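/- Let L, T > 0 and λ ≥ 1, and let u₀ : 𝕋_L → [0,∞) be continuous, not identically zero, L-periodic, absolutely continuous with derivative u₀' ∈ L²(0,L). Then there exists a weak solution u of the thin-film equation with absorption u_t + ∂_x(u² ∂_x³ u) + u^λ = 0 with initial datum u₀ (in the sense defined in the context), which is nonnegative on [0,T] × 𝕋_L and satisfies ∫₀^L u(t,x) dx ≤ ∫₀^L u₀(x) dx for every t ∈ [0,T]. -/

import Mathlib

/-!
The solution is obtained as a limit of Galerkin approximations of the equation
`v_t + (v₊² v_xxx)_x + v₊^λ = 0`, and its regularity on the positivity set comes from a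
quasilinear interior regularity theory carried out with Fourier series.

Approximation (`galerkin_exists`, `approx_exists`). The equation is projected onto the span of
the real trigonometric (Hartley) functions of frequency at most `N`. Testing with `-v_xx` is
legitimate because the span is invariant under `∂_x²`; it gives
`½ d/dt ∫ v_x² + ∫ v₊² v_xxx² ≤ 0`, the absorption term having the right sign because
`v ↦ v₊^λ` is monotone. Testing with the constant shows that the mass decreases, at a controlled
rate. Hence the approximations are bounded, `½`-Hölder in `x`, equicontinuous in `t`, and
`v₊ v_xxx` is bounded in `L²`. Cutting off the vector field turns these bounds into global
solvability of the ODE system. No positivity of the approximations is needed.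

Limit (`limSol_exists`). By equicontinuity `v → u` locally uniformly and `v₊ v_xxx ⇀ j` weakly in
`L²` along an ultrafilter, so that `u_t + (u₊ j)_x + u₊^λ = 0` holds weakly, `‖u_x(t)‖₂ ≤ ‖u₀'‖₂`
for every `t`, and `j = u u_xxx` in the sense of distributions where `u > 0`. On an open set where
`u < 0` the equation reads `u_t = 0`, so a nonnegative datum yields `u ≥ 0` (`LimSol.nonneg`).
Weak convergence `u_x(t) ⇀ u₀'` together with `‖u_x(t)‖₂ ≤ ‖u₀'‖₂` gives strong convergence to the
initial datum (`LimSol.init_tendsto`).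

Regularity (`unit_regularity`, `LocSol.regular`). Near a point where `u > 0`, parabolic rescaling
and division by the value there reduce to `u = 1 + v` on a unit box, with `v` and its weak third
derivative `h` small: `v_t + ((1+v)² h)_x + ρ (1+v)^λ = 0`. After localisation by cut-offs, the
two relations `h = v_xxx` and the equation become linear relations between Fourier coefficients
plus a convolution with the coefficients of `2v + v²`. These coefficients are small in `ℓ¹` (the
Wiener norm), so the convolution is absorbed in weighted `ℓ²` spaces (`absorb`), and each round
gains a fixed fraction of a derivative (`gain`, `UData.stepP`). Enough rounds give four continuous
space derivatives, and then the equation holds classically and yields a continuous `u_t`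
(`LimSol.time_deriv`).
-/

open MeasureTheory Set Filter

noncomputable section

/-- The positivity set `P_T = {(t,x) ∈ (0,T) × ℝ : u(t,x) > 0}` of `u`. -/
def PT (T : ℝ) (u : ℝ → ℝ → ℝ) : Set (ℝ × ℝ) :=
  {p : ℝ × ℝ | p.1 ∈ Set.Ioo (0 : ℝ) T ∧ 0 < u p.1 p.2}

/-- One period of the space-time cylinder: `(0,T) × (0,L)`. -/
def QTper (L T : ℝ) : Set (ℝ × ℝ) := Set.Ioo (0 : ℝ) T ×ˢ Set.Ioo (0 : ℝ) L

/-- A weak solution of the thin-film equation with absorption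
`u_t + ∂_x(u² ∂_x³ u) + u^λ = 0`, `u(0,·) = u₀`, on `[0,T] × 𝕋_L`.
Here `u₀` has (weak/a.e.) derivative `g₀`; `ux, ut, ux2, ux3, ux4` are the partial
derivatives `u_x, u_t, u_xx, u_xxx, u_xxxx`, which are required to exist classically
and be continuous on the positivity set `P_T`. -/
structure WeakSol (L T lam : ℝ) (u₀ g₀ : ℝ → ℝ) where
  u : ℝ → ℝ → ℝ
  ux : ℝ → ℝ → ℝ
  ut : ℝ → ℝ → ℝ
  ux2 : ℝ → ℝ → ℝ
  ux3 : ℝ → ℝ → ℝ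
  ux4 : ℝ → ℝ → ℝ
  /-- `u` is nonnegative. -/
  nonneg : ∀ t ∈ Set.Icc (0 : ℝ) T, ∀ x : ℝ, 0 ≤ u t x
  /-- `u` is continuous on `[0,T] × 𝕋_L`. -/
  cont : ContinuousOn (fun p : ℝ × ℝ => u p.1 p.2)
    (Set.Icc (0 : ℝ) T ×ˢ (Set.univ : Set ℝ))
  /-- `u(t,·)` is `L`-periodic. -/
  periodic : ∀ t x : ℝ, u t (x + L) = u t x
  /-- local integrability of the spatial derivative -/
  ux_int : ∀ t ∈ Set.Icc (0 : ℝ) T, ∀ a b : ℝ, IntervalIntegrable (ux t) volume a b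
  /-- each `u(t,·)` is absolutely continuous with derivative `ux t`. -/
  ac : ∀ t ∈ Set.Icc (0 : ℝ) T, ∀ a b : ℝ, u t b - u t a = ∫ x in a..b, ux t x
  /-- `u_x(t,·) ∈ L²(0,L)`. -/
  ux_sq_int : ∀ t ∈ Set.Icc (0 : ℝ) T,
    IntervalIntegrable (fun x => (ux t x) ^ 2) volume 0 L
  /-- `sup_{t ∈ [0,T]} ‖u(t,·)‖_{1,2} < ∞`. -/
  bdd : ∃ S : ℝ, ∀ t ∈ Set.Icc (0 : ℝ) T,
    (∫ x in (0 : ℝ)..L, ((u t x) ^ 2 + (ux t x) ^ 2)) ≤ S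
  /-- on `P_T` the time derivative exists and equals `ut`. -/
  hasDeriv_t : ∀ p ∈ PT T u, HasDerivAt (fun s => u s p.2) (ut p.1 p.2) p.1
  /-- on `P_T` the spatial derivative exists and equals `ux`. -/
  hasDeriv_x : ∀ p ∈ PT T u, HasDerivAt (fun y => u p.1 y) (ux p.1 p.2) p.2
  hasDeriv_x2 : ∀ p ∈ PT T u, HasDerivAt (fun y => ux p.1 y) (ux2 p.1 p.2) p.2
  hasDeriv_x3 : ∀ p ∈ PT T u, HasDerivAt (fun y => ux2 p.1 y) (ux3 p.1 p.2) p.2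
  hasDeriv_x4 : ∀ p ∈ PT T u, HasDerivAt (fun y => ux3 p.1 y) (ux4 p.1 p.2) p.2
  /-- the partial derivatives are continuous on `P_T`. -/
  cont_t : ContinuousOn (fun p : ℝ × ℝ => ut p.1 p.2) (PT T u)
  cont_x : ContinuousOn (fun p : ℝ × ℝ => ux p.1 p.2) (PT T u)
  cont_x2 : ContinuousOn (fun p : ℝ × ℝ => ux2 p.1 p.2) (PT T u)
  cont_x3 : ContinuousOn (fun p : ℝ × ℝ => ux3 p.1 p.2) (PT T u)
  cont_x4 : ContinuousOn (fun p : ℝ × ℝ => ux4 p.1 p.2) (PT T u)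
  /-- `∫∫_{P_T} (u u_xxx)² dx dt < ∞`. -/
  flux_sq_int : IntegrableOn (fun p : ℝ × ℝ => (u p.1 p.2 * ux3 p.1 p.2) ^ 2)
    (PT T u ∩ QTper L T) volume
  /-- the weak formulation, for every `C¹` space-periodic test function vanishing
  at `t = 0` and `t = T`. -/
  weak : ∀ ψ : ℝ → ℝ → ℝ,
    ContDiff ℝ 1 (fun p : ℝ × ℝ => ψ p.1 p.2) →
    (∀ t x : ℝ, ψ t (x + L) = ψ t x) →
    (∀ x : ℝ, ψ 0 x = 0) → (∀ x : ℝ, ψ T x = 0) →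
    (∫ p in QTper L T, u p.1 p.2 * deriv (fun s => ψ s p.2) p.1)
      + (∫ p in PT T u ∩ QTper L T,
          (u p.1 p.2) ^ 2 * ux3 p.1 p.2 * deriv (fun y => ψ p.1 y) p.2)
      - (∫ p in QTper L T, u p.1 p.2 ^ lam * ψ p.1 p.2) = 0
  /-- `u(t,·) → u₀` in the `‖·‖_{1,2}` norm as `t → 0⁺`. -/
  init : Tendsto
    (fun t => ∫ x in (0 : ℝ)..L, ((u t x - u₀ x) ^ 2 + (ux t x - g₀ x) ^ 2))
    (nhdsWithin 0 (Set.Ioi 0)) (nhds 0)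

/-! ### Sequences on `ℤ × ℤ`: sums of squares, convolutions, weights -/

/-- Sum of the squares of a `[0,∞]`-valued family on the frequency lattice. -/
def S2 (B : ℤ × ℤ → ENNReal) : ENNReal := ∑' n, B n ^ 2

/-- Convolution of `[0,∞]`-valued families on the frequency lattice. -/
def cv (K B : ℤ × ℤ → ENNReal) (n : ℤ × ℤ) : ENNReal := ∑' j, K j * B (n - j)

lemma enn_two_mul_le (a b : ENNReal) : 2 * (a * b) ≤ a ^ 2 + b ^ 2 := by
  rcases eq_or_ne a ⊤ with rfl | ha
  · simp
  rcases eq_or_ne b ⊤ with rfl | hb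
  · simp
  lift a to NNReal using ha
  lift b to NNReal using hb
  norm_cast
  have h := two_mul_le_add_sq (a : ℝ) b
  rw [← NNReal.coe_le_coe]; push_cast; linarith

lemma enn_add_sq_le (a b : ENNReal) : (a + b) ^ 2 ≤ 2 * a ^ 2 + 2 * b ^ 2 := by
  have := enn_two_mul_le a b
  calc (a + b) ^ 2 = a ^ 2 + b ^ 2 + 2 * (a * b) := by ring
    _ ≤ a ^ 2 + b ^ 2 + (a ^ 2 + b ^ 2) := by gcongr
    _ = _ := by ring

lemma S2_mono {A B : ℤ × ℤ → ENNReal} (h : ∀ n, A n ≤ B n) : S2 A ≤ S2 B :=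
  ENNReal.tsum_le_tsum fun n => by gcongr; exact h n

lemma S2_add (A B : ℤ × ℤ → ENNReal) : S2 (fun n => A n + B n) ≤ 2 * S2 A + 2 * S2 B := by
  unfold S2
  rw [← ENNReal.tsum_mul_left, ← ENNReal.tsum_mul_left, ← ENNReal.tsum_add]
  exact ENNReal.tsum_le_tsum fun n => enn_add_sq_le _ _

lemma S2_const_mul (c : ENNReal) (A : ℤ × ℤ → ENNReal) :
    S2 (fun n => c * A n) = c ^ 2 * S2 A := by
  unfold S2
  rw [← ENNReal.tsum_mul_left]
  exact tsum_congr fun n => by ring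

lemma S2_add_lt_top {A B : ℤ × ℤ → ENNReal} (hA : S2 A < ⊤) (hB : S2 B < ⊤) :
    S2 (fun n => A n + B n) < ⊤ :=
  (S2_add A B).trans_lt (by
    refine ENNReal.add_lt_top.2 ⟨ENNReal.mul_lt_top (by simp) hA, ENNReal.mul_lt_top (by simp) hB⟩)

lemma S2_const_lt_top {c : ENNReal} (hc : c ≠ ⊤) {A : ℤ × ℤ → ENNReal} (hA : S2 A < ⊤) :
    S2 (fun n => c * A n) < ⊤ := by
  rw [S2_const_mul]
  exact ENNReal.mul_lt_top (by simp [hc.lt_top]) hA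

lemma S2_young (K B : ℤ × ℤ → ENNReal) : S2 (cv K B) ≤ (∑' j, K j) ^ 2 * S2 B := by
  have key : ∀ i j : ℤ × ℤ, ∑' n, B (n - i) * B (n - j) ≤ S2 B := by
    intro i j
    have hs : ∀ i : ℤ × ℤ, ∑' n, B (n - i) ^ 2 = S2 B := fun i =>
      (Equiv.subRight i).tsum_eq (fun n => B n ^ 2)
    have h2 : 2 * ∑' n, B (n - i) * B (n - j) ≤ 2 * S2 B := by
      rw [← ENNReal.tsum_mul_left]
      calc _ ≤ ∑' n, (B (n - i) ^ 2 + B (n - j) ^ 2) :=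
            ENNReal.tsum_le_tsum fun n => enn_two_mul_le _ _
        _ = _ := by rw [ENNReal.tsum_add, hs, hs]; ring
    exact (ENNReal.mul_le_mul_iff_right (by simp) (by simp)).1 h2
  calc S2 (cv K B) = ∑' n, ∑' i, ∑' j, K i * K j * (B (n - i) * B (n - j)) := by
        unfold S2 cv
        refine tsum_congr fun n => ?_
        rw [sq, ← ENNReal.tsum_mul_right]
        refine tsum_congr fun i => ?_
        rw [← ENNReal.tsum_mul_left]
        exact tsum_congr fun j => by ring
    _ = ∑' i, ∑' j, K i * K j * ∑' n, (B (n - i) * B (n - j)) := by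
        rw [ENNReal.tsum_comm]
        refine tsum_congr fun i => ?_
        rw [ENNReal.tsum_comm]
        refine tsum_congr fun j => ?_
        rw [ENNReal.tsum_mul_left]
    _ ≤ ∑' i, ∑' j, K i * K j * S2 B := by
        refine ENNReal.tsum_le_tsum fun i => ENNReal.tsum_le_tsum fun j => ?_
        gcongr; exact key i j
    _ = _ := by
        simp_rw [ENNReal.tsum_mul_right, ENNReal.tsum_mul_left, ENNReal.tsum_mul_right]
        ring

lemma tsum_cv (K B : ℤ × ℤ → ENNReal) : ∑' n, cv K B n = (∑' j, K j) * ∑' j, B j := by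
  unfold cv
  rw [ENNReal.tsum_comm, ← ENNReal.tsum_mul_right]
  refine tsum_congr fun j => ?_
  rw [ENNReal.tsum_mul_left]
  congr 1
  exact (Equiv.subRight j).tsum_eq B

lemma S2_cauchy (A B : ℤ × ℤ → ENNReal) : (∑' n, A n * B n) ^ 2 ≤ S2 A * S2 B := by
  have h := ENNReal.lintegral_mul_le_Lp_mul_Lq (μ := (Measure.count : Measure (ℤ × ℤ)))
    (p := 2) (q := 2) Real.HolderConjugate.two_two (f := A) (g := B)
    (Measurable.of_discrete.aemeasurable) (Measurable.of_discrete.aemeasurable)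
  simp only [lintegral_count, Pi.mul_apply, ENNReal.rpow_two] at h
  calc _ ≤ ((∑' n, A n ^ 2) ^ ((1:ℝ) / 2) * (∑' n, B n ^ 2) ^ ((1:ℝ) / 2)) ^ 2 := by gcongr
    _ = _ := by
      rw [mul_pow, ← ENNReal.rpow_natCast, ← ENNReal.rpow_natCast, ← ENNReal.rpow_mul,
        ← ENNReal.rpow_mul]
      norm_num [S2]

/-- Absorption for a bounded weight: if `B ≤ K ∗ B + Φ` with `K` small in `ℓ¹`, then the
weighted `ℓ²` size of `B` is controlled by a constant not depending on the bound of the weight. -/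
lemma absorb_bdd {w K B Φ : ℤ × ℤ → ENNReal} {D R : ENNReal} (hR : R ≠ ⊤)
    (hw : ∀ n, w n ≤ R) (hD : ∀ i j, w (i + j) ≤ D * (w i + w j))
    (hB : S2 B < ⊤) (hle : ∀ n, B n ≤ cv K B n + Φ n)
    (hK : 2 * (D * ∑' j, K j) ≤ 1) :
    S2 (fun n => w n * B n) ≤
      8 * (D ^ 2 * ((∑' j, w j * K j) ^ 2 * S2 B)) + 8 * S2 (fun n => w n * Φ n) := by
  have hfin : S2 (fun n => w n * B n) < ⊤ :=
    (S2_mono (B := fun n => R * B n) fun n => by gcongr; exact hw n).trans_lt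
      (S2_const_lt_top hR hB)
  have h1 : ∀ n, w n * B n ≤ D * cv K (fun n => w n * B n) n +
      (D * cv (fun n => w n * K n) B n + w n * Φ n) := by
    intro n
    calc w n * B n ≤ w n * (cv K B n + Φ n) := by gcongr; exact hle n
      _ = w n * cv K B n + w n * Φ n := by ring
      _ ≤ (D * cv K (fun n => w n * B n) n + D * cv (fun n => w n * K n) B n) + w n * Φ n := by
          gcongr
          unfold cv
          rw [← mul_add, ← ENNReal.tsum_add, ← ENNReal.tsum_mul_left, ← ENNReal.tsum_mul_left]
          refine ENNReal.tsum_le_tsum fun j => ?_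
          have := hD j (n - j)
          rw [add_sub_cancel] at this
          calc w n * (K j * B (n - j)) ≤ (D * (w j + w (n - j))) * (K j * B (n - j)) := by gcongr
            _ = _ := by ring
      _ = _ := by ring
  set X := S2 (fun n => w n * B n) with hX
  set Y := 4 * (D ^ 2 * ((∑' j, w j * K j) ^ 2 * S2 B)) + 4 * S2 (fun n => w n * Φ n) with hY
  have h2 : X ≤ 2 * (D ^ 2 * ((∑' j, K j) ^ 2 * X)) + Y := by
    calc X ≤ _ := S2_mono h1
      _ ≤ _ := S2_add _ _
      _ ≤ 2 * (D ^ 2 * ((∑' j, K j) ^ 2 * X)) + 2 * (2 * (D ^ 2 * ((∑' j, w j * K j) ^ 2 * S2 B))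
          + 2 * S2 (fun n => w n * Φ n)) := by
          gcongr
          · rw [S2_const_mul]; gcongr; exact S2_young _ _
          · refine (S2_add _ _).trans ?_
            gcongr
            rw [S2_const_mul]; gcongr; exact S2_young _ _
      _ = _ := by rw [hY]; ring
  have h3 : 2 * X ≤ X + 2 * Y := by
    calc 2 * X ≤ 2 * (2 * (D ^ 2 * ((∑' j, K j) ^ 2 * X)) + Y) := by gcongr
      _ = (2 * (D * ∑' j, K j)) ^ 2 * X + 2 * Y := by ring
      _ ≤ 1 ^ 2 * X + 2 * Y := by gcongr
      _ = _ := by ring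
  rw [two_mul] at h3
  have h4 := (ENNReal.add_le_add_iff_left hfin.ne).1 h3
  refine h4.trans (le_of_eq ?_)
  rw [hY]; ring

/-- The spatial weight `(1 + |k|)^{1/4}` at the frequency `(m, k)`. -/
def yw (n : ℤ × ℤ) : ENNReal := ENNReal.ofReal ((1 + |(n.2 : ℝ)|) ^ ((1 : ℝ) / 4))

lemma yw_ne_top (n : ℤ × ℤ) : yw n ≠ ⊤ := ENNReal.ofReal_ne_top

lemma one_le_yw (n : ℤ × ℤ) : 1 ≤ yw n := by
  unfold yw
  rw [← ENNReal.ofReal_one]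
  exact ENNReal.ofReal_le_ofReal (Real.one_le_rpow (by simp) (by norm_num))

lemma yw_pow_ne_zero (n : ℤ × ℤ) (k : ℕ) : yw n ^ k ≠ 0 :=
  pow_ne_zero _ (one_pos.trans_le (one_le_yw n)).ne'

lemma yw_pow_ne_top (n : ℤ × ℤ) (k : ℕ) : yw n ^ k ≠ ⊤ := ENNReal.pow_ne_top (yw_ne_top n)

lemma yw_pow_mono (n : ℤ × ℤ) {j k : ℕ} (h : j ≤ k) : yw n ^ j ≤ yw n ^ k :=
  pow_le_pow_right₀ (one_le_yw n) h

lemma yw_pow_four (n : ℤ × ℤ) : yw n ^ 4 = ENNReal.ofReal (1 + |(n.2 : ℝ)|) := by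
  unfold yw
  rw [← ENNReal.ofReal_pow (by positivity), ← Real.rpow_natCast, ← Real.rpow_mul (by positivity)]
  norm_num

lemma yw_add_le_mul (i j : ℤ × ℤ) : yw (i + j) ≤ yw i * yw j := by
  unfold yw
  rw [← ENNReal.ofReal_mul (by positivity), ← Real.mul_rpow (by positivity) (by positivity)]
  refine ENNReal.ofReal_le_ofReal (Real.rpow_le_rpow (by positivity) ?_ (by norm_num))
  have := abs_add_le (i.2 : ℝ) j.2
  have h2 := mul_nonneg (abs_nonneg (i.2 : ℝ)) (abs_nonneg (j.2 : ℝ))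
  simp only [Prod.snd_add, Int.cast_add]; nlinarith

lemma yw_add_pow_le (i j : ℤ × ℤ) (n : ℕ) :
    yw (i + j) ^ n ≤ 2 ^ n * (yw i ^ n + yw j ^ n) := by
  have h : yw (i + j) ≤ 2 * max (yw i) (yw j) := by
    have h1 : yw (i + j) ≤ yw i + yw j := by
      unfold yw
      rw [← ENNReal.ofReal_add (by positivity) (by positivity)]
      refine ENNReal.ofReal_le_ofReal ?_
      refine le_trans (Real.rpow_le_rpow (by positivity) ?_ (by norm_num))
        (Real.rpow_add_le_add_rpow (p := 1 / 4) (a := 1 + |(i.2 : ℝ)|) (b := 1 + |(j.2 : ℝ)|)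
          (by positivity) (by positivity) (by norm_num) (by norm_num))
      have := abs_add_le (i.2 : ℝ) j.2
      simp only [Prod.snd_add, Int.cast_add]; linarith
    calc _ ≤ _ := h1
      _ ≤ max (yw i) (yw j) + max (yw i) (yw j) := add_le_add (le_max_left _ _) (le_max_right _ _)
      _ = _ := by ring
  calc yw (i + j) ^ n ≤ (2 * max (yw i) (yw j)) ^ n := by gcongr
    _ = 2 ^ n * (max (yw i) (yw j)) ^ n := by ring
    _ ≤ _ := by
      gcongr
      rcases max_cases (yw i) (yw j) with ⟨h, _⟩ | ⟨h, _⟩ <;> rw [h]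
      · exact le_self_add
      · exact le_add_self

/-- Absorption for the polynomial weights. -/
lemma absorb {K B Φ : ℤ × ℤ → ENNReal} (n : ℕ)
    (hB : S2 B < ⊤) (hle : ∀ n, B n ≤ cv K B n + Φ n)
    (hK : 2 * (2 ^ n * ∑' j, K j) ≤ 1)
    (hKn : ∑' j, yw j ^ n * K j < ⊤) (hΦ : S2 (fun j => yw j ^ n * Φ j) < ⊤) :
    S2 (fun j => yw j ^ n * B j) < ⊤ := by
  set C := 8 * ((2 ^ n) ^ 2 * ((∑' j, yw j ^ n * K j) ^ 2 * S2 B)) +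
    8 * S2 (fun j => yw j ^ n * Φ j) with hC
  have hCt : C < ⊤ := by
    refine ENNReal.add_lt_top.2 ⟨ENNReal.mul_lt_top (by simp) (ENNReal.mul_lt_top (by simp)
      (ENNReal.mul_lt_top (by simp [hKn]) hB)), ENNReal.mul_lt_top (by simp) hΦ⟩
  have hR : ∀ R : ℕ, S2 (fun j => min (yw j ^ n) R * B j) ≤ C := by
    intro R
    refine (absorb_bdd (w := fun j => min (yw j ^ n) R) (D := 2 ^ n) (R := R) (by simp)
      (fun _ => min_le_right _ _) ?_ hB hle hK).trans ?_
    · intro i j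
      have h := yw_add_pow_le i j n
      have h1 : (1 : ENNReal) ≤ 2 ^ n := one_le_pow₀ (by norm_num)
      rcases le_total (yw i ^ n) R with hi | hi
      · rcases le_total (yw j ^ n) R with hj | hj
        · simp only [min_eq_left hi, min_eq_left hj]
          exact (min_le_left _ _).trans h
        · simp only [min_eq_right hj]
          calc _ ≤ (R : ENNReal) := min_le_right _ _
            _ ≤ 1 * (min (yw i ^ n) R + R) := by rw [one_mul]; exact le_add_self
            _ ≤ _ := by gcongr
      · simp only [min_eq_right hi]
        calc _ ≤ (R : ENNReal) := min_le_right _ _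
          _ ≤ 1 * (R + min (yw j ^ n) R) := by rw [one_mul]; exact le_self_add
          _ ≤ _ := by gcongr
    · rw [hC]
      gcongr with j
      · exact min_le_left _ _
      · exact S2_mono fun j => by gcongr; exact min_le_left _ _
  refine lt_of_le_of_lt ?_ hCt
  unfold S2
  rw [ENNReal.tsum_eq_iSup_sum]
  refine iSup_le fun s => ?_
  obtain ⟨R, hRs⟩ : ∃ R : ℕ, ∀ j ∈ s, yw j ^ n ≤ R := by
    obtain ⟨R, hR⟩ := ENNReal.exists_nat_gt (r := ∑ j ∈ s, yw j ^ n)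
      (ENNReal.sum_lt_top.2 fun j _ => (yw_pow_ne_top j n).lt_top).ne
    exact ⟨R, fun j hj => (Finset.single_le_sum (f := fun j => yw j ^ n)
      (fun _ _ => zero_le) hj).trans hR.le⟩
  calc ∑ j ∈ s, (yw j ^ n * B j) ^ 2 = ∑ j ∈ s, (min (yw j ^ n) R * B j) ^ 2 :=
        Finset.sum_congr rfl fun j hj => by rw [min_eq_left (hRs j hj)]
    _ ≤ _ := ENNReal.sum_le_tsum s
    _ ≤ _ := hR R

lemma yw_cv_le (n : ℕ) (K B : ℤ × ℤ → ENNReal) (i : ℤ × ℤ) :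
    yw i ^ n * cv K B i ≤ cv (fun j => yw j ^ n * K j) (fun j => yw j ^ n * B j) i := by
  unfold cv
  rw [← ENNReal.tsum_mul_left]
  refine ENNReal.tsum_le_tsum fun j => ?_
  have := yw_add_le_mul j (i - j)
  rw [add_sub_cancel] at this
  calc _ ≤ (yw j * yw (i - j)) ^ n * (K j * B (i - j)) := by gcongr
    _ = _ := by ring

lemma summable_int_rpow {s : ℝ} (hs : s < -1) :
    Summable fun k : ℤ => (1 + |(k : ℝ)|) ^ s := by
  have hn : Summable fun k : ℕ => (1 + (k : ℝ)) ^ s := by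
    have := (summable_nat_add_iff 1).2 (Real.summable_nat_rpow.2 hs)
    refine this.congr fun k => by push_cast; rw [add_comm]
  refine Summable.of_nat_of_neg ?_ ?_ <;> simpa using hn

/-- The decay factor used to trade `ℓ²` bounds of order `|m| / y⁴ + y¹²` for `ℓ¹` bounds. -/
def dec (n : ℤ × ℤ) : ENNReal :=
  yw n ^ 5 * ((ENNReal.ofReal |(n.1 : ℝ)|) + yw n ^ 16)⁻¹

lemma S2_dec : S2 dec < ⊤ := by
  have hle : ∀ n : ℤ × ℤ, dec n ^ 2 ≤ ENNReal.ofReal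
      ((1 + |(n.1 : ℝ)|) ^ (-(17 / 16) : ℝ) * (1 + |(n.2 : ℝ)|) ^ (-(5 / 4) : ℝ)) := by
    rintro ⟨m, k⟩
    set M := 1 + |(m : ℝ)| with hM
    set Y := 1 + |(k : ℝ)| with hY
    have hM1 : 1 ≤ M := by simp [hM]
    have hY1 : 1 ≤ Y := by simp [hY]
    have hY0 : 0 < Y := by linarith
    have hM0 : 0 < M := by linarith
    have e1 : dec (m, k) = ENNReal.ofReal ((Y ^ ((1 : ℝ) / 4)) ^ 5 * (|(m : ℝ)| +
        (Y ^ ((1 : ℝ) / 4)) ^ 16)⁻¹) := by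
      unfold dec yw
      rw [ENNReal.ofReal_mul (by positivity), ENNReal.ofReal_inv_of_pos (by positivity),
        ENNReal.ofReal_add (by positivity) (by positivity), ENNReal.ofReal_pow (by positivity),
        ENNReal.ofReal_pow (by positivity)]
    rw [e1, ← ENNReal.ofReal_pow (by positivity)]
    refine ENNReal.ofReal_le_ofReal ?_
    have e2 : (Y ^ ((1 : ℝ) / 4)) ^ 16 = Y ^ (4 : ℝ) := by
      rw [← Real.rpow_natCast, ← Real.rpow_mul hY0.le]; norm_num
    have e3 : ((Y ^ ((1 : ℝ) / 4)) ^ 5) ^ 2 = Y ^ ((5 : ℝ) / 2) := by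
      rw [← pow_mul, ← Real.rpow_natCast, ← Real.rpow_mul hY0.le]; norm_num
    rw [mul_pow, e2, e3]
    set G := |(m : ℝ)| + Y ^ (4 : ℝ) with hG
    have hY4 : 1 ≤ Y ^ (4 : ℝ) := Real.one_le_rpow hY1 (by norm_num)
    have hGM : M ≤ G := by rw [hM, hG]; linarith
    have hGY : Y ^ (4 : ℝ) ≤ G := by rw [hG]; linarith [abs_nonneg (m : ℝ)]
    have hG0 : 0 < G := by linarith
    have h1 : M ^ ((17 : ℝ) / 16) * Y ^ ((15 : ℝ) / 4) ≤ G ^ 2 := by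
      calc _ ≤ G ^ ((17 : ℝ) / 16) * (Y ^ (4 : ℝ)) ^ ((15 : ℝ) / 16) := by
            rw [← Real.rpow_mul hY0.le]
            norm_num
            gcongr
        _ ≤ G ^ ((17 : ℝ) / 16) * G ^ ((15 : ℝ) / 16) := by gcongr
        _ = G ^ 2 := by rw [← Real.rpow_add hG0]; norm_num
    rw [inv_pow]
    calc Y ^ ((5 : ℝ) / 2) * (G ^ 2)⁻¹
        ≤ Y ^ ((5 : ℝ) / 2) * (M ^ ((17 : ℝ) / 16) * Y ^ ((15 : ℝ) / 4))⁻¹ := by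
          gcongr
      _ = M ^ (-(17 / 16) : ℝ) * Y ^ (-(5 / 4) : ℝ) := by
          rw [mul_inv, ← Real.rpow_neg hM0.le, ← Real.rpow_neg hY0.le, mul_left_comm,
            ← Real.rpow_add hY0]
          norm_num
  have hsum : Summable fun n : ℤ × ℤ =>
      (1 + |(n.1 : ℝ)|) ^ (-(17 / 16) : ℝ) * (1 + |(n.2 : ℝ)|) ^ (-(5 / 4) : ℝ) :=
    Summable.mul_of_nonneg (f := fun m : ℤ => (1 + |(m : ℝ)|) ^ (-(17 / 16) : ℝ))
      (g := fun m : ℤ => (1 + |(m : ℝ)|) ^ (-(5 / 4) : ℝ))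
      (summable_int_rpow (by norm_num)) (summable_int_rpow (by norm_num))
      (fun _ => by positivity) (fun _ => by positivity)
  refine lt_of_le_of_lt (ENNReal.tsum_le_tsum hle) ?_
  rw [← ENNReal.ofReal_tsum_of_nonneg (fun _ => by positivity) hsum]
  exact ENNReal.ofReal_lt_top

/-- The gain of one weight: an `ℓ²` bound on `yⁿ (|m| y⁻⁴ + y¹²) X` bounds `yⁿ⁺¹ X` in `ℓ¹`. -/
lemma gain (n : ℕ) (X q : ℤ × ℤ → ENNReal)
    (h : ∀ j, yw j ^ n * (ENNReal.ofReal |(j.1 : ℝ)| + yw j ^ 16) * X j ≤ yw j ^ 4 * q j) :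
    (∑' j, yw j ^ (n + 1) * X j) ^ 2 ≤ S2 q * S2 dec := by
  refine le_trans ?_ (S2_cauchy q dec)
  refine pow_le_pow_left' (ENNReal.tsum_le_tsum fun j => ?_) 2
  unfold dec
  set G := ENNReal.ofReal |(j.1 : ℝ)| + yw j ^ 16 with hG
  have hG0 : G ≠ 0 := by
    have := yw_pow_ne_zero j 16
    simp [hG, this]
  have hGt : G ≠ ⊤ := by
    simp [hG, yw_ne_top]
  calc yw j ^ (n + 1) * X j = (yw j ^ n * G * X j) * (yw j * G⁻¹) := by
        have := ENNReal.mul_inv_cancel hG0 hGt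
        calc _ = yw j ^ n * yw j * X j * (G * G⁻¹) := by rw [this, pow_succ]; ring
          _ = _ := by ring
    _ ≤ (yw j ^ 4 * q j) * (yw j * G⁻¹) := mul_le_mul_left (h j) _
    _ = _ := by ring

/-! ### Fourier coefficients of functions supported in the unit box -/

/-- The character `e^{2πi(mt + kx)}`. -/
def ex (n : ℤ × ℤ) (p : ℝ × ℝ) : ℂ :=
  Complex.exp (2 * Real.pi * Complex.I * (n.1 * p.1 + n.2 * p.2))

/-- Fourier coefficient of a real function on the plane; it is used for functions supported
in the unit box, where it is the coefficient of the periodic extension. -/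
def fc (f : ℝ × ℝ → ℝ) (n : ℤ × ℤ) : ℂ := ∫ p, (f p : ℂ) * ex (-n) p

/-- Modulus of the Fourier coefficient, as an extended nonnegative number. -/
def fA (f : ℝ × ℝ → ℝ) (n : ℤ × ℤ) : ENNReal := ‖fc f n‖ₑ

/-- Vanishing outside the open unit box centred at the origin (sup norm). -/
def InBox {E : Type*} [Zero E] (f : ℝ × ℝ → E) : Prop := ∀ p, 1 / 2 ≤ ‖p‖ → f p = 0

/-- The half-open unit box. -/
def box : Set (ℝ × ℝ) := Ioc (-(1 / 2)) (1 / 2) ×ˢ Ioc (-(1 / 2)) (1 / 2)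

lemma ex_continuous (n : ℤ × ℤ) : Continuous (ex n) := by unfold ex; fun_prop

lemma norm_ex (n : ℤ × ℤ) (p : ℝ × ℝ) : ‖ex n p‖ = 1 := by
  unfold ex
  rw [show (2 * Real.pi * Complex.I * (n.1 * p.1 + n.2 * p.2) : ℂ) =
    ((2 * Real.pi * (n.1 * p.1 + n.2 * p.2) : ℝ) : ℂ) * Complex.I by push_cast; ring]
  exact Complex.norm_exp_ofReal_mul_I _

lemma ex_mul (n m : ℤ × ℤ) (p : ℝ × ℝ) : ex n p * ex m p = ex (n + m) p := by
  unfold ex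
  rw [← Complex.exp_add]; congr 1; simp; ring

lemma conj_ex (n : ℤ × ℤ) (p : ℝ × ℝ) : (starRingEnd ℂ) (ex n p) = ex (-n) p := by
  unfold ex
  rw [← Complex.exp_conj]; congr 1; simp [Complex.conj_ofNat]; ring

lemma ex_zero (p : ℝ × ℝ) : ex 0 p = 1 := by simp [ex]

lemma box_sub {p : ℝ × ℝ} (hp : p ∉ box) : 1 / 2 ≤ ‖p‖ := by
  by_contra h
  push Not at h
  refine hp ?_
  rw [Prod.norm_def, max_lt_iff, Real.norm_eq_abs, Real.norm_eq_abs, abs_lt, abs_lt] at h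
  exact ⟨⟨h.1.1, h.1.2.le⟩, ⟨h.2.1, h.2.2.le⟩⟩

lemma measurableSet_box : MeasurableSet box := measurableSet_Ioc.prod measurableSet_Ioc

lemma volume_box : volume box = 1 := by
  unfold box
  rw [Measure.volume_eq_prod, Measure.prod_prod, Real.volume_Ioc]; norm_num

lemma InBox.setIntegral {E : Type*} [NormedAddCommGroup E] [NormedSpace ℝ E]
    {f : ℝ × ℝ → E} (hf : InBox f) : ∫ p in box, f p = ∫ p, f p :=
  setIntegral_eq_integral_of_forall_compl_eq_zero fun _ hp => hf _ (box_sub hp)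

lemma InBox.mul_right {R : Type*} [MulZeroClass R] {f : ℝ × ℝ → R} (hf : InBox f)
    (g : ℝ × ℝ → R) : InBox fun p => f p * g p := fun p hp => by simp [hf p hp]

lemma InBox.ofReal {f : ℝ × ℝ → ℝ} (hf : InBox f) : InBox fun p => (f p : ℂ) := fun p hp => by
  simp [hf p hp]

lemma integral_exp_period (k : ℤ) :
    ∫ t in Ioc (-(1 / 2) : ℝ) (1 / 2), Complex.exp (2 * Real.pi * Complex.I * k * t) =
      if k = 0 then 1 else 0 := by
  split_ifs with hk
  · subst hk; simp; norm_num
  · have hc : (2 * Real.pi * Complex.I * k : ℂ) ≠ 0 := by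
      simp [hk, Real.pi_ne_zero, Complex.I_ne_zero]
    rw [← intervalIntegral.integral_of_le (by norm_num), integral_exp_mul_complex hc,
      div_eq_zero_iff]
    left
    rw [sub_eq_zero, Complex.exp_eq_exp_iff_exists_int]
    exact ⟨k, by push_cast; ring⟩

lemma integral_ex (n : ℤ × ℤ) : ∫ p in box, ex n p = if n = 0 then 1 else 0 := by
  have h : ∀ p, ex n p = (fun t : ℝ => Complex.exp (2 * Real.pi * Complex.I * n.1 * t)) p.1 *
      (fun t : ℝ => Complex.exp (2 * Real.pi * Complex.I * n.2 * t)) p.2 := by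
    intro p
    unfold ex
    rw [← Complex.exp_add]; congr 1; ring
  simp_rw [h]
  unfold box
  rw [Measure.volume_eq_prod, setIntegral_prod_mul
    (fun t : ℝ => Complex.exp (2 * Real.pi * Complex.I * n.1 * t))
    (fun t : ℝ => Complex.exp (2 * Real.pi * Complex.I * n.2 * t)),
    integral_exp_period, integral_exp_period]
  rcases n with ⟨m, k⟩
  by_cases hm : m = 0 <;> by_cases hk : k = 0 <;> simp [hm, hk]

lemma ex_memLp (n : ℤ × ℤ) : MemLp (ex n) 2 (volume.restrict box) := by
  have : IsFiniteMeasure (volume.restrict box) := ⟨by simp [volume_box]⟩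
  exact MemLp.of_bound (ex_continuous n).aestronglyMeasurable 1
    (Eventually.of_forall fun p => (norm_ex n p).le)

lemma ex_orthonormal : Orthonormal ℂ fun n => (ex_memLp n).toLp (ex n) := by
  rw [orthonormal_iff_ite]
  intro i j
  rw [L2.inner_def]
  have : ∫ a, inner ℂ ((ex_memLp i).toLp (ex i) a) ((ex_memLp j).toLp (ex j) a)
      ∂(volume.restrict box) = ∫ a in box, ex (j - i) a := by
    refine integral_congr_ae ?_
    filter_upwards [(ex_memLp i).coeFn_toLp, (ex_memLp j).coeFn_toLp] with p h1 h2
    rw [h1, h2, RCLike.inner_apply, conj_ex, ex_mul, sub_eq_add_neg]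
  rw [this, integral_ex]
  simp [sub_eq_zero, eq_comm]

/-- Bessel's inequality on the unit box. -/
lemma bessel {f : ℝ × ℝ → ℝ} (hm : AEStronglyMeasurable f volume) (hf : InBox f) :
    S2 (fA f) ≤ ∫⁻ p, ‖f p‖ₑ ^ 2 := by
  by_cases htop : ∫⁻ p, ‖f p‖ₑ ^ 2 = ⊤
  · rw [htop]; exact le_top
  have hsq : eLpNorm (fun p => (f p : ℂ)) 2 volume ^ 2 = ∫⁻ p, ‖f p‖ₑ ^ 2 := by
    rw [eLpNorm_eq_lintegral_rpow_enorm_toReal (by norm_num) (by norm_num),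
      ← ENNReal.rpow_natCast, ← ENNReal.rpow_mul]
    norm_num
    simp [enorm]
  have hmem0 : MemLp (fun p => (f p : ℂ)) 2 volume := by
    refine ⟨Complex.continuous_ofReal.comp_aestronglyMeasurable hm, ?_⟩
    rw [lt_top_iff_ne_top]
    intro h
    rw [h] at hsq
    exact htop (by rw [← hsq]; simp)
  have hmem : MemLp (fun p => (f p : ℂ)) 2 (volume.restrict box) := hmem0.restrict _
  set F := hmem.toLp _ with hF
  have hin : ∀ n, inner ℂ ((ex_memLp n).toLp (ex n)) F = fc f n := by
    intro n
    rw [L2.inner_def]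
    unfold fc
    rw [← InBox.setIntegral (hf.ofReal.mul_right _)]
    refine integral_congr_ae ?_
    filter_upwards [(ex_memLp n).coeFn_toLp, hmem.coeFn_toLp] with p h1 h2
    rw [h1, h2, RCLike.inner_apply, conj_ex]
  have hle : ∀ s : Finset (ℤ × ℤ), ∑ n ∈ s, ‖fc f n‖ ^ 2 ≤ ‖F‖ ^ 2 := by
    intro s
    have := ex_orthonormal.sum_inner_products_le F (s := s)
    simpa only [hin] using this
  have hn : ENNReal.ofReal (‖F‖ ^ 2) ≤ ∫⁻ p, ‖f p‖ₑ ^ 2 := by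
    rw [← hsq, ENNReal.ofReal_pow (norm_nonneg _), Lp.norm_toLp,
      ENNReal.ofReal_toReal hmem.2.ne]
    gcongr
    exact Measure.restrict_le_self
  refine le_trans ?_ hn
  unfold S2
  rw [ENNReal.tsum_eq_iSup_sum]
  refine iSup_le fun s => ?_
  calc ∑ n ∈ s, fA f n ^ 2 = ENNReal.ofReal (∑ n ∈ s, ‖fc f n‖ ^ 2) := by
        rw [ENNReal.ofReal_sum_of_nonneg fun _ _ => by positivity]
        refine Finset.sum_congr rfl fun n _ => ?_
        rw [ENNReal.ofReal_pow (norm_nonneg _), ofReal_norm]; rfl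
    _ ≤ _ := ENNReal.ofReal_le_ofReal (hle s)

/-- One-dimensional Fourier inversion on the unit interval. -/
lemma inversion_one {f : ℝ → ℂ} (hc : Continuous f) (h0 : ∀ t, 1 / 2 ≤ |t| → f t = 0)
    (hs : Summable fun m : ℤ => ∫ t : ℝ, Complex.exp (-(2 * Real.pi * Complex.I * m * t)) * f t)
    {t : ℝ} (ht : |t| < 1 / 2) :
    HasSum (fun m : ℤ => (∫ t : ℝ, Complex.exp (-(2 * Real.pi * Complex.I * m * t)) * f t) *
      Complex.exp (2 * Real.pi * Complex.I * m * t)) (f t) := by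
  set F : AddCircle (1 : ℝ) → ℂ := AddCircle.liftIco 1 (-(1 / 2)) f with hF
  have hFc : Continuous F := AddCircle.liftIco_continuous
    (by rw [h0 _ (by norm_num), h0 _ (by norm_num)]) hc.continuousOn
  have hco : ∀ m : ℤ, fourierCoeff F m =
      ∫ t : ℝ, Complex.exp (-(2 * Real.pi * Complex.I * m * t)) * f t := by
    intro m
    rw [hF, fourierCoeff_liftIco_eq, fourierCoeffOn_eq_integral]
    have e : (-(1 / 2) + 1 : ℝ) = 1 / 2 := by norm_num
    rw [e, show (1 / (1 / 2 - -(1 / 2)) : ℝ) = 1 by norm_num, one_smul,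
      intervalIntegral.integral_of_le (by norm_num)]
    rw [← setIntegral_eq_integral_of_forall_compl_eq_zero (s := Ioc (-(1 / 2) : ℝ) (1 / 2))
      (f := fun t : ℝ => Complex.exp (-(2 * Real.pi * Complex.I * m * t)) * f t)]
    · refine setIntegral_congr_fun measurableSet_Ioc fun t _ => ?_
      simp only [fourier_coe_apply, smul_eq_mul]
      congr 2; push_cast; ring
    · intro t ht
      rw [h0 t, mul_zero]
      by_contra h
      push Not at h
      exact ht ⟨(abs_lt.1 h).1, (abs_lt.1 h).2.le⟩
  have := has_pointwise_sum_fourier_series_of_summable (f := ⟨F, hFc⟩)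
    (by rw [ContinuousMap.coe_mk, funext hco]; exact hs) (t : AddCircle (1 : ℝ))
  simp only [ContinuousMap.coe_mk, hco, fourier_coe_apply, smul_eq_mul] at this
  rw [hF, AddCircle.liftIco_coe_apply ⟨(abs_lt.1 ht).1.le, by linarith [(abs_lt.1 ht).2]⟩] at this
  convert this using 4
  push_cast; ring

lemma fc_continuous_integrable {f : ℝ × ℝ → ℝ} (hc : Continuous f) (hf : InBox f) :
    Integrable f volume := by
  refine hc.integrable_of_hasCompactSupport ?_
  refine HasCompactSupport.intro (isCompact_closedBall (0 : ℝ × ℝ) (1 / 2)) fun p hp => hf p ?_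
  simp at hp ⊢; exact hp.le

/-- Fourier inversion on the unit box. -/
lemma inversion {f : ℝ × ℝ → ℝ} (hc : Continuous f) (hf : InBox f) (hs : ∑' n, fA f n < ⊤)
    {p : ℝ × ℝ} (hp : ‖p‖ < 1 / 2) : HasSum (fun n => fc f n * ex n p) (f p) := by
  have hsn : Summable fun n => ‖fc f n‖ := by
    have := ENNReal.summable_toReal hs.ne
    simpa [fA] using this
  have hInt := (fc_continuous_integrable hc hf)
  have hp' : |p.1| < 1 / 2 ∧ |p.2| < 1 / 2 := by
    rwa [Prod.norm_def, max_lt_iff] at hp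
  have hz1 : ∀ t x, 1 / 2 ≤ |t| → f (t, x) = 0 := fun t x h =>
    hf _ (h.trans (by rw [Prod.norm_def]; exact le_max_left _ _))
  have hz2 : ∀ t x, 1 / 2 ≤ |x| → f (t, x) = 0 := fun t x h =>
    hf _ (h.trans (by rw [Prod.norm_def]; exact le_max_right _ _))
  -- partial Fourier coefficients in the second variable
  set c : ℤ → ℝ → ℂ := fun k t =>
    ∫ x : ℝ, Complex.exp (-(2 * Real.pi * Complex.I * k * x)) * (f (t, x) : ℂ) with hcdef
  have hcset : ∀ k t, c k t = ∫ x in Icc (-(1 / 2) : ℝ) (1 / 2),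
      Complex.exp (-(2 * Real.pi * Complex.I * k * x)) * (f (t, x) : ℂ) := by
    intro k t
    rw [setIntegral_eq_integral_of_forall_compl_eq_zero]
    intro x hx
    rw [hz2 t x]; · simp
    by_contra h
    push Not at h
    exact hx ⟨(abs_lt.1 h).1.le, (abs_lt.1 h).2.le⟩
  have hcc : ∀ k, Continuous (c k) := by
    intro k
    have := continuous_parametric_integral_of_continuous (μ := volume)
      (f := fun (t x : ℝ) => Complex.exp (-(2 * Real.pi * Complex.I * k * x)) * (f (t, x) : ℂ))
      (by simp only [Function.uncurry_def]; fun_prop) (isCompact_Icc (a := (-(1 / 2) : ℝ)) (b := 1 / 2))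
    exact this.congr fun t => (hcset k t).symm
  have hc0 : ∀ k t, 1 / 2 ≤ |t| → c k t = 0 := by
    intro k t ht
    simp [hcdef, hz1 t _ ht]
  have hcf : ∀ m k : ℤ, ∫ t : ℝ, Complex.exp (-(2 * Real.pi * Complex.I * m * t)) * c k t =
      fc f (m, k) := by
    intro m k
    unfold fc
    rw [Measure.volume_eq_prod, integral_prod]
    · refine integral_congr_ae (Eventually.of_forall fun t => ?_)
      simp only [hcdef]
      rw [← integral_const_mul]
      refine integral_congr_ae (Eventually.of_forall fun x => ?_)
      simp only [ex, Prod.fst_neg, Prod.snd_neg, Int.cast_neg]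
      rw [← mul_assoc, ← Complex.exp_add, mul_comm]
      congr 2; ring
    · rw [← Measure.volume_eq_prod]
      refine Integrable.mul_bdd (c := 1) hInt.ofReal (ex_continuous _).aestronglyMeasurable
        (Eventually.of_forall fun p => (norm_ex _ p).le)
  have hsum1 : ∀ k : ℤ, Summable fun m : ℤ => ‖fc f (m, k)‖ := fun k =>
    hsn.comp_injective (i := fun m : ℤ => (m, k)) fun a b h => by simpa using h
  have h1 : ∀ k : ℤ, HasSum (fun m : ℤ => fc f (m, k) *
      Complex.exp (2 * Real.pi * Complex.I * m * p.1)) (c k p.1) := by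
    intro k
    have := inversion_one (hcc k) (hc0 k) (by simp_rw [hcf]; exact (hsum1 k).of_norm) hp'.1
    simpa only [hcf] using this
  have hnexp : ∀ (m : ℤ) (t : ℝ), ‖Complex.exp (2 * Real.pi * Complex.I * m * t)‖ = 1 := by
    intro m t
    have := norm_ex (m, 0) (t, 0)
    simpa [ex, mul_assoc] using this
  have hsum2 : Summable fun k : ℤ => ‖c k p.1‖ := by
    have hsw : Summable fun n : ℤ × ℤ => ‖fc f (n.2, n.1)‖ :=
      hsn.comp_injective (i := Prod.swap) Prod.swap_injective
    refine Summable.of_nonneg_of_le (fun _ => norm_nonneg _) (fun k => ?_) hsw.prod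
    rw [← (h1 k).tsum_eq]
    refine (norm_tsum_le_tsum_norm ?_).trans (le_of_eq ?_)
    · simpa [hnexp] using hsum1 k
    · simp [hnexp]
  have h2 : HasSum (fun k : ℤ => c k p.1 * Complex.exp (2 * Real.pi * Complex.I * k * p.2))
      (f p : ℂ) := inversion_one (f := fun x => (f (p.1, x) : ℂ)) (by fun_prop)
        (fun x hx => by simp [hz2 _ x hx]) hsum2.of_norm hp'.2
  have hfull : Summable fun n => fc f n * ex n p := by
    refine Summable.of_norm ?_
    simpa [norm_ex] using hsn
  have hsw := hfull.hasSum
  have hsw' : HasSum (fun n : ℤ × ℤ => fc f (n.2, n.1) * ex (n.2, n.1) p)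
      (∑' n, fc f n * ex n p) := (Equiv.prodComm ℤ ℤ).hasSum_iff.2 hsw
  have h3 := hsw'.prod_fiberwise (g := fun k => c k p.1 *
      Complex.exp (2 * Real.pi * Complex.I * k * p.2)) (fun k => by
    have := (h1 k).mul_right (Complex.exp (2 * Real.pi * Complex.I * k * p.2))
    refine this.congr_fun fun m => ?_
    simp only [ex]
    rw [mul_assoc (fc f (m, k)), ← Complex.exp_add]
    congr 2; ring)
  rw [← h3.unique h2]
  exact hsw

/-- The coefficients of a product are dominated by the convolution of the coefficients, when
one factor has an absolutely convergent Fourier series. -/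
lemma fA_mul_le {f g : ℝ × ℝ → ℝ} (hc : Continuous f) (hf : InBox f) (hs : ∑' n, fA f n < ⊤)
    (hgi : Integrable g volume) (hg : InBox g) (n : ℤ × ℤ) :
    fA (fun p => f p * g p) n ≤ cv (fA f) (fA g) n := by
  have hsn : Summable fun n => ‖fc f n‖ := by
    have := ENNReal.summable_toReal hs.ne
    simpa [fA] using this
  have hI : ∀ m, Integrable (fun p => (g p : ℂ) * ex m p) volume := fun m =>
    Integrable.mul_bdd (c := 1) hgi.ofReal (ex_continuous _).aestronglyMeasurable
      (Eventually.of_forall fun p => (norm_ex _ p).le)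
  have key := hasSum_integral_of_summable_integral_norm (μ := volume)
    (F := fun (j : ℤ × ℤ) p => fc f j * ((g p : ℂ) * ex (-(n - j)) p))
    (fun j => (hI _).const_mul _) (by
      simp only [norm_mul, norm_ex, mul_one]
      simp_rw [integral_const_mul]
      exact hsn.mul_right _)
  have e : ∫ p, ∑' j, fc f j * ((g p : ℂ) * ex (-(n - j)) p) = fc (fun p => f p * g p) n := by
    rw [show fc (fun p => f p * g p) n = ∫ p, ((f p * g p : ℝ) : ℂ) * ex (-n) p from rfl]
    refine integral_congr_ae (Eventually.of_forall fun p => ?_)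
    simp only
    by_cases hp : ‖p‖ < 1 / 2
    · have := ((inversion hc hf hs hp).mul_right ((g p : ℂ) * ex (-n) p)).tsum_eq
      push_cast
      rw [mul_assoc, ← this]
      refine tsum_congr fun j => ?_
      rw [neg_sub, sub_eq_add_neg, ← ex_mul]
      ring
    · simp [hg p (not_lt.1 hp)]
  rw [e] at key
  simp_rw [integral_const_mul] at key
  unfold fA cv
  rw [← key.tsum_eq]
  refine (enorm_tsum_le_tsum_enorm).trans ?_
  refine ENNReal.tsum_le_tsum fun j => ?_
  rw [enorm_mul]; rfl

/-! ### Localised identities for the Fourier coefficients -/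

/-- `f'` is the partial derivative of `f` in the second (space) variable. -/
def DX {E : Type*} [NormedAddCommGroup E] [NormedSpace ℝ E] (f f' : ℝ × ℝ → E) : Prop :=
  ∀ p : ℝ × ℝ, HasDerivAt (fun y => f (p.1, y)) (f' p) p.2

/-- `f'` is the partial derivative of `f` in the first (time) variable. -/
def DT {E : Type*} [NormedAddCommGroup E] [NormedSpace ℝ E] (f f' : ℝ × ℝ → E) : Prop :=
  ∀ p : ℝ × ℝ, HasDerivAt (fun s => f (s, p.2)) (f' p) p.1

/-- Continuous functions vanishing outside the closed sup-norm ball of radius `r`. -/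
def CV {E : Type*} [NormedAddCommGroup E] (r : ℝ) (f : ℝ × ℝ → E) : Prop :=
  Continuous f ∧ ∀ p, r < ‖p‖ → f p = 0

/-- Smooth cut-off functions supported in the closed ball of radius `r`. -/
def Zr (r : ℝ) (ζ : ℝ × ℝ → ℝ) : Prop :=
  ContDiff ℝ (⊤ : ℕ∞) ζ ∧ ∀ p, r < ‖p‖ → ζ p = 0

/-- Partial derivative in space, through the Fréchet derivative. -/
def dX (ζ : ℝ × ℝ → ℝ) (p : ℝ × ℝ) : ℝ := fderiv ℝ ζ p (0, 1)

/-- Partial derivative in time, through the Fréchet derivative. -/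
def dT (ζ : ℝ × ℝ → ℝ) (p : ℝ × ℝ) : ℝ := fderiv ℝ ζ p (1, 0)

lemma Zr.cv {r : ℝ} {ζ : ℝ × ℝ → ℝ} (h : Zr r ζ) : CV r ζ := ⟨h.1.continuous, h.2⟩

lemma Zr.fderiv_apply {r : ℝ} {ζ : ℝ × ℝ → ℝ} (h : Zr r ζ) (w : ℝ × ℝ) :
    Zr r (fun p => fderiv ℝ ζ p w) := by
  refine ⟨?_, fun p hp => ?_⟩
  · exact (h.1.fderiv_right (m := (⊤ : ℕ∞)) (by simp)).clm_apply contDiff_const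
  · have : ζ =ᶠ[nhds p] fun _ => 0 := by
      filter_upwards [(isOpen_lt continuous_const continuous_norm).mem_nhds hp] with q hq
      exact h.2 q hq
    simp [this.fderiv_eq]

lemma Zr.dX {r : ℝ} {ζ : ℝ × ℝ → ℝ} (h : Zr r ζ) : Zr r (dX ζ) := h.fderiv_apply _

lemma Zr.dT {r : ℝ} {ζ : ℝ × ℝ → ℝ} (h : Zr r ζ) : Zr r (dT ζ) := h.fderiv_apply _

lemma Zr.mono {r r' : ℝ} {ζ : ℝ × ℝ → ℝ} (h : Zr r ζ) (hr : r ≤ r') : Zr r' ζ :=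
  ⟨h.1, fun p hp => h.2 p (hr.trans_lt hp)⟩

lemma Zr.hasDX {r : ℝ} {ζ : ℝ × ℝ → ℝ} (h : Zr r ζ) : DX ζ (_root_.dX ζ) := by
  intro p
  have h1 : HasFDerivAt ζ (fderiv ℝ ζ p) (p.1, p.2) :=
    (h.1.differentiable (by simp) p).hasFDerivAt
  have h2 : HasDerivAt (fun y : ℝ => (p.1, y)) ((0 : ℝ), (1 : ℝ)) p.2 :=
    (hasDerivAt_const _ _).prodMk (hasDerivAt_id _)
  exact h1.comp_hasDerivAt p.2 h2

lemma Zr.hasDT {r : ℝ} {ζ : ℝ × ℝ → ℝ} (h : Zr r ζ) : DT ζ (_root_.dT ζ) := by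
  intro p
  have h1 : HasFDerivAt ζ (fderiv ℝ ζ p) (p.1, p.2) :=
    (h.1.differentiable (by simp) p).hasFDerivAt
  have h2 : HasDerivAt (fun y : ℝ => (y, p.2)) ((1 : ℝ), (0 : ℝ)) p.1 :=
    (hasDerivAt_id _).prodMk (hasDerivAt_const _ _)
  exact h1.comp_hasDerivAt p.1 h2

lemma CV.inBox {E : Type*} [NormedAddCommGroup E] {r : ℝ} {f : ℝ × ℝ → E} (h : CV r f)
    (hr : r < 1 / 2) : InBox f := fun p hp => h.2 p (hr.trans_le hp)

lemma CV.compact {E : Type*} [NormedAddCommGroup E] {r : ℝ} {f : ℝ × ℝ → E} (h : CV r f) :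
    HasCompactSupport f :=
  HasCompactSupport.intro (isCompact_closedBall (0 : ℝ × ℝ) r) fun p hp => h.2 p (by
    simpa using hp)

lemma CV.integrable {E : Type*} [NormedAddCommGroup E] {r : ℝ} {f : ℝ × ℝ → E} (h : CV r f) :
    Integrable f volume := h.1.integrable_of_hasCompactSupport h.compact

lemma CV.mul {R : Type*} [NormedRing R] {r : ℝ} {f g : ℝ × ℝ → R} (h : CV r f)
    (hg : Continuous g) : CV r (fun p => f p * g p) :=
  ⟨h.1.mul hg, fun p hp => by simp [h.2 p hp]⟩

lemma CV.ofReal {r : ℝ} {f : ℝ × ℝ → ℝ} (h : CV r f) : CV r (fun p => (f p : ℂ)) :=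
  ⟨by have := h.1; fun_prop, fun p hp => by simp [h.2 p hp]⟩

/-- Square-integrability in terms of the lower integral of the square. -/
lemma memLp_two_of {h : ℝ × ℝ → ℝ} (hm : AEStronglyMeasurable h volume)
    (h2 : ∫⁻ p, ‖h p‖ₑ ^ 2 < ⊤) : MemLp h 2 volume := by
  refine ⟨hm, ?_⟩
  rw [eLpNorm_lt_top_iff_lintegral_rpow_enorm_lt_top (by norm_num) (by norm_num)]
  simpa using h2

lemma CV.memLp {r : ℝ} {f : ℝ × ℝ → ℝ} (h : CV r f) : MemLp f 2 volume :=
  h.1.memLp_of_hasCompactSupport h.compact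

/-- The normalised local problem on the unit box: `u = 1 + v` with `v` of size at most `ε`,
`h` the weak third space derivative of `v`, `h` of `L²` size at most `ε`, and
`v_t + ((1+v)² h)_x + ρ (1+v)^λ = 0`, tested against compactly supported functions. -/
structure UData (lam ε ρ : ℝ) (v h : ℝ × ℝ → ℝ) : Prop where
  cont : Continuous v
  small : ∀ p, ‖p‖ ≤ 1 / 2 → |v p| ≤ ε
  meas : AEStronglyMeasurable h volume
  h2 : ∫⁻ p, ‖h p‖ₑ ^ 2 ≤ ENNReal.ofReal (ε ^ 2)
  rho0 : 0 ≤ ρ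
  rho1 : ρ ≤ ε
  eps1 : ε ≤ 1 / 2
  lam1 : 1 ≤ lam
  e1 : ∀ r < (1 / 2 : ℝ), ∀ φ0 φ1 φ2 φ3 : ℝ × ℝ → ℝ, CV r φ0 → CV r φ1 → CV r φ2 → CV r φ3 →
    DX φ0 φ1 → DX φ1 φ2 → DX φ2 φ3 → ∫ p, v p * φ3 p = -∫ p, h p * φ0 p
  e2 : ∀ r < (1 / 2 : ℝ), ∀ φ φt φx : ℝ × ℝ → ℝ, CV r φ → CV r φt → CV r φx →
    DT φ φt → DX φ φx →
    (∫ p, v p * φt p) + (∫ p, h p * ((1 + v p) ^ 2 * φx p)) -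
      ρ * ∫ p, (1 + v p) ^ lam * φ p = 0

lemma DX.re {f f' : ℝ × ℝ → ℂ} (h : DX f f') : DX (fun p => (f p).re) (fun p => (f' p).re) :=
  fun p => (Complex.reCLM.hasFDerivAt.comp_hasDerivAt p.2 (h p))

lemma DX.im {f f' : ℝ × ℝ → ℂ} (h : DX f f') : DX (fun p => (f p).im) (fun p => (f' p).im) :=
  fun p => (Complex.imCLM.hasFDerivAt.comp_hasDerivAt p.2 (h p))

lemma DT.re {f f' : ℝ × ℝ → ℂ} (h : DT f f') : DT (fun p => (f p).re) (fun p => (f' p).re) :=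
  fun p => (Complex.reCLM.hasFDerivAt.comp_hasDerivAt p.1 (h p))

lemma DT.im {f f' : ℝ × ℝ → ℂ} (h : DT f f') : DT (fun p => (f p).im) (fun p => (f' p).im) :=
  fun p => (Complex.imCLM.hasFDerivAt.comp_hasDerivAt p.1 (h p))

lemma CV.re {r : ℝ} {f : ℝ × ℝ → ℂ} (h : CV r f) : CV r (fun p => (f p).re) :=
  ⟨Complex.continuous_re.comp h.1, fun p hp => by simp [h.2 p hp]⟩

lemma CV.im {r : ℝ} {f : ℝ × ℝ → ℂ} (h : CV r f) : CV r (fun p => (f p).im) :=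
  ⟨Complex.continuous_im.comp h.1, fun p hp => by simp [h.2 p hp]⟩

/-- A complex integral with a real density, split into real and imaginary parts. -/
lemma integral_split {g : ℝ × ℝ → ℝ} {φ : ℝ × ℝ → ℂ}
    (hi : Integrable (fun p => (g p : ℂ) * φ p) volume) :
    ∫ p, (g p : ℂ) * φ p = ((∫ p, g p * (φ p).re : ℝ) : ℂ) +
      ((∫ p, g p * (φ p).im : ℝ) : ℂ) * Complex.I := by
  have := integral_re_add_im hi
  simp only [RCLike.re_to_complex, RCLike.im_to_complex, Complex.mul_re, Complex.mul_im,
    Complex.ofReal_re, Complex.ofReal_im, zero_mul, sub_zero, add_zero, RCLike.I_to_complex] at this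
  exact this.symm

section
variable {lam ε ρ : ℝ} {v h : ℝ × ℝ → ℝ}

lemma UData.h_memLp (d : UData lam ε ρ v h) : MemLp h 2 volume :=
  memLp_two_of d.meas (d.h2.trans_lt ENNReal.ofReal_lt_top)

lemma UData.int_h_mul (d : UData lam ε ρ v h) {r : ℝ} {φ : ℝ × ℝ → ℝ} (hφ : CV r φ) :
    Integrable (fun p => h p * φ p) volume := d.h_memLp.integrable_mul hφ.memLp

lemma UData.int_h_mul_c (d : UData lam ε ρ v h) {r : ℝ} {φ : ℝ × ℝ → ℂ} (hφ : CV r φ) :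
    Integrable (fun p => (h p : ℂ) * φ p) volume := by
  have hm : MemLp φ 2 volume := hφ.1.memLp_of_hasCompactSupport hφ.compact
  exact d.h_memLp.ofReal.integrable_mul hm

lemma UData.cont_c (d : UData lam ε ρ v h) : Continuous fun p => (v p : ℂ) := by
  have := d.cont; fun_prop

lemma UData.cont_b (d : UData lam ε ρ v h) : Continuous fun p => (1 + v p) ^ lam := by
  have := d.cont
  exact (continuous_const.add this).rpow_const fun _ => Or.inr (by linarith [d.lam1])

lemma UData.e1c (d : UData lam ε ρ v h) {r : ℝ} (hr : r < 1 / 2) {φ0 φ1 φ2 φ3 : ℝ × ℝ → ℂ}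
    (c0 : CV r φ0) (c1 : CV r φ1) (c2 : CV r φ2) (c3 : CV r φ3)
    (d0 : DX φ0 φ1) (d1 : DX φ1 φ2) (d2 : DX φ2 φ3) :
    ∫ p, (v p : ℂ) * φ3 p = -∫ p, (h p : ℂ) * φ0 p := by
  rw [integral_split (d.int_h_mul_c c0), integral_split (φ := φ3)
    (by simpa only [mul_comm] using (c3.mul d.cont_c).integrable),
    d.e1 r hr _ _ _ _ c0.re c1.re c2.re c3.re d0.re d1.re d2.re,
    d.e1 r hr _ _ _ _ c0.im c1.im c2.im c3.im d0.im d1.im d2.im]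
  push_cast; ring

lemma UData.e2c (d : UData lam ε ρ v h) {r : ℝ} (hr : r < 1 / 2) {φ φt φx : ℝ × ℝ → ℂ}
    (c0 : CV r φ) (c1 : CV r φt) (c2 : CV r φx) (d0 : DT φ φt) (d1 : DX φ φx) :
    (∫ p, (v p : ℂ) * φt p) + (∫ p, (((1 + v p) ^ 2 * h p : ℝ) : ℂ) * φx p) -
      ρ * ∫ p, (((1 + v p) ^ lam : ℝ) : ℂ) * φ p = 0 := by
  have hc := d.cont
  have hi : Integrable (fun p => (((1 + v p) ^ 2 * h p : ℝ) : ℂ) * φx p) volume := by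
    have := d.int_h_mul_c (c2.mul (g := fun p => (((1 + v p) ^ 2 : ℝ) : ℂ)) (by fun_prop))
    refine this.congr (Eventually.of_forall fun p => ?_)
    push_cast; ring
  have hb : Continuous fun p => (((1 + v p) ^ lam : ℝ) : ℂ) :=
    Complex.continuous_ofReal.comp d.cont_b
  rw [integral_split (φ := φt) (by simpa only [mul_comm] using (c1.mul d.cont_c).integrable),
    integral_split hi,
    integral_split (φ := φ) (by simpa only [mul_comm] using (c0.mul hb).integrable)]
  have h1 := d.e2 r hr _ _ _ c0.re c1.re c2.re d0.re d1.re
  have h2 := d.e2 r hr _ _ _ c0.im c1.im c2.im d0.im d1.im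
  have e : ∀ f : ℝ × ℝ → ℝ, ∫ p, (1 + v p) ^ 2 * h p * f p =
      ∫ p, h p * ((1 + v p) ^ 2 * f p) := fun f => by
    congr 1; ext p; ring
  rw [e, e]
  have h1' := congrArg (fun x : ℝ => (x : ℂ)) h1
  have h2' := congrArg (fun x : ℝ => (x : ℂ)) h2
  push_cast at h1' h2'
  linear_combination h1' + h2' * Complex.I

/-- The symbol `2πik` of the space derivative. -/
def kap (n : ℤ × ℤ) : ℂ := 2 * Real.pi * Complex.I * n.2

/-- The symbol `2πim` of the time derivative. -/
def mu (n : ℤ × ℤ) : ℂ := 2 * Real.pi * Complex.I * n.1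

lemma ex_hasDX (n : ℤ × ℤ) (p : ℝ × ℝ) :
    HasDerivAt (fun y : ℝ => ex (-n) (p.1, y)) (-kap n * ex (-n) p) p.2 := by
  have h1 : HasDerivAt (fun y : ℝ => (2 * Real.pi * Complex.I * ((-n).1 * p.1 + (-n).2 * y) : ℂ))
      (-kap n) p.2 := by
    have h0 : HasDerivAt (fun y : ℝ => (y : ℂ)) 1 p.2 := Complex.ofRealCLM.hasDerivAt
    have := ((h0.const_mul ((-n).2 : ℂ)).const_add ((-n).1 * p.1 : ℂ)).const_mul
      (2 * Real.pi * Complex.I : ℂ)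
    refine this.congr_deriv ?_
    simp [kap]
  have := h1.cexp
  unfold ex
  convert this using 1
  ring

lemma ex_hasDT (n : ℤ × ℤ) (p : ℝ × ℝ) :
    HasDerivAt (fun s : ℝ => ex (-n) (s, p.2)) (-mu n * ex (-n) p) p.1 := by
  have h1 : HasDerivAt (fun y : ℝ => (2 * Real.pi * Complex.I * ((-n).1 * y + (-n).2 * p.2) : ℂ))
      (-mu n) p.1 := by
    have h0 : HasDerivAt (fun y : ℝ => (y : ℂ)) 1 p.1 := Complex.ofRealCLM.hasDerivAt
    have := ((h0.const_mul ((-n).1 : ℂ)).add_const ((-n).2 * p.2 : ℂ)).const_mul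
      (2 * Real.pi * Complex.I : ℂ)
    refine this.congr_deriv ?_
    simp [mu]
  have := h1.cexp
  unfold ex
  convert this using 1
  ring

/-- Multiplying a complex function by a character changes `∂_x` into `∂_x - 2πik`. -/
lemma DX.mul_ex {f f' : ℝ × ℝ → ℂ} (hf : DX f f') (n : ℤ × ℤ) :
    DX (fun p => f p * ex (-n) p) (fun p => (f' p - kap n * f p) * ex (-n) p) := by
  intro p
  have := (hf p).mul (ex_hasDX n p)
  refine this.congr_deriv ?_
  ring

lemma DT.mul_ex {f f' : ℝ × ℝ → ℂ} (hf : DT f f') (n : ℤ × ℤ) :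
    DT (fun p => f p * ex (-n) p) (fun p => (f' p - mu n * f p) * ex (-n) p) := by
  intro p
  have := (hf p).mul (ex_hasDT n p)
  refine this.congr_deriv ?_
  ring

lemma DX.ofReal {f f' : ℝ × ℝ → ℝ} (h : DX f f') :
    DX (fun p => (f p : ℂ)) (fun p => (f' p : ℂ)) :=
  fun p => (Complex.ofRealCLM.hasFDerivAt.comp_hasDerivAt p.2 (h p))

lemma DT.ofReal {f f' : ℝ × ℝ → ℝ} (h : DT f f') :
    DT (fun p => (f p : ℂ)) (fun p => (f' p : ℂ)) :=
  fun p => (Complex.ofRealCLM.hasFDerivAt.comp_hasDerivAt p.1 (h p))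

lemma DX.sub_const_mul {f f' g g' : ℝ × ℝ → ℂ} (hf : DX f f') (hg : DX g g') (c : ℂ) :
    DX (fun p => f p - c * g p) (fun p => f' p - c * g' p) :=
  fun p => (hf p).sub ((hg p).const_mul c)

lemma CV.sub_const_mul {r : ℝ} {f g : ℝ × ℝ → ℂ} (hf : CV r f) (hg : CV r g) (c : ℂ) :
    CV r (fun p => f p - c * g p) :=
  ⟨hf.1.sub (continuous_const.mul hg.1), fun p hp => by simp [hf.2 p hp, hg.2 p hp]⟩

/-- Coefficients of the third-derivative relation: `ζ h` against `ζ v` and lower order terms. -/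
lemma UData.id1 (d : UData lam ε ρ v h) {r : ℝ} (hr : r < 1 / 2) {ζ : ℝ × ℝ → ℝ} (hz : Zr r ζ)
    (n : ℤ × ℤ) :
    fc (fun p => ζ p * h p) n = kap n ^ 3 * fc (fun p => ζ p * v p) n -
      (fc (fun p => dX (dX (dX ζ)) p * v p) n - 3 * kap n * fc (fun p => dX (dX ζ) p * v p) n +
        3 * kap n ^ 2 * fc (fun p => dX ζ p * v p) n) := by
  set κ := kap n with hκ
  have z0 := hz.cv.ofReal
  have z1 := hz.dX.cv.ofReal
  have z2 := hz.dX.dX.cv.ofReal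
  have z3 := hz.dX.dX.dX.cv.ofReal
  have D0 := hz.hasDX.ofReal
  have D1 := hz.dX.hasDX.ofReal
  have D2 := hz.dX.dX.hasDX.ofReal
  have hec := ex_continuous (-n)
  have key := d.e1c hr (z0.mul hec) ((z1.sub_const_mul z0 κ).mul hec)
    (((z2.sub_const_mul z1 κ).sub_const_mul (z1.sub_const_mul z0 κ) κ).mul hec)
    ((((z3.sub_const_mul z2 κ).sub_const_mul (z2.sub_const_mul z1 κ) κ).sub_const_mul
      ((z2.sub_const_mul z1 κ).sub_const_mul (z1.sub_const_mul z0 κ) κ) κ).mul hec)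
    (D0.mul_ex n) ((D1.sub_const_mul D0 κ).mul_ex n)
    (((D2.sub_const_mul D1 κ).sub_const_mul (D1.sub_const_mul D0 κ) κ).mul_ex n)
  have hI : ∀ ξ : ℝ × ℝ → ℝ, Zr r ξ →
      Integrable (fun p => ((ξ p * v p : ℝ) : ℂ) * ex (-n) p) volume := fun ξ hξ =>
    ((hξ.cv.mul d.cont).ofReal.mul hec).integrable
  have e3 : ∫ p, (v p : ℂ) * (((((dX (dX (dX ζ)) p : ℝ) : ℂ) - κ * (dX (dX ζ) p : ℝ) -
      κ * ((dX (dX ζ) p : ℝ) - κ * (dX ζ p : ℝ))) - κ * (((dX (dX ζ) p : ℝ) - κ * (dX ζ p : ℝ)) -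
      κ * ((dX ζ p : ℝ) - κ * (ζ p : ℝ)))) * ex (-n) p) =
      fc (fun p => dX (dX (dX ζ)) p * v p) n + ((-3 * κ) * fc (fun p => dX (dX ζ) p * v p) n +
      (3 * κ ^ 2 * fc (fun p => dX ζ p * v p) n + (-κ ^ 3) * fc (fun p => ζ p * v p) n)) := by
    unfold fc
    have i0 := hI _ hz
    have i1 := hI _ hz.dX
    have i2 := hI _ hz.dX.dX
    have i3 := hI _ hz.dX.dX.dX
    have i10 : Integrable (fun p => 3 * κ ^ 2 * (((dX ζ p * v p : ℝ) : ℂ) * ex (-n) p) +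
      (-κ ^ 3) * (((ζ p * v p : ℝ) : ℂ) * ex (-n) p)) volume :=
      (i1.const_mul _).add (i0.const_mul _)
    have i210 : Integrable (fun p => (-3 * κ) * (((dX (dX ζ) p * v p : ℝ) : ℂ) * ex (-n) p) +
      (3 * κ ^ 2 * (((dX ζ p * v p : ℝ) : ℂ) * ex (-n) p) +
      (-κ ^ 3) * (((ζ p * v p : ℝ) : ℂ) * ex (-n) p))) volume :=
      (i2.const_mul _).add i10
    rw [← integral_const_mul, ← integral_const_mul, ← integral_const_mul,
      ← integral_add (i1.const_mul _) (i0.const_mul _),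
      ← integral_add (i2.const_mul _) i10, ← integral_add i3 i210]
    congr 1; ext p
    push_cast; ring
  rw [e3] at key
  have eh : ∫ p, (h p : ℂ) * ((ζ p : ℂ) * ex (-n) p) = fc (fun p => ζ p * h p) n := by
    unfold fc; congr 1; ext p; push_cast; ring
  rw [eh] at key
  linear_combination key

/-- Coefficients of the evolution equation localised by `ζ`. -/
lemma UData.id2 (d : UData lam ε ρ v h) {r : ℝ} (hr : r < 1 / 2) {ζ : ℝ × ℝ → ℝ} (hz : Zr r ζ)
    (n : ℤ × ℤ) :
    mu n * fc (fun p => ζ p * v p) n = fc (fun p => dT ζ p * v p) n +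
      fc (fun p => dX ζ p * ((1 + v p) ^ 2 * h p)) n -
      kap n * fc (fun p => ζ p * ((1 + v p) ^ 2 * h p)) n -
      ρ * fc (fun p => ζ p * (1 + v p) ^ lam) n := by
  have z0 := hz.cv.ofReal
  have z1 := hz.dX.cv.ofReal
  have zt := hz.dT.cv.ofReal
  have D0 := hz.hasDX.ofReal
  have Dt := hz.hasDT.ofReal
  have hec := ex_continuous (-n)
  have hc := d.cont
  have key := d.e2c hr (z0.mul hec) ((zt.sub_const_mul z0 (mu n)).mul hec)
    ((z1.sub_const_mul z0 (kap n)).mul hec) (Dt.mul_ex n) (D0.mul_ex n)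
  have hI : ∀ ξ : ℝ × ℝ → ℝ, Zr r ξ →
      Integrable (fun p => ((ξ p * v p : ℝ) : ℂ) * ex (-n) p) volume := fun ξ hξ =>
    ((hξ.cv.mul d.cont).ofReal.mul hec).integrable
  have hJ : ∀ ξ : ℝ × ℝ → ℝ, Zr r ξ →
      Integrable (fun p => ((ξ p * ((1 + v p) ^ 2 * h p) : ℝ) : ℂ) * ex (-n) p) volume := by
    intro ξ hξ
    have := d.int_h_mul_c (((hξ.cv.mul (g := fun p => (1 + v p) ^ 2)
      (by fun_prop)).ofReal).mul hec)
    refine this.congr (Eventually.of_forall fun p => ?_)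
    push_cast; ring
  have e1 : ∫ p, (v p : ℂ) * (((dT ζ p : ℝ) - mu n * (ζ p : ℝ)) * ex (-n) p) =
      fc (fun p => dT ζ p * v p) n + (-mu n) * fc (fun p => ζ p * v p) n := by
    unfold fc
    rw [← integral_const_mul, ← integral_add (hI _ hz.dT) ((hI _ hz).const_mul _)]
    congr 1; ext p; push_cast; ring
  have e2 : ∫ p, (((1 + v p) ^ 2 * h p : ℝ) : ℂ) *
      (((dX ζ p : ℝ) - kap n * (ζ p : ℝ)) * ex (-n) p) =
      fc (fun p => dX ζ p * ((1 + v p) ^ 2 * h p)) n +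
        (-kap n) * fc (fun p => ζ p * ((1 + v p) ^ 2 * h p)) n := by
    unfold fc
    rw [← integral_const_mul, ← integral_add (hJ _ hz.dX) ((hJ _ hz).const_mul _)]
    congr 1; ext p; push_cast; ring
  have e3 : ∫ p, (((1 + v p) ^ lam : ℝ) : ℂ) * ((ζ p : ℝ) * ex (-n) p) =
      fc (fun p => ζ p * (1 + v p) ^ lam) n := by
    unfold fc; congr 1; ext p; push_cast; ring
  rw [e1, e2, e3] at key
  linear_combination -key

end

/-! ### Iterated space derivatives and decay of coefficients -/

/-- The space derivative of a function on the plane (junk value `0` where it does not exist). -/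
def pX (f : ℝ × ℝ → ℝ) (p : ℝ × ℝ) : ℝ := deriv (fun y => f (p.1, y)) p.2

/-- `f` has `j` successive space derivatives on `U`, all of them jointly continuous there. -/
def Cx (U : Set (ℝ × ℝ)) : ℕ → (ℝ × ℝ → ℝ) → Prop
  | 0, f => ContinuousOn f U
  | j + 1, f => ContinuousOn f U ∧
      (∀ p ∈ U, DifferentiableAt ℝ (fun y => f (p.1, y)) p.2) ∧ Cx U j (pX f)

lemma Cx.continuousOn {U : Set (ℝ × ℝ)} {j : ℕ} {f : ℝ × ℝ → ℝ} (h : Cx U j f) :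
    ContinuousOn f U := by
  cases j with
  | zero => exact h
  | succ j => exact h.1

lemma Cx.pred {U : Set (ℝ × ℝ)} {j : ℕ} {f : ℝ × ℝ → ℝ} (h : Cx U (j + 1) f) : Cx U j f := by
  induction j generalizing f with
  | zero => exact h.1
  | succ j ih => exact ⟨h.1, h.2.1, ih h.2.2⟩

lemma Cx.mono {U V : Set (ℝ × ℝ)} {j : ℕ} {f : ℝ × ℝ → ℝ} (h : Cx U j f) (hV : V ⊆ U) :
    Cx V j f := by
  induction j generalizing f with
  | zero => exact ContinuousOn.mono h hV
  | succ j ih => exact ⟨h.1.mono hV, fun p hp => h.2.1 p (hV hp), ih h.2.2⟩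

lemma slice_eventually {U : Set (ℝ × ℝ)} (hU : IsOpen U) {p : ℝ × ℝ} (hp : p ∈ U) :
    ∀ᶠ y in nhds p.2, (p.1, y) ∈ U :=
  (Continuous.prodMk continuous_const continuous_id).continuousAt.eventually_mem
    (hU.mem_nhds hp)

lemma pX_congr {U : Set (ℝ × ℝ)} (hU : IsOpen U) {f g : ℝ × ℝ → ℝ} (h : ∀ p ∈ U, f p = g p)
    {p : ℝ × ℝ} (hp : p ∈ U) : pX f p = pX g p := by
  refine Filter.EventuallyEq.deriv_eq ?_
  filter_upwards [slice_eventually hU hp] with y hy using h _ hy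

lemma Cx.congr {U : Set (ℝ × ℝ)} (hU : IsOpen U) {j : ℕ} {f g : ℝ × ℝ → ℝ} (hf : Cx U j f)
    (h : ∀ p ∈ U, f p = g p) : Cx U j g := by
  induction j generalizing f g with
  | zero => exact ContinuousOn.congr hf fun p hp => (h p hp).symm
  | succ j ih =>
    refine ⟨hf.1.congr fun p hp => (h p hp).symm, fun p hp => ?_,
      ih hf.2.2 fun p hp => pX_congr hU h hp⟩
    refine (hf.2.1 p hp).congr_of_eventuallyEq ?_
    filter_upwards [slice_eventually hU hp] with y hy using (h _ hy).symm

lemma Cx.union {U V : Set (ℝ × ℝ)} (hU : IsOpen U) (hV : IsOpen V) {j : ℕ} {f : ℝ × ℝ → ℝ}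
    (h : Cx U j f) (hv : Cx V j f) : Cx (U ∪ V) j f := by
  induction j generalizing f with
  | zero => exact ContinuousOn.union_of_isOpen h hv hU hV
  | succ j ih =>
    exact ⟨ContinuousOn.union_of_isOpen h.1 hv.1 hU hV,
      fun p hp => hp.elim (h.2.1 p) (hv.2.1 p), ih h.2.2 hv.2.2⟩

/-- Recognising `Cx` from an explicit derivative. -/
lemma Cx.of_hasDeriv {U : Set (ℝ × ℝ)} (hU : IsOpen U) {j : ℕ} {f f' : ℝ × ℝ → ℝ}
    (hf : ContinuousOn f U) (hd : ∀ p ∈ U, HasDerivAt (fun y => f (p.1, y)) (f' p) p.2)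
    (h' : Cx U j f') : Cx U (j + 1) f :=
  ⟨hf, fun p hp => (hd p hp).differentiableAt, h'.congr hU fun p hp => (hd p hp).deriv.symm⟩

lemma Cx.hasDeriv {U : Set (ℝ × ℝ)} {j : ℕ} {f : ℝ × ℝ → ℝ} (h : Cx U (j + 1) f)
    {p : ℝ × ℝ} (hp : p ∈ U) : HasDerivAt (fun y => f (p.1, y)) (pX f p) p.2 :=
  (h.2.1 p hp).hasDerivAt

lemma Cx.const {U : Set (ℝ × ℝ)} (hU : IsOpen U) (c : ℝ) (j : ℕ) : Cx U j fun _ => c := by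
  induction j generalizing c with
  | zero => exact continuousOn_const
  | succ j ih =>
    exact Cx.of_hasDeriv hU continuousOn_const
      (fun p _ => hasDerivAt_const p.2 c) (ih 0)

lemma Cx.add {U : Set (ℝ × ℝ)} (hU : IsOpen U) {j : ℕ} {f g : ℝ × ℝ → ℝ} (hf : Cx U j f)
    (hg : Cx U j g) : Cx U j fun p => f p + g p := by
  induction j generalizing f g with
  | zero => exact ContinuousOn.add hf hg
  | succ j ih =>
    exact Cx.of_hasDeriv hU (hf.1.add hg.1)
      (fun p hp => (hf.hasDeriv hp).add (hg.hasDeriv hp)) (ih hf.2.2 hg.2.2)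

lemma Cx.mul {U : Set (ℝ × ℝ)} (hU : IsOpen U) {j : ℕ} {f g : ℝ × ℝ → ℝ} (hf : Cx U j f)
    (hg : Cx U j g) : Cx U j fun p => f p * g p := by
  induction j generalizing f g with
  | zero => exact ContinuousOn.mul hf hg
  | succ j ih =>
    exact Cx.of_hasDeriv hU (hf.1.mul hg.1)
      (fun p hp => (hf.hasDeriv hp).mul (hg.hasDeriv hp))
      ((ih hf.2.2 hg.pred).add hU (ih hf.pred hg.2.2))

lemma Cx.rpow {U : Set (ℝ × ℝ)} (hU : IsOpen U) {j : ℕ} {f : ℝ × ℝ → ℝ} (hf : Cx U j f)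
    (hpos : ∀ p ∈ U, 0 < f p) (s : ℝ) : Cx U j fun p => f p ^ s := by
  induction j generalizing f s with
  | zero => exact ContinuousOn.rpow_const hf fun p hp => Or.inl (hpos p hp).ne'
  | succ j ih =>
    refine Cx.of_hasDeriv hU (hf.1.rpow_const fun p hp => Or.inl (hpos p hp).ne')
      (fun p hp => (hf.hasDeriv hp).rpow_const (Or.inl (hpos p hp).ne')) ?_
    exact (hf.2.2.mul hU (Cx.const hU s j)).mul hU (ih hf.pred hpos (s - 1))

lemma Zr.cx {r : ℝ} {ζ : ℝ × ℝ → ℝ} (h : Zr r ζ) (j : ℕ) : Cx univ j ζ := by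
  induction j generalizing ζ with
  | zero => exact h.1.continuous.continuousOn
  | succ j ih =>
    exact Cx.of_hasDeriv isOpen_univ h.1.continuous.continuousOn
      (fun p _ => h.hasDX p) (ih h.dX)

lemma ex_hasDX' (n : ℤ × ℤ) (p : ℝ × ℝ) :
    HasDerivAt (fun y : ℝ => ex n (p.1, y)) (kap n * ex n p) p.2 := by
  have := ex_hasDX (-n) p
  rw [neg_neg] at this
  refine this.congr_deriv ?_
  simp [kap]

lemma norm_kap (n : ℤ × ℤ) : ‖kap n‖ = 2 * Real.pi * |(n.2 : ℝ)| := by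
  simp [kap, abs_of_pos Real.pi_pos]

/-- Sums of Fourier series with enough decay have continuous space derivatives. -/
lemma cx_series (j : ℕ) (c : ℤ × ℤ → ℂ)
    (hs : Summable fun n => (1 + |(n.2 : ℝ)|) ^ j * ‖c n‖) :
    Cx univ j fun p => (∑' n, c n * ex n p).re := by
  have h1 : ∀ n : ℤ × ℤ, (1 : ℝ) ≤ 1 + |(n.2 : ℝ)| := fun n => by simp
  have hs0 : Summable fun n => ‖c n‖ := Summable.of_nonneg_of_le (fun _ => norm_nonneg _)
    (fun n => le_mul_of_one_le_left (norm_nonneg _) (one_le_pow₀ (h1 n))) hs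
  have hcont : Continuous fun p => (∑' n, c n * ex n p).re := by
    refine Complex.continuous_re.comp (continuous_tsum
      (fun n => continuous_const.mul (ex_continuous n)) hs0 fun n p => ?_)
    simp [norm_ex]
  induction j generalizing c with
  | zero => exact hcont.continuousOn
  | succ j ih =>
    have hs' : Summable fun n : ℤ × ℤ => (1 + |(n.2 : ℝ)|) ^ j * ‖kap n * c n‖ := by
      refine Summable.of_nonneg_of_le (fun _ => by positivity) (fun n => ?_)
        (hs.mul_left (2 * Real.pi))
      rw [norm_mul, norm_kap, pow_succ]
      have : 0 ≤ 2 * Real.pi * (1 + |(n.2 : ℝ)|) ^ j * ‖c n‖ := by positivity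
      nlinarith
    have hsk : Summable fun n : ℤ × ℤ => ‖kap n * c n‖ :=
      Summable.of_nonneg_of_le (fun _ => norm_nonneg _)
        (fun n => le_mul_of_one_le_left (norm_nonneg _) (one_le_pow₀ (h1 n))) hs'
    refine Cx.of_hasDeriv isOpen_univ hcont.continuousOn (fun p _ => ?_)
      (ih (fun n => kap n * c n) hs' hsk ?_)
    · have := hasDerivAt_tsum (𝕜 := ℝ) (g := fun n (y : ℝ) => c n * ex n (p.1, y))
        (g' := fun n (y : ℝ) => kap n * c n * ex n (p.1, y)) (y₀ := p.2) hsk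
        (fun n y => by
          have := (ex_hasDX' n (p.1, y)).const_mul (c n)
          refine this.congr_deriv (by ring))
        (fun n y => by rw [norm_mul, norm_ex, mul_one])
        (Summable.of_norm (by simpa [norm_ex] using hs0)) p.2
      exact Complex.reCLM.hasFDerivAt.comp_hasDerivAt p.2 this
    · refine Complex.continuous_re.comp (continuous_tsum
        (fun n => continuous_const.mul (ex_continuous n)) hsk fun n p => ?_)
      simp [norm_ex]

lemma fA_ne_top (f : ℝ × ℝ → ℝ) (n : ℤ × ℤ) : fA f n ≠ ⊤ := by simp [fA]

lemma yw_pow_four_mul (n : ℤ × ℤ) (j : ℕ) :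
    yw n ^ (4 * j) = ENNReal.ofReal ((1 + |(n.2 : ℝ)|) ^ j) := by
  rw [pow_mul, yw_pow_four, ENNReal.ofReal_pow (by positivity)]

lemma tsum_fA_le {f : ℝ × ℝ → ℝ} {j : ℕ} (h : ∑' n, yw n ^ j * fA f n < ⊤) :
    ∑' n, fA f n < ⊤ :=
  (ENNReal.tsum_le_tsum fun n => by
    calc fA f n = 1 * fA f n := (one_mul _).symm
      _ ≤ _ := by gcongr; exact one_le_pow₀ (one_le_yw n)).trans_lt h

/-- Weighted absolute convergence of the Fourier series yields classical space derivatives. -/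
lemma cx_of_summable {r : ℝ} (hr : r < 1 / 2) {f : ℝ × ℝ → ℝ} (hf : CV r f) (j : ℕ)
    (hs : ∑' n, yw n ^ (4 * j) * fA f n < ⊤) : Cx univ j f := by
  have hs' : Summable fun n : ℤ × ℤ => (1 + |(n.2 : ℝ)|) ^ j * ‖fc f n‖ := by
    have := ENNReal.summable_toReal hs.ne
    refine this.congr fun n => ?_
    rw [yw_pow_four_mul, ENNReal.toReal_mul, ENNReal.toReal_ofReal (by positivity)]
    simp [fA]
  have h1 : Cx {p | ‖p‖ < 1 / 2} j f := by
    refine ((cx_series j _ hs').mono (subset_univ _)).congr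
      (isOpen_lt continuous_norm continuous_const) fun p hp => ?_
    rw [(inversion hf.1 (hf.inBox hr) (tsum_fA_le hs) hp).tsum_eq]
    simp
  have h2 : Cx {p | r < ‖p‖} j f :=
    (Cx.const (isOpen_lt continuous_const continuous_norm) 0 j).congr
      (isOpen_lt continuous_const continuous_norm) fun p hp => (hf.2 p hp).symm
  refine (h1.union (isOpen_lt continuous_norm continuous_const)
    (isOpen_lt continuous_const continuous_norm) h2).mono fun p _ => ?_
  rcases lt_or_ge ‖p‖ (1 / 2) with h | h
  · exact Or.inl h
  · exact Or.inr (hr.trans_le h)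

lemma integral_DX_eq_zero {r : ℝ} {G G' : ℝ × ℝ → ℂ} (hG : CV r G) (hG' : CV r G')
    (hd : DX G G') : ∫ p, G' p = 0 := by
  have hi : ∀ {F : ℝ × ℝ → ℂ}, CV r F → ∀ t, Integrable (fun y => F (t, y)) volume := by
    intro F hF t
    refine Continuous.integrable_of_hasCompactSupport
      (hF.1.comp (continuous_const.prodMk continuous_id)) ?_
    refine HasCompactSupport.intro (isCompact_closedBall (0 : ℝ) r) fun y hy => hF.2 _ ?_
    simp only [Metric.mem_closedBall, dist_zero_right, not_le] at hy
    exact hy.trans_le (by rw [Prod.norm_def]; exact le_max_right _ _)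
  have hInt := hG'.integrable
  rw [Measure.volume_eq_prod] at hInt ⊢
  rw [integral_prod _ hInt]
  have : ∀ t, ∫ y, G' (t, y) = 0 := fun t =>
    integral_eq_zero_of_hasDerivAt_of_integrable (fun y => hd (t, y)) (hi hG' t) (hi hG t)
  simp [this]

lemma CV.pX {r : ℝ} {f : ℝ × ℝ → ℝ} (hf : CV r f) (hc : Cx univ 1 f) : CV r (pX f) := by
  refine ⟨continuousOn_univ.1 hc.2.2, fun p hp => ?_⟩
  rw [pX_congr (isOpen_lt continuous_const continuous_norm)
    (fun q (hq : r < ‖q‖) => hf.2 q hq) hp]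
  simp [_root_.pX]

lemma fc_pX {r : ℝ} {f : ℝ × ℝ → ℝ} (hf : CV r f) (hc : Cx univ 1 f)
    (n : ℤ × ℤ) : kap n * fc f n = fc (pX f) n := by
  have hD : DX f (pX f) := fun p => hc.hasDeriv (mem_univ p)
  have h' := hf.pX hc
  have hec := ex_continuous (-n)
  have key := integral_DX_eq_zero (hf.ofReal.mul hec)
    ((h'.ofReal.sub_const_mul hf.ofReal (kap n)).mul hec) (hD.ofReal.mul_ex n)
  have i1 := (h'.ofReal.mul hec).integrable
  have i2 := (hf.ofReal.mul hec).integrable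
  have e : ∫ p, (((pX f p : ℝ) : ℂ) - kap n * (f p : ℝ)) * ex (-n) p =
      fc (pX f) n - kap n * fc f n := by
    unfold fc
    rw [← integral_const_mul, ← integral_sub i1 (i2.const_mul _)]
    congr 1; ext p; ring
  rw [e] at key
  linear_combination -key

lemma lintegral_sq_lt_top {r : ℝ} {f : ℝ × ℝ → ℝ} (hf : CV r f) : ∫⁻ p, ‖f p‖ₑ ^ 2 < ⊤ := by
  have h := hf.memLp.2
  rw [eLpNorm_lt_top_iff_lintegral_rpow_enorm_lt_top (by norm_num) (by norm_num)] at h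
  simpa using h

/-- Classical space derivatives give weighted `ℓ²` decay of the coefficients. -/
lemma S2_of_cx {r : ℝ} (hr : r < 1 / 2) (j : ℕ) {f : ℝ × ℝ → ℝ} (hf : CV r f)
    (hc : Cx univ j f) : S2 (fun n => yw n ^ (4 * j) * fA f n) < ⊤ := by
  induction j generalizing f with
  | zero =>
    simp only [mul_zero, pow_zero, one_mul]
    exact (bessel hf.1.aestronglyMeasurable (hf.inBox hr)).trans_lt (lintegral_sq_lt_top hf)
  | succ j ih =>
    have hc1 : Cx univ 1 f := ⟨hc.1, hc.2.1, hc.2.2.continuousOn⟩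
    refine lt_of_le_of_lt (S2_mono fun n => ?_) (S2_add_lt_top (ih hf hc.pred)
      (ih (hf.pX hc1) hc.2.2))
    rw [mul_add, pow_add, mul_one, ← mul_add, mul_assoc]
    gcongr
    have e : fA (pX f) n = ENNReal.ofReal (2 * Real.pi * |(n.2 : ℝ)|) * fA f n := by
      unfold fA
      rw [← fc_pX hf hc1, enorm_mul, ← norm_kap, ofReal_norm]
    rw [e, yw_pow_four, ENNReal.ofReal_add (by norm_num) (by positivity), add_mul,
      ENNReal.ofReal_one, one_mul]
    gcongr
    have := Real.pi_gt_three
    nlinarith [abs_nonneg (n.2 : ℝ)]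

/-! ### Pointwise inequalities between Fourier coefficients -/

/-- Real version of the weight `yw`. -/
def eta (n : ℤ × ℤ) : ℝ := (1 + |(n.2 : ℝ)|) ^ (1 / 4 : ℝ)

lemma yw_eq (n : ℤ × ℤ) : yw n = ENNReal.ofReal (eta n) := rfl

lemma eta_one_le (n : ℤ × ℤ) : 1 ≤ eta n := Real.one_le_rpow (by simp) (by norm_num)

lemma eta_nonneg (n : ℤ × ℤ) : 0 ≤ eta n := zero_le_one.trans (eta_one_le n)

lemma eta_pow_four (n : ℤ × ℤ) : eta n ^ 4 = 1 + |(n.2 : ℝ)| := by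
  unfold eta
  rw [← Real.rpow_natCast, ← Real.rpow_mul (by positivity)]
  norm_num

lemma fA_eq (f : ℝ × ℝ → ℝ) (n : ℤ × ℤ) : fA f n = ENNReal.ofReal ‖fc f n‖ := by
  rw [fA, ofReal_norm]

lemma ofReal_600 : (600 : ENNReal) = ENNReal.ofReal 600 := by norm_num

lemma kap_le (n : ℤ × ℤ) : ‖kap n‖ ≤ 7 * eta n ^ 4 := by
  rw [norm_kap, eta_pow_four]
  nlinarith [Real.pi_lt_d2, abs_nonneg (n.2 : ℝ)]

section
variable {lam ε ρ : ℝ} {v h : ℝ × ℝ → ℝ}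

lemma norm_R_le (n : ℤ × ℤ) (V1 V2 V3 : ℂ) :
    ‖V3 - 3 * kap n * V2 + 3 * kap n ^ 2 * V1‖ ≤
      ‖V3‖ + 21 * eta n ^ 4 * ‖V2‖ + 147 * eta n ^ 8 * ‖V1‖ := by
  have hk := kap_le n
  have h2 : ‖3 * kap n * V2‖ ≤ 21 * eta n ^ 4 * ‖V2‖ := by
    rw [norm_mul, norm_mul]
    norm_num
    nlinarith [norm_nonneg V2]
  have h1 : ‖3 * kap n ^ 2 * V1‖ ≤ 147 * eta n ^ 8 * ‖V1‖ := by
    rw [norm_mul, norm_mul, norm_pow]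
    norm_num
    have : ‖kap n‖ ^ 2 ≤ (7 * eta n ^ 4) ^ 2 := pow_le_pow_left₀ (norm_nonneg _) hk 2
    have : 3 * ‖kap n‖ ^ 2 ≤ 147 * eta n ^ 8 := by nlinarith
    exact mul_le_mul_of_nonneg_right this (norm_nonneg _)
  calc _ ≤ ‖V3 - 3 * kap n * V2‖ + ‖3 * kap n ^ 2 * V1‖ := norm_add_le _ _
    _ ≤ ‖V3‖ + ‖3 * kap n * V2‖ + ‖3 * kap n ^ 2 * V1‖ := by gcongr; exact norm_sub_le _ _
    _ ≤ _ := by gcongr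

lemma real_J1 (n : ℤ × ℤ) {X H V1 V2 V3 : ℂ}
    (e : H = kap n ^ 3 * X - (V3 - 3 * kap n * V2 + 3 * kap n ^ 2 * V1)) :
    eta n ^ 12 * ‖X‖ ≤ 600 * (‖X‖ + ‖H‖ + ‖V3‖ + eta n ^ 4 * ‖V2‖ + eta n ^ 8 * ‖V1‖) := by
  have hR := norm_R_le n V1 V2 V3
  have e' : kap n ^ 3 * X = H + (V3 - 3 * kap n * V2 + 3 * kap n ^ 2 * V1) := by rw [e]; ring
  have h1 : ‖kap n‖ ^ 3 * ‖X‖ ≤ ‖H‖ + (‖V3‖ + 21 * eta n ^ 4 * ‖V2‖ + 147 * eta n ^ 8 * ‖V1‖) := by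
    rw [← norm_pow, ← norm_mul, e']
    exact (norm_add_le _ _).trans (by gcongr)
  have h2 : |(n.2 : ℝ)| ≤ ‖kap n‖ := by
    rw [norm_kap]
    nlinarith [Real.pi_gt_three, abs_nonneg (n.2 : ℝ)]
  have h3 : eta n ^ 12 ≤ 4 + 4 * ‖kap n‖ ^ 3 := by
    have : eta n ^ 12 = (1 + |(n.2 : ℝ)|) ^ 3 := by rw [← eta_pow_four]; ring
    rw [this]
    have h4 : |(n.2 : ℝ)| ^ 3 ≤ ‖kap n‖ ^ 3 := pow_le_pow_left₀ (abs_nonneg _) h2 3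
    have ha := abs_nonneg (n.2 : ℝ)
    nlinarith [mul_nonneg (add_nonneg ha zero_le_one) (sq_nonneg (|(n.2 : ℝ)| - 1))]
  have hX := norm_nonneg X
  have hH := norm_nonneg H
  have hV3 := norm_nonneg V3
  have e4 : 0 ≤ eta n ^ 4 * ‖V2‖ := by have := eta_nonneg n; positivity
  have e8 : 0 ≤ eta n ^ 8 * ‖V1‖ := by have := eta_nonneg n; positivity
  nlinarith [mul_le_mul_of_nonneg_right h3 hX]

lemma real_J1' {y X H V1 V2 V3 : ℝ} (hy : 1 ≤ y) (hX : 0 ≤ X) (hH : 0 ≤ H) (_ : 0 ≤ V1)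
    (h2 : 0 ≤ V2) (h3 : 0 ≤ V3) (e : y ^ 12 * X ≤ 600 * (X + H + V3 + y ^ 4 * V2 + y ^ 8 * V1))
    {s n : ℕ} (hs : s ≤ n + 8) :
    y ^ (s + 4) * X ≤ 600 * (y ^ s * X + y ^ n * H + y ^ s * V3 + y ^ s * V2 + y ^ s * V1) := by
  have y0 : 0 < y := by linarith
  refine le_of_mul_le_mul_left ?_ (pow_pos y0 12)
  calc y ^ 12 * (y ^ (s + 4) * X) = y ^ (s + 4) * (y ^ 12 * X) := by ring
    _ ≤ y ^ (s + 4) * (600 * (X + H + V3 + y ^ 4 * V2 + y ^ 8 * V1)) := by gcongr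
    _ = 600 * (y ^ (s + 4) * X + y ^ (s + 4) * H + y ^ (s + 4) * V3 + y ^ (s + 8) * V2 +
        y ^ (s + 12) * V1) := by ring
    _ ≤ 600 * (y ^ (s + 12) * X + y ^ (n + 12) * H + y ^ (s + 12) * V3 + y ^ (s + 12) * V2 +
        y ^ (s + 12) * V1) := by
      have p1 : y ^ (s + 4) ≤ y ^ (s + 12) := pow_le_pow_right₀ hy (by omega)
      have p2 : y ^ (s + 4) ≤ y ^ (n + 12) := pow_le_pow_right₀ hy (by omega)
      have p3 : y ^ (s + 8) ≤ y ^ (s + 12) := pow_le_pow_right₀ hy (by omega)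
      gcongr 600 * (?_ * X + ?_ * H + ?_ * V3 + ?_ * V2 + _)
    _ = _ := by ring

/-- Four more powers of the weight on `ζ v`, at the price of `ζ h` and of cut-off derivatives. -/
lemma UData.J1 (d : UData lam ε ρ v h) {r : ℝ} (hr : r < 1 / 2) {ζ : ℝ × ℝ → ℝ} (hz : Zr r ζ)
    {s k : ℕ} (hs : s ≤ k + 8) (n : ℤ × ℤ) :
    yw n ^ (s + 4) * fA (fun p => ζ p * v p) n ≤
      600 * (yw n ^ s * fA (fun p => ζ p * v p) n + yw n ^ k * fA (fun p => ζ p * h p) n +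
        yw n ^ s * fA (fun p => dX (dX (dX ζ)) p * v p) n +
        yw n ^ s * fA (fun p => dX (dX ζ) p * v p) n +
        yw n ^ s * fA (fun p => dX ζ p * v p) n) := by
  have key := real_J1' (eta_one_le n) (norm_nonneg _) (norm_nonneg _) (norm_nonneg _)
    (norm_nonneg _) (norm_nonneg _) (real_J1 n (d.id1 hr hz n)) hs
  have := eta_nonneg n
  simp (disch := positivity) only [yw_eq, fA_eq, ofReal_600, ← ENNReal.ofReal_pow,
    ← ENNReal.ofReal_mul, ← ENNReal.ofReal_add]
  exact ENNReal.ofReal_le_ofReal key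

lemma norm_mu (n : ℤ × ℤ) : ‖mu n‖ = 2 * Real.pi * |(n.1 : ℝ)| := by
  simp [mu, abs_of_pos Real.pi_pos]

lemma norm_L_le {ρ : ℝ} (hρ : 0 ≤ ρ) (Vt A1 B : ℂ) :
    ‖Vt + A1 - ρ * B‖ ≤ ‖Vt‖ + ‖A1‖ + ρ * ‖B‖ := by
  have : ‖(ρ : ℂ) * B‖ = ρ * ‖B‖ := by
    rw [norm_mul, Complex.norm_real, Real.norm_of_nonneg hρ]
  rw [← this]
  exact (norm_sub_le _ _).trans (by gcongr; exact norm_add_le _ _)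

/-- The evolution equation on the Fourier side, in the form required by `gain`. -/
lemma UData.J2 (d : UData lam ε ρ v h) {r : ℝ} (hr : r < 1 / 2) {ζ : ℝ × ℝ → ℝ} (hz : Zr r ζ)
    (k : ℕ) (n : ℤ × ℤ) :
    yw n ^ k * (ENNReal.ofReal |(n.1 : ℝ)| + yw n ^ 16) * fA (fun p => ζ p * v p) n ≤
      yw n ^ 4 * (yw n ^ k * fA (fun p => dT ζ p * v p) n +
        yw n ^ k * fA (fun p => dX ζ p * ((1 + v p) ^ 2 * h p)) n +
        yw n ^ k * ((yw n ^ 4)⁻¹ * (ENNReal.ofReal ρ * fA (fun p => ζ p * (1 + v p) ^ lam) n)) +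
        yw n ^ k * fA (fun p => ζ p * ((1 + v p) ^ 2 * h p)) n +
        yw n ^ (k + 12) * fA (fun p => ζ p * v p) n) := by
  have e := d.id2 hr hz n
  set X := fc (fun p => ζ p * v p) n
  set Vt := fc (fun p => dT ζ p * v p) n
  set A1 := fc (fun p => dX ζ p * ((1 + v p) ^ 2 * h p)) n
  set A := fc (fun p => ζ p * ((1 + v p) ^ 2 * h p)) n
  set B := fc (fun p => ζ p * (1 + v p) ^ lam) n
  have hρ := d.rho0
  have hy := eta_one_le n
  have y0 : 0 < eta n := by linarith
  have e1 : |(n.1 : ℝ)| * ‖X‖ ≤ ‖Vt‖ + ‖A1‖ + ρ * ‖B‖ + eta n ^ 4 * ‖A‖ := by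
    have e2 : ‖mu n * X‖ ≤ ‖Vt‖ + ‖A1‖ + ρ * ‖B‖ + ‖kap n‖ * ‖A‖ := by
      have : mu n * X = (Vt + A1 - ρ * B) - kap n * A := by rw [e]; ring
      rw [this, ← norm_mul]
      exact (norm_sub_le _ _).trans (by gcongr; exact norm_L_le hρ _ _ _)
    rw [norm_mul, norm_mu, norm_kap] at e2
    have h0 : 0 ≤ ‖Vt‖ + ‖A1‖ + ρ * ‖B‖ := by positivity
    rw [eta_pow_four]
    have hA := norm_nonneg A
    have hp : (1 : ℝ) ≤ 2 * Real.pi := by linarith [Real.pi_gt_three]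
    refine le_of_mul_le_mul_left ?_ (zero_lt_one.trans_le hp)
    nlinarith [mul_le_mul_of_nonneg_right hp h0, mul_le_mul_of_nonneg_right hp hA]
  have key : eta n ^ k * (|(n.1 : ℝ)| + eta n ^ 16) * ‖X‖ ≤
      eta n ^ 4 * (eta n ^ k * ‖Vt‖ + eta n ^ k * ‖A1‖ + eta n ^ k * ((eta n ^ 4)⁻¹ * (ρ * ‖B‖)) +
        eta n ^ k * ‖A‖ + eta n ^ (k + 12) * ‖X‖) := by
    have h4 : 1 ≤ eta n ^ 4 := one_le_pow₀ hy
    have h5 : eta n ^ 4 * (eta n ^ k * ((eta n ^ 4)⁻¹ * (ρ * ‖B‖))) = eta n ^ k * (ρ * ‖B‖) := by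
      field_simp
    calc eta n ^ k * (|(n.1 : ℝ)| + eta n ^ 16) * ‖X‖
        = eta n ^ k * (|(n.1 : ℝ)| * ‖X‖) + eta n ^ 4 * (eta n ^ (k + 12) * ‖X‖) := by ring
      _ ≤ eta n ^ k * (eta n ^ 4 * ‖Vt‖ + eta n ^ 4 * ‖A1‖ + ρ * ‖B‖ + eta n ^ 4 * ‖A‖) +
          eta n ^ 4 * (eta n ^ (k + 12) * ‖X‖) := by
        gcongr
        refine e1.trans ?_
        gcongr <;> exact le_mul_of_one_le_left (norm_nonneg _) h4
      _ = _ := by rw [mul_add (eta n ^ 4), mul_add (eta n ^ 4), mul_add (eta n ^ 4), h5]; ring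
  simp (disch := positivity) only [yw_eq, fA_eq, ← ENNReal.ofReal_pow, ← ENNReal.ofReal_inv_of_pos,
    ← ENNReal.ofReal_mul, ← ENNReal.ofReal_add]
  exact ENNReal.ofReal_le_ofReal key

lemma real_J3 (n : ℤ × ℤ) {X H C R L : ℂ} (e1 : H = kap n ^ 3 * X - R)
    (e2 : mu n * X = L - kap n * (H + C)) : ‖H‖ ≤ ‖C‖ + ‖R‖ + (eta n ^ 4)⁻¹ * ‖L‖ := by
  have y0 : 0 < eta n := zero_lt_one.trans_le (eta_one_le n)
  rcases eq_or_ne n.2 0 with hk | hk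
  · have : kap n = 0 := by simp [kap, hk]
    rw [e1, this]
    have : 0 ≤ (eta n ^ 4)⁻¹ * ‖L‖ := by positivity
    simp
    linarith [norm_nonneg C]
  · have e3 : (kap n ^ 4 + mu n) * H = kap n ^ 3 * L - kap n ^ 4 * C - mu n * R := by
      linear_combination (kap n ^ 3) * e2 + mu n * e1
    set K := ‖kap n‖ with hK
    have hKe : eta n ^ 4 ≤ K := by
      rw [hK, norm_kap, eta_pow_four]
      have : (1 : ℝ) ≤ |(n.2 : ℝ)| := by exact_mod_cast Int.one_le_abs hk
      nlinarith [Real.pi_gt_three]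
    have hK0 : 0 < K := (pow_pos y0 4).trans_le hKe
    have hk4 : kap n ^ 4 = ((2 * Real.pi * n.2) ^ 4 : ℝ) := by
      unfold kap
      rw [mul_pow, mul_pow, Complex.I_pow_four]
      push_cast; ring
    have hmu : mu n = ((2 * Real.pi * n.1 : ℝ) : ℂ) * Complex.I := by
      unfold mu; push_cast; ring
    have hre : (kap n ^ 4 + mu n).re = (2 * Real.pi * n.2) ^ 4 := by
      rw [hk4, hmu, Complex.add_re, Complex.ofReal_re, Complex.re_ofReal_mul]; simp
    have him : (kap n ^ 4 + mu n).im = 2 * Real.pi * n.1 := by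
      rw [hk4, hmu, Complex.add_im, Complex.ofReal_im, Complex.im_ofReal_mul]; simp
    have hK4 : K ^ 4 ≤ ‖kap n ^ 4 + mu n‖ := by
      refine le_trans (le_of_eq ?_) (Complex.abs_re_le_norm _)
      rw [hre, hK, ← norm_pow, hk4, Complex.norm_real, Real.norm_eq_abs]
    have hM4 : ‖mu n‖ ≤ ‖kap n ^ 4 + mu n‖ := by
      refine le_trans (le_of_eq ?_) (Complex.abs_im_le_norm _)
      rw [him, hmu, norm_mul, Complex.norm_real, Complex.norm_I, mul_one, Real.norm_eq_abs]
    set D := ‖kap n ^ 4 + mu n‖ with hD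
    have hD0 : 0 < D := (pow_pos hK0 4).trans_le hK4
    have h4 : D * ‖H‖ ≤ K ^ 3 * ‖L‖ + K ^ 4 * ‖C‖ + ‖mu n‖ * ‖R‖ := by
      rw [hD, ← norm_mul, e3, hK, ← norm_pow, ← norm_pow, ← norm_mul, ← norm_mul, ← norm_mul]
      exact (norm_sub_le _ _).trans (by gcongr; exact norm_sub_le _ _)
    refine le_of_mul_le_mul_left (h4.trans ?_) hD0
    have h5 : K ^ 3 * ‖L‖ ≤ D * ((eta n ^ 4)⁻¹ * ‖L‖) := by
      rw [← mul_assoc]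
      gcongr
      rw [← div_eq_mul_inv, le_div_iff₀ (pow_pos y0 4)]
      calc K ^ 3 * eta n ^ 4 ≤ K ^ 3 * K := by gcongr
        _ = K ^ 4 := by ring
        _ ≤ D := hK4
    have h6 : K ^ 4 * ‖C‖ ≤ D * ‖C‖ := by gcongr
    have h7 : ‖mu n‖ * ‖R‖ ≤ D * ‖R‖ := by gcongr
    linarith [mul_add D (‖C‖ + ‖R‖) ((eta n ^ 4)⁻¹ * ‖L‖), mul_add D ‖C‖ ‖R‖]

/-- The right-hand side of the equation for `ζ h` apart from the quasilinear term. -/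
def PhiT (lam ρ : ℝ) (v h ζ : ℝ × ℝ → ℝ) (n : ℤ × ℤ) : ENNReal :=
  fA (fun p => dX (dX (dX ζ)) p * v p) n + 21 * (yw n ^ 4 * fA (fun p => dX (dX ζ) p * v p) n) +
    147 * (yw n ^ 8 * fA (fun p => dX ζ p * v p) n) +
    (yw n ^ 4)⁻¹ * (fA (fun p => dT ζ p * v p) n +
      fA (fun p => dX ζ p * ((1 + v p) ^ 2 * h p)) n +
      ENNReal.ofReal ρ * fA (fun p => ζ p * (1 + v p) ^ lam) n)

lemma Zr.smul_h (d : UData lam ε ρ v h) {r : ℝ} {ζ c : ℝ × ℝ → ℝ} (hz : Zr r ζ)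
    (hc : Continuous c) : Integrable (fun p => ζ p * (c p * h p)) volume := by
  refine (d.int_h_mul (hz.cv.mul hc)).congr (Eventually.of_forall fun p => ?_)
  simp only
  ring

lemma UData.fc_ah (d : UData lam ε ρ v h) {r : ℝ} {ζ : ℝ × ℝ → ℝ} (hz : Zr r ζ) (n : ℤ × ℤ) :
    fc (fun p => ζ p * ((1 + v p) ^ 2 * h p)) n =
      fc (fun p => ζ p * h p) n + fc (fun p => ζ p * ((2 * v p + v p ^ 2) * h p)) n := by
  unfold fc
  have hvc := d.cont
  have i : ∀ c : ℝ × ℝ → ℝ, Continuous c →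
      Integrable (fun p => ((ζ p * (c p * h p) : ℝ) : ℂ) * ex (-n) p) volume := by
    intro c hc
    refine (hz.smul_h d hc).ofReal.mul_bdd (c := 1)
      (ex_continuous _).aestronglyMeasurable (Eventually.of_forall fun p => (norm_ex _ p).le)
  have i1 := i (fun _ => 1) continuous_const
  simp only [one_mul] at i1
  rw [← integral_add i1 (i _ (by fun_prop))]
  congr 1; ext p
  push_cast; ring

/-- Elliptic-type bound for `ζ h` obtained by eliminating `ζ v` between the two identities. -/
lemma UData.J3 (d : UData lam ε ρ v h) {r : ℝ} (hr : r < 1 / 2) {ζ : ℝ × ℝ → ℝ} (hz : Zr r ζ)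
    (n : ℤ × ℤ) :
    fA (fun p => ζ p * h p) n ≤ fA (fun p => ζ p * ((2 * v p + v p ^ 2) * h p)) n +
      PhiT lam ρ v h ζ n := by
  have e1 := d.id1 hr hz n
  have e2 := d.id2 hr hz n
  have hA := d.fc_ah hz n
  rw [hA] at e2
  set X := fc (fun p => ζ p * v p) n
  set Vt := fc (fun p => dT ζ p * v p) n
  set A1 := fc (fun p => dX ζ p * ((1 + v p) ^ 2 * h p)) n
  set B := fc (fun p => ζ p * (1 + v p) ^ lam) n
  set H := fc (fun p => ζ p * h p) n
  set C := fc (fun p => ζ p * ((2 * v p + v p ^ 2) * h p)) n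
  have key := real_J3 n (C := C) (L := Vt + A1 - ρ * B) e1 (by rw [e2]; ring)
  have hρ := d.rho0
  have y0 : 0 < eta n := zero_lt_one.trans_le (eta_one_le n)
  have k2 := norm_R_le n (fc (fun p => dX ζ p * v p) n) (fc (fun p => dX (dX ζ) p * v p) n)
    (fc (fun p => dX (dX (dX ζ)) p * v p) n)
  have k3 := mul_le_mul_of_nonneg_left (norm_L_le hρ Vt A1 B)
    (inv_nonneg.2 (pow_nonneg y0.le 4))
  have h21 : (21 : ENNReal) = ENNReal.ofReal 21 := by norm_num
  have h147 : (147 : ENNReal) = ENNReal.ofReal 147 := by norm_num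
  unfold PhiT
  simp (disch := positivity) only [yw_eq, fA_eq, ← ENNReal.ofReal_pow, h21, h147,
    ← ENNReal.ofReal_inv_of_pos, ← ENNReal.ofReal_mul, ← ENNReal.ofReal_add]
  refine ENNReal.ofReal_le_ofReal ?_
  linarith

end

/-! ### Interior regularity of the normalised problem -/

lemma exists_cutoff {r1 r : ℝ} (h1 : 0 < r1) (h : r1 < r) :
    ∃ χ : ℝ × ℝ → ℝ, Zr r χ ∧ (∀ p, 0 ≤ χ p ∧ χ p ≤ 1) ∧ ∀ p, ‖p‖ ≤ r1 → χ p = 1 := by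
  let f : ContDiffBump (0 : ℝ × ℝ) := ⟨r1, r, h1, h⟩
  refine ⟨f, ⟨f.contDiff, fun p hp => f.zero_of_le_dist ?_⟩, fun p => ⟨f.nonneg, f.le_one⟩,
    fun p hp => f.one_of_mem_closedBall ?_⟩
  · simpa [f] using hp.le
  · simpa [f] using hp

lemma fc_integrable {f : ℝ × ℝ → ℝ} (hf : Integrable f volume) (n : ℤ × ℤ) :
    Integrable (fun p => (f p : ℂ) * ex (-n) p) volume :=
  hf.ofReal.mul_bdd (c := 1) (ex_continuous _).aestronglyMeasurable
    (Eventually.of_forall fun p => (norm_ex _ p).le)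

lemma fA_add_le {f g : ℝ × ℝ → ℝ} (hf : Integrable f volume) (hg : Integrable g volume)
    (n : ℤ × ℤ) : fA (fun p => f p + g p) n ≤ fA f n + fA g n := by
  have : fc (fun p => f p + g p) n = fc f n + fc g n := by
    unfold fc
    rw [← integral_add (fc_integrable hf n) (fc_integrable hg n)]
    congr 1; ext p; push_cast; ring
  unfold fA
  rw [this]
  exact enorm_add_le _ _

/-- The localised coefficient `2v + v²` of the quasilinear term. -/
def cc (χ v : ℝ × ℝ → ℝ) (p : ℝ × ℝ) : ℝ := χ p * v p + (χ p * v p + (χ p * v p) * (χ p * v p))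

lemma cc_tsum {r : ℝ} (hr : r < 1 / 2) {χ v : ℝ × ℝ → ℝ} (hχ : Zr r χ) (hv : Continuous v) (n : ℕ)
    (hs : ∑' j, fA (fun p => χ p * v p) j < ⊤) :
    ∑' j, yw j ^ n * fA (cc χ v) j ≤ 2 * (∑' j, yw j ^ n * fA (fun p => χ p * v p) j) +
      (∑' j, yw j ^ n * fA (fun p => χ p * v p) j) ^ 2 := by
  have hc : CV r fun p => χ p * v p := hχ.cv.mul hv
  have hi := hc.integrable
  have hi2 := (hc.mul hc.1).integrable
  have hle : ∀ j, yw j ^ n * fA (cc χ v) j ≤ (yw j ^ n * fA (fun p => χ p * v p) j +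
      yw j ^ n * fA (fun p => χ p * v p) j) +
      cv (fun j => yw j ^ n * fA (fun p => χ p * v p) j)
        (fun j => yw j ^ n * fA (fun p => χ p * v p) j) j := by
    intro j
    refine le_trans ?_ (add_le_add_right (yw_cv_le n _ _ j) _)
    rw [← mul_add, ← mul_add]
    gcongr
    refine (fA_add_le hi (hi.add hi2) j).trans ?_
    rw [add_assoc]
    gcongr
    refine (fA_add_le hi hi2 j).trans ?_
    gcongr
    exact fA_mul_le hc.1 (hc.inBox hr) hs hi (hc.inBox hr) j
  refine (ENNReal.tsum_le_tsum hle).trans (le_of_eq ?_)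
  rw [ENNReal.tsum_add, ENNReal.tsum_add, tsum_cv]
  ring

lemma S2_weight_le {n m : ℕ} (h : n ≤ m) (A : ℤ × ℤ → ENNReal) :
    S2 (fun j => yw j ^ n * A j) ≤ S2 (fun j => yw j ^ m * A j) :=
  S2_mono fun j => by gcongr; exact one_le_yw j

lemma tsum_weight_le {n m : ℕ} (h : n ≤ m) (A : ℤ × ℤ → ENNReal) :
    ∑' j, yw j ^ n * A j ≤ ∑' j, yw j ^ m * A j :=
  ENNReal.tsum_le_tsum fun j => by gcongr; exact one_le_yw j

lemma bessel_le {f g : ℝ × ℝ → ℝ} (hm : AEStronglyMeasurable f volume) (hf : InBox f)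
    {c : ENNReal} (hc : c ≠ ⊤) (hle : ∀ p, ‖f p‖ₑ ≤ c * ‖g p‖ₑ) :
    S2 (fA f) ≤ c ^ 2 * ∫⁻ p, ‖g p‖ₑ ^ 2 := by
  refine (bessel hm hf).trans ?_
  rw [← lintegral_const_mul' _ _ (by simp [hc])]
  refine lintegral_mono fun p => ?_
  rw [← mul_pow]
  gcongr
  exact hle p

section
variable {lam ε ρ : ℝ} {v h : ℝ × ℝ → ℝ}

lemma UData.eps0 (d : UData lam ε ρ v h) : 0 ≤ ε := d.rho0.trans d.rho1

lemma UData.quasi (d : UData lam ε ρ v h) {r r1 : ℝ} (hr : r < 1 / 2) (hr1 : r1 < 1 / 2)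
    {χ ζ : ℝ × ℝ → ℝ} (hχ : Zr r χ) (h1 : ∀ p, ‖p‖ ≤ r1 → χ p = 1) (hz : Zr r1 ζ)
    (hs : ∑' j, fA (fun p => χ p * v p) j < ⊤) (n : ℤ × ℤ) :
    fA (fun p => ζ p * ((2 * v p + v p ^ 2) * h p)) n ≤
      cv (fA (cc χ v)) (fA fun p => ζ p * h p) n := by
  have e : (fun p => ζ p * ((2 * v p + v p ^ 2) * h p)) = fun p => cc χ v p * (ζ p * h p) := by
    ext p
    rcases le_or_gt ‖p‖ r1 with hp | hp
    · simp only [cc, h1 p hp]; ring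
    · simp [hz.2 p hp]
  have hc : CV r fun p => χ p * v p := hχ.cv.mul d.cont
  have hcc : CV r (cc χ v) := ⟨hc.1.add (hc.1.add (hc.1.mul hc.1)), fun p hp => by
    simp [cc, hχ.2 p hp]⟩
  rw [e]
  refine fA_mul_le hcc.1 (hcc.inBox hr) ?_ ?_ ?_ n
  · have := cc_tsum hr hχ d.cont 0 (by simpa using hs)
    simp only [pow_zero, one_mul] at this
    exact this.trans_lt (ENNReal.add_lt_top.2 ⟨ENNReal.mul_lt_top (by simp) hs,
      ENNReal.pow_lt_top hs⟩)
  · exact (d.int_h_mul hz.cv).congr (Eventually.of_forall fun p => mul_comm _ _)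
  · exact (hz.cv.inBox hr1).mul_right h

lemma UData.fA_ah_le (d : UData lam ε ρ v h) {r : ℝ} {ζ : ℝ × ℝ → ℝ} (hz : Zr r ζ) (n : ℤ × ℤ) :
    fA (fun p => ζ p * ((1 + v p) ^ 2 * h p)) n ≤ fA (fun p => ζ p * h p) n +
      fA (fun p => ζ p * ((2 * v p + v p ^ 2) * h p)) n := by
  unfold fA
  rw [d.fc_ah hz n]
  exact enorm_add_le _ _

end

/-- Families of coefficients depending on the data whose `ℓ²` norm is `O(ε)`, uniformly. -/
def Bd (lam : ℝ) (F : ℝ → (ℝ × ℝ → ℝ) → (ℝ × ℝ → ℝ) → ℤ × ℤ → ENNReal) : Prop :=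
  ∃ C : ENNReal, C ≠ ⊤ ∧ ∀ ε ρ v h, UData lam ε ρ v h → S2 (F ρ v h) ≤ C * ENNReal.ofReal (ε ^ 2)

section
variable {lam : ℝ} {F G : ℝ → (ℝ × ℝ → ℝ) → (ℝ × ℝ → ℝ) → ℤ × ℤ → ENNReal}

lemma Bd.mono (hF : Bd lam F) (hle : ∀ ε ρ v h, UData lam ε ρ v h → ∀ n, G ρ v h n ≤ F ρ v h n) :
    Bd lam G := by
  obtain ⟨C, hC, hb⟩ := hF
  exact ⟨C, hC, fun ε ρ v h d => (S2_mono (hle ε ρ v h d)).trans (hb ε ρ v h d)⟩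

lemma Bd.add (hF : Bd lam F) (hG : Bd lam G) : Bd lam fun ρ v h n => F ρ v h n + G ρ v h n := by
  obtain ⟨C, hC, hb⟩ := hF
  obtain ⟨D, hD, hb'⟩ := hG
  refine ⟨2 * C + 2 * D, ENNReal.add_ne_top.2 ⟨ENNReal.mul_ne_top (by simp) hC,
    ENNReal.mul_ne_top (by simp) hD⟩, fun ε ρ v h d => (S2_add _ _).trans ?_⟩
  rw [add_mul, mul_assoc, mul_assoc]
  gcongr
  · exact hb ε ρ v h d
  · exact hb' ε ρ v h d

lemma Bd.const (hF : Bd lam F) {c : ENNReal} (hc : c ≠ ⊤) : Bd lam fun ρ v h n => c * F ρ v h n := by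
  obtain ⟨C, hC, hb⟩ := hF
  refine ⟨c ^ 2 * C, ENNReal.mul_ne_top (by simp [hc]) hC, fun ε ρ v h d => ?_⟩
  rw [S2_const_mul, mul_assoc]
  gcongr
  exact hb ε ρ v h d

lemma bd_v {r : ℝ} (hr : r < 1 / 2) {ζ : ℝ × ℝ → ℝ} (hz : Zr r ζ) :
    Bd lam fun _ v _ => fA fun p => ζ p * v p := by
  refine ⟨∫⁻ p, ‖ζ p‖ₑ ^ 2, (lintegral_sq_lt_top hz.cv).ne, fun ε ρ v h d => ?_⟩
  rw [mul_comm, ENNReal.ofReal_pow d.eps0]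
  refine bessel_le (hz.cv.mul d.cont).1.aestronglyMeasurable
    ((hz.cv.mul d.cont).inBox hr) ENNReal.ofReal_ne_top fun p => ?_
  rcases le_or_gt ‖p‖ (1 / 2) with hp | hp
  · rw [enorm_mul, mul_comm, Real.enorm_eq_ofReal_abs (v p)]
    gcongr
    exact d.small p hp
  · simp [hz.2 p (hr.trans hp)]

lemma Zr.bound {r : ℝ} {ζ : ℝ × ℝ → ℝ} (hz : Zr r ζ) : ∃ M : ℝ, 0 ≤ M ∧ ∀ p, |ζ p| ≤ M := by
  obtain ⟨M, hM⟩ := hz.cv.1.bounded_above_of_compact_support hz.cv.compact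
  exact ⟨M, (norm_nonneg _).trans (hM 0), hM⟩

/-- `L²` control of `ζ a h` for a coefficient `a` bounded on the box. -/
lemma bd_h {r : ℝ} (hr : r < 1 / 2) {ζ : ℝ × ℝ → ℝ} (hz : Zr r ζ) {a : (ℝ × ℝ → ℝ) → ℝ × ℝ → ℝ}
    {K : ℝ} (ha : ∀ ε ρ v h, UData lam ε ρ v h → Continuous (a v) ∧
      ∀ p, ‖p‖ ≤ 1 / 2 → |a v p| ≤ K) :
    Bd lam fun _ v h => fA fun p => ζ p * (a v p * h p) := by
  obtain ⟨M, hM0, hM⟩ := hz.bound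
  refine ⟨ENNReal.ofReal (M * K) ^ 2, by simp, fun ε ρ v h d => ?_⟩
  obtain ⟨hc, hb⟩ := ha ε ρ v h d
  refine le_trans ?_ (mul_le_mul_right d.h2 _)
  refine bessel_le (hz.smul_h d hc).aestronglyMeasurable ((hz.cv.inBox hr).mul_right _)
    ENNReal.ofReal_ne_top fun p => ?_
  rcases le_or_gt ‖p‖ (1 / 2) with hp | hp
  · rw [← mul_assoc, enorm_mul, Real.enorm_eq_ofReal_abs (ζ p * a v p), abs_mul]
    gcongr
    · exact hM p
    · exact hb p hp
  · simp [hz.2 p (hr.trans hp)]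

lemma bd_h1 {r : ℝ} (hr : r < 1 / 2) {ζ : ℝ × ℝ → ℝ} (hz : Zr r ζ) :
    Bd lam fun _ _ h => fA fun p => ζ p * h p := by
  have := bd_h (lam := lam) hr hz (a := fun _ _ => 1) (K := 1)
    fun _ _ _ _ _ => ⟨continuous_const, fun _ _ => by simp⟩
  simpa using this

lemma bd_ah {r : ℝ} (hr : r < 1 / 2) {ζ : ℝ × ℝ → ℝ} (hz : Zr r ζ) :
    Bd lam fun _ v h => fA fun p => ζ p * ((1 + v p) ^ 2 * h p) := by
  refine bd_h (lam := lam) hr hz (a := fun v p => (1 + v p) ^ 2) (K := 4) fun ε ρ v h d => ?_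
  have := d.cont
  refine ⟨by fun_prop, fun p hp => ?_⟩
  have h1 := abs_le.1 ((d.small p hp).trans d.eps1)
  rw [abs_le]
  constructor <;> nlinarith

lemma bd_b {r : ℝ} (hr : r < 1 / 2) {ζ : ℝ × ℝ → ℝ} (hz : Zr r ζ) :
    Bd lam fun ρ v _ n => ENNReal.ofReal ρ * fA (fun p => ζ p * (1 + v p) ^ lam) n := by
  refine ⟨ENNReal.ofReal (2 ^ lam) ^ 2 * ∫⁻ p, ‖ζ p‖ₑ ^ 2,
    ENNReal.mul_ne_top (by simp) (lintegral_sq_lt_top hz.cv).ne, fun ε ρ v h d => ?_⟩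
  rw [S2_const_mul, mul_comm, ENNReal.ofReal_pow d.eps0]
  gcongr
  · refine bessel_le (hz.cv.mul d.cont_b).1.aestronglyMeasurable
      ((hz.cv.mul d.cont_b).inBox hr) ENNReal.ofReal_ne_top fun p => ?_
    rcases le_or_gt ‖p‖ (1 / 2) with hp | hp
    · rw [enorm_mul, mul_comm, Real.enorm_eq_ofReal_abs (_ ^ lam)]
      gcongr
      have h1 := abs_le.1 ((d.small p hp).trans d.eps1)
      have h0 : 0 ≤ 1 + v p := by linarith
      rw [abs_of_nonneg (Real.rpow_nonneg h0 _)]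
      exact Real.rpow_le_rpow h0 (by linarith) (by linarith [d.lam1])
    · simp [hz.2 p (hr.trans hp)]
  · exact d.rho1

lemma bd_weight {r : ℝ} (hr : r < 1 / 2) (i : ℕ) (hi : i ≤ 3) :
    ∀ ζ : ℝ × ℝ → ℝ, Zr r ζ → Bd lam fun _ v _ n => yw n ^ (4 * i) * fA (fun p => ζ p * v p) n := by
  induction i with
  | zero => intro ζ hz; simpa using bd_v hr hz
  | succ i ih =>
    intro ζ hz
    have ih := ih (by omega)
    refine (((((ih ζ hz).add (bd_h1 hr hz)).add (ih _ hz.dX.dX.dX)).add (ih _ hz.dX.dX)).add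
      (ih _ hz.dX)).const (c := 600) (by simp) |>.mono fun ε ρ v h d n => ?_
    have := d.J1 hr hz (s := 4 * i) (k := 0) (by omega) n
    simpa [mul_add] using this

/-- Smallness of the Wiener norm of `ζ v`. -/
lemma bd_wiener {r : ℝ} (hr : r < 1 / 2) {ζ : ℝ × ℝ → ℝ} (hz : Zr r ζ) :
    ∃ C : ENNReal, C ≠ ⊤ ∧ ∀ ε ρ v h, UData lam ε ρ v h →
      (∑' n, yw n ^ 1 * fA (fun p => ζ p * v p) n) ^ 2 ≤ C * ENNReal.ofReal (ε ^ 2) := by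
  have hq : Bd lam fun ρ v h n => yw n ^ 0 * fA (fun p => dT ζ p * v p) n +
        yw n ^ 0 * fA (fun p => dX ζ p * ((1 + v p) ^ 2 * h p)) n +
        yw n ^ 0 * ((yw n ^ 4)⁻¹ * (ENNReal.ofReal ρ * fA (fun p => ζ p * (1 + v p) ^ lam) n)) +
        yw n ^ 0 * fA (fun p => ζ p * ((1 + v p) ^ 2 * h p)) n +
        yw n ^ (0 + 12) * fA (fun p => ζ p * v p) n := by
    have hb := bd_weight (lam := lam) hr 3 le_rfl ζ hz
    simp only [pow_zero, one_mul, zero_add]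
    refine ((((bd_v hr hz.dT).add (bd_ah hr hz.dX)).add ((bd_b hr hz).mono ?_)).add
      (bd_ah hr hz)).add hb
    intro ε ρ v h d n
    exact mul_le_of_le_one_left zero_le (ENNReal.inv_le_one.2 (one_le_pow₀ (one_le_yw n)))
  obtain ⟨C, hC, hb⟩ := hq
  refine ⟨C * S2 dec, ENNReal.mul_ne_top hC S2_dec.ne, fun ε ρ v h d => ?_⟩
  refine (gain 0 _ _ (d.J2 hr hz 0)).trans ?_
  rw [mul_right_comm]
  gcongr
  exact hb ε ρ v h d

end

section
variable {lam ε ρ : ℝ} {v h : ℝ × ℝ → ℝ}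

/-- Regularity of level `n` on the ball of radius `r`. -/
def Lev (v h : ℝ × ℝ → ℝ) (n : ℕ) (r : ℝ) : Prop :=
  ∀ ζ, Zr r ζ → S2 (fun j => yw j ^ n * fA (fun p => ζ p * h p) j) < ⊤ ∧
    S2 (fun j => yw j ^ (n + 12) * fA (fun p => ζ p * v p) j) < ⊤ ∧
    ∑' j, yw j ^ n * fA (fun p => ζ p * v p) j < ⊤

lemma Bd.lt_top {F : ℝ → (ℝ × ℝ → ℝ) → (ℝ × ℝ → ℝ) → ℤ × ℤ → ENNReal} (hF : Bd lam F)
    (d : UData lam ε ρ v h) : S2 (F ρ v h) < ⊤ := by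
  obtain ⟨C, hC, hb⟩ := hF
  exact (hb ε ρ v h d).trans_lt (ENNReal.mul_lt_top hC.lt_top ENNReal.ofReal_lt_top)

lemma UData.lev_zero (d : UData lam ε ρ v h) {r : ℝ} (hr : r < 1 / 2) : Lev v h 0 r := by
  intro ζ hz
  refine ⟨?_, ?_, ?_⟩
  · simpa using (bd_h1 (lam := lam) hr hz).lt_top d
  · exact (bd_weight (lam := lam) hr 3 le_rfl ζ hz).lt_top d
  · obtain ⟨C, hC, hb⟩ := bd_wiener (lam := lam) hr hz
    have h1 := (hb ε ρ v h d).trans_lt (ENNReal.mul_lt_top hC.lt_top ENNReal.ofReal_lt_top)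
    refine (tsum_weight_le (zero_le_one' ℕ) _).trans_lt ?_
    by_contra h2
    rw [not_lt, top_le_iff] at h2
    rw [h2] at h1
    simp at h1

/-- Control of the absorption term at level `n`. -/
lemma UData.lev_b (d : UData lam ε ρ v h) {r r1 : ℝ} (hr : r < 1 / 2) (hr1 : r1 < 1 / 2) {n : ℕ}
    (hl : Lev v h n r) {χ ζ : ℝ × ℝ → ℝ} (hχ : Zr r χ) (h01 : ∀ p, 0 ≤ χ p ∧ χ p ≤ 1)
    (h1 : ∀ p, ‖p‖ ≤ r1 → χ p = 1) (hz : Zr r1 ζ) :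
    S2 (fun j => yw j ^ (n + 1) * ((yw j ^ 4)⁻¹ *
      (ENNReal.ofReal ρ * fA (fun p => ζ p * (1 + v p) ^ lam) j))) < ⊤ := by
  have hs : ∑' j, yw j ^ (4 * (n / 4)) * fA (fun p => χ p * v p) j < ⊤ :=
    (tsum_weight_le (by omega) _).trans_lt (hl χ hχ).2.2
  have hcx : Cx univ (n / 4) fun p => χ p * v p := cx_of_summable hr (hχ.cv.mul d.cont) _ hs
  have hpos : ∀ p ∈ (univ : Set (ℝ × ℝ)), 0 < 1 + χ p * v p := by
    intro p _
    rcases le_or_gt ‖p‖ (1 / 2) with hp | hp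
    · have h2 := abs_le.1 ((d.small p hp).trans d.eps1)
      have := h01 p
      nlinarith
    · simp [hχ.2 p (hr.trans hp)]
  have hb := (hz.cx (n / 4)).mul isOpen_univ
    (((Cx.const isOpen_univ 1 (n / 4)).add isOpen_univ hcx).rpow isOpen_univ hpos lam)
  have e : (fun p => ζ p * (1 + χ p * v p) ^ lam) = fun p => ζ p * (1 + v p) ^ lam := by
    ext p
    rcases le_or_gt ‖p‖ r1 with hp | hp
    · rw [h1 p hp, one_mul]
    · simp [hz.2 p hp]
  rw [e] at hb
  have h3 := S2_of_cx hr1 _ (hz.cv.mul d.cont_b) hb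
  refine lt_of_le_of_lt (S2_mono fun j => ?_) (S2_const_lt_top (c := ENNReal.ofReal ρ)
    ENNReal.ofReal_ne_top h3)
  · calc yw j ^ (n + 1) * ((yw j ^ 4)⁻¹ * (ENNReal.ofReal ρ * fA (fun p => ζ p * (1 + v p) ^ lam) j))
        ≤ (yw j ^ (4 * (n / 4)) * yw j ^ 4) * ((yw j ^ 4)⁻¹ *
          (ENNReal.ofReal ρ * fA (fun p => ζ p * (1 + v p) ^ lam) j)) := by
          rw [← pow_add]
          refine mul_le_mul_left (yw_pow_mono j ?_) _
          omega
      _ = (yw j ^ 4 * (yw j ^ 4)⁻¹) * (ENNReal.ofReal ρ *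
          (yw j ^ (4 * (n / 4)) * fA (fun p => ζ p * (1 + v p) ^ lam) j)) := by ring
      _ = _ := by rw [ENNReal.mul_inv_cancel (yw_pow_ne_zero j 4) (yw_pow_ne_top j 4), one_mul]

/-- Control of the quasilinear flux at level `n`. -/
lemma UData.lev_a (d : UData lam ε ρ v h) {r r1 : ℝ} (hr : r < 1 / 2) (hrr : r1 ≤ r)
    {n : ℕ} (hl : Lev v h n r) {χ ζ : ℝ × ℝ → ℝ} (hχ : Zr r χ)
    (h1 : ∀ p, ‖p‖ ≤ r1 → χ p = 1) (hz : Zr r1 ζ) :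
    S2 (fun j => yw j ^ n * fA (fun p => ζ p * ((1 + v p) ^ 2 * h p)) j) < ⊤ := by
  have hN := (hl χ hχ).2.2
  have hs := tsum_fA_le hN
  have hH := (hl ζ (hz.mono hrr)).1
  have hK : ∑' j, yw j ^ n * fA (cc χ v) j < ⊤ := (cc_tsum hr hχ d.cont n hs).trans_lt
    (ENNReal.add_lt_top.2 ⟨ENNReal.mul_lt_top (by simp) hN, ENNReal.pow_lt_top hN⟩)
  have hcv : S2 (cv (fun j => yw j ^ n * fA (cc χ v) j)
      (fun j => yw j ^ n * fA (fun p => ζ p * h p) j)) < ⊤ :=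
    (S2_young _ _).trans_lt (ENNReal.mul_lt_top (ENNReal.pow_lt_top hK) hH)
  refine lt_of_le_of_lt (S2_mono fun j => ?_) (S2_add_lt_top hH hcv)
  calc _ ≤ yw j ^ n * (fA (fun p => ζ p * h p) j +
        cv (fA (cc χ v)) (fA fun p => ζ p * h p) j) := by
        gcongr
        refine (d.fA_ah_le hz j).trans ?_
        gcongr
        exact d.quasi hr (hrr.trans_lt hr) hχ h1 hz hs j
    _ ≤ _ := by
        rw [mul_add]
        gcongr
        exact yw_cv_le n _ _ j

/-- Gain of one weight in the Wiener norm of `ζ v`. -/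
lemma UData.stepN (d : UData lam ε ρ v h) {r r1 : ℝ} (hr : r < 1 / 2) (hrr : r1 ≤ r)
    {n : ℕ} (hl : Lev v h n r) {χ : ℝ × ℝ → ℝ} (hχ : Zr r χ) (h01 : ∀ p, 0 ≤ χ p ∧ χ p ≤ 1)
    (h1 : ∀ p, ‖p‖ ≤ r1 → χ p = 1) {ζ : ℝ × ℝ → ℝ} (hz : Zr r1 ζ) :
    ∑' j, yw j ^ (n + 1) * fA (fun p => ζ p * v p) j < ⊤ := by
  have hr1 := hrr.trans_lt hr
  have hg := gain n _ _ (d.J2 hr1 hz n)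
  have ht : S2 (fun j => yw j ^ n * fA (fun p => dT ζ p * v p) j) < ⊤ :=
    (S2_weight_le (by omega) _).trans_lt (hl _ (hz.dT.mono hrr)).2.1
  have hb : S2 (fun j => yw j ^ n * ((yw j ^ 4)⁻¹ *
      (ENNReal.ofReal ρ * fA (fun p => ζ p * (1 + v p) ^ lam) j))) < ⊤ :=
    (S2_weight_le (by omega) _).trans_lt (d.lev_b hr hr1 hl hχ h01 h1 hz)
  have hq := S2_add_lt_top (S2_add_lt_top (S2_add_lt_top (S2_add_lt_top ht
    (d.lev_a hr hrr hl hχ h1 hz.dX)) hb) (d.lev_a hr hrr hl hχ h1 hz)) (hl ζ (hz.mono hrr)).2.1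
  have h2 := hg.trans_lt (ENNReal.mul_lt_top hq S2_dec)
  by_contra h3
  rw [not_lt, top_le_iff] at h3
  rw [h3] at h2
  simp at h2

/-- Passage from level `n` to level `n + 1`, with a loss of domain and under smallness. -/
lemma UData.stepP (d : UData lam ε ρ v h) {r r1 r2 : ℝ} (hr : r < 1 / 2) (hrr : r1 ≤ r)
    (hrr2 : r2 ≤ r1) {n : ℕ} (hl : Lev v h n r) {χ χ' : ℝ × ℝ → ℝ} (hχ : Zr r χ)
    (h01 : ∀ p, 0 ≤ χ p ∧ χ p ≤ 1) (h1 : ∀ p, ‖p‖ ≤ r1 → χ p = 1) (hχ' : Zr r1 χ')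
    (h1' : ∀ p, ‖p‖ ≤ r2 → χ' p = 1)
    (hsm : 2 * (2 ^ (n + 1) * (2 * (∑' j, fA (fun p => χ' p * v p) j) +
      (∑' j, fA (fun p => χ' p * v p) j) ^ 2)) ≤ 1) : Lev v h (n + 1) r2 := by
  intro ζ hz
  have hr1 := hrr.trans_lt hr
  have hr2 := hrr2.trans_lt hr1
  have hzr1 := hz.mono hrr2
  have hzr := hzr1.mono hrr
  have hN : ∀ {ζ}, Zr r1 ζ → ∑' j, yw j ^ (n + 1) * fA (fun p => ζ p * v p) j < ⊤ :=
    fun hz => d.stepN hr hrr hl hχ h01 h1 hz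
  have hNχ := hN hχ'
  have hs := tsum_fA_le hNχ
  have hV : ∀ {ζ}, Zr r ζ → ∀ m ≤ n + 12, S2 (fun j => yw j ^ m * fA (fun p => ζ p * v p) j) < ⊤ :=
    fun hz m hm => (S2_weight_le hm _).trans_lt (hl _ hz).2.1
  have hPhi : S2 (fun j => yw j ^ (n + 1) * PhiT lam ρ v h ζ j) < ⊤ := by
    have hA := d.lev_a hr hrr hl hχ h1 hzr1.dX
    have hB := d.lev_b hr hr1 hl hχ h01 h1 hzr1
    have hy : ∀ j, yw j ^ (n + 1) * (yw j ^ 4)⁻¹ ≤ yw j ^ n := by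
      intro j
      calc yw j ^ (n + 1) * (yw j ^ 4)⁻¹ ≤ (yw j ^ n * yw j ^ 4) * (yw j ^ 4)⁻¹ := by
            rw [← pow_add]
            gcongr
            · exact one_le_yw j
            · omega
        _ = _ := by
          rw [mul_assoc, ENNReal.mul_inv_cancel (yw_pow_ne_zero j 4) (yw_pow_ne_top j 4), mul_one]
    refine lt_of_le_of_lt (S2_mono fun j => ?_) (S2_add_lt_top (S2_add_lt_top (S2_add_lt_top
      (hV hzr.dX.dX.dX (n + 1) (by omega))
      (S2_const_lt_top (c := 21) (by simp) (hV hzr.dX.dX (n + 1 + 4) (by omega))))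
      (S2_const_lt_top (c := 147) (by simp) (hV hzr.dX (n + 1 + 8) (by omega))))
      (S2_add_lt_top (S2_add_lt_top (hV hzr.dT n (by omega)) hA) hB))
    unfold PhiT
    rw [mul_add, mul_add, mul_add]
    refine add_le_add (le_of_eq (by ring)) ?_
    rw [mul_add, mul_add, mul_add, mul_add]
    refine add_le_add (add_le_add ?_ ?_) le_rfl
    · rw [← mul_assoc]; gcongr; exact hy j
    · rw [← mul_assoc]; gcongr; exact hy j
  have hH : S2 (fun j => yw j ^ (n + 1) * fA (fun p => ζ p * h p) j) < ⊤ := by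
    refine absorb (n + 1) (K := fA (cc χ' v)) (Φ := PhiT lam ρ v h ζ) ?_ (fun j => ?_) ?_ ?_ hPhi
    · have := (hl ζ hzr).1
      refine lt_of_le_of_lt ?_ this
      simpa using S2_weight_le (Nat.zero_le n) (fA fun p => ζ p * h p)
    · refine (d.J3 hr2 hz j).trans ?_
      gcongr
      exact d.quasi hr1 hr2 hχ' h1' hz hs j
    · refine le_trans ?_ hsm
      gcongr
      simpa using cc_tsum hr1 hχ' d.cont 0 (by simpa using hs)
    · exact (cc_tsum hr1 hχ' d.cont (n + 1) hs).trans_lt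
        (ENNReal.add_lt_top.2 ⟨ENNReal.mul_lt_top (by simp) hNχ, ENNReal.pow_lt_top hNχ⟩)
  refine ⟨hH, ?_, hN hzr1⟩
  have hsum := S2_const_lt_top (c := 600) (by simp) (S2_add_lt_top (S2_add_lt_top (S2_add_lt_top
    (S2_add_lt_top (hV hzr (n + 9) (by omega)) hH) (hV hzr.dX.dX.dX (n + 9) (by omega)))
    (hV hzr.dX.dX (n + 9) (by omega))) (hV hzr.dX (n + 9) (by omega)))
  exact lt_of_le_of_lt (S2_mono fun j => d.J1 hr2 hz (s := n + 9) (k := n + 1) (by omega) j) hsum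

end

lemma enn_small {N : ENNReal} {m : ℕ} (hN : N ^ 2 ≤ (((2 : ENNReal) ^ (m + 3)) ^ 2)⁻¹) :
    2 * (2 ^ m * (2 * N + N ^ 2)) ≤ 1 := by
  have h1 : N ≤ ((2 : ENNReal) ^ (m + 3))⁻¹ := by
    rw [ENNReal.inv_pow] at hN
    exact (ENNReal.pow_le_pow_left_iff (by norm_num)).1 hN
  have hN1 : N ≤ 1 := h1.trans (ENNReal.inv_le_one.2 (one_le_pow₀ (by norm_num)))
  calc 2 * (2 ^ m * (2 * N + N ^ 2)) ≤ 2 * (2 ^ m * (2 * N + 2 * N)) := by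
        gcongr
        rw [sq]
        gcongr
        exact hN1.trans (by norm_num)
    _ = 2 ^ (m + 3) * N := by ring
    _ ≤ 2 ^ (m + 3) * ((2 : ENNReal) ^ (m + 3))⁻¹ := by gcongr
    _ = 1 := ENNReal.mul_inv_cancel (by simp) (by simp)

/-- Interior regularity of small solutions of the normalised problem. -/
theorem unit_regularity (lam : ℝ) : ∃ ε0 : ℝ, 0 < ε0 ∧ ∀ ε ρ v h, UData lam ε ρ v h → ε ≤ ε0 →
    Cx {p | ‖p‖ < 1 / 4} 4 v := by
  -- nested balls of radii `R i`, decreasing from `2/5` and all larger than `1/4`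
  set R : ℕ → ℝ := fun i => 2 / 5 - min (i : ℝ) 40 / 1000 with hR
  have hR1 : ∀ i, R i < 1 / 2 := fun i => by
    have : (0 : ℝ) ≤ min (i : ℝ) 40 := by positivity
    simp only [hR]; linarith
  have hR0 : ∀ i, 1 / 4 < R i := fun i => by
    have : min (i : ℝ) 40 ≤ 40 := min_le_right _ _
    simp only [hR]; linarith
  have hRlt : ∀ i < 40, R (i + 1) < R i := fun i hi => by
    have h1 : ((i + 1 : ℕ) : ℝ) ≤ 40 := by exact_mod_cast hi
    have h2 : (i : ℝ) ≤ 40 := by exact_mod_cast hi.le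
    simp only [hR]
    rw [min_eq_left h1, min_eq_left h2]
    push_cast
    linarith
  have hcut : ∀ i : ℕ, ∃ χ : ℝ × ℝ → ℝ, i < 40 → Zr (R i) χ ∧ (∀ p, 0 ≤ χ p ∧ χ p ≤ 1) ∧
      ∀ p, ‖p‖ ≤ R (i + 1) → χ p = 1 := by
    intro i
    by_cases hi : i < 40
    · obtain ⟨χ, hχ⟩ := exists_cutoff (by linarith [hR0 (i + 1)]) (hRlt i hi)
      exact ⟨χ, fun _ => hχ⟩
    · exact ⟨0, fun h => absurd h hi⟩
  choose χ hχ using hcut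
  have hC : ∀ i : ℕ, ∃ C : ENNReal, i < 40 → C ≠ ⊤ ∧ ∀ ε ρ v h, UData lam ε ρ v h →
      (∑' n, yw n ^ 1 * fA (fun p => χ i p * v p) n) ^ 2 ≤ C * ENNReal.ofReal (ε ^ 2) := by
    intro i
    by_cases hi : i < 40
    · obtain ⟨C, hC⟩ := bd_wiener (lam := lam) (hR1 i) (hχ i hi).1
      exact ⟨C, fun _ => hC⟩
    · exact ⟨0, fun h => absurd h hi⟩
  choose C hC using hC
  set D : ENNReal := ∑ i ∈ Finset.range 40, C i with hD
  have hDtop : D ≠ ⊤ := ENNReal.sum_ne_top.2 fun i hi => (hC i (Finset.mem_range.1 hi)).1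
  have hCD : ∀ i < 40, C i ≤ D := fun i hi =>
    Finset.single_le_sum (f := C) (fun _ _ => zero_le) (Finset.mem_range.2 hi)
  obtain ⟨ε0, hε0, hε⟩ : ∃ ε0 : ℝ, 0 < ε0 ∧
      D * ENNReal.ofReal (ε0 ^ 2) ≤ (((2 : ENNReal) ^ (16 + 3)) ^ 2)⁻¹ := by
    have hc : Tendsto (fun e : ℝ => D * ENNReal.ofReal (e ^ 2)) (nhdsWithin 0 (Ioi 0)) (nhds 0) := by
      have h1 : Tendsto (fun e : ℝ => ENNReal.ofReal (e ^ 2)) (nhds 0) (nhds 0) := by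
        have := (ENNReal.continuous_ofReal.comp (continuous_pow (M := ℝ) 2)).tendsto 0
        simpa [Function.comp_def] using this
      have h2 := ENNReal.Tendsto.const_mul (a := D) h1 (Or.inr hDtop)
      rw [mul_zero] at h2
      exact h2.mono_left nhdsWithin_le_nhds
    have hpos : (0 : ENNReal) < (((2 : ENNReal) ^ (16 + 3)) ^ 2)⁻¹ := by simp
    obtain ⟨e, he, he0⟩ := ((hc.eventually_le_const hpos).and self_mem_nhdsWithin).exists
    exact ⟨e, he0, he⟩
  refine ⟨ε0, hε0, fun ε ρ v h d hle => ?_⟩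
  have hsm : ∀ i < 40, ∀ n ≤ 15, 2 * (2 ^ (n + 1) * (2 * (∑' j, fA (fun p => χ i p * v p) j) +
      (∑' j, fA (fun p => χ i p * v p) j) ^ 2)) ≤ 1 := by
    intro i hi n hn
    refine enn_small ?_
    have h0 : ∑' j, fA (fun p => χ i p * v p) j ≤ ∑' n, yw n ^ 1 * fA (fun p => χ i p * v p) n := by
      simpa using tsum_weight_le (zero_le_one' ℕ) (fA fun p => χ i p * v p)
    calc (∑' j, fA (fun p => χ i p * v p) j) ^ 2
        ≤ (∑' n, yw n ^ 1 * fA (fun p => χ i p * v p) n) ^ 2 := by gcongr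
      _ ≤ C i * ENNReal.ofReal (ε ^ 2) := (hC i hi).2 ε ρ v h d
      _ ≤ D * ENNReal.ofReal (ε0 ^ 2) := by
        have := d.eps0
        gcongr
        exact hCD i hi
      _ ≤ _ := hε
      _ ≤ _ := by
        gcongr
        · norm_num
        · omega
  have hlev : ∀ n ≤ 15, Lev v h n (R (2 * n)) := by
    intro n
    induction n with
    | zero => intro _; exact d.lev_zero (hR1 _)
    | succ n ih =>
      intro hn
      have hi : 2 * n < 40 := by omega
      have hi1 : 2 * n + 1 < 40 := by omega
      exact d.stepP (hR1 _) (hRlt _ hi).le (hRlt _ hi1).le (ih (by omega)) (hχ _ hi).1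
        (hχ _ hi).2.1 (hχ _ hi).2.2 (hχ _ hi1).1 (hχ _ hi1).2.2 (hsm _ hi1 n (by omega))
  have hN := d.stepN (hR1 _) (hRlt 30 (by norm_num)).le (hlev 15 le_rfl) (hχ 30 (by norm_num)).1
    (hχ 30 (by norm_num)).2.1 (hχ 30 (by norm_num)).2.2 (hχ 31 (by norm_num)).1
  have hcx := cx_of_summable (hR1 31) ((hχ 31 (by norm_num)).1.cv.mul d.cont) 4 hN
  refine (hcx.mono (subset_univ _)).congr (isOpen_lt continuous_norm continuous_const)
    fun p hp => ?_
  rw [(hχ 31 (by norm_num)).2.2 p (le_of_lt (lt_trans hp (hR0 32))), one_mul]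

/-! ### Interior regularity by rescaling -/

/-- Continuous functions vanishing outside the closed sup-norm ball of radius `δ` about `p0`. -/
def CB (p0 : ℝ × ℝ) (δ : ℝ) (f : ℝ × ℝ → ℝ) : Prop :=
  Continuous f ∧ ∀ p, δ < ‖p - p0‖ → f p = 0

/-- `u` is a positive solution near `p0` in the sense of distributions: `h` is a square
integrable weak third space derivative of `u`, and `u_t + (u² h)_x + u^λ = 0`. -/
structure LocSol (lam δ : ℝ) (p0 : ℝ × ℝ) (u h : ℝ × ℝ → ℝ) : Prop where
  cont : Continuous u
  pos : ∀ p, ‖p - p0‖ ≤ δ → 0 < u p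
  meas : AEStronglyMeasurable h volume
  h2 : ∫⁻ p in Metric.ball p0 δ, ‖h p‖ₑ ^ 2 < ⊤
  e1 : ∀ φ0 φ1 φ2 φ3 : ℝ × ℝ → ℝ, CB p0 δ φ0 → CB p0 δ φ1 → CB p0 δ φ2 → CB p0 δ φ3 →
    DX φ0 φ1 → DX φ1 φ2 → DX φ2 φ3 → ∫ p, u p * φ3 p = -∫ p, h p * φ0 p
  e2 : ∀ φ φt φx : ℝ × ℝ → ℝ, CB p0 δ φ → CB p0 δ φt → CB p0 δ φx → DT φ φt → DX φ φx →
    (∫ p, u p * φt p) + (∫ p, u p ^ 2 * h p * φx p) - ∫ p, u p ^ lam * φ p = 0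

lemma integral_DX_real {r : ℝ} {G G' : ℝ × ℝ → ℝ} (hG : CV r G) (hG' : CV r G')
    (hd : DX G G') : ∫ p, G' p = 0 := by
  have := integral_DX_eq_zero hG.ofReal hG'.ofReal hd.ofReal
  have h2 : ∫ p, ((G' p : ℝ) : ℂ) = ((∫ p, G' p : ℝ) : ℂ) := integral_ofReal
  rw [h2] at this
  exact_mod_cast this

lemma CV.swap {r : ℝ} {G : ℝ × ℝ → ℝ} (hG : CV r G) : CV r (fun p => G p.swap) :=
  ⟨hG.1.comp continuous_swap, fun p hp => hG.2 _ (by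
    rw [Prod.norm_def] at hp ⊢; simpa [max_comm] using hp)⟩

lemma integral_DT_real {r : ℝ} {G G' : ℝ × ℝ → ℝ} (hG : CV r G) (hG' : CV r G')
    (hd : DT G G') : ∫ p, G' p = 0 := by
  have h := integral_DX_real hG.swap hG'.swap (fun p => hd p.swap)
  rw [Measure.volume_eq_prod] at h ⊢
  rw [← h, integral_prod_swap]

/-- The parabolic scaling `q ↦ (t₀ + τ q₁, x₀ + r q₂)`. -/
def aff (p0 : ℝ × ℝ) (τ r : ℝ) (q : ℝ × ℝ) : ℝ × ℝ := (p0.1 + τ * q.1, p0.2 + r * q.2)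

/-- The inverse of `aff p0 τ r`. -/
def affi (p0 : ℝ × ℝ) (τ r : ℝ) (p : ℝ × ℝ) : ℝ × ℝ :=
  (τ⁻¹ * (p.1 - p0.1), r⁻¹ * (p.2 - p0.2))

section aff
variable {p0 : ℝ × ℝ} {τ r : ℝ}

lemma aff_affi (hτ : 0 < τ) (hr : 0 < r) (p : ℝ × ℝ) : aff p0 τ r (affi p0 τ r p) = p := by
  ext <;> simp [aff, affi] <;> field_simp <;> ring

lemma affi_aff (hτ : 0 < τ) (hr : 0 < r) (q : ℝ × ℝ) : affi p0 τ r (aff p0 τ r q) = q := by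
  ext <;> simp [aff, affi] <;> field_simp

lemma aff_continuous : Continuous (aff p0 τ r) := by unfold aff; fun_prop

lemma affi_continuous : Continuous (affi p0 τ r) := by unfold affi; fun_prop

lemma aff_embedding (hτ : 0 < τ) (hr : 0 < r) : MeasurableEmbedding (aff p0 τ r) :=
  (Homeomorph.mk (Equiv.mk (aff p0 τ r) (affi p0 τ r) (affi_aff hτ hr) (aff_affi hτ hr))
    aff_continuous affi_continuous).measurableEmbedding

lemma map_aff_one (a : ℝ) {τ : ℝ} (hτ : 0 < τ) :
    Measure.map (fun s : ℝ => a + τ * s) volume = ENNReal.ofReal τ⁻¹ • volume := by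
  have h : (fun s : ℝ => a + τ * s) = (fun s => a + s) ∘ (fun s => τ * s) := rfl
  rw [h, ← Measure.map_map (measurable_const_add a) (measurable_const_mul τ),
    Real.map_volume_mul_left hτ.ne', Measure.map_smul, map_add_left_eq_self,
    abs_of_pos (inv_pos.2 hτ)]

lemma map_aff (hτ : 0 < τ) (hr : 0 < r) :
    Measure.map (aff p0 τ r) volume = ENNReal.ofReal (τ * r)⁻¹ • volume := by
  have h : aff p0 τ r = Prod.map (fun s => p0.1 + τ * s) (fun s => p0.2 + r * s) := rfl
  rw [h, Measure.volume_eq_prod, ← Measure.map_prod_map _ _ (by fun_prop) (by fun_prop),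
    map_aff_one _ hτ, map_aff_one _ hr, Measure.prod_smul_left, Measure.prod_smul_right, smul_smul,
    ← ENNReal.ofReal_mul (by positivity), mul_inv]

lemma integral_aff (hτ : 0 < τ) (hr : 0 < r) (f : ℝ × ℝ → ℝ) :
    ∫ p, f p = (τ * r) * ∫ q, f (aff p0 τ r q) := by
  rw [← (aff_embedding hτ hr).integral_map, map_aff hτ hr, integral_smul_measure,
    ENNReal.toReal_ofReal (by positivity), smul_eq_mul]
  field_simp

lemma lintegral_aff (hτ : 0 < τ) (hr : 0 < r) (f : ℝ × ℝ → ENNReal) :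
    ∫⁻ q, f (aff p0 τ r q) = ENNReal.ofReal (τ * r)⁻¹ * ∫⁻ p, f p := by
  rw [← (aff_embedding hτ hr).lintegral_map, map_aff hτ hr, lintegral_smul_measure, smul_eq_mul]

lemma norm_aff_sub_le (hτ : 0 < τ) (hr : 0 < r) {η : ℝ} (h1 : τ ≤ η) (h2 : r ≤ η)
    {q : ℝ × ℝ} {b : ℝ} (hq : ‖q‖ ≤ b) : ‖aff p0 τ r q - p0‖ ≤ η * b := by
  rw [Prod.norm_def] at hq ⊢
  simp only [aff, Prod.fst_sub, Prod.snd_sub, add_sub_cancel_left, norm_mul, Real.norm_eq_abs,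
    abs_of_pos hτ, abs_of_pos hr]
  rw [Real.norm_eq_abs, Real.norm_eq_abs] at hq
  have := (le_max_left |q.1| |q.2|).trans hq
  have := (le_max_right |q.1| |q.2|).trans hq
  have hη := hτ.le.trans h1
  refine max_le ?_ ?_ <;> gcongr

lemma DX.comp_affi {f f' : ℝ × ℝ → ℝ} (h : DX f f') :
    DX (fun p => f (affi p0 τ r p)) (fun p => r⁻¹ * f' (affi p0 τ r p)) := by
  intro p
  have h1 : HasDerivAt (fun y : ℝ => r⁻¹ * (y - p0.2)) r⁻¹ p.2 := by
    simpa using ((hasDerivAt_id p.2).sub_const p0.2).const_mul r⁻¹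
  have := (h (affi p0 τ r p)).comp p.2 h1
  rw [mul_comm] at this
  exact this

lemma DT.comp_affi {f f' : ℝ × ℝ → ℝ} (h : DT f f') :
    DT (fun p => f (affi p0 τ r p)) (fun p => τ⁻¹ * f' (affi p0 τ r p)) := by
  intro p
  have h1 : HasDerivAt (fun y : ℝ => τ⁻¹ * (y - p0.1)) τ⁻¹ p.1 := by
    simpa using ((hasDerivAt_id p.1).sub_const p0.1).const_mul τ⁻¹
  have := (h (affi p0 τ r p)).comp p.1 h1
  rw [mul_comm] at this
  exact this

lemma Cx.comp_affi {U : Set (ℝ × ℝ)} (hU : IsOpen U) {j : ℕ} {f : ℝ × ℝ → ℝ} (h : Cx U j f) :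
    Cx (affi p0 τ r ⁻¹' U) j (fun p => f (affi p0 τ r p)) := by
  have hV : IsOpen (affi p0 τ r ⁻¹' U) := hU.preimage affi_continuous
  induction j generalizing f with
  | zero =>
    exact ContinuousOn.comp h affi_continuous.continuousOn fun p hp => hp
  | succ j ih =>
    refine Cx.of_hasDeriv hV (f' := fun p => r⁻¹ * pX f (affi p0 τ r p))
      (ContinuousOn.comp h.1 affi_continuous.continuousOn fun p hp => hp) (fun p hp => ?_)
      ((Cx.const hV _ _).mul hV (ih h.2.2))
    have h1 : HasDerivAt (fun y : ℝ => r⁻¹ * (y - p0.2)) r⁻¹ p.2 := by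
      simpa using ((hasDerivAt_id p.2).sub_const p0.2).const_mul r⁻¹
    have := (h.hasDeriv (p := affi p0 τ r p) hp).comp p.2 h1
    rw [mul_comm] at this
    exact this

end aff

lemma CB.const_mul {p0 : ℝ × ℝ} {δ : ℝ} {f : ℝ × ℝ → ℝ} (h : CB p0 δ f) (c : ℝ) :
    CB p0 δ fun p => c * f p :=
  ⟨continuous_const.mul h.1, fun p hp => by simp [h.2 p hp]⟩

lemma DX.const_mul {f f' : ℝ × ℝ → ℝ} (h : DX f f') (c : ℝ) :
    DX (fun p => c * f p) (fun p => c * f' p) := fun p => (h p).const_mul c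

lemma CV.comp_affi {p0 : ℝ × ℝ} {τ r δ b : ℝ} (hτ : 0 < τ) (hr : 0 < r) (h1 : τ ≤ δ) (h2 : r ≤ δ)
    (hb : b < 1 / 2) {f : ℝ × ℝ → ℝ} (h : CV b f) : CB p0 δ (fun p => f (affi p0 τ r p)) := by
  refine ⟨h.1.comp affi_continuous, fun p hp => h.2 _ ?_⟩
  by_contra hcon
  have := norm_aff_sub_le (p0 := p0) hτ hr h1 h2 (b := 1 / 2)
    (q := affi p0 τ r p) (by linarith)
  rw [aff_affi hτ hr] at this
  linarith

/-- A local solution, rescaled parabolically about `p0` and normalised by `u p0`, satisfies the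
normalised problem on the unit box. -/
lemma LocSol.uData {lam δ ε τ r : ℝ} {p0 : ℝ × ℝ} {u h : ℝ × ℝ → ℝ} (d : LocSol lam δ p0 u h)
    (hlam : 1 ≤ lam) (hc : 0 < u p0) (hr : 0 < r) (hτdef : τ = r ^ 4 / u p0 ^ 2)
    (hrδ : r ≤ δ) (hτδ : τ ≤ δ) (hε : ε ≤ 1 / 2)
    (hsm : ∀ q, ‖q‖ ≤ 1 / 2 → |u (aff p0 τ r q) / u p0 - 1| ≤ ε)
    (hH : r * (∫⁻ p in Metric.ball p0 δ, ‖h p‖ₑ ^ 2).toReal ≤ ε ^ 2)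
    (hρ : u p0 ^ lam * τ / u p0 ≤ ε) :
    UData lam ε (u p0 ^ lam * τ / u p0) (fun q => u (aff p0 τ r q) / u p0 - 1)
      ((Metric.ball 0 (1 / 2)).indicator fun q => r ^ 3 / u p0 * h (aff p0 τ r q)) := by
  set c := u p0 with hcdef
  have hτ : 0 < τ := by rw [hτdef]; positivity
  have hcl : 0 < c ^ lam := Real.rpow_pos_of_pos hc _
  have hind : ∀ {b : ℝ} {φ : ℝ × ℝ → ℝ}, b < 1 / 2 → CV b φ → ∀ q,
      (Metric.ball (0 : ℝ × ℝ) (1 / 2)).indicator (fun q => r ^ 3 / c * h (aff p0 τ r q)) q * φ q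
        = r ^ 3 / c * (h (aff p0 τ r q) * φ q) := by
    intro b φ hb hφ q
    by_cases hq : q ∈ Metric.ball (0 : ℝ × ℝ) (1 / 2)
    · rw [indicator_of_mem hq]; ring
    · have : φ q = 0 := hφ.2 q (by simp at hq; linarith)
      simp [this]
  have hucont : Continuous fun q => u (aff p0 τ r q) := d.cont.comp aff_continuous
  have hucont1 : Continuous fun q => u (aff p0 τ r q) / c := hucont.div_const c
  refine ⟨hucont1.sub continuous_const, hsm, ?_, ?_, by positivity, hρ, hε, hlam, ?_, ?_⟩
  · refine AEStronglyMeasurable.indicator ?_ measurableSet_ball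
    refine AEStronglyMeasurable.const_mul ?_ _
    refine AEStronglyMeasurable.comp_measurable ?_ aff_continuous.measurable
    rw [map_aff hτ hr]
    exact d.meas.smul_measure _
  · have hle : ∀ q, ‖(Metric.ball (0 : ℝ × ℝ) (1 / 2)).indicator
        (fun q => r ^ 3 / c * h (aff p0 τ r q)) q‖ₑ ^ 2 ≤
        ENNReal.ofReal ((r ^ 3 / c) ^ 2) * (Metric.ball p0 δ).indicator (fun p => ‖h p‖ₑ ^ 2)
          (aff p0 τ r q) := by
      intro q
      by_cases hq : q ∈ Metric.ball (0 : ℝ × ℝ) (1 / 2)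
      · have h1 : aff p0 τ r q ∈ Metric.ball p0 δ := by
          rw [mem_ball_iff_norm]
          have hq' : ‖q‖ < 1 / 2 := by simpa using hq
          have := norm_aff_sub_le (p0 := p0) hτ hr hτδ hrδ hq'.le
          linarith [hr.trans_le hrδ]
        rw [indicator_of_mem hq, indicator_of_mem h1, enorm_mul, mul_pow,
          ENNReal.ofReal_pow (by positivity), Real.enorm_of_nonneg (by positivity : 0 ≤ r ^ 3 / c)]
      · rw [indicator_of_notMem hq]; simp
    calc _ ≤ ∫⁻ q, ENNReal.ofReal ((r ^ 3 / c) ^ 2) *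
          (Metric.ball p0 δ).indicator (fun p => ‖h p‖ₑ ^ 2) (aff p0 τ r q) :=
            lintegral_mono hle
      _ = ENNReal.ofReal ((r ^ 3 / c) ^ 2) * (ENNReal.ofReal (τ * r)⁻¹ *
          ∫⁻ p in Metric.ball p0 δ, ‖h p‖ₑ ^ 2) := by
            rw [lintegral_const_mul' _ _ ENNReal.ofReal_ne_top, lintegral_aff hτ hr,
              lintegral_indicator measurableSet_ball]
      _ = ENNReal.ofReal (r * (∫⁻ p in Metric.ball p0 δ, ‖h p‖ₑ ^ 2).toReal) := by
            rw [← ENNReal.ofReal_toReal d.h2.ne, ← ENNReal.ofReal_mul (by positivity),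
              ← ENNReal.ofReal_mul (by positivity), ENNReal.toReal_ofReal (by positivity), hτdef]
            congr 1
            field_simp
      _ ≤ _ := ENNReal.ofReal_le_ofReal hH
  · intro b hb φ0 φ1 φ2 φ3 h0 h1 h2 h3 d0 d1 d2
    have key := d.e1 (fun p => φ0 (affi p0 τ r p)) (fun p => r⁻¹ * φ1 (affi p0 τ r p))
      (fun p => r⁻¹ * (r⁻¹ * φ2 (affi p0 τ r p)))
      (fun p => r⁻¹ * (r⁻¹ * (r⁻¹ * φ3 (affi p0 τ r p))))
      (h0.comp_affi hτ hr hτδ hrδ hb)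
      ((h1.comp_affi hτ hr hτδ hrδ hb).const_mul _)
      (((h2.comp_affi hτ hr hτδ hrδ hb).const_mul _).const_mul _)
      ((((h3.comp_affi hτ hr hτδ hrδ hb).const_mul _).const_mul _).const_mul _)
      d0.comp_affi (d1.comp_affi.const_mul _) ((d2.comp_affi.const_mul _).const_mul _)
    rw [integral_aff (p0 := p0) hτ hr (fun p => u p * _),
      integral_aff (p0 := p0) hτ hr (fun p => h p * _)] at key
    simp only [affi_aff hτ hr] at key
    have hz := integral_DX_real h2 h3 d2
    have hI : ∫ q, u (aff p0 τ r q) * (r⁻¹ * (r⁻¹ * (r⁻¹ * φ3 q))) =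
        c * (r⁻¹ * (r⁻¹ * r⁻¹)) * ∫ q, (u (aff p0 τ r q) / c - 1) * φ3 q := by
      have e : (fun q => (u (aff p0 τ r q) / c - 1) * φ3 q) =
          fun q => φ3 q * (u (aff p0 τ r q) / c) - φ3 q := by ext q; ring
      rw [e, integral_sub (h3.mul hucont1).integrable h3.integrable, hz, sub_zero,
        ← integral_const_mul]
      congr 1; ext q; field_simp
    rw [hI] at key
    simp_rw [hind hb h0]
    rw [integral_const_mul]
    generalize (∫ q, (u (aff p0 τ r q) / c - 1) * φ3 q) = X at key ⊢
    generalize (∫ q, h (aff p0 τ r q) * φ0 q) = Y at key ⊢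
    field_simp at key ⊢
    linarith
  · intro b hb φ φt φx h0 ht hx dt dx
    have key := d.e2 (fun p => φ (affi p0 τ r p)) (fun p => τ⁻¹ * φt (affi p0 τ r p))
      (fun p => r⁻¹ * φx (affi p0 τ r p))
      (h0.comp_affi hτ hr hτδ hrδ hb)
      ((ht.comp_affi hτ hr hτδ hrδ hb).const_mul _)
      ((hx.comp_affi hτ hr hτδ hrδ hb).const_mul _) dt.comp_affi dx.comp_affi
    rw [integral_aff (p0 := p0) hτ hr (fun p => u p * _),
      integral_aff (p0 := p0) hτ hr (fun p => u p ^ 2 * h p * _),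
      integral_aff (p0 := p0) hτ hr (fun p => u p ^ lam * _)] at key
    simp only [affi_aff hτ hr] at key
    have hz := integral_DT_real h0 ht dt
    have hI : ∫ q, u (aff p0 τ r q) * (τ⁻¹ * φt q) =
        c * τ⁻¹ * ∫ q, (u (aff p0 τ r q) / c - 1) * φt q := by
      have e : (fun q => (u (aff p0 τ r q) / c - 1) * φt q) =
          fun q => φt q * (u (aff p0 τ r q) / c) - φt q := by ext q; ring
      rw [e, integral_sub (ht.mul hucont1).integrable ht.integrable, hz, sub_zero,
        ← integral_const_mul]
      congr 1; ext q; field_simp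
    have hJ : ∫ q, u (aff p0 τ r q) ^ lam * φ q =
        c ^ lam * ∫ q, (1 + (u (aff p0 τ r q) / c - 1)) ^ lam * φ q := by
      rw [← integral_const_mul]
      congr 1; ext q
      by_cases hq : ‖q‖ ≤ 1 / 2
      · have h2 : ‖aff p0 τ r q - p0‖ ≤ δ := by
          have := norm_aff_sub_le (p0 := p0) hτ hr hτδ hrδ hq
          linarith [hr.trans_le hrδ]
        have h3 := d.pos _ h2
        rw [← mul_assoc, ← Real.mul_rpow hc.le (by rw [add_sub_cancel]; positivity)]
        congr 2; field_simp; ring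
      · rw [h0.2 q (by linarith)]; ring
    have hK : ∫ q, u (aff p0 τ r q) ^ 2 * h (aff p0 τ r q) * (r⁻¹ * φx q) =
        c ^ 2 * r⁻¹ * ∫ q, h (aff p0 τ r q) * ((1 + (u (aff p0 τ r q) / c - 1)) ^ 2 * φx q) := by
      rw [← integral_const_mul]
      congr 1; ext q; field_simp; ring
    have hM : ∀ q, (Metric.ball (0 : ℝ × ℝ) (1 / 2)).indicator
        (fun q => r ^ 3 / c * h (aff p0 τ r q)) q *
          ((1 + (u (aff p0 τ r q) / c - 1)) ^ 2 * φx q) =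
        r ^ 3 / c * (h (aff p0 τ r q) * ((1 + (u (aff p0 τ r q) / c - 1)) ^ 2 * φx q)) := by
      intro q
      have := hind hb hx q
      linear_combination ((1 + (u (aff p0 τ r q) / c - 1)) ^ 2) * this
    rw [hI, hJ, hK] at key
    simp_rw [hM]
    rw [integral_const_mul]
    set X := ∫ q, (u (aff p0 τ r q) / c - 1) * φt q
    set Y := ∫ q, h (aff p0 τ r q) * ((1 + (u (aff p0 τ r q) / c - 1)) ^ 2 * φx q)
    set Z := ∫ q, (1 + (u (aff p0 τ r q) / c - 1)) ^ lam * φ q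
    have h4 : r ^ 3 / c = c * τ / r := by rw [hτdef]; field_simp
    rw [h4]
    have : (r * c) * (X + c * τ / r * Y - c ^ lam * τ / c * Z) = 0 := by
      field_simp at key ⊢
      linarith
    exact (mul_eq_zero.1 this).resolve_left (by positivity)


/-- Integration by parts in space on an open set, against functions supported in a compact
subset. -/
lemma ibp_on {V K : Set (ℝ × ℝ)} (hV : IsOpen V) (hK : IsCompact K) (hKV : K ⊆ V)
    {f g g' : ℝ × ℝ → ℝ} (hf : Cx V 1 f) (hg : Continuous g) (hg' : Continuous g')
    (h0 : ∀ p ∉ K, g p = 0) (h0' : ∀ p ∉ K, g' p = 0) (hd : DX g g') :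
    ∫ p, f p * g' p = -∫ p, pX f p * g p := by
  have hcont : ∀ {F G : ℝ × ℝ → ℝ}, ContinuousOn F V → Continuous G → (∀ p ∉ K, G p = 0) →
      Continuous fun p => F p * G p := by
    intro F G hF hG hz
    rw [continuous_iff_continuousAt]
    intro p
    by_cases hp : p ∈ V
    · exact (hF.continuousAt (hV.mem_nhds hp)).mul hG.continuousAt
    · have : (fun p => F p * G p) =ᶠ[nhds p] fun _ => 0 := by
        filter_upwards [hK.isClosed.isOpen_compl.mem_nhds fun h => hp (hKV h)] with q hq
        rw [hz q hq, mul_zero]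
      exact continuousAt_const.congr this.symm
  obtain ⟨R, hR⟩ := hK.isBounded.exists_norm_le
  have hout : ∀ p : ℝ × ℝ, R < ‖p‖ → p ∉ K := fun p hp hpK => absurd (hR p hpK) (not_le.2 hp)
  have cv : ∀ {F G : ℝ × ℝ → ℝ}, ContinuousOn F V → Continuous G → (∀ p ∉ K, G p = 0) →
      CV R fun p => F p * G p := fun hF hG hz =>
    ⟨hcont hF hG hz, fun p hp => by simp only [hz p (hout p hp), mul_zero]⟩
  have c1 := cv hf.1 hg h0
  have c2 := cv hf.1 hg' h0'
  have c3 := cv (F := pX f) hf.2.2 hg h0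
  have key := integral_DX_real c1 (G' := fun p => pX f p * g p + f p * g' p)
    ⟨c3.1.add c2.1, fun p hp => by
      simp only [h0 p (hout p hp), h0' p (hout p hp), mul_zero, add_zero]⟩ (by
      intro p
      by_cases hp : p ∈ V
      · exact (hf.hasDeriv hp).mul (hd p)
      · have hpK : p ∉ K := fun h => hp (hKV h)
        simp only [h0 p hpK, h0' p hpK, mul_zero, add_zero]
        refine (hasDerivAt_const p.2 (0 : ℝ)).congr_of_eventuallyEq ?_
        filter_upwards [slice_eventually hK.isClosed.isOpen_compl hpK] with y hy
        rw [h0 _ hy, mul_zero])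
  rw [integral_add c3.integrable c2.integrable] at key
  linarith

/-- Interior regularity: a positive local solution has four continuous space derivatives near
`p0`, and its weak third derivative is the classical one. -/
theorem LocSol.regular {lam δ : ℝ} {p0 : ℝ × ℝ} {u h : ℝ × ℝ → ℝ} (d : LocSol lam δ p0 u h)
    (hlam : 1 ≤ lam) (hδ : 0 < δ) :
    ∃ V : Set (ℝ × ℝ), IsOpen V ∧ p0 ∈ V ∧ Cx V 4 u ∧
      ∀ᵐ p, p ∈ V → h p = pX (pX (pX u)) p := by
  obtain ⟨ε0, hε0, hreg⟩ := unit_regularity lam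
  set ε := min ε0 (1 / 2) with hεd
  have hε : 0 < ε := by positivity
  have hc : 0 < u p0 := d.pos p0 (by simp [hδ.le])
  set c := u p0 with hcdef
  obtain ⟨η, hη, hηu⟩ : ∃ η > 0, ∀ p, ‖p - p0‖ ≤ η → |u p / c - 1| ≤ ε := by
    have h1 : ContinuousAt (fun p => |u p / c - 1|) p0 := by
      have := d.cont
      fun_prop
    have h2 := h1.eventually_lt (continuousAt_const (y := ε)) (by
      simp [← hcdef, div_self hc.ne', hε])
    obtain ⟨η, hη, hb⟩ := Metric.eventually_nhds_iff.1 h2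
    refine ⟨η / 2, by positivity, fun p hp => (hb ?_).le⟩
    rw [dist_eq_norm]; linarith
  set H := (∫⁻ p in Metric.ball p0 δ, ‖h p‖ₑ ^ 2).toReal
  -- all smallness requirements on the scale `r` are open conditions satisfied at `r = 0`
  obtain ⟨r, hr, hrδ, hrη, hτδ, hτη, hH, hρ⟩ : ∃ r : ℝ, 0 < r ∧ r ≤ δ ∧ r ≤ η ∧
      r ^ 4 / c ^ 2 ≤ δ ∧ r ^ 4 / c ^ 2 ≤ η ∧ r * H ≤ ε ^ 2 ∧
      c ^ lam * (r ^ 4 / c ^ 2) / c ≤ ε := by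
    have hev : ∀ {f : ℝ → ℝ} {b : ℝ}, Continuous f → f 0 = 0 → 0 < b →
        ∀ᶠ r in nhdsWithin (0 : ℝ) (Ioi 0), f r ≤ b := fun {f b} hf h0 hb =>
      nhdsWithin_le_nhds ((hf.continuousAt.eventually_lt continuousAt_const
        (by rw [h0]; exact hb)).mono fun _ h => h.le)
    have h0 : ∀ᶠ r in nhdsWithin (0 : ℝ) (Ioi 0), 0 < r := self_mem_nhdsWithin
    exact (h0.and ((hev continuous_id rfl hδ).and ((hev continuous_id rfl hη).and
      ((hev (f := fun r => r ^ 4 / c ^ 2) (by fun_prop) (by simp) hδ).and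
      ((hev (f := fun r => r ^ 4 / c ^ 2) (by fun_prop) (by simp) hη).and
      ((hev (f := fun r => r * H) (by fun_prop) (by simp) (by positivity)).and
      (hev (f := fun r => c ^ lam * (r ^ 4 / c ^ 2) / c) (by fun_prop) (by simp) hε))))))).exists
  set τ := r ^ 4 / c ^ 2 with hτd
  have hτ : 0 < τ := by positivity
  have hU := d.uData (ε := ε) hlam hc hr hτd hrδ hτδ (min_le_right _ _) (fun q hq => hηu _ (by
    have := norm_aff_sub_le (p0 := p0) hτ hr hτη hrη hq
    linarith)) hH hρ
  have hcx := hreg _ _ _ _ hU (min_le_left _ _)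
  have hBo : IsOpen {p : ℝ × ℝ | ‖p‖ < 1 / 4} := isOpen_lt continuous_norm continuous_const
  set V := affi p0 τ r ⁻¹' {p : ℝ × ℝ | ‖p‖ < 1 / 4} with hVd
  have hV : IsOpen V := hBo.preimage affi_continuous
  have hVcx : Cx V 4 u := by
    have h1 := (Cx.const hV c 4).mul hV ((Cx.const hV 1 4).add hV
      (hcx.comp_affi (p0 := p0) (τ := τ) (r := r) hBo))
    refine h1.congr hV fun p _ => ?_
    rw [aff_affi hτ hr, ← hcdef]
    field_simp; ring
  have hVb : V ⊆ Metric.ball p0 δ := by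
    intro p hp
    have := norm_aff_sub_le (p0 := p0) hτ hr hτδ hrδ (le_of_lt hp)
    rw [aff_affi hτ hr] at this
    rw [mem_ball_iff_norm]
    linarith
  refine ⟨V, hV, ?_, hVcx, ?_⟩
  · simp [hVd, affi]
  have hc3 : ContinuousOn (pX (pX (pX u))) V := hVcx.2.2.2.2.2.2.1
  have hLint : IntegrableOn h (Metric.ball p0 δ) volume := by
    have hm : MemLp h 2 (volume.restrict (Metric.ball p0 δ)) := by
      refine ⟨d.meas.restrict, ?_⟩
      rw [eLpNorm_lt_top_iff_lintegral_rpow_enorm_lt_top (by norm_num) (by norm_num)]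
      simpa using d.h2
    have : IsFiniteMeasure (volume.restrict (Metric.ball p0 δ)) :=
      ⟨by simpa using measure_ball_lt_top⟩
    exact hm.integrable (by norm_num)
  have hLI : LocallyIntegrableOn h V volume := (hLint.mono_set hVb).locallyIntegrableOn
  have hLI3 : LocallyIntegrableOn (pX (pX (pX u))) V volume :=
    hc3.locallyIntegrableOn hV.measurableSet
  have hfin := hV.ae_eq_zero_of_integral_contDiff_smul_eq_zero (hLI.sub hLI3) (by
    intro g hg hgc hgV
    obtain ⟨R, hR⟩ := hgc.isCompact.isBounded.exists_norm_le
    have hout : ∀ p : ℝ × ℝ, R < ‖p‖ → p ∉ tsupport g :=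
      fun p hp hpK => absurd (hR p hpK) (not_le.2 hp)
    have z0 : Zr R g := ⟨hg, fun p hp => image_eq_zero_of_notMem_tsupport (hout p hp)⟩
    have van : ∀ (f : ℝ × ℝ → ℝ), (∀ p ∉ tsupport g, f p = 0) →
        ∀ p ∉ tsupport g, dX f p = 0 := by
      intro f hf p hp
      have : f =ᶠ[nhds p] fun _ => 0 := by
        filter_upwards [(isClosed_tsupport g).isOpen_compl.mem_nhds hp] with q hq using hf q hq
      simp [dX, this.fderiv_eq]
    have v0 : ∀ p ∉ tsupport g, g p = 0 := fun p hp => image_eq_zero_of_notMem_tsupport hp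
    have v1 := van _ v0
    have v2 := van _ v1
    have v3 := van _ v2
    have cb : ∀ {f : ℝ × ℝ → ℝ}, Zr R f → (∀ p ∉ tsupport g, f p = 0) → CB p0 δ f :=
      fun hz hv => ⟨hz.1.continuous, fun p hp => hv p fun hpt => by
        have := hVb (hgV hpt)
        rw [mem_ball_iff_norm] at this
        linarith⟩
    have k1 := d.e1 g (dX g) (dX (dX g)) (dX (dX (dX g))) (cb z0 v0) (cb z0.dX v1)
      (cb z0.dX.dX v2) (cb z0.dX.dX.dX v3) z0.hasDX z0.dX.hasDX z0.dX.dX.hasDX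
    have c3 : Cx V 3 (pX u) := hVcx.2.2
    have c2 : Cx V 2 (pX (pX u)) := c3.2.2
    have i1 := ibp_on hV hgc.isCompact hgV hVcx.pred.pred.pred z0.dX.dX.1.continuous
      z0.dX.dX.dX.1.continuous v2 v3 z0.dX.dX.hasDX
    have i2 := ibp_on hV hgc.isCompact hgV c3.pred.pred z0.dX.1.continuous
      z0.dX.dX.1.continuous v1 v2 z0.dX.hasDX
    have i3 := ibp_on hV hgc.isCompact hgV c2.pred z0.1.continuous
      z0.dX.1.continuous v0 v1 z0.hasDX
    have hh : ∫ p, g p * h p = ∫ p, g p * pX (pX (pX u)) p := by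
      simp_rw [mul_comm (g _)]
      linarith
    have int1 : ∀ {F : ℝ × ℝ → ℝ}, LocallyIntegrableOn F V volume →
        Integrable (fun p => g p * F p) volume := by
      intro F hF
      have h1 : IntegrableOn F (tsupport g) volume := hF.integrableOn_compact_subset hgV hgc.isCompact
      have h2 : IntegrableOn (fun p => g p * F p) (tsupport g) volume :=
        h1.continuousOn_mul hg.continuous.continuousOn hgc.isCompact
      exact (integrableOn_iff_integrable_of_support_subset (fun p hp => subset_tsupport g (by
        intro h0; exact hp (by simp [h0])))).1 h2
    simp only [smul_eq_mul, Pi.sub_apply, mul_sub]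
    rw [integral_sub (int1 hLI) (int1 hLI3), hh, sub_self])
  filter_upwards [hfin] with p hp hpV
  exact sub_eq_zero.1 (hp hpV)

/-! ### The real trigonometric basis -/

/-- The base frequency `2π / L`. -/
def om (L : ℝ) : ℝ := 2 * Real.pi / L

/-- The Hartley basis `(cos (ω k x) + sin (ω k x)) / √L`, `k ∈ ℤ`: real, orthonormal on each
period, and with `e_k' = ω k e_{-k}`. -/
def he (L : ℝ) (k : ℤ) (x : ℝ) : ℝ :=
  (Real.cos (om L * k * x) + Real.sin (om L * k * x)) / √L

section
variable {L : ℝ}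

lemma om_pos (hL : 0 < L) : 0 < om L := by unfold om; positivity

lemma he_cont (k : ℤ) : Continuous (he L k) := by unfold he; fun_prop

lemma he_hasDeriv (k : ℤ) (x : ℝ) :
    HasDerivAt (he L k) (om L * k * he L (-k) x) x := by
  have h1 : HasDerivAt (fun x : ℝ => om L * k * x) (om L * k) x := by
    simpa using (hasDerivAt_id x).const_mul (om L * k)
  refine ((h1.cos.add h1.sin).div_const (√L)).congr_deriv ?_
  simp only [he, Int.cast_neg, mul_neg, neg_mul, Real.cos_neg, Real.sin_neg]
  ring

lemma he_periodic (hL : 0 < L) (k : ℤ) (x : ℝ) : he L k (x + L) = he L k x := by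
  have : om L * k * (x + L) = om L * k * x + k * (2 * Real.pi) := by
    unfold om; field_simp
  rw [he, he, this, Real.cos_add_int_mul_two_pi, Real.sin_add_int_mul_two_pi]

lemma he_abs_le (k : ℤ) (x : ℝ) : |he L k x| ≤ 2 / √L := by
  rw [he, abs_div, abs_of_nonneg (Real.sqrt_nonneg L)]
  gcongr
  calc _ ≤ |Real.cos (om L * k * x)| + |Real.sin (om L * k * x)| := abs_add_le _ _
    _ ≤ 1 + 1 := add_le_add (Real.abs_cos_le_one _) (Real.abs_sin_le_one _)
    _ = 2 := by norm_num

lemma he_zero (x : ℝ) : he L 0 x = 1 / √L := by simp [he]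

/-- The integral of a derivative of a periodic function over one period. -/
lemma integral_period_deriv {f f' : ℝ → ℝ} (hd : ∀ x, HasDerivAt f (f' x) x)
    (hc : Continuous f') {y : ℝ} (hp : f (y + L) = f y) : ∫ x in y..(y + L), f' x = 0 := by
  rw [intervalIntegral.integral_eq_sub_of_hasDerivAt (fun x _ => hd x)
    (hc.intervalIntegrable _ _), hp, sub_self]

lemma integral_cos_period (hL : 0 < L) (m : ℤ) (y : ℝ) :
    ∫ x in y..(y + L), Real.cos (om L * m * x) = if m = 0 then L else 0 := by
  split_ifs with h
  · simp [h]
  · have hm : om L * m ≠ 0 := mul_ne_zero (om_pos hL).ne' (by exact_mod_cast h)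
    have key : ∫ x in y..(y + L), om L * m * Real.cos (om L * m * x) = 0 := by
      refine integral_period_deriv (f := fun x => Real.sin (om L * m * x)) (fun x => ?_)
        (by fun_prop) ?_
      · have h1 : HasDerivAt (fun x : ℝ => om L * m * x) (om L * m) x := by
          simpa using (hasDerivAt_id x).const_mul (om L * m)
        simpa [mul_comm] using h1.sin
      · have : om L * m * (y + L) = om L * m * y + m * (2 * Real.pi) := by
          unfold om; field_simp
        rw [this, Real.sin_add_int_mul_two_pi]
    rw [intervalIntegral.integral_const_mul] at key
    exact (mul_eq_zero.1 key).resolve_left hm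

lemma integral_sin_period (hL : 0 < L) (m : ℤ) (y : ℝ) :
    ∫ x in y..(y + L), Real.sin (om L * m * x) = 0 := by
  by_cases h : m = 0
  · simp [h]
  · have hm : om L * m ≠ 0 := mul_ne_zero (om_pos hL).ne' (by exact_mod_cast h)
    have key : ∫ x in y..(y + L), -(om L * m) * Real.sin (om L * m * x) = 0 := by
      refine integral_period_deriv (f := fun x => Real.cos (om L * m * x)) (fun x => ?_)
        (by fun_prop) ?_
      · have h1 : HasDerivAt (fun x : ℝ => om L * m * x) (om L * m) x := by
          simpa using (hasDerivAt_id x).const_mul (om L * m)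
        refine h1.cos.congr_deriv ?_
        ring
      · have : om L * m * (y + L) = om L * m * y + m * (2 * Real.pi) := by
          unfold om; field_simp
        rw [this, Real.cos_add_int_mul_two_pi]
    rw [intervalIntegral.integral_const_mul] at key
    exact (mul_eq_zero.1 key).resolve_left (neg_ne_zero.2 hm)

lemma he_mul (hL : 0 < L) (j k : ℤ) (x : ℝ) : he L j x * he L k x =
    L⁻¹ * (Real.cos (om L * (j - k : ℤ) * x) + Real.sin (om L * (j + k : ℤ) * x)) := by
  have h1 : om L * (j - k : ℤ) * x = om L * j * x - om L * k * x := by push_cast; ring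
  have h2 : om L * (j + k : ℤ) * x = om L * j * x + om L * k * x := by push_cast; ring
  have h3 : √L * √L = L := Real.mul_self_sqrt hL.le
  rw [h1, h2, Real.cos_sub, Real.sin_add, he, he, div_mul_div_comm, h3]
  field_simp
  ring

lemma he_ortho (hL : 0 < L) (j k : ℤ) (y : ℝ) :
    ∫ x in y..(y + L), he L j x * he L k x = if j = k then 1 else 0 := by
  simp_rw [he_mul hL]
  rw [intervalIntegral.integral_const_mul, intervalIntegral.integral_add
    (Continuous.intervalIntegrable (by fun_prop) _ _)
    (Continuous.intervalIntegrable (by fun_prop) _ _),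
    integral_cos_period hL, integral_sin_period hL]
  by_cases h : j = k
  · simp [h, hL.ne']
  · simp [h, sub_eq_zero]

/-- Orthonormality for finite sums; `σ` is the identity or the reflection `k ↦ -k`. -/
lemma he_sum_sq (hL : 0 < L) (σ : ℤ → ℤ) (hσ : Function.Injective σ) (I : Finset ℤ) (d : ℤ → ℝ)
    (y : ℝ) : ∫ x in y..(y + L), (∑ k ∈ I, d k * he L (σ k) x) ^ 2 = ∑ k ∈ I, d k ^ 2 := by
  have h1 : ∀ x, (∑ k ∈ I, d k * he L (σ k) x) ^ 2 =
      ∑ j ∈ I, ∑ k ∈ I, d j * d k * (he L (σ j) x * he L (σ k) x) := by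
    intro x
    rw [sq, Finset.sum_mul_sum]
    exact Finset.sum_congr rfl fun j _ => Finset.sum_congr rfl fun k _ => by ring
  have hc := fun k => he_cont (L := L) k
  simp_rw [h1]
  rw [intervalIntegral.integral_finsetSum fun j _ =>
    Continuous.intervalIntegrable (by fun_prop) _ _]
  refine Finset.sum_congr rfl fun j hj => ?_
  rw [intervalIntegral.integral_finsetSum fun k _ =>
    Continuous.intervalIntegrable (by fun_prop) _ _]
  simp_rw [intervalIntegral.integral_const_mul, he_ortho hL, hσ.eq_iff]
  simp [hj, sq]

lemma he_proj (hL : 0 < L) (σ : ℤ → ℤ) (hσ : Function.Injective σ) (I : Finset ℤ)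
    {f : ℝ → ℝ} {y : ℝ} (hf : IntervalIntegrable f volume y (y + L))
    (hf2 : IntervalIntegrable (fun x => f x ^ 2) volume y (y + L)) :
    ∫ x in y..(y + L),
        (f x - ∑ k ∈ I, (∫ z in y..(y + L), f z * he L (σ k) z) * he L (σ k) x) ^ 2 =
      (∫ x in y..(y + L), f x ^ 2) - ∑ k ∈ I, (∫ z in y..(y + L), f z * he L (σ k) z) ^ 2 := by
  set b : ℤ → ℝ := fun k => ∫ z in y..(y + L), f z * he L (σ k) z with hb
  have hc := fun k => he_cont (L := L) k
  have hfe : ∀ k, IntervalIntegrable (fun x => f x * he L (σ k) x) volume y (y + L) :=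
    fun k => hf.mul_continuousOn (hc _).continuousOn
  have hfs : IntervalIntegrable (fun x => ∑ k ∈ I, b k * (f x * he L (σ k) x)) volume y (y + L) := by
    have h0 : (fun x => ∑ k ∈ I, b k * (f x * he L (σ k) x)) =
        ∑ k ∈ I, fun x => b k * (f x * he L (σ k) x) := by
      ext x; simp
    rw [h0]
    exact IntervalIntegrable.sum I fun k _ => (hfe k).const_mul (b k)
  have h1 : ∀ x, (f x - ∑ k ∈ I, b k * he L (σ k) x) ^ 2 =
      (f x ^ 2 - 2 * ∑ k ∈ I, b k * (f x * he L (σ k) x)) +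
        (∑ k ∈ I, b k * he L (σ k) x) ^ 2 := by
    intro x
    have : ∑ k ∈ I, b k * (f x * he L (σ k) x) = f x * ∑ k ∈ I, b k * he L (σ k) x := by
      rw [Finset.mul_sum]; exact Finset.sum_congr rfl fun k _ => by ring
    rw [this]; ring
  rw [intervalIntegral.integral_congr fun x _ => h1 x]
  rw [intervalIntegral.integral_add (hf2.sub (hfs.const_mul 2))
    (Continuous.intervalIntegrable (by fun_prop) _ _), he_sum_sq hL σ hσ,
    intervalIntegral.integral_sub hf2 (hfs.const_mul 2), intervalIntegral.integral_const_mul,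
    intervalIntegral.integral_finsetSum fun k _ => (hfe k).const_mul (b k)]
  simp_rw [intervalIntegral.integral_const_mul]
  have : ∑ k ∈ I, b k * ∫ x in y..(y + L), f x * he L (σ k) x = ∑ k ∈ I, b k ^ 2 :=
    Finset.sum_congr rfl fun k _ => by rw [sq]
  rw [this]; ring

/-- The frequencies `|k| ≤ N`. -/
def fI (N : ℕ) : Finset ℤ := Finset.Icc (-(N : ℤ)) N

lemma mem_fI {N : ℕ} {k : ℤ} : k ∈ fI N ↔ -(N : ℤ) ≤ k ∧ k ≤ N := Finset.mem_Icc

lemma neg_mem_fI {N : ℕ} {k : ℤ} : -k ∈ fI N ↔ k ∈ fI N := by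
  simp only [mem_fI]; omega

lemma sum_fI_neg (N : ℕ) (f : ℤ → ℝ) : ∑ k ∈ fI N, f (-k) = ∑ k ∈ fI N, f k :=
  Finset.sum_nbij' (fun k => -k) (fun k => -k) (fun _ hk => neg_mem_fI.2 hk)
    (fun _ hk => neg_mem_fI.2 hk) (fun k _ => neg_neg k) (fun k _ => neg_neg k) fun _ _ => rfl

lemma tendsto_fI : Tendsto fI atTop atTop := by
  refine tendsto_atTop_finset_of_monotone (fun a b hab k hk => ?_) fun k => ⟨k.natAbs, ?_⟩
  · rw [mem_fI] at hk ⊢; omega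
  · rw [mem_fI]; omega

/-- Parseval's identity for the Hartley basis. -/
lemma he_parseval (hL : 0 < L) {f : ℝ → ℝ} {y : ℝ}
    (hf : IntervalIntegrable f volume y (y + L))
    (hf2 : IntervalIntegrable (fun x => f x ^ 2) volume y (y + L)) :
    Tendsto (fun N => ∑ k ∈ fI N, (∫ x in y..(y + L), f x * he L k x) ^ 2) atTop
      (nhds (∫ x in y..(y + L), f x ^ 2)) := by
  have hyL : y < y + L := by linarith
  have hm : MemLp (fun x => (f x : ℂ)) 2 (volume.restrict (Ioc y (y + L))) := by
    have h1 : AEStronglyMeasurable f (volume.restrict (Ioc y (y + L))) :=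
      ((intervalIntegrable_iff_integrableOn_Ioc_of_le hyL.le).1 hf).aestronglyMeasurable
    have h2 : MemLp f 2 (volume.restrict (Ioc y (y + L))) :=
      (memLp_two_iff_integrable_sq h1).2
        ((intervalIntegrable_iff_integrableOn_Ioc_of_le hyL.le).1 hf2)
    exact h2.ofReal
  have hs := (hasSum_sq_fourierCoeffOn hyL hm).comp tendsto_fI
  have hcoef : ∀ k : ℤ, ‖fourierCoeffOn hyL (fun x => (f x : ℂ)) k‖ ^ 2 = (2 * L)⁻¹ *
      ((∫ x in y..(y + L), f x * he L k x) ^ 2 + (∫ x in y..(y + L), f x * he L (-k) x) ^ 2) := by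
    intro k
    set C := ∫ x in y..(y + L), f x * Real.cos (om L * k * x) with hC
    set S := ∫ x in y..(y + L), f x * Real.sin (om L * k * x) with hS
    have hiC : IntervalIntegrable (fun x => f x * Real.cos (om L * k * x)) volume y (y + L) :=
      hf.mul_continuousOn (by fun_prop)
    have hiS : IntervalIntegrable (fun x => f x * Real.sin (om L * k * x)) volume y (y + L) :=
      hf.mul_continuousOn (by fun_prop)
    have hiC' : IntervalIntegrable (fun x => ((f x * Real.cos (om L * k * x) : ℝ) : ℂ)) volume
        y (y + L) := ⟨hiC.1.ofReal (𝕜 := ℂ), hiC.2.ofReal (𝕜 := ℂ)⟩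
    have hiS' : IntervalIntegrable (fun x => ((f x * Real.sin (om L * k * x) : ℝ) : ℂ)) volume
        y (y + L) := ⟨hiS.1.ofReal (𝕜 := ℂ), hiS.2.ofReal (𝕜 := ℂ)⟩
    have e1 : ∫ x in y..(y + L), f x * he L k x = (C + S) / √L := by
      rw [hC, hS, ← intervalIntegral.integral_add hiC hiS, ← intervalIntegral.integral_div]
      congr 1; ext x; rw [he]; ring
    have e2 : ∫ x in y..(y + L), f x * he L (-k) x = (C - S) / √L := by
      rw [hC, hS, ← intervalIntegral.integral_sub hiC hiS, ← intervalIntegral.integral_div]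
      congr 1; ext x
      simp only [he, Int.cast_neg, mul_neg, neg_mul, Real.cos_neg, Real.sin_neg]; ring
    have e3 : fourierCoeffOn hyL (fun x => (f x : ℂ)) k = ((L⁻¹ : ℝ) : ℂ) * (C - S * Complex.I) := by
      rw [fourierCoeffOn_eq_integral]
      simp only [add_sub_cancel_left, smul_eq_mul, one_div, Complex.real_smul]
      congr 1
      rw [hC, hS, ← intervalIntegral.integral_ofReal, ← intervalIntegral.integral_ofReal,
        ← intervalIntegral.integral_mul_const, ← intervalIntegral.integral_sub hiC'
          (hiS'.mul_const _)]
      congr 1; ext x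
      rw [fourier_coe_apply, add_sub_cancel_left]
      have : 2 * (Real.pi : ℂ) * Complex.I * ((-k : ℤ) : ℂ) * (x : ℂ) / (L : ℂ) =
          ((-(om L * k * x) : ℝ) : ℂ) * Complex.I := by
        unfold om; push_cast; field_simp
      rw [this, Complex.exp_mul_I, ← Complex.ofReal_cos, ← Complex.ofReal_sin, Real.cos_neg,
        Real.sin_neg]
      push_cast; ring
    have h4 : √L ^ 2 = L := Real.sq_sqrt hL.le
    have h5 : ‖(C : ℂ) - S * Complex.I‖ ^ 2 = C ^ 2 + S ^ 2 := by
      rw [← Complex.normSq_eq_norm_sq, Complex.normSq_apply]; simp; ring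
    rw [e1, e2, e3, norm_mul, mul_pow, h5, div_pow, div_pow, h4, Complex.norm_real,
      Real.norm_eq_abs, sq_abs]
    field_simp
    ring
  have hsum : ∀ N, ∑ k ∈ fI N, ‖fourierCoeffOn hyL (fun x => (f x : ℂ)) k‖ ^ 2 =
      L⁻¹ * ∑ k ∈ fI N, (∫ x in y..(y + L), f x * he L k x) ^ 2 := by
    intro N
    simp_rw [hcoef]
    rw [← Finset.mul_sum, Finset.sum_add_distrib,
      sum_fI_neg N (fun k => (∫ x in y..(y + L), f x * he L k x) ^ 2)]
    field_simp; ring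
  have h6 := hs.const_mul L
  simp only [Function.comp_def, hsum, Complex.norm_real, Real.norm_eq_abs, sq_abs,
    add_sub_cancel_left, smul_eq_mul, mul_inv_cancel_left₀ hL.ne'] at h6
  exact h6

end

/-! ### Global solvability of an autonomous ODE under an a priori bound -/

/-- If `F` is Lipschitz on bounded sets and every solution of every damped equation
`c' = θ(t) F(c)`, `0 ≤ θ ≤ 1`, stays in the ball of radius `R`, then `c' = F(c)` is solvable on
`[0,T]`: apply Picard–Lindelöf to the vector field cut off outside the ball of radius `R + 1`. -/
theorem ode_exists {E : Type*} [NormedAddCommGroup E] [NormedSpace ℝ E] [CompleteSpace E]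
    (F : E → E) (hF : ∀ R : ℝ, ∃ K : NNReal, LipschitzOnWith K F (Metric.closedBall 0 R))
    (c0 : E) {T R : ℝ} (hT : 0 ≤ T)
    (hap : ∀ θ : ℝ → ℝ, (∀ t, 0 ≤ θ t) → (∀ t, θ t ≤ 1) → ∀ c : ℝ → E, c 0 = c0 →
      (∀ t ∈ Icc 0 T, HasDerivWithinAt c (θ t • F (c t)) (Icc 0 T) t) →
      ∀ t ∈ Icc 0 T, ‖c t‖ ≤ R) :
    ∃ c : ℝ → E, c 0 = c0 ∧ ∀ t ∈ Icc 0 T, HasDerivWithinAt c (F (c t)) (Icc 0 T) t := by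
  set θ : E → ℝ := fun c => max 0 (min 1 (R + 1 - ‖c‖)) with hθ
  have hθ0 : ∀ c, 0 ≤ θ c := fun c => le_max_left _ _
  have hθ1 : ∀ c, θ c ≤ 1 := fun c => max_le zero_le_one (min_le_left _ _)
  have hθL : ∀ x y, |θ x - θ y| ≤ ‖x - y‖ := by
    intro x y
    have h1 : |θ x - θ y| ≤ |min 1 (R + 1 - ‖x‖) - min 1 (R + 1 - ‖y‖)| := by
      simpa using abs_max_sub_max_le_max 0 (min 1 (R + 1 - ‖x‖)) 0 (min 1 (R + 1 - ‖y‖))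
    have h2 : |min 1 (R + 1 - ‖x‖) - min 1 (R + 1 - ‖y‖)| ≤ |(R + 1 - ‖x‖) - (R + 1 - ‖y‖)| := by
      simpa using abs_min_sub_min_le_max 1 (R + 1 - ‖x‖) 1 (R + 1 - ‖y‖)
    have h3 : |(R + 1 - ‖x‖) - (R + 1 - ‖y‖)| ≤ ‖x - y‖ := by
      rw [show (R + 1 - ‖x‖) - (R + 1 - ‖y‖) = -(‖x‖ - ‖y‖) by ring, abs_neg]
      exact abs_norm_sub_norm_le x y
    exact h1.trans (h2.trans h3)
  obtain ⟨K1, hK1⟩ := hF (|R| + 1)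
  have hbd : ∀ (K : NNReal) (ρ : ℝ), LipschitzOnWith K F (Metric.closedBall 0 ρ) →
      ∀ x, ‖x‖ ≤ ρ → ‖F x‖ ≤ ‖F 0‖ + K * ρ := by
    intro K ρ hK x hx
    have h1 := hK.norm_sub_le (x := x) (y := 0) (by simpa using hx)
      (by simpa using (norm_nonneg x).trans hx)
    rw [sub_zero] at h1
    have h2 := norm_add_le (F x - F 0) (F 0)
    rw [sub_add_cancel] at h2
    have : (K : ℝ) * ‖x‖ ≤ K * ρ := mul_le_mul_of_nonneg_left hx K.2
    linarith
  set M0 : ℝ := ‖F 0‖ + K1 * (|R| + 1) with hM0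
  have hM00 : 0 ≤ M0 := by positivity
  have hGb : ∀ x, ‖θ x • F x‖ ≤ M0 := by
    intro x
    rw [norm_smul, Real.norm_eq_abs, abs_of_nonneg (hθ0 x)]
    rcases le_or_gt ‖x‖ (R + 1) with h | h
    · have h1 := hbd K1 _ hK1 x (h.trans (by linarith [le_abs_self R]))
      nlinarith [hθ1 x, hθ0 x, norm_nonneg (F x)]
    · have : θ x = 0 := max_eq_left (min_le_of_right_le (by linarith))
      rw [this, zero_mul]; exact hM00
  set a : ℝ := M0 * T with ha
  have ha0 : 0 ≤ a := mul_nonneg hM00 hT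
  obtain ⟨K2, hK2⟩ := hF (‖c0‖ + a)
  set M2 : ℝ := ‖F 0‖ + K2 * (‖c0‖ + a) with hM2
  have hM20 : 0 ≤ M2 := by positivity
  have hsub : ∀ x ∈ Metric.closedBall c0 a, ‖x‖ ≤ ‖c0‖ + a := by
    intro x hx
    rw [Metric.mem_closedBall, dist_eq_norm] at hx
    have := norm_add_le (x - c0) c0
    rw [sub_add_cancel] at this
    linarith
  have hGL : LipschitzOnWith (Real.toNNReal M2 + K2) (fun x => θ x • F x) (Metric.closedBall c0 a) := by
    refine LipschitzOnWith.of_dist_le_mul fun x hx y hy => ?_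
    rw [dist_eq_norm, dist_eq_norm]
    have h1 : θ x • F x - θ y • F y = (θ x - θ y) • F x + θ y • (F x - F y) := by
      rw [sub_smul, smul_sub]; abel
    have h2 := hK2.norm_sub_le (x := x) (y := y) (by simpa using hsub x hx)
      (by simpa using hsub y hy)
    have h3 := hbd K2 _ hK2 x (hsub x hx)
    rw [h1]
    refine (norm_add_le _ _).trans ?_
    rw [norm_smul, norm_smul, Real.norm_eq_abs, Real.norm_eq_abs, abs_of_nonneg (hθ0 y)]
    have h4 : |θ x - θ y| * ‖F x‖ ≤ ‖x - y‖ * M2 :=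
      mul_le_mul (hθL x y) h3 (norm_nonneg _) (norm_nonneg _)
    have h5 : θ y * ‖F x - F y‖ ≤ 1 * (K2 * ‖x - y‖) :=
      mul_le_mul (hθ1 y) h2 (norm_nonneg _) zero_le_one
    have h6 : ((Real.toNNReal M2 + K2 : NNReal) : ℝ) = M2 + K2 := by
      rw [NNReal.coe_add, Real.coe_toNNReal _ hM20]
    rw [h6]; linarith
  have hPL : IsPicardLindelof (fun _ x => θ x • F x) (⟨0, le_rfl, hT⟩ : Icc (0 : ℝ) T) c0
      ⟨a, ha0⟩ 0 ⟨M0, hM00⟩ (Real.toNNReal M2 + K2) :=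
    { lipschitzOnWith := fun _ _ => hGL
      continuousOn := fun _ _ => continuousOn_const
      norm_le := fun _ _ x _ => hGb x
      mul_max_le := by
        change M0 * max (T - 0) (0 - 0) ≤ a - 0
        rw [sub_zero, sub_zero, sub_zero, max_eq_left hT] }
  obtain ⟨c, hc0, hc⟩ := hPL.exists_eq_forall_mem_Icc_hasDerivWithinAt₀
  have hc0' : c 0 = c0 := hc0
  refine ⟨c, hc0', fun t ht => ?_⟩
  have hb := hap (fun t => θ (c t)) (fun t => hθ0 _) (fun t => hθ1 _) c hc0' hc t ht
  have h1 : θ (c t) = 1 := by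
    simp only [hθ]
    rw [min_eq_left (by linarith), max_eq_right zero_le_one]
  have h2 := hc t ht
  rw [h1, one_smul] at h2
  exact h2

/-! ### The Galerkin system -/

section
variable {L lam : ℝ} {N : ℕ}

/-- The trigonometric polynomial with Hartley coefficients `d`, frequencies `|k| ≤ N`. -/
def gV (L : ℝ) (N : ℕ) (d : ℤ → ℝ) (x : ℝ) : ℝ := ∑ k ∈ fI N, d k * he L k x

/-- First derivative of `gV`. -/
def gV1 (L : ℝ) (N : ℕ) (d : ℤ → ℝ) (x : ℝ) : ℝ :=
  ∑ k ∈ fI N, d k * (om L * k * he L (-k) x)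

/-- Second derivative of `gV`. -/
def gV2 (L : ℝ) (N : ℕ) (d : ℤ → ℝ) (x : ℝ) : ℝ :=
  ∑ k ∈ fI N, d k * (-(om L * k) ^ 2 * he L k x)

/-- Third derivative of `gV`. -/
def gV3 (L : ℝ) (N : ℕ) (d : ℤ → ℝ) (x : ℝ) : ℝ :=
  ∑ k ∈ fI N, d k * (-(om L * k) ^ 3 * he L (-k) x)

lemma gV_hasDeriv (d : ℤ → ℝ) (x : ℝ) : HasDerivAt (gV L N d) (gV1 L N d x) x :=
  HasDerivAt.fun_sum fun k _ => (he_hasDeriv k x).const_mul (d k)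

lemma gV1_hasDeriv (d : ℤ → ℝ) (x : ℝ) : HasDerivAt (gV1 L N d) (gV2 L N d x) x := by
  refine HasDerivAt.fun_sum fun k _ => ?_
  refine (((he_hasDeriv (-k) x).const_mul (om L * k)).const_mul (d k)).congr_deriv ?_
  rw [neg_neg]; push_cast; ring

lemma gV2_hasDeriv (d : ℤ → ℝ) (x : ℝ) : HasDerivAt (gV2 L N d) (gV3 L N d x) x := by
  refine HasDerivAt.fun_sum fun k _ => ?_
  refine (((he_hasDeriv k x).const_mul (-(om L * k) ^ 2)).const_mul (d k)).congr_deriv ?_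
  ring

lemma gV_per (hL : 0 < L) (d : ℤ → ℝ) (x : ℝ) : gV L N d (x + L) = gV L N d x := by
  simp only [gV, he_periodic hL]
lemma gV1_per (hL : 0 < L) (d : ℤ → ℝ) (x : ℝ) : gV1 L N d (x + L) = gV1 L N d x := by
  simp only [gV1, he_periodic hL]
lemma gV3_per (hL : 0 < L) (d : ℤ → ℝ) (x : ℝ) : gV3 L N d (x + L) = gV3 L N d x := by
  simp only [gV3, he_periodic hL]

lemma gV_cont (d : ℤ → ℝ) : Continuous (gV L N d) :=
  continuous_finsetSum _ fun k _ => (he_cont k).const_mul _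
lemma gV1_cont (d : ℤ → ℝ) : Continuous (gV1 L N d) :=
  continuous_finsetSum _ fun k _ => ((he_cont (-k)).const_mul _).const_mul _
lemma gV2_cont (d : ℤ → ℝ) : Continuous (gV2 L N d) :=
  continuous_finsetSum _ fun k _ => ((he_cont k).const_mul _).const_mul _
lemma gV3_cont (d : ℤ → ℝ) : Continuous (gV3 L N d) :=
  continuous_finsetSum _ fun k _ => ((he_cont (-k)).const_mul _).const_mul _

/-- The absorption term `v₊ ^ λ`. -/
def ab (lam v : ℝ) : ℝ := (max v 0) ^ lam

lemma ab_cont (hlam : 1 ≤ lam) : Continuous (ab lam) :=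
  (continuous_id.max continuous_const).rpow_const fun _ => Or.inr (by linarith)

lemma ab_nonneg (v : ℝ) : 0 ≤ ab lam v := Real.rpow_nonneg (le_max_right _ _) _

lemma ab_mono (hlam : 1 ≤ lam) : Monotone (ab lam) := fun _ _ h =>
  Real.rpow_le_rpow (le_max_right _ _) (max_le_max_right _ h) (by linarith)

lemma ab_locLip (hlam : 1 ≤ lam) : LocallyLipschitz (ab lam) := by
  have h1 : LocallyLipschitz (fun x : ℝ => x ^ lam) :=
    (Real.contDiff_rpow_const_of_le (n := 1) (by simpa using hlam)).locallyLipschitz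
  have h2 : LocallyLipschitz (fun x : ℝ => max x 0) :=
    (LipschitzWith.id.max_const 0).locallyLipschitz
  exact h1.comp h2

/-- The Galerkin vector field: the weak form of the equation tested with `e_k`. -/
def gF (L lam : ℝ) (N : ℕ) (d : ℤ → ℝ) (k : ℤ) : ℝ :=
  ∫ x in (0 : ℝ)..L, ((max (gV L N d x) 0) ^ 2 * gV3 L N d x * (om L * k * he L (-k) x)
    - ab lam (gV L N d x) * he L k x)

/-- Extension by zero of a coefficient vector. -/
def gext (N : ℕ) (c : fI N → ℝ) (k : ℤ) : ℝ := if h : k ∈ fI N then c ⟨k, h⟩ else 0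

lemma gext_contDiff (k : ℤ) : ContDiff ℝ 1 (fun c : fI N → ℝ => gext N c k) := by
  unfold gext
  split_ifs with h
  · exact contDiff_apply ℝ ℝ (⟨k, h⟩ : fI N)
  · exact contDiff_const

lemma he_contDiff (k : ℤ) : ContDiff ℝ 1 (he L k) := by
  unfold he; fun_prop

/-- The vector field is Lipschitz on bounded sets: its integrand is locally Lipschitz in
`(c, x)`. -/
lemma gF_lip (hL : 0 < L) (hlam : 1 ≤ lam) (R : ℝ) : ∃ K : NNReal,
    LipschitzOnWith K (fun (c : fI N → ℝ) (k : fI N) => gF L lam N (gext N c) k)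
      (Metric.closedBall 0 R) := by
  have hk : ∀ k : ℤ, ∃ K : NNReal, LipschitzOnWith K
      (fun p : (fI N → ℝ) × ℝ => (max (gV L N (gext N p.1) p.2) 0) ^ 2 *
        gV3 L N (gext N p.1) p.2 * (om L * k * he L (-k) p.2)
          - ab lam (gV L N (gext N p.1) p.2) * he L k p.2)
      (Metric.closedBall (0 : fI N → ℝ) R ×ˢ Icc 0 L) := by
    intro k
    have hV : ContDiff ℝ 1 (fun p : (fI N → ℝ) × ℝ => gV L N (gext N p.1) p.2) :=
      ContDiff.sum fun j _ => ((gext_contDiff j).comp contDiff_fst).mul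
        ((he_contDiff j).comp contDiff_snd)
    have hV3 : ContDiff ℝ 1 (fun p : (fI N → ℝ) × ℝ => gV3 L N (gext N p.1) p.2) :=
      ContDiff.sum fun j _ => ((gext_contDiff j).comp contDiff_fst).mul
        (contDiff_const.mul ((he_contDiff (-j)).comp contDiff_snd))
    have hmax : LocallyLipschitz (fun x : ℝ => max x 0) :=
      (LipschitzWith.id.max_const 0).locallyLipschitz
    have hQ : ContDiff ℝ 1 (fun q : (ℝ × ℝ) × (ℝ × ℝ) =>
        q.1.1 ^ 2 * q.2.1 * (om L * k * he L (-k) q.2.2) - q.1.2 * he L k q.2.2) := by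
      have h1 := (he_contDiff (L := L) (-k)).comp
        (contDiff_snd.comp contDiff_snd : ContDiff ℝ 1 fun q : (ℝ × ℝ) × (ℝ × ℝ) => q.2.2)
      have h2 := (he_contDiff (L := L) k).comp
        (contDiff_snd.comp contDiff_snd : ContDiff ℝ 1 fun q : (ℝ × ℝ) × (ℝ × ℝ) => q.2.2)
      simp only [Function.comp_def] at h1 h2
      fun_prop
    have hcomp := hQ.locallyLipschitz.comp
      (((hmax.comp hV.locallyLipschitz).prodMk ((ab_locLip hlam).comp hV.locallyLipschitz)).prodMk
        (hV3.locallyLipschitz.prodMk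
          (contDiff_snd (𝕜 := ℝ) (n := 1) (E := fI N → ℝ) (F := ℝ)).locallyLipschitz))
    exact LocallyLipschitzOn.exists_lipschitzOnWith_of_compact
      ((isCompact_closedBall _ _).prod isCompact_Icc) hcomp.locallyLipschitzOn
  choose K hK using hk
  refine ⟨⟨L, hL.le⟩ * ∑ k ∈ fI N, K k, LipschitzOnWith.of_dist_le_mul fun c hc c' hc' => ?_⟩
  rw [dist_pi_le_iff (by positivity)]
  intro k
  have hcont : ∀ d : ℤ → ℝ, Continuous (fun x =>
      (max (gV L N d x) 0) ^ 2 * gV3 L N d x * (om L * (k : ℤ) * he L (-k) x)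
        - ab lam (gV L N d x) * he L k x) := by
    intro d
    have h1 := gV_cont (L := L) (N := N) d
    have h2 := gV3_cont (L := L) (N := N) d
    have h3 := he_cont (L := L) k
    have h4 := he_cont (L := L) (-k)
    have h5 := ab_cont hlam
    fun_prop
  simp only [gF]
  rw [Real.dist_eq, ← intervalIntegral.integral_sub ((hcont _).intervalIntegrable _ _)
    ((hcont _).intervalIntegrable _ _), ← Real.norm_eq_abs]
  have h2 : (K k : ℝ) ≤ ((∑ k ∈ fI N, K k : NNReal) : ℝ) := by
    have : K k ≤ ∑ k ∈ fI N, K k :=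
      Finset.single_le_sum (f := K) (fun _ _ => zero_le) k.2
    exact_mod_cast this
  refine (intervalIntegral.norm_integral_le_of_norm_le_const (C := K k * dist c c')
    fun x hx => ?_).trans ?_
  · rw [uIoc_of_le hL.le] at hx
    have h1 := (hK k).dist_le_mul (c, x) ⟨hc, hx.1.le, hx.2⟩ (c', x) ⟨hc', hx.1.le, hx.2⟩
    rw [Real.dist_eq] at h1
    simpa [Prod.dist_eq] using h1
  · rw [sub_zero, abs_of_pos hL]
    have h3 : ((⟨L, hL.le⟩ * ∑ k ∈ fI N, K k : NNReal) : ℝ) =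
      L * ((∑ k ∈ fI N, K k : NNReal) : ℝ) := rfl
    rw [h3]
    have h4 := mul_le_mul_of_nonneg_right h2 (dist_nonneg (x := c) (y := c'))
    nlinarith

end

/-! ### A priori estimates for the Galerkin system -/

/-- Cauchy–Schwarz in integral form. -/
lemma cs_integral {α : Type*} [MeasurableSpace α] {μ : Measure α} {f g : α → ℝ}
    (hf : Integrable (fun x => f x ^ 2) μ) (hg : Integrable (fun x => g x ^ 2) μ)
    (hfg : Integrable (fun x => f x * g x) μ) :
    (∫ x, f x * g x ∂μ) ^ 2 ≤ (∫ x, f x ^ 2 ∂μ) * ∫ x, g x ^ 2 ∂μ := by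
  have key : ∀ s : ℝ, 0 ≤ (∫ x, f x ^ 2 ∂μ) * (s * s) + (-2 * ∫ x, f x * g x ∂μ) * s +
      ∫ x, g x ^ 2 ∂μ := by
    intro s
    have h0 : 0 ≤ ∫ x, (s * f x - g x) ^ 2 ∂μ := integral_nonneg fun x => sq_nonneg _
    have h1 : ∀ x, (s * f x - g x) ^ 2 = (s * s) * f x ^ 2 + (-2 * s) * (f x * g x) + g x ^ 2 :=
      fun x => by ring
    simp_rw [h1] at h0
    rw [integral_add (f := fun x => s * s * f x ^ 2 + -2 * s * (f x * g x))
        ((hf.const_mul _).add (hfg.const_mul _)) hg,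
      integral_add (hf.const_mul _) (hfg.const_mul _), integral_const_mul,
      integral_const_mul] at h0
    linarith
  have := discrim_le_zero key
  unfold discrim at this
  nlinarith

/-- Cauchy–Schwarz for continuous functions on an interval. -/
lemma cs_interval {f g : ℝ → ℝ} (hf : Continuous f) (hg : Continuous g) {a b : ℝ} (hab : a ≤ b) :
    (∫ x in a..b, f x * g x) ^ 2 ≤ (∫ x in a..b, f x ^ 2) * ∫ x in a..b, g x ^ 2 := by
  rw [intervalIntegral.integral_of_le hab, intervalIntegral.integral_of_le hab,
    intervalIntegral.integral_of_le hab]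
  exact cs_integral ((hf.pow 2).integrableOn_Ioc) ((hg.pow 2).integrableOn_Ioc)
    ((hf.mul hg).integrableOn_Ioc)

section
variable {L lam : ℝ} {N : ℕ}

lemma gF_test (hlam : 1 ≤ lam) (d b : ℤ → ℝ) :
    ∑ k ∈ fI N, b k * gF L lam N d k = ∫ x in (0 : ℝ)..L,
      ((max (gV L N d x) 0) ^ 2 * gV3 L N d x * gV1 L N b x
        - ab lam (gV L N d x) * gV L N b x) := by
  have h1 := gV_cont (L := L) (N := N) d
  have h2 := gV3_cont (L := L) (N := N) d
  have h5 := ab_cont hlam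
  have h3 := fun k => he_cont (L := L) k
  simp only [gF]
  simp_rw [← intervalIntegral.integral_const_mul]
  rw [← intervalIntegral.integral_finsetSum fun k _ =>
    Continuous.intervalIntegrable (by fun_prop) _ _]
  refine intervalIntegral.integral_congr fun x _ => ?_
  simp only [gV1, gV, Finset.mul_sum]
  rw [← Finset.sum_sub_distrib]
  exact Finset.sum_congr rfl fun k _ => by ring

/-- The absorption term dissipates the energy: `∫ a(v) v'' = -∫ a(v)' v' ≤ 0`. -/
lemma ab_energy (hL : 0 < L) (hlam : 1 ≤ lam) (d : ℤ → ℝ) :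
    ∫ x in (0 : ℝ)..L, ab lam (gV L N d x) * gV2 L N d x ≤ 0 := by
  have hlipV : LocallyLipschitz (gV L N d) := by
    have : ContDiff ℝ 1 (gV L N d) :=
      ContDiff.sum fun j _ => contDiff_const.mul (he_contDiff j)
    exact this.locallyLipschitz
  have hlipV1 : LocallyLipschitz (gV1 L N d) := by
    have : ContDiff ℝ 1 (gV1 L N d) :=
      ContDiff.sum fun j _ => contDiff_const.mul (contDiff_const.mul (he_contDiff (-j)))
    exact this.locallyLipschitz
  have hAC : ∀ f : ℝ → ℝ, LocallyLipschitz f → AbsolutelyContinuousOnInterval f 0 L := by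
    intro f hf
    obtain ⟨K, hK⟩ := LocallyLipschitzOn.exists_lipschitzOnWith_of_compact
      (isCompact_uIcc (a := (0 : ℝ)) (b := L)) hf.locallyLipschitzOn
    exact hK.absolutelyContinuousOnInterval
  have h1 := (hAC _ ((ab_locLip hlam).comp hlipV)).integral_mul_deriv_eq_deriv_mul (hAC _ hlipV1)
  have h2 : ∀ x, deriv (gV1 L N d) x = gV2 L N d x := fun x => (gV1_hasDeriv d x).deriv
  simp only [h2, Function.comp_def] at h1
  have hp0 : gV L N d L = gV L N d 0 := by simpa using gV_per (N := N) hL d 0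
  have hp1 : gV1 L N d L = gV1 L N d 0 := by simpa using gV1_per (N := N) hL d 0
  rw [h1, hp0, hp1, sub_self, zero_sub, neg_nonpos]
  refine intervalIntegral.integral_nonneg hL.le fun x _ => ?_
  by_cases hd : DifferentiableAt ℝ (fun x => ab lam (gV L N d x)) x
  · -- the product of the two difference quotients is nonnegative since `ab` is monotone
    have ha := hd.hasDerivAt.tendsto_slope
    have hb := (gV_hasDeriv (L := L) (N := N) d x).tendsto_slope
    refine ge_of_tendsto (ha.mul hb) (Eventually.of_forall fun z => ?_)
    simp only [slope_def_field]
    rw [div_mul_div_comm]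
    refine div_nonneg ?_ (mul_self_nonneg _)
    rcases le_total (gV L N d x) (gV L N d z) with h | h
    · exact mul_nonneg (sub_nonneg.2 (ab_mono hlam h)) (sub_nonneg.2 h)
    · exact mul_nonneg_of_nonpos_of_nonpos (sub_nonpos.2 (ab_mono hlam h)) (sub_nonpos.2 h)
  · rw [deriv_zero_of_not_differentiableAt hd, zero_mul]

lemma gF_energy (hL : 0 < L) (hlam : 1 ≤ lam) (d : ℤ → ℝ) :
    ∑ k ∈ fI N, ((om L * k) ^ 2 * d k) * gF L lam N d k ≤
      -∫ x in (0 : ℝ)..L, (max (gV L N d x) 0 * gV3 L N d x) ^ 2 := by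
  rw [gF_test hlam d (fun k => (om L * k) ^ 2 * d k)]
  have e1 : ∀ x, gV L N (fun k => (om L * k) ^ 2 * d k) x = -gV2 L N d x := by
    intro x
    simp only [gV, gV2, ← Finset.sum_neg_distrib]
    exact Finset.sum_congr rfl fun k _ => by ring
  have e2 : ∀ x, gV1 L N (fun k => (om L * k) ^ 2 * d k) x = -gV3 L N d x := by
    intro x
    simp only [gV1, gV3, ← Finset.sum_neg_distrib]
    exact Finset.sum_congr rfl fun k _ => by ring
  have h1 := gV_cont (L := L) (N := N) d
  have h2 := gV2_cont (L := L) (N := N) d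
  have h3 := gV3_cont (L := L) (N := N) d
  have h5 := ab_cont hlam
  have e3 : ∀ x, (max (gV L N d x) 0) ^ 2 * gV3 L N d x *
      gV1 L N (fun k => (om L * k) ^ 2 * d k) x
        - ab lam (gV L N d x) * gV L N (fun k => (om L * k) ^ 2 * d k) x =
      -(max (gV L N d x) 0 * gV3 L N d x) ^ 2 + ab lam (gV L N d x) * gV2 L N d x := by
    intro x; rw [e1, e2]; ring
  rw [intervalIntegral.integral_congr fun x _ => e3 x,
    intervalIntegral.integral_add (Continuous.intervalIntegrable (by fun_prop) _ _)
      (Continuous.intervalIntegrable (by fun_prop) _ _), intervalIntegral.integral_neg]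
  linarith [ab_energy (N := N) hL hlam d]

lemma gF_zero (d : ℤ → ℝ) :
    gF L lam N d 0 = -((∫ x in (0 : ℝ)..L, ab lam (gV L N d x)) / √L) := by
  simp only [gF, Int.cast_zero, mul_zero, zero_mul, he_zero, zero_sub]
  rw [intervalIntegral.integral_neg, intervalIntegral.integral_mul_const]
  ring

lemma gV1_sq (hL : 0 < L) (d : ℤ → ℝ) (y : ℝ) :
    ∫ x in y..(y + L), gV1 L N d x ^ 2 = ∑ k ∈ fI N, (om L * k) ^ 2 * d k ^ 2 := by
  have h := he_sum_sq hL (fun k => -k) neg_injective (fI N) (fun k => d k * (om L * k)) y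
  have e : ∀ x, gV1 L N d x = ∑ k ∈ fI N, d k * (om L * k) * he L (-k) x := fun x =>
    Finset.sum_congr rfl fun k _ => by ring
  simp_rw [e]
  rw [h]
  exact Finset.sum_congr rfl fun k _ => by ring

lemma gV_sq (hL : 0 < L) (d : ℤ → ℝ) (y : ℝ) :
    ∫ x in y..(y + L), gV L N d x ^ 2 = ∑ k ∈ fI N, d k ^ 2 :=
  he_sum_sq hL (fun k => k) Function.injective_id (fI N) d y

lemma gV_mean (hL : 0 < L) (d : ℤ → ℝ) (y : ℝ) :
    ∫ x in y..(y + L), gV L N d x = √L * d 0 := by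
  have hc := fun k => he_cont (L := L) k
  have h0 : ∀ k, ∫ x in y..(y + L), he L k x = if k = 0 then √L else 0 := by
    intro k
    have h := he_ortho hL k 0 y
    simp_rw [he_zero] at h
    rw [intervalIntegral.integral_mul_const] at h
    have hs : √L ≠ 0 := (Real.sqrt_pos.2 hL).ne'
    field_simp at h
    rw [h]; split_ifs <;> simp
  simp only [gV]
  rw [intervalIntegral.integral_finsetSum fun k _ =>
    Continuous.intervalIntegrable (by fun_prop) _ _]
  simp_rw [intervalIntegral.integral_const_mul, h0]
  have hm : (0 : ℤ) ∈ fI N := by rw [mem_fI]; omega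
  simp [hm, mul_comm]

/-- Hölder continuity of a function with square integrable derivative. -/
lemma gV_holder (hL : 0 < L) (d : ℤ → ℝ) {G : ℝ}
    (hG : ∑ k ∈ fI N, (om L * k) ^ 2 * d k ^ 2 ≤ G) {x z : ℝ} (hxz : |x - z| ≤ L) :
    (gV L N d x - gV L N d z) ^ 2 ≤ G * |x - z| := by
  wlog hle : z ≤ x generalizing x z
  · have := this (x := z) (z := x) (by rwa [abs_sub_comm]) (le_of_not_ge hle)
    rw [abs_sub_comm] at this
    nlinarith
  rw [abs_of_nonneg (sub_nonneg.2 hle)] at hxz ⊢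
  have h1 : gV L N d x - gV L N d z = ∫ s in z..x, 1 * gV1 L N d s := by
    simp only [one_mul]
    rw [intervalIntegral.integral_eq_sub_of_hasDerivAt (fun s _ => gV_hasDeriv d s)
      ((gV1_cont d).intervalIntegrable _ _)]
  have h2 := cs_interval (continuous_const (y := (1 : ℝ))) (gV1_cont (L := L) (N := N) d) hle
  have h3 : ∫ s in z..x, gV1 L N d s ^ 2 ≤ ∫ s in z..(z + L), gV1 L N d s ^ 2 :=
    intervalIntegral.integral_mono_interval le_rfl hle (by linarith)
      (Eventually.of_forall fun s => sq_nonneg _)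
      (((gV1_cont d).pow 2).intervalIntegrable _ _)
  rw [gV1_sq hL] at h3
  rw [h1]
  refine h2.trans ?_
  simp only [one_pow, intervalIntegral.integral_const, smul_eq_mul, mul_one]
  rw [mul_comm G]
  exact mul_le_mul_of_nonneg_left (h3.trans hG) (sub_nonneg.2 hle)

lemma gV_bound (hL : 0 < L) (d : ℤ → ℝ) {G : ℝ}
    (hG : ∑ k ∈ fI N, (om L * k) ^ 2 * d k ^ 2 ≤ G) (x : ℝ) :
    |gV L N d x - d 0 / √L| ≤ √(L * G) := by
  have hs : 0 < √L := Real.sqrt_pos.2 hL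
  have hss : √L * √L = L := Real.mul_self_sqrt hL.le
  have hG0 : 0 ≤ G := le_trans (Finset.sum_nonneg fun k _ => by positivity) hG
  have hm := gV_mean (N := N) hL d x
  have h1 : L * (gV L N d x - d 0 / √L) = ∫ z in x..(x + L), (gV L N d x - gV L N d z) := by
    rw [intervalIntegral.integral_sub (by simp) ((gV_cont d).intervalIntegrable _ _), hm,
      intervalIntegral.integral_const, add_sub_cancel_left, smul_eq_mul]
    have : L * (d 0 / √L) = √L * d 0 := by
      rw [mul_div_assoc', div_eq_iff hs.ne', mul_right_comm, hss]
    rw [mul_sub, this]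
  have h2 : ‖∫ z in x..(x + L), (gV L N d x - gV L N d z)‖ ≤ √(L * G) * |x + L - x| := by
    refine intervalIntegral.norm_integral_le_of_norm_le_const fun z hz => ?_
    rw [uIoc_of_le (by linarith)] at hz
    have hxz : |x - z| ≤ L := by rw [abs_le]; constructor <;> linarith [hz.1, hz.2]
    refine Real.le_sqrt_of_sq_le ?_
    rw [Real.norm_eq_abs, sq_abs]
    have := gV_holder (N := N) hL d hG hxz
    nlinarith
  rw [← h1, add_sub_cancel_left, abs_of_pos hL, norm_mul, Real.norm_eq_abs, Real.norm_eq_abs,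
    abs_of_pos hL] at h2
  exact le_of_mul_le_mul_left (by linarith) hL

end

section
variable {L lam T : ℝ} {N : ℕ}

/-- `α` solves the Galerkin system slowed down by the factor `θ`. -/
def DSol (L lam T : ℝ) (N : ℕ) (θ : ℝ → ℝ) (α : ℤ → ℝ → ℝ) : Prop :=
  ∀ k ∈ fI N, ∀ t ∈ Icc 0 T,
    HasDerivWithinAt (α k) (θ t * gF L lam N (fun j => α j t) k) (Icc 0 T) t

lemma DSol.energy_deriv {θ : ℝ → ℝ} {α : ℤ → ℝ → ℝ} (h : DSol L lam T N θ α) {t : ℝ}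
    (ht : t ∈ Icc 0 T) : HasDerivWithinAt (fun t => ∑ k ∈ fI N, (om L * k) ^ 2 * α k t ^ 2)
      (2 * θ t * ∑ k ∈ fI N, ((om L * k) ^ 2 * α k t) * gF L lam N (fun j => α j t) k)
      (Icc 0 T) t := by
  have := HasDerivWithinAt.fun_sum (u := fI N)
    fun k hk => ((h k hk t ht).pow 2).const_mul ((om L * k) ^ 2)
  refine this.congr_deriv ?_
  rw [Finset.mul_sum]
  refine Finset.sum_congr rfl fun k _ => ?_
  push_cast; ring

lemma DSol.energy (hL : 0 < L) (hlam : 1 ≤ lam) {θ : ℝ → ℝ} {α : ℤ → ℝ → ℝ}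
    (h : DSol L lam T N θ α) (hθ : ∀ t, 0 ≤ θ t) {t : ℝ} (ht : t ∈ Icc 0 T) :
    ∑ k ∈ fI N, (om L * k) ^ 2 * α k t ^ 2 ≤ ∑ k ∈ fI N, (om L * k) ^ 2 * α k 0 ^ 2 := by
  have hanti : AntitoneOn (fun t => ∑ k ∈ fI N, (om L * k) ^ 2 * α k t ^ 2) (Icc 0 T) := by
    refine antitoneOn_of_hasDerivWithinAt_nonpos (convex_Icc 0 T)
      (fun t ht => (h.energy_deriv ht).continuousWithinAt)
      (fun t ht => (h.energy_deriv (interior_subset ht)).mono interior_subset) fun t _ => ?_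
    have h1 := gF_energy (N := N) hL hlam (fun j => α j t)
    have h2 : 0 ≤ ∫ x in (0 : ℝ)..L,
        (max (gV L N (fun j => α j t) x) 0 * gV3 L N (fun j => α j t) x) ^ 2 :=
      intervalIntegral.integral_nonneg hL.le fun x _ => sq_nonneg _
    exact mul_nonpos_of_nonneg_of_nonpos (mul_nonneg zero_le_two (hθ t)) (by linarith)
  exact hanti ⟨le_rfl, ht.1.trans ht.2⟩ ht ht.1

lemma zero_mem_fI : (0 : ℤ) ∈ fI N := by rw [mem_fI]; omega

lemma DSol.mass_anti (hL : 0 < L) {θ : ℝ → ℝ} {α : ℤ → ℝ → ℝ}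
    (h : DSol L lam T N θ α) (hθ : ∀ t, 0 ≤ θ t) : AntitoneOn (α 0) (Icc 0 T) := by
  refine antitoneOn_of_hasDerivWithinAt_nonpos (convex_Icc 0 T)
    (fun t ht => (h 0 zero_mem_fI t ht).continuousWithinAt)
    (fun t ht => (h 0 zero_mem_fI t (interior_subset ht)).mono interior_subset) fun t _ => ?_
  rw [gF_zero]
  refine mul_nonpos_of_nonneg_of_nonpos (hθ t) (neg_nonpos.2 ?_)
  exact div_nonneg (intervalIntegral.integral_nonneg hL.le fun x _ => ab_nonneg _)
    (Real.sqrt_nonneg _)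

/-- The bound for the loss of `α₀` over the time `T`. -/
def lossB (L lam T G m : ℝ) : ℝ := T * (L * ab lam (m / √L + √(L * G)) / √L)

/-- The resulting uniform bound for the approximations. -/
def supB (L lam T G m : ℝ) : ℝ := (|m| + lossB L lam T G m) / √L + √(L * G)

lemma lossB_nonneg (hL : 0 < L) (hT : 0 ≤ T) (G m : ℝ) : 0 ≤ lossB L lam T G m := by
  have := ab_nonneg (lam := lam) (m / √L + √(L * G))
  unfold lossB; positivity

lemma DSol.mass_lower (hL : 0 < L) (hlam : 1 ≤ lam) {θ : ℝ → ℝ} {α : ℤ → ℝ → ℝ}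
    (h : DSol L lam T N θ α) (hθ : ∀ t, 0 ≤ θ t) (hθ1 : ∀ t, θ t ≤ 1) {G m : ℝ}
    (hG : ∑ k ∈ fI N, (om L * k) ^ 2 * α k 0 ^ 2 ≤ G) (hm : α 0 0 = m) {t : ℝ}
    (ht : t ∈ Icc 0 T) : |α 0 t| ≤ |m| + lossB L lam T G m := by
  have hs : 0 < √L := Real.sqrt_pos.2 hL
  set C := L * ab lam (m / √L + √(L * G)) / √L with hC
  have hC0 : 0 ≤ C := by have := ab_nonneg (lam := lam) (m / √L + √(L * G)); positivity
  have h0 : (0 : ℝ) ∈ Icc 0 T := ⟨le_rfl, ht.1.trans ht.2⟩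
  have hmono : MonotoneOn (fun t => α 0 t + C * t) (Icc 0 T) := by
    have hd : ∀ t ∈ Icc 0 T, HasDerivWithinAt (fun t => α 0 t + C * t)
        (θ t * gF L lam N (fun j => α j t) 0 + C) (Icc 0 T) t := by
      intro t ht
      have := (h 0 zero_mem_fI t ht).add ((hasDerivWithinAt_id t (Icc 0 T)).const_mul C)
      rwa [mul_one] at this
    refine monotoneOn_of_hasDerivWithinAt_nonneg (convex_Icc 0 T)
      (fun t ht => (hd t ht).continuousWithinAt)
      (fun t ht => (hd t (interior_subset ht)).mono interior_subset) fun t ht => ?_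
    have ht' : t ∈ Icc 0 T := interior_subset ht
    have hE := (h.energy hL hlam hθ ht').trans hG
    have hle : α 0 t ≤ m := hm ▸ h.mass_anti hL hθ h0 ht' ht'.1
    have hv : ∀ x, ab lam (gV L N (fun j => α j t) x) ≤ ab lam (m / √L + √(L * G)) := by
      intro x
      refine ab_mono hlam ?_
      have h1 := (abs_le.1 (gV_bound hL (fun j => α j t) hE x)).2
      have h2 : α 0 t / √L ≤ m / √L := by gcongr
      linarith
    have hInt : ∫ x in (0 : ℝ)..L, ab lam (gV L N (fun j => α j t) x) ≤
        L * ab lam (m / √L + √(L * G)) := by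
      have := intervalIntegral.integral_mono_on (μ := volume) hL.le
        (((ab_cont hlam).comp (gV_cont (L := L) (N := N) (fun j => α j t))).intervalIntegrable _ _)
        (intervalIntegrable_const (c := ab lam (m / √L + √(L * G)))) fun x _ => hv x
      simpa using this
    have h3 : (∫ x in (0 : ℝ)..L, ab lam (gV L N (fun j => α j t) x)) / √L ≤ C := by
      rw [hC]; gcongr
    have h4 : 0 ≤ (∫ x in (0 : ℝ)..L, ab lam (gV L N (fun j => α j t) x)) / √L :=
      div_nonneg (intervalIntegral.integral_nonneg hL.le fun x _ => ab_nonneg _)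
        (Real.sqrt_nonneg _)
    rw [gF_zero]
    nlinarith [hθ t, hθ1 t]
  have h1 := hmono h0 ht ht.1
  have h2 := h.mass_anti hL hθ h0 ht ht.1
  simp only [mul_zero, add_zero, hm] at h1 h2
  have h3 : C * t ≤ lossB L lam T G m := by
    rw [lossB, mul_comm]; exact mul_le_mul_of_nonneg_right ht.2 hC0
  have h5 := mul_nonneg hC0 ht.1
  rw [abs_le]
  constructor <;> linarith [neg_abs_le m, le_abs_self m]

lemma DSol.sup (hL : 0 < L) (hlam : 1 ≤ lam) {θ : ℝ → ℝ} {α : ℤ → ℝ → ℝ}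
    (h : DSol L lam T N θ α) (hθ : ∀ t, 0 ≤ θ t) (hθ1 : ∀ t, θ t ≤ 1) {G m : ℝ}
    (hG : ∑ k ∈ fI N, (om L * k) ^ 2 * α k 0 ^ 2 ≤ G) (hm : α 0 0 = m) {t : ℝ}
    (ht : t ∈ Icc 0 T) (x : ℝ) : |gV L N (fun j => α j t) x| ≤ supB L lam T G m := by
  have hs : 0 < √L := Real.sqrt_pos.2 hL
  have h1 := gV_bound hL (fun j => α j t) ((h.energy hL hlam hθ ht).trans hG) x
  have h2 := h.mass_lower hL hlam hθ hθ1 hG hm ht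
  have h3 : |α 0 t / √L| ≤ (|m| + lossB L lam T G m) / √L := by
    rw [abs_div, abs_of_pos hs]; gcongr
  have h4 := abs_add_le (gV L N (fun j => α j t) x - α 0 t / √L) (α 0 t / √L)
  rw [sub_add_cancel] at h4
  unfold supB; linarith

/-- Global solvability of the Galerkin system. -/
theorem galerkin_exists (hL : 0 < L) (hlam : 1 ≤ lam) (hT : 0 ≤ T) (N : ℕ) (a0 : ℤ → ℝ) :
    ∃ α : ℤ → ℝ → ℝ, (∀ k, Continuous (α k)) ∧ (∀ k ∈ fI N, α k 0 = a0 k) ∧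
      (∀ k t, α k (projIcc 0 T hT t) = α k t) ∧ DSol L lam T N (fun _ => 1) α := by
  set G := ∑ k ∈ fI N, (om L * k) ^ 2 * a0 k ^ 2 with hG
  have hG0 : 0 ≤ G := Finset.sum_nonneg fun k _ => by positivity
  set R := |a0 0| + lossB L lam T G (a0 0) + √G / om L with hR
  have hlb := lossB_nonneg (lam := lam) hL hT G (a0 0)
  have hom := om_pos hL
  have hg : ∀ (c : fI N → ℝ) (k : ℤ) (hk : k ∈ fI N), gext N c k = c ⟨k, hk⟩ := by
    intro c k hk; rw [gext, dif_pos hk]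
  obtain ⟨c, hc0, hc⟩ := ode_exists (fun (c : fI N → ℝ) (k : fI N) => gF L lam N (gext N c) k)
    (gF_lip hL hlam) (fun k => a0 k) (R := R) hT (by
      intro θ hθ0 hθ1 c hc0 hc t ht
      have hD : DSol L lam T N θ (fun k t => gext N (c t) k) := by
        intro k hk t ht
        have := hasDerivWithinAt_pi.1 (hc t ht) ⟨k, hk⟩
        simpa only [hg _ _ hk, Pi.smul_apply, smul_eq_mul] using this
      have h00 : ∀ k ∈ fI N, gext N (c 0) k = a0 k := by
        intro k hk; rw [hg _ _ hk, hc0]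
      have hE0 : ∑ k ∈ fI N, (om L * k) ^ 2 * gext N (c 0) k ^ 2 ≤ G :=
        (Finset.sum_congr rfl fun k hk => by rw [h00 k hk]).le
      rw [pi_norm_le_iff_of_nonneg (by positivity)]
      intro k
      rw [Real.norm_eq_abs]
      by_cases hk : (k : ℤ) = 0
      · have h1 := hD.mass_lower hL hlam hθ0 hθ1 hE0 (h00 0 zero_mem_fI) ht
        have h2 : gext N (c t) 0 = c t k := by
          rw [hg _ _ zero_mem_fI]; congr 1; exact Subtype.ext hk.symm
        rw [h2] at h1
        have : 0 ≤ √G / om L := by positivity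
        rw [hR]
        linarith
      · have h1 := (hD.energy hL hlam hθ0 ht).trans hE0
        have h2 := (Finset.single_le_sum (f := fun k : ℤ => (om L * k) ^ 2 * gext N (c t) k ^ 2)
          (fun k _ => by positivity) k.2).trans h1
        simp only [hg _ _ k.2, Subtype.coe_eta] at h2
        have h3 : (1 : ℝ) ≤ ((k : ℤ) : ℝ) ^ 2 := by
          have : (1 : ℤ) ≤ (k : ℤ) ^ 2 := by
            have : 0 < (k : ℤ) ^ 2 := by positivity
            omega
          exact_mod_cast this
        have h4 : (om L * |c t k|) ^ 2 ≤ G := by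
          rw [mul_pow, sq_abs]
          rw [mul_pow] at h2
          nlinarith [mul_nonneg (sq_nonneg (om L)) (sq_nonneg (c t k))]
        have h5 : |c t k| ≤ √G / om L := by
          rw [le_div_iff₀ hom, mul_comm]
          exact Real.le_sqrt_of_sq_le h4
        linarith [abs_nonneg (a0 0)])
  have hcc : ContinuousOn c (Icc 0 T) := fun t ht => (hc t ht).continuousWithinAt
  set π : ℝ → ℝ := fun t => (projIcc 0 T hT t : ℝ) with hπ
  have hπm : ∀ t, π t ∈ Icc 0 T := fun t => (projIcc 0 T hT t).2
  have hπc : Continuous π := continuous_subtype_val.comp continuous_projIcc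
  have hπe : ∀ t ∈ Icc 0 T, π t = t := fun t ht => by simp only [hπ, projIcc_of_mem hT ht]
  have hcπ : Continuous fun t => c (π t) :=
    hcc.comp_continuous hπc hπm
  refine ⟨fun k t => gext N (c (π t)) k, fun k => ?_, fun k hk => ?_, fun k t => ?_, fun k hk t ht => ?_⟩
  · exact (gext_contDiff k).continuous.comp hcπ
  · simp only [hg _ _ hk, hπe 0 ⟨le_rfl, hT⟩, hc0]
  · simp only [hπ, projIcc_val]
  · have h1 := hasDerivWithinAt_pi.1 (hc t ht) ⟨k, hk⟩
    simp only [hg _ _ hk, hπe t ht, one_mul]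
    exact h1.congr (fun s hs => by rw [hπe s hs]) (by rw [hπe t ht])

/-- Joint continuity of `gV` and its derivatives along a continuous coefficient curve. -/
lemma gV_jcont {α : ℤ → ℝ → ℝ} (hα : ∀ k, Continuous (α k)) :
    Continuous (fun p : ℝ × ℝ => gV L N (fun j => α j p.1) p.2) ∧
    Continuous (fun p : ℝ × ℝ => gV1 L N (fun j => α j p.1) p.2) ∧
    Continuous (fun p : ℝ × ℝ => gV2 L N (fun j => α j p.1) p.2) ∧
    Continuous (fun p : ℝ × ℝ => gV3 L N (fun j => α j p.1) p.2) := by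
  have hc := fun k => he_cont (L := L) k
  refine ⟨?_, ?_, ?_, ?_⟩
  · unfold gV; fun_prop
  · unfold gV1; fun_prop
  · unfold gV2; fun_prop
  · unfold gV3; fun_prop

lemma DSol.dissipation (hL : 0 < L) (hlam : 1 ≤ lam) (hT : 0 ≤ T) {α : ℤ → ℝ → ℝ}
    (hα : ∀ k, Continuous (α k)) (h : DSol L lam T N (fun _ => 1) α) {G : ℝ}
    (hG : ∑ k ∈ fI N, (om L * k) ^ 2 * α k 0 ^ 2 ≤ G) :
    ∫ t in (0 : ℝ)..T, ∫ x in (0 : ℝ)..L,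
      (max (gV L N (fun j => α j t) x) 0 * gV3 L N (fun j => α j t) x) ^ 2 ≤ G / 2 := by
  set D : ℝ → ℝ := fun t => ∫ x in (0 : ℝ)..L,
      (max (gV L N (fun j => α j t) x) 0 * gV3 L N (fun j => α j t) x) ^ 2 with hD
  have hDc : Continuous D := by
    have h1 := (gV_jcont (L := L) (N := N) hα).1
    have h2 := (gV_jcont (L := L) (N := N) hα).2.2.2
    refine intervalIntegral.continuous_parametric_intervalIntegral_of_continuous' ?_ 0 L
    exact ((h1.max continuous_const).mul h2).pow 2
  have hd : ∀ t ∈ Icc 0 T, HasDerivWithinAt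
      (fun t => (∑ k ∈ fI N, (om L * k) ^ 2 * α k t ^ 2) + 2 * ∫ s in (0 : ℝ)..t, D s)
      (2 * 1 * (∑ k ∈ fI N, ((om L * k) ^ 2 * α k t) * gF L lam N (fun j => α j t) k) + 2 * D t)
      (Icc 0 T) t := fun t ht =>
    (h.energy_deriv ht).add
      ((hDc.integral_hasStrictDerivAt 0 t).hasDerivAt.hasDerivWithinAt.const_mul 2)
  have hanti := antitoneOn_of_hasDerivWithinAt_nonpos (convex_Icc 0 T)
    (fun t ht => (hd t ht).continuousWithinAt)
    (fun t ht => (hd t (interior_subset ht)).mono interior_subset) (fun t _ => by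
      have h1 := gF_energy (N := N) hL hlam (fun j => α j t)
      simp only [hD]; linarith)
  have h1 := hanti ⟨le_rfl, hT⟩ ⟨hT, le_rfl⟩ hT
  simp only [intervalIntegral.integral_same, mul_zero, add_zero] at h1
  have h2 : 0 ≤ ∑ k ∈ fI N, (om L * k) ^ 2 * α k T ^ 2 :=
    Finset.sum_nonneg fun k _ => by positivity
  linarith

end

/-! ### Initial data and time modulus of the Galerkin approximation -/

/-- Integration by parts for an indefinite integral against a `C¹` function. -/
lemma ac_ibp {u g w w' : ℝ → ℝ} {a b : ℝ} (hg : ∀ a b, IntervalIntegrable g volume a b)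
    (hu : ∀ a b, u b - u a = ∫ x in a..b, g x) (hw : ∀ x, HasDerivAt w (w' x) x)
    (hw' : Continuous w') :
    ∫ x in a..b, u x * w' x = u b * w b - u a * w a - ∫ x in a..b, g x * w x := by
  have hue : u = fun x => u a + ∫ z in a..x, g z := by
    ext x; rw [← hu a x]; ring
  have hACg : AbsolutelyContinuousOnInterval (fun x => ∫ z in a..x, g z) a b :=
    (hg a b).absolutelyContinuousOnInterval_intervalIntegral (c := a) (by simp)
  have hACw : AbsolutelyContinuousOnInterval w a b := by
    have : ContDiff ℝ 1 w := by
      rw [contDiff_one_iff_deriv]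
      refine ⟨fun x => (hw x).differentiableAt, ?_⟩
      have : deriv w = w' := funext fun x => (hw x).deriv
      rwa [this]
    obtain ⟨K, hK⟩ := LocallyLipschitzOn.exists_lipschitzOnWith_of_compact
      (isCompact_uIcc (a := a) (b := b)) this.locallyLipschitz.locallyLipschitzOn
    exact hK.absolutelyContinuousOnInterval
  have h1 := hACg.integral_mul_deriv_eq_deriv_mul hACw
  have h2 : ∀ x, deriv w x = w' x := fun x => (hw x).deriv
  simp only [h2, intervalIntegral.integral_same, zero_mul, sub_zero] at h1
  have h3 : ∫ x in a..b, deriv (fun x => ∫ z in a..x, g z) x * w x = ∫ x in a..b, g x * w x := by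
    refine intervalIntegral.integral_congr_ae ?_
    filter_upwards [(hg a b).ae_hasDerivAt_integral] with x hx hx'
    rw [(hx (uIoc_subset_uIcc hx') a (by simp)).deriv]
  rw [h3, ← hu a b] at h1
  have hwc : Continuous w := continuous_iff_continuousAt.2 fun x => (hw x).continuousAt
  have h4 : ∫ x in a..b, u x * w' x =
      (∫ x in a..b, u a * w' x) + ∫ x in a..b, (∫ z in a..x, g z) * w' x := by
    rw [← intervalIntegral.integral_add]
    · refine intervalIntegral.integral_congr fun x _ => ?_
      simp only [← hu a x]; ring
    · exact (hw'.const_mul _).intervalIntegrable _ _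
    · exact ((intervalIntegral.continuous_primitive hg a).mul hw').intervalIntegrable _ _
  rw [h4, h1, intervalIntegral.integral_const_mul,
    intervalIntegral.integral_eq_sub_of_hasDerivAt (fun x _ => hw x)
      (hw'.intervalIntegrable _ _)]
  ring

/-- `C¹` version of `ac_ibp` on a period, for functions with equal boundary values. -/
lemma coef_deriv {L : ℝ} (hL : 0 < L) {u g : ℝ → ℝ} {y : ℝ}
    (hg : ∀ a b, IntervalIntegrable g volume a b)
    (hu : ∀ a b, u b - u a = ∫ x in a..b, g x) (hp : u (y + L) = u y) (k : ℤ) :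
    ∫ x in y..(y + L), g x * he L (-k) x = om L * k * ∫ x in y..(y + L), u x * he L k x := by
  have h := ac_ibp (a := y) (b := y + L) hg hu (he_hasDeriv (L := L) (-k))
    (((he_cont _).const_mul _))
  rw [hp, he_periodic hL, sub_self, zero_sub] at h
  rw [← neg_eq_iff_eq_neg.2 h, ← intervalIntegral.integral_neg,
    ← intervalIntegral.integral_const_mul]
  refine intervalIntegral.integral_congr fun x _ => ?_
  simp only [neg_neg]; push_cast; ring

section
variable {L lam T : ℝ} {N : ℕ}

lemma init_energy (hL : 0 < L) {u₀ g₀ : ℝ → ℝ}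
    (h0per : ∀ x : ℝ, u₀ (x + L) = u₀ x)
    (h0int : ∀ a b : ℝ, IntervalIntegrable g₀ volume a b)
    (h0ac : ∀ a b : ℝ, u₀ b - u₀ a = ∫ x in a..b, g₀ x)
    (h0L2 : IntervalIntegrable (fun x => (g₀ x) ^ 2) volume 0 L) (N : ℕ) :
    ∑ k ∈ fI N, (om L * k) ^ 2 * (∫ x in (0 : ℝ)..L, u₀ x * he L k x) ^ 2 ≤
      ∫ x in (0 : ℝ)..L, g₀ x ^ 2 := by
  have h2 := he_proj (y := 0) hL (fun k => -k) neg_injective (fI N) (h0int 0 (0 + L))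
    (by simpa using h0L2)
  have h3 : 0 ≤ ∫ x in (0 : ℝ)..(0 + L), (g₀ x - ∑ k ∈ fI N,
      (∫ z in (0 : ℝ)..(0 + L), g₀ z * he L (-k) z) * he L (-k) x) ^ 2 :=
    intervalIntegral.integral_nonneg (by linarith) fun x _ => sq_nonneg _
  rw [h2] at h3
  have hcd := fun k => coef_deriv (y := 0) hL h0int h0ac (h0per 0) k
  simp only [zero_add] at hcd h3
  simp only [hcd, mul_pow] at h3
  simp only [mul_pow]
  linarith

lemma init_L2 (hL : 0 < L) {u₀ : ℝ → ℝ} (h0 : Continuous u₀) :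
    Tendsto (fun N => ∫ x in (0 : ℝ)..L,
      (gV L N (fun k => ∫ x in (0 : ℝ)..L, u₀ x * he L k x) x - u₀ x) ^ 2) atTop (nhds 0) := by
  have h1 := he_parseval (y := 0) hL (h0.intervalIntegrable 0 (0 + L))
    ((h0.pow 2).intervalIntegrable 0 (0 + L))
  have h2 := h1.const_sub (∫ x in (0 : ℝ)..(0 + L), u₀ x ^ 2)
  rw [sub_self] at h2
  refine h2.congr fun N => ?_
  rw [← he_proj (y := 0) hL (fun k => k) Function.injective_id (fI N)
    (h0.intervalIntegrable 0 (0 + L)) ((h0.pow 2).intervalIntegrable 0 (0 + L))]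
  simp only [zero_add, gV]
  refine intervalIntegral.integral_congr fun x _ => ?_
  ring

/-- Interpolation between `L²` and the `L²` norm of the derivative. -/
lemma gV_interp (hL : 0 < L) (b : ℤ → ℝ) {S W : ℝ} (hS : ∑ k ∈ fI N, b k ^ 2 ≤ S)
    (hW : ∑ k ∈ fI N, (om L * k) ^ 2 * b k ^ 2 ≤ W) (x : ℝ) :
    gV L N b x ^ 2 ≤ S / L + 2 * √(S * W) := by
  have hS0 : 0 ≤ S := (Finset.sum_nonneg fun k _ => sq_nonneg _).trans hS
  have hc := gV_cont (L := L) (N := N) b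
  have hc1 := gV1_cont (L := L) (N := N) b
  have hz : ∀ z ∈ Icc x (x + L), gV L N b x ^ 2 - 2 * √(S * W) ≤ gV L N b z ^ 2 := by
    intro z hz
    have h1 : gV L N b z ^ 2 - gV L N b x ^ 2 = 2 * ∫ s in x..z, gV L N b s * gV1 L N b s := by
      have : ∀ s, HasDerivAt (fun s => gV L N b s ^ 2) (2 * (gV L N b s * gV1 L N b s)) s := by
        intro s
        refine ((gV_hasDeriv b s).pow 2).congr_deriv ?_
        push_cast; ring
      rw [← intervalIntegral.integral_const_mul,
        intervalIntegral.integral_eq_sub_of_hasDerivAt (fun s _ => this s)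
          ((Continuous.intervalIntegrable (by fun_prop) _ _))]
    have h2 := cs_interval hc hc1 hz.1
    have h3 : ∫ s in x..z, gV L N b s ^ 2 ≤ S := by
      refine le_trans ?_ hS
      rw [← gV_sq hL b x]
      exact intervalIntegral.integral_mono_interval le_rfl hz.1 hz.2
        (Eventually.of_forall fun s => sq_nonneg _) ((hc.pow 2).intervalIntegrable _ _)
    have h4 : ∫ s in x..z, gV1 L N b s ^ 2 ≤ W := by
      refine le_trans ?_ hW
      rw [← gV1_sq hL b x]
      exact intervalIntegral.integral_mono_interval le_rfl hz.1 hz.2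
        (Eventually.of_forall fun s => sq_nonneg _) ((hc1.pow 2).intervalIntegrable _ _)
    have h5 : 0 ≤ ∫ s in x..z, gV1 L N b s ^ 2 :=
      intervalIntegral.integral_nonneg hz.1 fun s _ => sq_nonneg _
    have h6 := Real.abs_le_sqrt (h2.trans (mul_le_mul h3 h4 h5 hS0))
    have := (abs_le.1 h6).1
    linarith
  have h7 := intervalIntegral.integral_mono_on (g := fun z => gV L N b z ^ 2) (μ := volume)
    (by linarith : x ≤ x + L)
    (intervalIntegrable_const (c := gV L N b x ^ 2 - 2 * √(S * W)))
    ((hc.pow 2).intervalIntegrable _ _) hz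
  rw [gV_sq hL b x, intervalIntegral.integral_const, smul_eq_mul, add_sub_cancel_left] at h7
  have h8 : gV L N b x ^ 2 - 2 * √(S * W) ≤ S / L := by
    rw [le_div_iff₀ hL, mul_comm]; linarith
  linarith

lemma gV_sub (d d' : ℤ → ℝ) (x : ℝ) :
    gV L N (fun k => d k - d' k) x = gV L N d x - gV L N d' x := by
  simp only [gV, sub_mul, Finset.sum_sub_distrib]

/-- `gF_test` over an arbitrary period. -/
lemma gF_test' (hL : 0 < L) (hlam : 1 ≤ lam) (d b : ℤ → ℝ) (y : ℝ) :
    ∑ k ∈ fI N, b k * gF L lam N d k = ∫ x in y..(y + L),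
      ((max (gV L N d x) 0) ^ 2 * gV3 L N d x * gV1 L N b x
        - ab lam (gV L N d x) * gV L N b x) := by
  rw [gF_test hlam]
  have hp : Function.Periodic (fun x => (max (gV L N d x) 0) ^ 2 * gV3 L N d x * gV1 L N b x
        - ab lam (gV L N d x) * gV L N b x) L := by
    intro x
    simp only [gV_per hL, gV1_per hL, gV3_per hL]
  have := hp.intervalIntegral_add_eq 0 y
  simpa using this

/-- The bound for the squared `L²` distance of two time slices at time distance `s`. -/
def etaB (L lam G M s : ℝ) : ℝ := M * √(4 * G) * √(s * (G / 2)) + ab lam M * (2 * M) * L * s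

/-- The modulus of continuity in time. -/
def omB (L lam G M s : ℝ) : ℝ :=
  etaB L lam G M s / L + 2 * √(etaB L lam G M s * (4 * G))

lemma omB_tendsto (hlam : 1 ≤ lam) (L G M : ℝ) :
    Tendsto (omB L lam G M) (nhds 0) (nhds 0) := by
  have h5 := ab_cont hlam
  have hc : Continuous (omB L lam G M) := by unfold omB etaB; fun_prop
  have h0 : omB L lam G M 0 = 0 := by simp [omB, etaB]
  simpa [h0] using hc.tendsto 0

/-- Continuity in time of the dissipation density. -/
lemma diss_cont {α : ℤ → ℝ → ℝ} (hα : ∀ k, Continuous (α k)) (y : ℝ) :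
    Continuous (fun t => ∫ x in y..(y + L),
      (max (gV L N (fun j => α j t) x) 0 * gV3 L N (fun j => α j t) x) ^ 2) := by
  have h1 := (gV_jcont (L := L) (N := N) hα).1
  have h2 := (gV_jcont (L := L) (N := N) hα).2.2.2
  refine intervalIntegral.continuous_parametric_intervalIntegral_of_continuous' ?_ _ _
  exact ((h1.max continuous_const).mul h2).pow 2

/-- Bound for the flux term: `|∫ v₊² v₃ w| ≤ M ‖v₊ v₃‖ ‖w‖`. -/
lemma flux_bound (hL : 0 < L) (d : ℤ → ℝ) {w : ℝ → ℝ} (hw : Continuous w) {M : ℝ}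
    (hM : ∀ x, |gV L N d x| ≤ M) (y : ℝ) :
    |∫ x in y..(y + L), (max (gV L N d x) 0) ^ 2 * gV3 L N d x * w x| ≤
      M * (√(∫ x in y..(y + L), (max (gV L N d x) 0 * gV3 L N d x) ^ 2) *
        √(∫ x in y..(y + L), w x ^ 2)) := by
  have hM0 : 0 ≤ M := (abs_nonneg _).trans (hM 0)
  have h1 := gV_cont (L := L) (N := N) d
  have h3 := gV3_cont (L := L) (N := N) d
  have hyL : y ≤ y + L := by linarith
  have hcs := cs_interval (f := fun x => max (gV L N d x) 0 * gV3 L N d x)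
    (g := fun x => max (gV L N d x) 0 * w x) (by fun_prop) (by fun_prop) hyL
  have hle : ∫ x in y..(y + L), (max (gV L N d x) 0 * w x) ^ 2 ≤
      ∫ x in y..(y + L), M ^ 2 * w x ^ 2 := by
    refine intervalIntegral.integral_mono_on hyL (Continuous.intervalIntegrable (by fun_prop) _ _)
      (Continuous.intervalIntegrable (by fun_prop) _ _) fun x _ => ?_
    rw [mul_pow]
    have h4 : max (gV L N d x) 0 ≤ M := max_le ((le_abs_self _).trans (hM x)) hM0
    have h5 : 0 ≤ max (gV L N d x) 0 := le_max_right _ _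
    gcongr
  rw [intervalIntegral.integral_const_mul] at hle
  have hD0 : 0 ≤ ∫ x in y..(y + L), (max (gV L N d x) 0 * gV3 L N d x) ^ 2 :=
    intervalIntegral.integral_nonneg hyL fun x _ => sq_nonneg _
  have e : ∫ x in y..(y + L), (max (gV L N d x) 0) ^ 2 * gV3 L N d x * w x =
      ∫ x in y..(y + L), (max (gV L N d x) 0 * gV3 L N d x) * (max (gV L N d x) 0 * w x) :=
    intervalIntegral.integral_congr fun x _ => by ring
  rw [e]
  refine (Real.abs_le_sqrt (hcs.trans (mul_le_mul_of_nonneg_left hle hD0))).trans (le_of_eq ?_)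
  rw [Real.sqrt_mul hD0, Real.sqrt_mul (sq_nonneg M), Real.sqrt_sq hM0]
  ring

/-- The time modulus of the `L²` norm, from testing with the difference of two time slices. -/
lemma DSol.time_L2 (hL : 0 < L) (hlam : 1 ≤ lam) (hT : 0 ≤ T) {α : ℤ → ℝ → ℝ}
    (hα : ∀ k, Continuous (α k)) (h : DSol L lam T N (fun _ => 1) α) {G M : ℝ}
    (hG : ∑ k ∈ fI N, (om L * k) ^ 2 * α k 0 ^ 2 ≤ G)
    (hM : ∀ t ∈ Icc 0 T, ∀ x, |gV L N (fun j => α j t) x| ≤ M)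
    {t1 t2 : ℝ} (ht1 : t1 ∈ Icc 0 T) (ht2 : t2 ∈ Icc 0 T) (h12 : t1 ≤ t2) :
    ∑ k ∈ fI N, (α k t2 - α k t1) ^ 2 ≤ etaB L lam G M (t2 - t1) ∧
      ∑ k ∈ fI N, (om L * k) ^ 2 * (α k t2 - α k t1) ^ 2 ≤ 4 * G := by
  have hM0 : 0 ≤ M := (abs_nonneg _).trans (hM t1 ht1 0)
  have hG0 : 0 ≤ G := (Finset.sum_nonneg fun k _ => by positivity).trans hG
  set b : ℤ → ℝ := fun k => α k t2 - α k t1 with hb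
  have hW : ∑ k ∈ fI N, (om L * k) ^ 2 * b k ^ 2 ≤ 4 * G := by
    have h1 := (h.energy hL hlam (fun _ => zero_le_one) ht1).trans hG
    have h2 := (h.energy hL hlam (fun _ => zero_le_one) ht2).trans hG
    have h3 : ∑ k ∈ fI N, (om L * k) ^ 2 * b k ^ 2 ≤ ∑ k ∈ fI N,
        (2 * ((om L * k) ^ 2 * α k t1 ^ 2) + 2 * ((om L * k) ^ 2 * α k t2 ^ 2)) := by
      refine Finset.sum_le_sum fun k _ => ?_
      have : b k ^ 2 ≤ 2 * α k t1 ^ 2 + 2 * α k t2 ^ 2 := by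
        simp only [hb]; nlinarith [sq_nonneg (α k t2 + α k t1)]
      nlinarith [mul_le_mul_of_nonneg_left this (sq_nonneg (om L * k))]
    rw [Finset.sum_add_distrib, ← Finset.mul_sum, ← Finset.mul_sum] at h3
    linarith
  refine ⟨?_, hW⟩
  set D : ℝ → ℝ := fun t => ∫ x in (0 : ℝ)..(0 + L),
      (max (gV L N (fun j => α j t) x) 0 * gV3 L N (fun j => α j t) x) ^ 2 with hD
  have hDc : Continuous D := diss_cont hα 0
  have hDn : ∀ t, 0 ≤ D t := fun t =>
    intervalIntegral.integral_nonneg (by linarith) fun x _ => sq_nonneg _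
  have hsub : Icc t1 t2 ⊆ Icc 0 T := Icc_subset_Icc ht1.1 ht2.2
  -- `f t` is the scalar product of the increment since `t1` with the full increment `b`
  set f : ℝ → ℝ := fun t => ∑ k ∈ fI N, b k * (α k t - α k t1) with hf
  set H : ℝ → ℝ := fun t => M * √(4 * G) * √(D t) + ab lam M * (2 * M) * L with hH
  have hHc : Continuous H := by fun_prop
  have hder : ∀ t ∈ Icc t1 t2, HasDerivWithinAt f
      (∑ k ∈ fI N, b k * gF L lam N (fun j => α j t) k) (Icc t1 t2) t := by
    intro t ht
    refine HasDerivWithinAt.fun_sum fun k hk => ?_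
    have := ((h k hk t (hsub ht)).mono hsub).sub_const (α k t1)
    rw [one_mul] at this
    exact this.const_mul _
  have hbd : ∀ t ∈ Icc t1 t2, ∑ k ∈ fI N, b k * gF L lam N (fun j => α j t) k ≤ H t := by
    intro t ht
    have hMt := hM t (hsub ht)
    have h1 := gV_cont (L := L) (N := N) (fun j => α j t)
    have h3 := gV3_cont (L := L) (N := N) (fun j => α j t)
    have h4 := gV1_cont (L := L) (N := N) b
    have h5 := gV_cont (L := L) (N := N) b
    have h6 := ab_cont hlam
    rw [gF_test' hL hlam _ _ 0, intervalIntegral.integral_sub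
      (Continuous.intervalIntegrable (by fun_prop) _ _)
      (Continuous.intervalIntegrable (by fun_prop) _ _)]
    have e1 := (le_abs_self _).trans (flux_bound hL (fun j => α j t) h4 hMt 0)
    have e2 : √(∫ x in (0 : ℝ)..(0 + L), gV1 L N b x ^ 2) ≤ √(4 * G) := by
      rw [gV1_sq hL]; exact Real.sqrt_le_sqrt hW
    have e3 : ‖∫ x in (0 : ℝ)..(0 + L), ab lam (gV L N (fun j => α j t) x) * gV L N b x‖ ≤
        ab lam M * (2 * M) * |0 + L - 0| := by
      refine intervalIntegral.norm_integral_le_of_norm_le_const fun x _ => ?_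
      rw [norm_mul, Real.norm_eq_abs, Real.norm_eq_abs, abs_of_nonneg (ab_nonneg _)]
      refine mul_le_mul (ab_mono hlam ((le_abs_self _).trans (hMt x))) ?_ (abs_nonneg _)
        (ab_nonneg _)
      rw [hb, gV_sub (fun k => α k t2) (fun k => α k t1)]
      have a1 := hM t1 ht1 x
      have a2 := hM t2 ht2 x
      have := abs_sub (gV L N (fun k => α k t2) x) (gV L N (fun k => α k t1) x)
      linarith
    rw [zero_add, sub_zero, abs_of_pos hL, Real.norm_eq_abs] at e3
    have e4 := neg_abs_le (∫ x in (0 : ℝ)..L, ab lam (gV L N (fun j => α j t) x) * gV L N b x)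
    have e5 : M * (√(D t) * √(∫ x in (0 : ℝ)..(0 + L), gV1 L N b x ^ 2)) ≤
        M * (√(D t) * √(4 * G)) := by gcongr
    simp only [zero_add] at e1 e5 ⊢
    simp only [hH, hD, zero_add] at e5 ⊢
    nlinarith
  have hanti : AntitoneOn (fun t => f t - ∫ s in t1..t, H s) (Icc t1 t2) := by
    have hd : ∀ t ∈ Icc t1 t2, HasDerivWithinAt (fun t => f t - ∫ s in t1..t, H s)
        ((∑ k ∈ fI N, b k * gF L lam N (fun j => α j t) k) - H t) (Icc t1 t2) t := fun t ht =>
      (hder t ht).sub (hHc.integral_hasStrictDerivAt t1 t).hasDerivAt.hasDerivWithinAt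
    exact antitoneOn_of_hasDerivWithinAt_nonpos (convex_Icc _ _)
      (fun t ht => (hd t ht).continuousWithinAt)
      (fun t ht => (hd t (interior_subset ht)).mono interior_subset)
      (fun t ht => sub_nonpos.2 (hbd t (interior_subset ht)))
  have h1 := hanti ⟨le_rfl, h12⟩ ⟨h12, le_rfl⟩ h12
  have hf1 : f t1 = 0 := by simp [hf]
  have hf2 : f t2 = ∑ k ∈ fI N, b k ^ 2 := by
    simp only [hf, hb]; exact Finset.sum_congr rfl fun k _ => by ring
  simp only [hf1, hf2, intervalIntegral.integral_same, sub_zero] at h1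
  have h2 : ∫ s in t1..t2, H s =
      M * √(4 * G) * (∫ s in t1..t2, √(D s)) + ab lam M * (2 * M) * L * (t2 - t1) := by
    simp only [hH]
    rw [intervalIntegral.integral_add (Continuous.intervalIntegrable (by fun_prop) _ _)
      (by simp), intervalIntegral.integral_const_mul, intervalIntegral.integral_const, smul_eq_mul]
    ring
  have h3 : ∫ s in t1..t2, √(D s) ≤ √((t2 - t1) * (G / 2)) := by
    have hcs := cs_interval (continuous_const (y := (1 : ℝ))) (hDc.sqrt) h12
    simp only [one_mul, one_pow, Real.sq_sqrt (hDn _), intervalIntegral.integral_const, smul_eq_mul,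
      mul_one] at hcs
    have h5 : ∫ s in t1..t2, D s ≤ G / 2 := by
      refine le_trans (intervalIntegral.integral_mono_interval ht1.1 h12 ht2.2
        (Eventually.of_forall fun s => hDn s) (hDc.intervalIntegrable _ _)) ?_
      have := h.dissipation hL hlam hT hα hG
      simpa only [hD, zero_add] using this
    refine (le_abs_self _).trans (Real.abs_le_sqrt (hcs.trans ?_))
    exact mul_le_mul_of_nonneg_left h5 (sub_nonneg.2 h12)
  have h4 : M * √(4 * G) * (∫ s in t1..t2, √(D s)) ≤ M * √(4 * G) * √((t2 - t1) * (G / 2)) := by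
    gcongr
  unfold etaB
  linarith

end

/-! ### Consistency of the Galerkin approximation -/

/-- Differentiation under the integral sign, for jointly continuous data. -/
lemma hasDerivAt_param {f f' : ℝ × ℝ → ℝ} (hf : Continuous f) (hf' : Continuous f')
    (hd : DT f f') (a b t : ℝ) :
    HasDerivAt (fun s => ∫ x in a..b, f (s, x)) (∫ x in a..b, f' (t, x)) t := by
  obtain ⟨C, hC⟩ := ((isCompact_Icc (a := t - 1) (b := t + 1)).prod
    (isCompact_uIcc (a := a) (b := b))).exists_bound_of_continuousOn hf'.continuousOn
  refine (intervalIntegral.hasDerivAt_integral_of_dominated_loc_of_deriv_le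
    (F := fun s x => f (s, x)) (F' := fun s x => f' (s, x)) (bound := fun _ => C)
    (Icc_mem_nhds (by linarith : t - 1 < t) (by linarith : t < t + 1))
    (Eventually.of_forall fun s => ?_) ?_ ?_ ?_ ?_ ?_).2
  · exact (hf.comp (by fun_prop : Continuous fun x => (s, x))).aestronglyMeasurable
  · exact (hf.comp (by fun_prop : Continuous fun x => (t, x))).intervalIntegrable _ _
  · exact (hf'.comp (by fun_prop : Continuous fun x => (t, x))).aestronglyMeasurable
  · exact Eventually.of_forall fun x hx s hs => hC (s, x) ⟨hs, uIoc_subset_uIcc hx⟩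
  · simp
  · exact Eventually.of_forall fun x _ s _ => hd (s, x)

section
variable {L lam T : ℝ} {N : ℕ}

lemma gV_pair {g : ℝ → ℝ} (hg : Continuous g) (d : ℤ → ℝ) (y : ℝ) :
    ∫ x in y..(y + L), gV L N d x * g x = ∑ k ∈ fI N, d k * ∫ x in y..(y + L), g x * he L k x := by
  have hc := fun k => he_cont (L := L) k
  simp only [gV, Finset.sum_mul]
  rw [intervalIntegral.integral_finsetSum fun k _ => Continuous.intervalIntegrable (by fun_prop) _ _]
  refine Finset.sum_congr rfl fun k _ => ?_
  rw [← intervalIntegral.integral_const_mul]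
  exact intervalIntegral.integral_congr fun x _ => by ring

/-- Hartley coefficients over the period `[y, y+L]` of the time slices of `ψ`. -/
def hco (L : ℝ) (ψ : ℝ × ℝ → ℝ) (y t : ℝ) (k : ℤ) : ℝ := ∫ x in y..(y + L), ψ (t, x) * he L k x

lemma hco_cont {ψ : ℝ × ℝ → ℝ} (hψ : Continuous ψ) (y : ℝ) (k : ℤ) :
    Continuous (fun t => hco L ψ y t k) := by
  have hc := he_cont (L := L) k
  refine intervalIntegral.continuous_parametric_intervalIntegral_of_continuous' ?_ _ _
  exact hψ.mul (hc.comp continuous_snd)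

/-- The Galerkin solution satisfies the weak formulation with projected test functions. -/
lemma DSol.exact (hL : 0 < L) (hlam : 1 ≤ lam) {α : ℤ → ℝ → ℝ}
    (hα : ∀ k, Continuous (α k)) (h : DSol L lam T N (fun _ => 1) α)
    {ψ ψt : ℝ × ℝ → ℝ} (hψ : Continuous ψ) (hψt : Continuous ψt) (hd : DT ψ ψt) (y : ℝ)
    {t1 t2 : ℝ} (ht1 : 0 ≤ t1) (h12 : t1 ≤ t2) (ht2 : t2 ≤ T) :
    (∫ x in y..(y + L), gV L N (fun j => α j t2) x * ψ (t2, x)) -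
      (∫ x in y..(y + L), gV L N (fun j => α j t1) x * ψ (t1, x)) =
    ∫ t in t1..t2, ∫ x in y..(y + L), (gV L N (fun j => α j t) x * ψt (t, x) +
      ((max (gV L N (fun j => α j t) x) 0) ^ 2 * gV3 L N (fun j => α j t) x *
          gV1 L N (hco L ψ y t) x
        - ab lam (gV L N (fun j => α j t) x) * gV L N (hco L ψ y t) x)) := by
  have hc := fun k => he_cont (L := L) k
  have hs : ∀ (g : ℝ × ℝ → ℝ) (_ : Continuous g) (t : ℝ), Continuous (fun x => g (t, x)) :=
    fun g hg t => hg.comp (by fun_prop)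
  have hb := fun k => hco_cont (L := L) hψ y k
  obtain ⟨j0, -, -, j3⟩ := gV_jcont (L := L) (N := N) hα
  obtain ⟨k0, k1, -, -⟩ := gV_jcont (L := L) (N := N) (α := fun k t => hco L ψ y t k) hb
  have hab := ab_cont hlam
  set f : ℝ → ℝ := fun t => ∫ x in y..(y + L), gV L N (fun j => α j t) x * ψ (t, x) with hf
  have hfe : f = fun t => ∑ k ∈ fI N, α k t * hco L ψ y t k := by
    ext t; exact gV_pair (hs ψ hψ t) _ y
  have hder : ∀ t ∈ Ioo t1 t2, HasDerivAt f (∫ x in y..(y + L),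
      (gV L N (fun j => α j t) x * ψt (t, x) +
      ((max (gV L N (fun j => α j t) x) 0) ^ 2 * gV3 L N (fun j => α j t) x *
          gV1 L N (hco L ψ y t) x
        - ab lam (gV L N (fun j => α j t) x) * gV L N (hco L ψ y t) x))) t := by
    intro t ht
    have hbd : ∀ k, HasDerivAt (fun s => hco L ψ y s k) (hco L ψt y t k) t := fun k =>
      hasDerivAt_param (f := fun p => ψ p * he L k p.2) (f' := fun p => ψt p * he L k p.2)
        (by fun_prop) (by fun_prop) (fun p => (hd p).mul_const (he L k p.2)) _ _ _
    have hT' : t ∈ Ioo 0 T := ⟨ht1.trans_lt ht.1, ht.2.trans_le ht2⟩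
    have ha : ∀ k ∈ fI N, HasDerivAt (α k) (gF L lam N (fun j => α j t) k) t := fun k hk => by
      have := (h k hk t (Ioo_subset_Icc_self hT')).hasDerivAt (Icc_mem_nhds hT'.1 hT'.2)
      rwa [one_mul] at this
    have h1 : HasDerivAt f (∑ k ∈ fI N, (gF L lam N (fun j => α j t) k * hco L ψ y t k +
        α k t * hco L ψt y t k)) t := by
      rw [hfe]; exact HasDerivAt.fun_sum fun k hk => (ha k hk).mul (hbd k)
    convert h1 using 1
    have e1 := gV_pair (L := L) (N := N) (hs ψt hψt t) (fun j => α j t) y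
    have e2 := gF_test' (N := N) hL hlam (fun j => α j t) (hco L ψ y t) y
    have c0 := gV_cont (L := L) (N := N) (fun j => α j t)
    have c3 := gV3_cont (L := L) (N := N) (fun j => α j t)
    have d0 := gV_cont (L := L) (N := N) (hco L ψ y t)
    have d1 := gV1_cont (L := L) (N := N) (hco L ψ y t)
    have e3 := hs ψt hψt t
    rw [intervalIntegral.integral_add (Continuous.intervalIntegrable (by fun_prop) _ _)
      (Continuous.intervalIntegrable (by fun_prop) _ _), e1, ← e2, Finset.sum_add_distrib, add_comm]
    congr 1
    exact Finset.sum_congr rfl fun k _ => mul_comm _ _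
  have hfc : Continuous f := by
    rw [hfe]; fun_prop
  have hInt : Continuous fun t => ∫ x in y..(y + L),
      (gV L N (fun j => α j t) x * ψt (t, x) +
      ((max (gV L N (fun j => α j t) x) 0) ^ 2 * gV3 L N (fun j => α j t) x *
          gV1 L N (hco L ψ y t) x
        - ab lam (gV L N (fun j => α j t) x) * gV L N (hco L ψ y t) x)) := by
    refine intervalIntegral.continuous_parametric_intervalIntegral_of_continuous' ?_ _ _
    exact (j0.mul hψt).add ((((j0.max continuous_const).pow 2).mul j3).mul k1 |>.sub
      ((hab.comp j0).mul k0))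
  exact (intervalIntegral.integral_eq_sub_of_hasDerivAt_of_le h12 hfc.continuousOn hder
    (hInt.intervalIntegrable _ _)).symm

/-- The projection errors of `ψ` and of its space derivative tend to zero. -/
lemma proj_err (hL : 0 < L) {ψ ψx : ℝ × ℝ → ℝ} (hψ : Continuous ψ) (hψx : Continuous ψx)
    (hd : DX ψ ψx) (y : ℝ) (hper : ∀ t, ψ (t, y + L) = ψ (t, y)) (t1 t2 : ℝ) :
    Tendsto (fun N => ∫ t in t1..t2, ∫ x in y..(y + L),
      (ψ (t, x) - gV L N (hco L ψ y t) x) ^ 2) atTop (nhds 0) ∧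
    Tendsto (fun N => ∫ t in t1..t2, ∫ x in y..(y + L),
      (ψx (t, x) - gV1 L N (hco L ψ y t) x) ^ 2) atTop (nhds 0) := by
  have hs : ∀ (g : ℝ × ℝ → ℝ) (_ : Continuous g) (t : ℝ), Continuous (fun x => g (t, x)) :=
    fun g hg t => hg.comp (by fun_prop)
  -- both statements are instances of the convergence of the Hartley series of time slices
  have key : ∀ (g : ℝ × ℝ → ℝ) (P : ℕ → ℝ × ℝ → ℝ), Continuous g → (∀ N, Continuous (P N)) →
      (∀ N t, ∫ x in y..(y + L), (g (t, x) - P N (t, x)) ^ 2 =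
        (∫ x in y..(y + L), g (t, x) ^ 2) - ∑ k ∈ fI N, (hco L g y t k) ^ 2) →
      Tendsto (fun N => ∫ t in t1..t2, ∫ x in y..(y + L), (g (t, x) - P N (t, x)) ^ 2)
        atTop (nhds 0) := by
    intro g P hg hP hE
    have hgc : Continuous fun t => ∫ x in y..(y + L), g (t, x) ^ 2 :=
      intervalIntegral.continuous_parametric_intervalIntegral_of_continuous' (hg.pow 2) _ _
    have := intervalIntegral.tendsto_integral_filter_of_dominated_convergence (μ := volume)
      (a := t1) (b := t2) (l := atTop) (f := fun _ => (0 : ℝ))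
      (F := fun N t => ∫ x in y..(y + L), (g (t, x) - P N (t, x)) ^ 2)
      (fun t => ∫ x in y..(y + L), g (t, x) ^ 2)
      (Eventually.of_forall fun N => ?_) (Eventually.of_forall fun N => Eventually.of_forall
        fun t _ => ?_) (hgc.intervalIntegrable _ _) (Eventually.of_forall fun t _ => ?_)
    · simpa using this
    · exact (intervalIntegral.continuous_parametric_intervalIntegral_of_continuous'
        ((hg.sub (hP N)).pow 2) _ _).aestronglyMeasurable
    · rw [Real.norm_of_nonneg (intervalIntegral.integral_nonneg (by linarith)
        fun x _ => sq_nonneg _), hE]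
      have : 0 ≤ ∑ k ∈ fI N, (hco L g y t k) ^ 2 := Finset.sum_nonneg fun k _ => sq_nonneg _
      linarith
    · simp only [hE]
      have h1 := he_parseval hL (y := y) ((hs g hg t).intervalIntegrable _ _)
        (((hs g hg t).pow 2).intervalIntegrable _ _)
      have h2 := h1.const_sub (∫ x in y..(y + L), g (t, x) ^ 2)
      simpa [hco] using h2
  have hb := fun k => hco_cont (L := L) hψ y k
  constructor
  · refine key ψ (fun N p => gV L N (hco L ψ y p.1) p.2) hψ
      (fun N => (gV_jcont (L := L) (N := N) (α := fun k t => hco L ψ y t k) hb).1) fun N t => ?_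
    exact he_proj hL (fun k => k) Function.injective_id (fI N)
      ((hs ψ hψ t).intervalIntegrable _ _) (((hs ψ hψ t).pow 2).intervalIntegrable _ _)
  · refine key ψx (fun N p => gV1 L N (hco L ψ y p.1) p.2) hψx
      (fun N => (gV_jcont (L := L) (N := N) (α := fun k t => hco L ψ y t k) hb).2.1) fun N t => ?_
    have h1 := he_proj hL (fun k => -k) neg_injective (fI N) (y := y)
      ((hs ψx hψx t).intervalIntegrable _ _) (((hs ψx hψx t).pow 2).intervalIntegrable _ _)
    have hcd := fun k => coef_deriv hL (u := fun x => ψ (t, x)) (g := fun x => ψx (t, x)) (y := y)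
      (fun a b => (hs ψx hψx t).intervalIntegrable _ _)
      (fun a b => (intervalIntegral.integral_eq_sub_of_hasDerivAt (f := fun x => ψ (t, x))
        (fun x _ => hd (t, x))
        ((hs ψx hψx t).intervalIntegrable _ _)).symm) (hper t) k
    have e1 : ∀ x, gV1 L N (hco L ψ y t) x = ∑ k ∈ fI N,
        (∫ z in y..(y + L), ψx (t, z) * he L (-k) z) * he L (-k) x := fun x =>
      Finset.sum_congr rfl fun k _ => by rw [hcd]; simp only [hco]; ring
    simp only [e1]
    rw [h1, ← sum_fI_neg N (fun k => hco L ψx y t k ^ 2)]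
    rfl

/-- The Galerkin solution satisfies the weak formulation up to the projection errors. -/
lemma DSol.consistency (hL : 0 < L) (hlam : 1 ≤ lam) {α : ℤ → ℝ → ℝ}
    (hα : ∀ k, Continuous (α k)) (h : DSol L lam T N (fun _ => 1) α) {G M : ℝ}
    (hG : ∀ y, ∫ t in (0 : ℝ)..T, ∫ x in y..(y + L),
      (max (gV L N (fun j => α j t) x) 0 * gV3 L N (fun j => α j t) x) ^ 2 ≤ G)
    (hM : ∀ t x, |gV L N (fun j => α j t) x| ≤ M)
    {ψ ψt ψx : ℝ × ℝ → ℝ} (hψ : Continuous ψ) (hψt : Continuous ψt) (hψx : Continuous ψx)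
    (hd : DT ψ ψt) (y : ℝ)
    {t1 t2 : ℝ} (ht1 : 0 ≤ t1) (h12 : t1 ≤ t2) (ht2 : t2 ≤ T) :
    |(∫ x in y..(y + L), gV L N (fun j => α j t2) x * ψ (t2, x)) -
      (∫ x in y..(y + L), gV L N (fun j => α j t1) x * ψ (t1, x)) -
    ∫ t in t1..t2, ∫ x in y..(y + L), (gV L N (fun j => α j t) x * ψt (t, x) +
      ((max (gV L N (fun j => α j t) x) 0) ^ 2 * gV3 L N (fun j => α j t) x * ψx (t, x)
        - ab lam (gV L N (fun j => α j t) x) * ψ (t, x)))| ≤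
    M * √(G * ∫ t in t1..t2, ∫ x in y..(y + L), (ψx (t, x) - gV1 L N (hco L ψ y t) x) ^ 2) +
    ab lam M * √L * √((t2 - t1) * ∫ t in t1..t2, ∫ x in y..(y + L),
      (ψ (t, x) - gV L N (hco L ψ y t) x) ^ 2) := by
  have hyL : y ≤ y + L := by linarith
  have hM0 : 0 ≤ M := (abs_nonneg _).trans (hM 0 0)
  have hs : ∀ (g : ℝ × ℝ → ℝ) (_ : Continuous g) (t : ℝ), Continuous (fun x => g (t, x)) :=
    fun g hg t => hg.comp (by fun_prop)
  have hb := fun k => hco_cont (L := L) hψ y k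
  obtain ⟨j0, -, -, j3⟩ := gV_jcont (L := L) (N := N) hα
  obtain ⟨k0, k1, -, -⟩ := gV_jcont (L := L) (N := N) (α := fun k t => hco L ψ y t k) hb
  have hab := ab_cont hlam
  rw [h.exact hL hlam hα hψ hψt hd y ht1 h12 ht2]
  have hpc := fun (F : ℝ × ℝ → ℝ) (hF : Continuous F) =>
    intervalIntegral.continuous_parametric_intervalIntegral_of_continuous' (μ := volume)
      (f := fun t x => F (t, x)) hF y (y + L)
  have c1 := hpc (fun p => gV L N (fun j => α j p.1) p.2 * ψt p +
      ((max (gV L N (fun j => α j p.1) p.2) 0) ^ 2 * gV3 L N (fun j => α j p.1) p.2 *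
          gV1 L N (hco L ψ y p.1) p.2
        - ab lam (gV L N (fun j => α j p.1) p.2) * gV L N (hco L ψ y p.1) p.2)) (by fun_prop)
  have c2 := hpc (fun p => gV L N (fun j => α j p.1) p.2 * ψt p +
      ((max (gV L N (fun j => α j p.1) p.2) 0) ^ 2 * gV3 L N (fun j => α j p.1) p.2 *
          ψx p
        - ab lam (gV L N (fun j => α j p.1) p.2) * ψ p)) (by fun_prop)
  rw [← intervalIntegral.integral_sub (c1.intervalIntegrable _ _) (c2.intervalIntegrable _ _)]
  set D : ℝ → ℝ := fun t => ∫ x in y..(y + L),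
      (max (gV L N (fun j => α j t) x) 0 * gV3 L N (fun j => α j t) x) ^ 2 with hD
  have hDc : Continuous D := diss_cont hα y
  have hDn : ∀ t, 0 ≤ D t := fun t =>
    intervalIntegral.integral_nonneg hyL fun x _ => sq_nonneg _
  set E1 : ℝ → ℝ := fun t => ∫ x in y..(y + L), (ψx (t, x) - gV1 L N (hco L ψ y t) x) ^ 2 with hE1
  set E0 : ℝ → ℝ := fun t => ∫ x in y..(y + L), (ψ (t, x) - gV L N (hco L ψ y t) x) ^ 2 with hE0
  have hE1c : Continuous E1 :=
    hpc (fun p => (ψx p - gV1 L N (hco L ψ y p.1) p.2) ^ 2) (by fun_prop)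
  have hE0c : Continuous E0 :=
    hpc (fun p => (ψ p - gV L N (hco L ψ y p.1) p.2) ^ 2) (by fun_prop)
  have hE1n : ∀ t, 0 ≤ E1 t := fun t =>
    intervalIntegral.integral_nonneg hyL fun x _ => sq_nonneg _
  have hE0n : ∀ t, 0 ≤ E0 t := fun t =>
    intervalIntegral.integral_nonneg hyL fun x _ => sq_nonneg _
  have hpt : ∀ t, |(∫ x in y..(y + L), (gV L N (fun j => α j t) x * ψt (t, x) +
      ((max (gV L N (fun j => α j t) x) 0) ^ 2 * gV3 L N (fun j => α j t) x *
          gV1 L N (hco L ψ y t) x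
        - ab lam (gV L N (fun j => α j t) x) * gV L N (hco L ψ y t) x))) -
      ∫ x in y..(y + L), (gV L N (fun j => α j t) x * ψt (t, x) +
      ((max (gV L N (fun j => α j t) x) 0) ^ 2 * gV3 L N (fun j => α j t) x * ψx (t, x)
        - ab lam (gV L N (fun j => α j t) x) * ψ (t, x)))| ≤
      M * (√(D t) * √(E1 t)) + ab lam M * √L * √(E0 t) := by
    intro t
    have a0 := gV_cont (L := L) (N := N) (fun j => α j t)
    have a3 := gV3_cont (L := L) (N := N) (fun j => α j t)
    have b0 := gV_cont (L := L) (N := N) (hco L ψ y t)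
    have b1 := gV1_cont (L := L) (N := N) (hco L ψ y t)
    have g0 := hs ψ hψ t
    have gx := hs ψx hψx t
    have gt := hs ψt hψt t
    have f1 := flux_bound hL (N := N) (fun j => α j t)
      (w := fun x => ψx (t, x) - gV1 L N (hco L ψ y t) x) (by fun_prop) (hM t) y
    have f2 := cs_interval (f := fun x => ab lam (gV L N (fun j => α j t) x))
      (g := fun x => ψ (t, x) - gV L N (hco L ψ y t) x) (by fun_prop) (by fun_prop) hyL
    have f3 : ∫ x in y..(y + L), ab lam (gV L N (fun j => α j t) x) ^ 2 ≤ ab lam M ^ 2 * L := by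
      have : ∫ x in y..(y + L), ab lam (gV L N (fun j => α j t) x) ^ 2 ≤
          ∫ x in y..(y + L), ab lam M ^ 2 :=
        intervalIntegral.integral_mono_on hyL (Continuous.intervalIntegrable (by fun_prop) _ _)
          (by simp) fun x _ => by
            have h0 := ab_nonneg (lam := lam) (gV L N (fun j => α j t) x)
            have := ab_mono hlam ((le_abs_self _).trans (hM t x))
            gcongr
      simpa [mul_comm] using this
    have f4 : |∫ x in y..(y + L), ab lam (gV L N (fun j => α j t) x) *
        (ψ (t, x) - gV L N (hco L ψ y t) x)| ≤ ab lam M * √L * √(E0 t) := by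
      refine (Real.abs_le_sqrt (f2.trans (mul_le_mul_of_nonneg_right f3 (hE0n t)))).trans
        (le_of_eq ?_)
      rw [Real.sqrt_mul (by positivity), Real.sqrt_mul (by positivity),
        Real.sqrt_sq (ab_nonneg _)]
    rw [← intervalIntegral.integral_sub (Continuous.intervalIntegrable (by fun_prop) _ _)
      (Continuous.intervalIntegrable (by fun_prop) _ _)]
    have e : ∀ x, (gV L N (fun j => α j t) x * ψt (t, x) +
      ((max (gV L N (fun j => α j t) x) 0) ^ 2 * gV3 L N (fun j => α j t) x *
          gV1 L N (hco L ψ y t) x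
        - ab lam (gV L N (fun j => α j t) x) * gV L N (hco L ψ y t) x)) -
      (gV L N (fun j => α j t) x * ψt (t, x) +
      ((max (gV L N (fun j => α j t) x) 0) ^ 2 * gV3 L N (fun j => α j t) x * ψx (t, x)
        - ab lam (gV L N (fun j => α j t) x) * ψ (t, x))) =
      ab lam (gV L N (fun j => α j t) x) * (ψ (t, x) - gV L N (hco L ψ y t) x) -
      (max (gV L N (fun j => α j t) x) 0) ^ 2 * gV3 L N (fun j => α j t) x *
        (ψx (t, x) - gV1 L N (hco L ψ y t) x) := fun x => by ring
    simp only [e]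
    rw [intervalIntegral.integral_sub (Continuous.intervalIntegrable (by fun_prop) _ _)
      (Continuous.intervalIntegrable (by fun_prop) _ _)]
    refine (abs_sub _ _).trans ?_
    rw [add_comm]
    exact add_le_add f1 f4
  have hI : ∫ t in t1..t2, D t ≤ G := by
    refine le_trans (intervalIntegral.integral_mono_interval ht1 h12 ht2
      (Eventually.of_forall fun s => hDn s) (hDc.intervalIntegrable _ _)) (hG y)
  have hEi1 : 0 ≤ ∫ t in t1..t2, E1 t := intervalIntegral.integral_nonneg h12 fun t _ => hE1n t
  have hEi0 : 0 ≤ ∫ t in t1..t2, E0 t := intervalIntegral.integral_nonneg h12 fun t _ => hE0n t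
  have i1 : Continuous fun t => M * (√(D t) * √(E1 t)) := by fun_prop
  have i2 : Continuous fun t => ab lam M * √L * √(E0 t) := by fun_prop
  rw [← Real.norm_eq_abs]
  refine (intervalIntegral.norm_integral_le_of_norm_le
    (g := fun t => M * (√(D t) * √(E1 t)) + ab lam M * √L * √(E0 t)) h12
    (Eventually.of_forall fun t _ => ?_) ((i1.add i2).intervalIntegrable _ _)).trans ?_
  · rw [Real.norm_eq_abs]; exact hpt t
  rw [intervalIntegral.integral_add (i1.intervalIntegrable _ _) (i2.intervalIntegrable _ _),
      intervalIntegral.integral_const_mul, intervalIntegral.integral_const_mul]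
  have q1 : ∫ t in t1..t2, √(D t) * √(E1 t) ≤ √(G * ∫ t in t1..t2, E1 t) := by
    have := cs_interval hDc.sqrt hE1c.sqrt h12
    simp only [Real.sq_sqrt (hDn _), Real.sq_sqrt (hE1n _)] at this
    exact (le_abs_self _).trans
      (Real.abs_le_sqrt (this.trans (mul_le_mul_of_nonneg_right hI hEi1)))
  have q2 : ∫ t in t1..t2, √(E0 t) ≤ √((t2 - t1) * ∫ t in t1..t2, E0 t) := by
    have := cs_interval (continuous_const (y := (1 : ℝ))) hE0c.sqrt h12
    simp only [one_mul, one_pow, Real.sq_sqrt (hE0n _), intervalIntegral.integral_const, smul_eq_mul,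
      mul_one] at this
    exact (le_abs_self _).trans (Real.abs_le_sqrt this)
  have q3 : 0 ≤ ab lam M := ab_nonneg _
  gcongr

end

/-- The properties of a sequence of approximate solutions which are used in the limit:
uniform bounds, equicontinuity, dissipation bound, convergence of the initial data and
asymptotic validity of the weak formulation over every period `[y, y+L]`. -/
structure Approx (L T lam G M : ℝ) (u₀ : ℝ → ℝ) (v v1 v2 v3 : ℕ → ℝ × ℝ → ℝ) : Prop where
  c0 : ∀ N, Continuous (v N)
  c1 : ∀ N, Continuous (v1 N)
  c2 : ∀ N, Continuous (v2 N)
  c3 : ∀ N, Continuous (v3 N)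
  d0 : ∀ N, DX (v N) (v1 N)
  d1 : ∀ N, DX (v1 N) (v2 N)
  d2 : ∀ N, DX (v2 N) (v3 N)
  per : ∀ N t x, v N (t, x + L) = v N (t, x)
  bdd : ∀ N p, |v N p| ≤ M
  holder : ∀ N t x z, |x - z| ≤ L → (v N (t, x) - v N (t, z)) ^ 2 ≤ G * |x - z|
  time : ∀ N t s x, (v N (t, x) - v N (s, x)) ^ 2 ≤ omB L lam G M |t - s|
  diss : ∀ N y, ∫ t in (0 : ℝ)..T, ∫ x in y..(y + L), (max (v N (t, x)) 0 * v3 N (t, x)) ^ 2 ≤ G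
  en : ∀ N t y, ∫ x in y..(y + L), v1 N (t, x) ^ 2 ≤ G
  mass : ∀ N t, ∫ x in (0 : ℝ)..L, v N (t, x) ≤ ∫ x in (0 : ℝ)..L, u₀ x
  init : Tendsto (fun N => ∫ x in (0 : ℝ)..L, (v N (0, x) - u₀ x) ^ 2) atTop (nhds 0)
  weak : ∀ (ψ ψt ψx : ℝ × ℝ → ℝ) (y : ℝ), Continuous ψ → Continuous ψt → Continuous ψx →
    DT ψ ψt → DX ψ ψx → (∀ t, ψ (t, y + L) = ψ (t, y)) →
    ∀ t1 t2, 0 ≤ t1 → t1 ≤ t2 → t2 ≤ T →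
    Tendsto (fun N => (∫ x in y..(y + L), v N (t2, x) * ψ (t2, x)) -
      (∫ x in y..(y + L), v N (t1, x) * ψ (t1, x)) -
      ∫ t in t1..t2, ∫ x in y..(y + L), (v N (t, x) * ψt (t, x) +
        ((max (v N (t, x)) 0) ^ 2 * v3 N (t, x) * ψx (t, x) - ab lam (v N (t, x)) * ψ (t, x))))
      atTop (nhds 0)

section
variable {L lam T : ℝ}

lemma omB_mono (hL : 0 < L) {G M : ℝ} (hG : 0 ≤ G) (hM : 0 ≤ M) {s t : ℝ} (hst : s ≤ t) :
    omB L lam G M s ≤ omB L lam G M t := by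
  have h0 : 0 ≤ ab lam M := ab_nonneg _
  have h : etaB L lam G M s ≤ etaB L lam G M t := by unfold etaB; gcongr
  unfold omB
  gcongr

theorem approx_exists (hL : 0 < L) (hT : 0 < T) (hlam : 1 ≤ lam) {u₀ g₀ : ℝ → ℝ}
    (h0cont : Continuous u₀)
    (h0per : ∀ x : ℝ, u₀ (x + L) = u₀ x)
    (h0int : ∀ a b : ℝ, IntervalIntegrable g₀ volume a b)
    (h0ac : ∀ a b : ℝ, u₀ b - u₀ a = ∫ x in a..b, g₀ x)
    (h0L2 : IntervalIntegrable (fun x => (g₀ x) ^ 2) volume 0 L) :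
    ∃ M v v1 v2 v3, Approx L T lam (∫ x in (0 : ℝ)..L, g₀ x ^ 2) M u₀ v v1 v2 v3 := by
  have hG0 := init_energy hL h0per h0int h0ac h0L2
  set G := ∫ x in (0 : ℝ)..L, g₀ x ^ 2 with hGdef
  set a0 : ℤ → ℝ := fun k => ∫ x in (0 : ℝ)..L, u₀ x * he L k x with ha0
  choose α hαc hα0 hαp hαs using fun N => galerkin_exists (L := L) (lam := lam) hL hlam hT.le N a0
  have hG : ∀ N, ∑ k ∈ fI N, (om L * k) ^ 2 * α N k 0 ^ 2 ≤ G := fun N => by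
    refine le_trans (le_of_eq (Finset.sum_congr rfl fun k hk => ?_)) (hG0 N)
    rw [hα0 N k hk]
  have hGn : 0 ≤ G := intervalIntegral.integral_nonneg hL.le fun x _ => sq_nonneg _
  set M := supB L lam T G (a0 0) with hMdef
  -- the coefficients are constant outside `[0,T]`
  have hcl : ∀ N t, (fun k => α N k t) = fun k => α N k (projIcc 0 T hT.le t) := fun N t => by
    ext k; rw [hαp]
  have hM : ∀ N t x, |gV L N (fun k => α N k t) x| ≤ M := fun N t x => by
    rw [hcl]
    exact (hαs N).sup hL hlam (fun _ => zero_le_one) (fun _ => le_rfl) (hG N)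
      (hα0 N 0 zero_mem_fI) (projIcc 0 T hT.le t).2 x
  have hM0 : 0 ≤ M := (abs_nonneg _).trans (hM 0 0 0)
  have hE : ∀ N t, ∑ k ∈ fI N, (om L * k) ^ 2 * α N k t ^ 2 ≤ G := fun N t => by
    have h := ((hαs N).energy hL hlam (fun _ => zero_le_one) (projIcc 0 T hT.le t).2).trans (hG N)
    refine le_trans (le_of_eq (Finset.sum_congr rfl fun k hk => ?_)) h
    rw [hαp]
  have hj := fun N => gV_jcont (L := L) (N := N) (hαc N)
  have hdiss : ∀ N y, ∫ t in (0 : ℝ)..T, ∫ x in y..(y + L),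
      (max (gV L N (fun k => α N k t) x) 0 * gV3 L N (fun k => α N k t) x) ^ 2 ≤ G := fun N y => by
    have h := (hαs N).dissipation hL hlam hT.le (hαc N) (hG N)
    have e : ∀ t, ∫ x in y..(y + L),
        (max (gV L N (fun k => α N k t) x) 0 * gV3 L N (fun k => α N k t) x) ^ 2 =
        ∫ x in (0 : ℝ)..L,
        (max (gV L N (fun k => α N k t) x) 0 * gV3 L N (fun k => α N k t) x) ^ 2 := fun t => by
      have hp : Function.Periodic (fun x =>
          (max (gV L N (fun k => α N k t) x) 0 * gV3 L N (fun k => α N k t) x) ^ 2) L := by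
        intro x
        simp only [gV_per hL, gV3_per hL]
      have := hp.intervalIntegral_add_eq y 0
      simpa using this
    simp only [e]
    linarith
  refine ⟨M, fun N p => gV L N (fun k => α N k p.1) p.2, fun N p => gV1 L N (fun k => α N k p.1) p.2,
    fun N p => gV2 L N (fun k => α N k p.1) p.2, fun N p => gV3 L N (fun k => α N k p.1) p.2,
    { c0 := fun N => (hj N).1
      c1 := fun N => (hj N).2.1
      c2 := fun N => (hj N).2.2.1
      c3 := fun N => (hj N).2.2.2
      d0 := fun N p => gV_hasDeriv (fun k => α N k p.1) p.2
      d1 := fun N p => gV1_hasDeriv (fun k => α N k p.1) p.2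
      d2 := fun N p => gV2_hasDeriv (fun k => α N k p.1) p.2
      per := fun N t x => gV_per hL _ _
      bdd := fun N p => hM N _ _
      holder := fun N t x z hxz => gV_holder hL _ (hE N t) hxz
      time := ?_
      diss := hdiss
      en := fun N t y => (gV1_sq hL (fun k => α N k t) y).trans_le (hE N t)
      mass := ?_
      init := ?_
      weak := ?_ }⟩
  · intro N t s x
    wlog hst : s ≤ t generalizing t s
    · rw [abs_sub_comm, ← neg_sub, neg_sq]; exact this s t (le_of_not_ge hst)
    simp only
    rw [hcl N t, hcl N s, ← gV_sub]
    have h12 : (projIcc 0 T hT.le s : ℝ) ≤ projIcc 0 T hT.le t := monotone_projIcc hT.le hst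
    have h := (hαs N).time_L2 hL hlam hT.le (hαc N) (hG N) (fun t _ x => hM N t x)
      (projIcc 0 T hT.le s).2 (projIcc 0 T hT.le t).2 h12
    refine (gV_interp hL _ h.1 h.2 x).trans ?_
    refine omB_mono hL hGn hM0 ?_
    rw [← abs_of_nonneg (sub_nonneg.2 h12)]
    exact abs_projIcc_sub_projIcc hT.le
  · intro N t
    have h1 := gV_mean (N := N) hL (fun k => α N k t) 0
    rw [zero_add] at h1
    simp only
    rw [h1, ← hαp]
    have h2 := (hαs N).mass_anti hL (fun _ => zero_le_one) ⟨le_rfl, hT.le⟩ (projIcc 0 T hT.le t).2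
      (projIcc 0 T hT.le t).2.1
    have hs : 0 < √L := Real.sqrt_pos.2 hL
    have h3 : √L * α N 0 0 = ∫ x in (0 : ℝ)..L, u₀ x := by
      rw [hα0 N 0 zero_mem_fI, ha0]
      simp only [he_zero]
      rw [intervalIntegral.integral_mul_const]
      field_simp
    rw [← h3]
    exact mul_le_mul_of_nonneg_left h2 hs.le
  · refine (init_L2 hL h0cont).congr fun N => ?_
    refine intervalIntegral.integral_congr fun x _ => ?_
    simp only [gV]
    congr 2
    exact Finset.sum_congr rfl fun k hk => by rw [hα0 N k hk]
  · intro ψ ψt ψx y hψ hψt hψx ht hx hp t1 t2 h1 h12 h2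
    obtain ⟨e0, e1⟩ := proj_err hL hψ hψx hx y hp t1 t2
    refine squeeze_zero_norm (fun N => (hαs N).consistency hL hlam (hαc N) (hdiss N) (hM N) hψ hψt hψx
      ht y h1 h12 h2) ?_
    have f1 := ((e1.const_mul G).sqrt).const_mul M
    have f0 := ((e0.const_mul (t2 - t1)).sqrt).const_mul (ab lam M * √L)
    simpa using f1.add f0

end

/-! ### Limits along an ultrafilter -/

section
variable {F : Ultrafilter ℕ}

lemma ultra_lim (F : Ultrafilter ℕ) {f : ℕ → ℝ} {M : ℝ} (h : ∀ N, |f N| ≤ M) :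
    ∃ l, Tendsto f F (nhds l) ∧ |l| ≤ M := by
  have hle : ((F.map f : Ultrafilter ℝ) : Filter ℝ) ≤ 𝓟 (Icc (-M) M) := by
    rw [le_principal_iff]
    exact Filter.mem_map.2 (Filter.univ_mem' fun N => abs_le.1 (h N))
  obtain ⟨l, hl, hF⟩ := isCompact_Icc.ultrafilter_le_nhds (F.map f) hle
  exact ⟨l, hF, abs_le.2 hl⟩

/-- Bounded sequences in a Hilbert space have weak limits along an ultrafilter. -/
lemma hilbert_weak {E : Type*} [NormedAddCommGroup E] [InnerProductSpace ℝ E] [CompleteSpace E]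
    (F : Ultrafilter ℕ) {x : ℕ → E} {C : ℝ} (hx : ∀ N, ‖x N‖ ≤ C) :
    ∃ h : E, ‖h‖ ≤ C ∧ ∀ φ : E, Tendsto (fun N => inner ℝ (x N) φ) F (nhds (inner ℝ h φ)) := by
  have hC : 0 ≤ C := (norm_nonneg _).trans (hx 0)
  have hb : ∀ φ N, |inner ℝ (x N) φ| ≤ C * ‖φ‖ := fun φ N =>
    (abs_real_inner_le_norm _ _).trans (mul_le_mul_of_nonneg_right (hx N) (norm_nonneg _))
  choose l hl hlb using fun φ => ultra_lim F (hb φ)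
  let lin : E →ₗ[ℝ] ℝ :=
    { toFun := l
      map_add' := fun a b => tendsto_nhds_unique (hl (a + b)) (by
        simpa only [inner_add_right] using (hl a).add (hl b))
      map_smul' := fun c a => tendsto_nhds_unique (hl (c • a)) (by
        simpa only [inner_smul_right, smul_eq_mul, RingHom.id_apply] using (hl a).const_mul c) }
  let f := lin.mkContinuous C (fun φ => hlb φ)
  refine ⟨(InnerProductSpace.toDual ℝ E).symm f, ?_, fun φ => ?_⟩
  · rw [LinearIsometryEquiv.norm_map]
    exact lin.mkContinuous_norm_le hC _
  · rw [InnerProductSpace.toDual_symm_apply]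
    exact hl φ

variable {X : Type*} [MeasurableSpace X] {μ : Measure X}

lemma memLp_mul_integrable {f g : X → ℝ} (hf : MemLp f 2 μ) (hg : MemLp g 2 μ) :
    Integrable (fun p => f p * g p) μ :=
  hf.integrable_mul hg

/-- Bounded sequences in `L²` have weak limits along an ultrafilter. -/
lemma weak_L2 (F : Ultrafilter ℕ) {w : ℕ → X → ℝ} (hw : ∀ N, MemLp (w N) 2 μ) {C : ℝ}
    (hC : ∀ N, ∫ p, w N p ^ 2 ∂μ ≤ C) :
    ∃ h : X → ℝ, MemLp h 2 μ ∧ ∫ p, h p ^ 2 ∂μ ≤ C ∧ ∀ φ : X → ℝ, MemLp φ 2 μ →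
      Tendsto (fun N => ∫ p, w N p * φ p ∂μ) F (nhds (∫ p, h p * φ p ∂μ)) := by
  have hin : ∀ (a b : X → ℝ) (ha : MemLp a 2 μ) (hb : MemLp b 2 μ),
      inner ℝ (ha.toLp a) (hb.toLp b) = ∫ p, a p * b p ∂μ := by
    intro a b ha hb
    rw [L2.inner_def]
    refine integral_congr_ae ?_
    filter_upwards [ha.coeFn_toLp, hb.coeFn_toLp] with p h1 h2
    rw [h1, h2]
    simp [mul_comm]
  have hC0 : 0 ≤ C := (integral_nonneg fun p => sq_nonneg _).trans (hC 0)
  have hn : ∀ (a : X → ℝ) (ha : MemLp a 2 μ), ‖ha.toLp a‖ ^ 2 = ∫ p, a p ^ 2 ∂μ := by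
    intro a ha
    rw [← real_inner_self_eq_norm_sq, hin]
    simp only [sq]
  obtain ⟨h, hh, hl⟩ := hilbert_weak F (x := fun N => (hw N).toLp (w N)) (C := √C) fun N =>
    Real.le_sqrt_of_sq_le (by rw [hn]; exact hC N)
  have hm : MemLp h 2 μ := Lp.memLp h
  have he : hm.toLp h = h := Lp.toLp_coeFn h hm
  refine ⟨h, hm, ?_, fun φ hφ => ?_⟩
  · rw [← hn h hm, he]
    calc ‖h‖ ^ 2 ≤ √C ^ 2 := by gcongr
      _ = C := Real.sq_sqrt hC0
  · have := hl (hφ.toLp φ)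
    simp only [hin] at this
    rwa [← he, hin] at this

/-- Products of weakly and uniformly converging sequences. -/
lemma weak_strong [IsFiniteMeasure μ] {w : ℕ → X → ℝ} (hw : ∀ N, MemLp (w N) 2 μ) {C : ℝ}
    (hC : ∀ N, ∫ p, w N p ^ 2 ∂μ ≤ C) {h : X → ℝ}
    (hl : ∀ φ : X → ℝ, MemLp φ 2 μ →
      Tendsto (fun N => ∫ p, w N p * φ p ∂μ) F (nhds (∫ p, h p * φ p ∂μ)))
    {f : ℕ → X → ℝ} {g : X → ℝ} (hf : ∀ N, AEStronglyMeasurable (f N) μ) (hg : MemLp g 2 μ)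
    (hfg : ∀ ε > 0, ∀ᶠ N in (F : Filter ℕ), ∀ᵐ p ∂μ, |f N p - g p| ≤ ε) :
    Tendsto (fun N => ∫ p, w N p * f N p ∂μ) F (nhds (∫ p, h p * g p ∂μ)) := by
  have hC0 : 0 ≤ C := (integral_nonneg fun p => sq_nonneg _).trans (hC 0)
  have hdiff : Tendsto (fun N => (∫ p, w N p * f N p ∂μ) - ∫ p, w N p * g p ∂μ) F (nhds 0) := by
    rw [Metric.tendsto_nhds]
    intro ε hε
    set A := C * μ.real univ with hA
    have hA0 : 0 ≤ A := by positivity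
    obtain ⟨δ, hδ, hδA⟩ : ∃ δ > 0, δ * √A < ε := by
      refine ⟨ε / (√A + 1), by positivity, ?_⟩
      rw [div_mul_eq_mul_div, div_lt_iff₀ (by positivity)]
      nlinarith [Real.sqrt_nonneg A]
    filter_upwards [hfg δ hδ] with N hN
    have hm : MemLp (fun p => f N p - g p) 2 μ :=
      MemLp.of_bound ((hf N).sub hg.1) δ (by simpa using hN)
    have e : ∫ p, w N p * f N p ∂μ =
        (∫ p, w N p * (f N p - g p) ∂μ) + ∫ p, w N p * g p ∂μ := by
      rw [← integral_add (memLp_mul_integrable (hw N) hm) (memLp_mul_integrable (hw N) hg)]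
      exact integral_congr_ae (Eventually.of_forall fun p => by simp only; ring)
    rw [e, add_sub_cancel_right, Real.dist_eq, sub_zero]
    have hcs := cs_integral (hw N).integrable_sq hm.integrable_sq
      (memLp_mul_integrable (hw N) hm)
    have hb : ∫ p, (f N p - g p) ^ 2 ∂μ ≤ δ ^ 2 * μ.real univ := by
      have : ∫ p, (f N p - g p) ^ 2 ∂μ ≤ ∫ _, δ ^ 2 ∂μ := by
        refine integral_mono_ae hm.integrable_sq (integrable_const _) ?_
        filter_upwards [hN] with p hp
        exact sq_le_sq' (abs_le.1 hp).1 (abs_le.1 hp).2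
      simpa [mul_comm] using this
    have h3 : (∫ p, w N p * (f N p - g p) ∂μ) ^ 2 ≤ δ ^ 2 * A := by
      refine hcs.trans ((mul_le_mul (hC N) hb (integral_nonneg fun p => sq_nonneg _) hC0).trans
        (le_of_eq ?_))
      rw [hA]; ring
    refine (Real.abs_le_sqrt h3).trans_lt ?_
    rw [Real.sqrt_mul (sq_nonneg _), Real.sqrt_sq hδ.le]
    exact hδA
  simpa using hdiff.add (hl g hg)

/-- Integrals of uniformly converging sequences on a finite measure space. -/
lemma unif_int [IsFiniteMeasure μ] {f : ℕ → X → ℝ} {g : X → ℝ}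
    (hf : ∀ N, AEStronglyMeasurable (f N) μ) (hg : MemLp g 2 μ)
    (hfg : ∀ ε > 0, ∀ᶠ N in (F : Filter ℕ), ∀ᵐ p ∂μ, |f N p - g p| ≤ ε) :
    Tendsto (fun N => ∫ p, f N p ∂μ) F (nhds (∫ p, g p ∂μ)) := by
  have := weak_strong (F := F) (w := fun _ _ => (1 : ℝ)) (h := fun _ => 1) (μ := μ)
    (fun N => memLp_const 1) (C := μ.real univ) (fun N => by simp)
    (fun φ _ => tendsto_const_nhds) hf hg hfg
  simpa using this

end

/-! ### Passage to the limit -/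

section
variable {L T lam G M : ℝ} {u₀ : ℝ → ℝ} {v v1 v2 v3 : ℕ → ℝ × ℝ → ℝ}

/-- Equicontinuity gives a continuous limit, uniform on compact sets. -/
lemma Approx.limit_exists (A : Approx L T lam G M u₀ v v1 v2 v3) (hL : 0 < L) (hlam : 1 ≤ lam)
    (F : Ultrafilter ℕ) : ∃ u : ℝ × ℝ → ℝ, Continuous u ∧
      (∀ p, Tendsto (fun N => v N p) F (nhds (u p))) ∧
      ∀ K : Set (ℝ × ℝ), IsCompact K → ∀ ε > 0, ∀ᶠ N in (F : Filter ℕ), ∀ p ∈ K,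
        |v N p - u p| ≤ ε := by
  choose u hu hub using fun p => ultra_lim F (fun N => A.bdd N p)
  -- the common modulus of continuity at `p0`
  have hmod : ∀ p0 : ℝ × ℝ, ∀ ε > 0, ∀ᶠ p in nhds p0, ∀ N, |v N p - v N p0| ≤ ε := by
    intro p0 ε hε
    have ht : Tendsto (fun p : ℝ × ℝ => √(G * |p.2 - p0.2|) + √(omB L lam G M |p.1 - p0.1|))
        (nhds p0) (nhds 0) := by
      have h1 : Tendsto (fun p : ℝ × ℝ => √(G * |p.2 - p0.2|)) (nhds p0) (nhds 0) := by
        have : Continuous fun p : ℝ × ℝ => √(G * |p.2 - p0.2|) := by fun_prop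
        simpa using this.tendsto p0
      have h2 : Tendsto (fun p : ℝ × ℝ => |p.1 - p0.1|) (nhds p0) (nhds 0) := by
        have : Continuous fun p : ℝ × ℝ => |p.1 - p0.1| := by fun_prop
        simpa using this.tendsto p0
      have h3 := ((omB_tendsto hlam L G M).comp h2).sqrt
      simpa using h1.add h3
    have hn : ∀ᶠ p : ℝ × ℝ in nhds p0, |p.2 - p0.2| < L := by
      have : Continuous fun p : ℝ × ℝ => |p.2 - p0.2| := by fun_prop
      exact this.tendsto p0 |>.eventually (Iio_mem_nhds (by simpa using hL))
    filter_upwards [ht.eventually (Iio_mem_nhds hε), hn] with p hp hpL N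
    have e1 : |v N (p.1, p.2) - v N (p.1, p0.2)| ≤ √(G * |p.2 - p0.2|) :=
      Real.abs_le_sqrt (A.holder N p.1 p.2 p0.2 hpL.le)
    have e2 : |v N (p.1, p0.2) - v N (p0.1, p0.2)| ≤ √(omB L lam G M |p.1 - p0.1|) :=
      Real.abs_le_sqrt (A.time N p.1 p0.1 p0.2)
    have e3 := abs_sub_le (v N (p.1, p.2)) (v N (p.1, p0.2)) (v N (p0.1, p0.2))
    simp only [Prod.mk.eta] at *
    linarith
  have humod : ∀ p0 : ℝ × ℝ, ∀ ε > 0, ∀ᶠ p in nhds p0, |u p - u p0| ≤ ε := by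
    intro p0 ε hε
    filter_upwards [hmod p0 ε hε] with p hp
    exact le_of_tendsto (((hu p).sub (hu p0)).abs) (Eventually.of_forall hp)
  refine ⟨u, ?_, hu, ?_⟩
  · rw [continuous_iff_continuousAt]
    intro p0
    rw [ContinuousAt, Metric.tendsto_nhds]
    intro ε hε
    filter_upwards [humod p0 (ε / 2) (by linarith)] with p hp
    rw [Real.dist_eq]; linarith
  · intro K hK ε hε
    refine hK.induction_on (p := fun S => ∀ᶠ N in (F : Filter ℕ), ∀ p ∈ S, |v N p - u p| ≤ ε)
      (by simp) (fun s t hst h => h.mono fun N hN p hp => hN p (hst hp))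
      (fun s t hs ht => by
        filter_upwards [hs, ht] with N h1 h2 p hp
        exact hp.elim (h1 p) (h2 p)) fun p0 _ => ?_
    refine ⟨_, mem_nhdsWithin_of_mem_nhds ((hmod p0 (ε / 3) (by linarith)).and
      (humod p0 (ε / 3) (by linarith))), ?_⟩
    filter_upwards [(hu p0).eventually (Metric.closedBall_mem_nhds (u p0) (ε := ε / 3)
      (by linarith))] with N hN p hp
    have h1 := hp.1 N
    have h2 := hp.2
    rw [Real.dist_eq] at hN
    rw [abs_le] at *
    constructor <;> linarith [h1.1, h1.2, h2.1, h2.2, hN.1, hN.2]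

/-- The limit of the approximations: `hh y` is the weak limit of the fluxes `v₊ v_xxx` on
`(0,T) × (y, y+L)`. -/
structure LimSol (L T lam G : ℝ) (u₀ : ℝ → ℝ) (u : ℝ × ℝ → ℝ) (hh : ℝ → ℝ × ℝ → ℝ) : Prop where
  cont : Continuous u
  per : ∀ t x, u (t, x + L) = u (t, x)
  hmem : ∀ y, MemLp (hh y) 2 (volume.restrict (Ioc 0 T ×ˢ Ioc y (y + L)))
  weak : ∀ (ψ ψt ψx : ℝ × ℝ → ℝ) (y : ℝ), Continuous ψ → Continuous ψt → Continuous ψx →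
    DT ψ ψt → DX ψ ψx → (∀ t, ψ (t, y + L) = ψ (t, y)) →
    ∀ t1 t2, 0 ≤ t1 → t1 ≤ t2 → t2 ≤ T →
    (∫ x in y..(y + L), u (t2, x) * ψ (t2, x)) - (∫ x in y..(y + L), u (t1, x) * ψ (t1, x)) =
      (∫ p in Ioc t1 t2 ×ˢ Ioc y (y + L), u p * ψt p) +
      (∫ p in Ioc t1 t2 ×ˢ Ioc y (y + L), hh y p * (max (u p) 0 * ψx p)) -
      ∫ p in Ioc t1 t2 ×ˢ Ioc y (y + L), ab lam (u p) * ψ p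
  third : ∀ (y : ℝ) (K : Set (ℝ × ℝ)) (φ0 φ1 φ2 φ3 : ℝ × ℝ → ℝ), IsCompact K →
    K ⊆ Ioc 0 T ×ˢ Ioc y (y + L) → (∀ p ∈ K, 0 < u p) →
    Continuous φ0 → Continuous φ1 → Continuous φ2 → Continuous φ3 →
    (∀ p ∉ K, φ0 p = 0 ∧ φ1 p = 0 ∧ φ2 p = 0 ∧ φ3 p = 0) →
    DX φ0 φ1 → DX φ1 φ2 → DX φ2 φ3 →
    ∫ p, u p * φ3 p = -∫ p in Ioc 0 T ×ˢ Ioc y (y + L), hh y p * (φ0 p / u p)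
  ac : ∀ t y, ∃ g : ℝ → ℝ, MemLp g 2 (volume.restrict (Ioc y (y + L))) ∧
    ∫ x in y..(y + L), g x ^ 2 ≤ G ∧
    ∀ b ∈ Icc y (y + L), u (t, b) - u (t, y) = ∫ x in y..b, g x
  mass : ∀ t, ∫ x in (0 : ℝ)..L, u (t, x) ≤ ∫ x in (0 : ℝ)..L, u₀ x
  init : ∀ x, u (0, x) = u₀ x

lemma memLp_of_subset_compact {X : Type*} [TopologicalSpace X] [MeasurableSpace X] [BorelSpace X]
    [SecondCountableTopology X]
    {μ : Measure X} [IsFiniteMeasureOnCompacts μ] {f : X → ℝ} (hf : Continuous f)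
    {S K : Set X} (hS : MeasurableSet S) (hK : IsCompact K) (hSK : S ⊆ K) :
    MemLp f 2 (μ.restrict S) := by
  obtain ⟨C, hC⟩ := hK.exists_bound_of_continuousOn hf.continuousOn
  have : IsFiniteMeasure (μ.restrict S) :=
    ⟨by rw [Measure.restrict_apply_univ]; exact (measure_mono hSK).trans_lt hK.measure_lt_top⟩
  exact MemLp.of_bound hf.aestronglyMeasurable C
    ((ae_restrict_iff' hS).2 (Eventually.of_forall fun p hp => hC p (hSK hp)))

lemma memLp_box {f : ℝ × ℝ → ℝ} (hf : Continuous f) (a b c d : ℝ) :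
    MemLp f 2 (volume.restrict (Ioc a b ×ˢ Ioc c d)) :=
  memLp_of_subset_compact hf (measurableSet_Ioc.prod measurableSet_Ioc)
    (isCompact_Icc.prod isCompact_Icc) (Set.prod_mono Ioc_subset_Icc_self Ioc_subset_Icc_self)

lemma memLp_Ioc {f : ℝ → ℝ} (hf : Continuous f) (a b : ℝ) :
    MemLp f 2 (volume.restrict (Ioc a b)) :=
  memLp_of_subset_compact hf measurableSet_Ioc isCompact_Icc Ioc_subset_Icc_self

lemma isFinite_box (a b c d : ℝ) :
    IsFiniteMeasure ((volume : Measure (ℝ × ℝ)).restrict (Ioc a b ×ˢ Ioc c d)) :=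
  ⟨by
    rw [Measure.restrict_apply_univ]
    exact (measure_mono (Set.prod_mono Ioc_subset_Icc_self Ioc_subset_Icc_self)).trans_lt
      (isCompact_Icc.prod isCompact_Icc).measure_lt_top⟩

lemma integrable_box {f : ℝ × ℝ → ℝ} (hf : Continuous f) (a b c d : ℝ) :
    IntegrableOn f (Ioc a b ×ˢ Ioc c d) volume :=
  have := isFinite_box a b c d
  (memLp_box hf a b c d).integrable one_le_two

lemma iter_box {f : ℝ × ℝ → ℝ} (hf : Continuous f) {a b c d : ℝ} (hab : a ≤ b) (hcd : c ≤ d) :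
    ∫ t in a..b, ∫ x in c..d, f (t, x) = ∫ p in Ioc a b ×ˢ Ioc c d, f p := by
  have h := integrable_box hf a b c d
  rw [Measure.volume_eq_prod] at h ⊢
  rw [setIntegral_prod _ h, intervalIntegral.integral_of_le hab]
  simp only [intervalIntegral.integral_of_le hcd]

end

section
variable {L T lam G M : ℝ} {u₀ : ℝ → ℝ} {v v1 v2 v3 : ℕ → ℝ × ℝ → ℝ}

lemma unif_comp {F : Ultrafilter ℕ} {u : ℝ × ℝ → ℝ} (hb : ∀ N p, |v N p| ≤ M)
    (hlim : ∀ p, Tendsto (fun N => v N p) F (nhds (u p)))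
    (hunif : ∀ K : Set (ℝ × ℝ), IsCompact K → ∀ ε > 0, ∀ᶠ N in (F : Filter ℕ), ∀ p ∈ K,
        |v N p - u p| ≤ ε)
    {Φ : ℝ → ℝ} (hΦ : Continuous Φ) {ψ : ℝ × ℝ → ℝ} (hψ : Continuous ψ) {K : Set (ℝ × ℝ)}
    (hK : IsCompact K) {ε : ℝ} (hε : 0 < ε) :
    ∀ᶠ N in (F : Filter ℕ), ∀ p ∈ K, |Φ (v N p) * ψ p - Φ (u p) * ψ p| ≤ ε := by
  obtain ⟨C, hC⟩ := hK.exists_bound_of_continuousOn hψ.continuousOn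
  have hub : ∀ p, |u p| ≤ M := fun p =>
    le_of_tendsto (hlim p).abs (Eventually.of_forall fun N => hb N p)
  have huc : UniformContinuousOn Φ (Icc (-M) M) :=
    isCompact_Icc.uniformContinuousOn_of_continuous hΦ.continuousOn
  rw [Metric.uniformContinuousOn_iff_le] at huc
  obtain ⟨δ, hδ, h⟩ := huc (ε / (|C| + 1)) (by positivity)
  filter_upwards [hunif K hK δ hδ] with N hN p hp
  have h1 := h _ (abs_le.1 (hb N p)) _ (abs_le.1 (hub p)) (by rw [Real.dist_eq]; exact hN p hp)
  rw [Real.dist_eq] at h1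
  have h2 : |ψ p| ≤ |C| + 1 := by
    have := hC p hp
    rw [Real.norm_eq_abs] at this
    linarith [le_abs_self C]
  rw [← sub_mul, abs_mul]
  calc _ ≤ ε / (|C| + 1) * (|C| + 1) := mul_le_mul h1 h2 (abs_nonneg _) (by positivity)
    _ = ε := by field_simp

lemma Ioc_box_sub (a b c d : ℝ) : Ioc a b ×ˢ Ioc c d ⊆ Icc a b ×ˢ Icc c d :=
  Set.prod_mono Ioc_subset_Icc_self Ioc_subset_Icc_self

lemma DX.pX_eq {f f' : ℝ × ℝ → ℝ} (h : DX f f') : pX f = f' := funext fun p => (h p).deriv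

lemma Cx_univ_one {f f' : ℝ × ℝ → ℝ} (h : DX f f') (hf : Continuous f) (hf' : Continuous f') :
    Cx univ 1 f := by
  refine ⟨hf.continuousOn, fun p _ => (h p).differentiableAt, ?_⟩
  rw [h.pX_eq]
  exact hf'.continuousOn

theorem limSol_exists (A : Approx L T lam G M u₀ v v1 v2 v3) (hL : 0 < L) (hT : 0 < T)
    (hlam : 1 ≤ lam) (h0cont : Continuous u₀) (h0per : ∀ x, u₀ (x + L) = u₀ x) :
    ∃ u hh, LimSol L T lam G u₀ u hh := by
  let F : Ultrafilter ℕ := hyperfilter ℕ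
  have hF : (F : Filter ℕ) ≤ atTop := Nat.hyperfilter_le_atTop
  obtain ⟨u, huc, hlim, hunif⟩ := A.limit_exists hL hlam F
  have hcomp : ∀ {Φ : ℝ → ℝ} (_ : Continuous Φ) {ψ : ℝ × ℝ → ℝ} (_ : Continuous ψ)
      {K : Set (ℝ × ℝ)} (_ : IsCompact K) {ε : ℝ} (_ : 0 < ε),
      ∀ᶠ N in (F : Filter ℕ), ∀ p ∈ K, |Φ (v N p) * ψ p - Φ (u p) * ψ p| ≤ ε :=
    fun hΦ _ hψ _ hK _ hε => unif_comp A.bdd hlim hunif hΦ hψ hK hε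
  have hslice : ∀ (t : ℝ) {Φ : ℝ → ℝ} (_ : Continuous Φ) {ψ : ℝ × ℝ → ℝ} (_ : Continuous ψ)
      (a b : ℝ), a ≤ b → Tendsto (fun N => ∫ x in a..b, Φ (v N (t, x)) * ψ (t, x)) F
        (nhds (∫ x in a..b, Φ (u (t, x)) * ψ (t, x))) := by
    intro t Φ hΦ ψ hψ a b hab
    simp only [intervalIntegral.integral_of_le hab]
    refine unif_int (fun N => ?_) (memLp_Ioc ?_ _ _) fun ε hε => ?_
    · have := A.c0 N
      exact (by fun_prop : Continuous fun x => Φ (v N (t, x)) * ψ (t, x)).aestronglyMeasurable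
    · fun_prop
    · filter_upwards [hcomp hΦ hψ ((isCompact_singleton (x := t)).prod
        (isCompact_Icc (a := a) (b := b))) hε] with N hN
      exact (ae_restrict_iff' measurableSet_Ioc).2 (Eventually.of_forall fun x hx =>
        hN (t, x) ⟨rfl, Ioc_subset_Icc_self hx⟩)
  have hbox : ∀ {Φ : ℝ → ℝ} (_ : Continuous Φ) {ψ : ℝ × ℝ → ℝ} (_ : Continuous ψ)
      (a b c d : ℝ), Tendsto (fun N => ∫ p in Ioc a b ×ˢ Ioc c d, Φ (v N p) * ψ p) F
        (nhds (∫ p in Ioc a b ×ˢ Ioc c d, Φ (u p) * ψ p)) := by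
    intro Φ hΦ ψ hψ a b c d
    have := isFinite_box a b c d
    refine unif_int (fun N => ?_) (memLp_box ?_ _ _ _ _) fun ε hε => ?_
    · have := A.c0 N
      exact (by fun_prop : Continuous fun p => Φ (v N p) * ψ p).aestronglyMeasurable
    · fun_prop
    · filter_upwards [hcomp hΦ hψ ((isCompact_Icc (a := a) (b := b)).prod
        (isCompact_Icc (a := c) (b := d))) hε] with N hN
      exact (ae_restrict_iff' (measurableSet_Ioc.prod measurableSet_Ioc)).2
        (Eventually.of_forall fun p hp => hN p (Ioc_box_sub _ _ _ _ hp))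
  have hwc : ∀ N, Continuous fun p => max (v N p) 0 * v3 N p := fun N => by
    have := A.c0 N
    have := A.c3 N
    fun_prop
  have hwG : ∀ y N, ∫ p in Ioc 0 T ×ˢ Ioc y (y + L), (max (v N p) 0 * v3 N p) ^ 2 ≤ G := by
    intro y N
    rw [← iter_box (f := fun p => (max (v N p) 0 * v3 N p) ^ 2) ((hwc N).pow 2) hT.le
      (by linarith : y ≤ y + L)]
    exact A.diss N y
  choose hh hm hb hw using fun y : ℝ => weak_L2 F
    (fun N => memLp_box (hwc N) 0 T y (y + L)) (hwG y)
  have hws : ∀ y {Φ : ℝ → ℝ} (_ : Continuous Φ) {ψ : ℝ × ℝ → ℝ} (_ : Continuous ψ) (t1 t2 : ℝ),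
      0 ≤ t1 → t2 ≤ T →
      Tendsto (fun N => ∫ p in Ioc t1 t2 ×ˢ Ioc y (y + L),
        (max (v N p) 0 * v3 N p) * (Φ (v N p) * ψ p)) F
      (nhds (∫ p in Ioc t1 t2 ×ˢ Ioc y (y + L), hh y p * (Φ (u p) * ψ p))) := by
    intro y Φ hΦ ψ hψ t1 t2 h1 h2
    set B := Ioc t1 t2 ×ˢ Ioc y (y + L) with hB
    have hBm : MeasurableSet B := measurableSet_Ioc.prod measurableSet_Ioc
    have hBs : B ⊆ Ioc 0 T ×ˢ Ioc y (y + L) :=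
      Set.prod_mono (Ioc_subset_Ioc h1 h2) subset_rfl
    have := isFinite_box 0 T y (y + L)
    have hconv : ∀ (w f : ℝ × ℝ → ℝ), ∫ p in B, w p * f p =
        ∫ p in Ioc 0 T ×ˢ Ioc y (y + L), w p * B.indicator f p := by
      intro w f
      have : (fun p => w p * B.indicator f p) = B.indicator (fun p => w p * f p) := by
        ext p
        by_cases hp : p ∈ B <;> simp [hp]
      rw [this, setIntegral_indicator hBm, inter_eq_right.2 hBs]
    simp only [hconv]
    refine weak_strong (fun N => memLp_box (hwc N) 0 T y (y + L)) (hwG y) (hw y)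
      (fun N => ?_) ((memLp_box ?_ _ _ _ _).indicator hBm) fun ε hε => ?_
    · have := A.c0 N
      exact (by fun_prop : Continuous fun p => Φ (v N p) * ψ p).aestronglyMeasurable.indicator hBm
    · fun_prop
    · filter_upwards [hcomp hΦ hψ ((isCompact_Icc (a := t1) (b := t2)).prod
        (isCompact_Icc (a := y) (b := y + L))) hε] with N hN
      refine Eventually.of_forall fun p => ?_
      by_cases hp : p ∈ B
      · simp only [indicator_of_mem hp]
        exact hN p (Ioc_box_sub _ _ _ _ hp)
      · simp [indicator_of_notMem hp, hε.le]
  have hu0 : ∀ x, u (0, x) = u₀ x := by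
    have h1 : ∫ x in (0 : ℝ)..L, (u (0, x) - u₀ x) ^ 2 = 0 := by
      refine tendsto_nhds_unique ?_ (A.init.mono_left hF)
      simp only [intervalIntegral.integral_of_le hL.le]
      refine unif_int (fun N => ?_) (memLp_Ioc ?_ _ _) fun ε hε => ?_
      · have := A.c0 N
        exact (by fun_prop : Continuous fun x => (v N (0, x) - u₀ x) ^ 2).aestronglyMeasurable
      · fun_prop
      · have hcpt : IsCompact (({0} : Set ℝ) ×ˢ Icc 0 L) := isCompact_singleton.prod isCompact_Icc
        obtain ⟨C, hC⟩ := hcpt.exists_bound_of_continuousOn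
          (f := fun p : ℝ × ℝ => u p - u₀ p.2) (by fun_prop)
        filter_upwards [hunif _ hcpt (min 1 (ε / (2 * |C| + 1))) (by positivity)] with N hN
        refine (ae_restrict_iff' measurableSet_Ioc).2 (Eventually.of_forall fun x hx => ?_)
        have hx' : ((0 : ℝ), x) ∈ (({0} : Set ℝ) ×ˢ Icc 0 L) := ⟨rfl, Ioc_subset_Icc_self hx⟩
        have e1 := hN _ hx'
        have e2 : |u (0, x) - u₀ x| ≤ |C| := (hC _ hx').trans (le_abs_self C)
        have e3 : |v N (0, x) - u (0, x)| ≤ 1 := e1.trans (min_le_left _ _)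
        have e4 := e1.trans (min_le_right _ _)
        have e5 : (v N (0, x) - u₀ x) ^ 2 - (u (0, x) - u₀ x) ^ 2 =
          (v N (0, x) - u (0, x)) * ((v N (0, x) - u (0, x)) + 2 * (u (0, x) - u₀ x)) := by ring
        rw [e5, abs_mul]
        have e6 : |(v N (0, x) - u (0, x)) + 2 * (u (0, x) - u₀ x)| ≤ 2 * |C| + 1 := by
          refine (abs_add_le _ _).trans ?_
          rw [abs_mul, abs_two]
          linarith
        calc _ ≤ ε / (2 * |C| + 1) * (2 * |C| + 1) :=
              mul_le_mul e4 e6 (abs_nonneg _) (by positivity)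
          _ = ε := by field_simp
    have hcont : Continuous fun x => (u (0, x) - u₀ x) ^ 2 := by fun_prop
    have h2 : ∀ x ∈ Ico 0 L, u (0, x) = u₀ x := by
      intro x hx
      by_contra hne
      have : 0 < ∫ x in (0 : ℝ)..L, (u (0, x) - u₀ x) ^ 2 :=
        intervalIntegral.integral_pos hL hcont.continuousOn (fun x _ => sq_nonneg _)
          ⟨x, Ico_subset_Icc_self hx, by have := sub_ne_zero.2 hne; positivity⟩
      exact this.ne' h1
    have hper : Function.Periodic (fun x => u (0, x) - u₀ x) L := fun x => by
      have : u (0, x + L) = u (0, x) := tendsto_nhds_unique (hlim _)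
        ((hlim (0, x)).congr fun N => (A.per N 0 x).symm)
      simp only [this, h0per]
    intro x
    obtain ⟨z, hz, hxz⟩ := hper.exists_mem_Ico₀ hL x
    have := h2 z hz
    linarith
  refine ⟨u, hh, huc, ?_, hm, ?_, ?_, ?_, ?_, hu0⟩
  · intro t x
    exact tendsto_nhds_unique (hlim _) ((hlim (t, x)).congr fun N => (A.per N t x).symm)
  · intro ψ ψt ψx y hψ hψt hψx ht hx hp t1 t2 h1 h12 h2
    have hyL : y ≤ y + L := by linarith
    have hA := (A.weak ψ ψt ψx y hψ hψt hψx ht hx hp t1 t2 h1 h12 h2).mono_left hF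
    have l1 := hslice t2 continuous_id hψ y (y + L) hyL
    have l2 := hslice t1 continuous_id hψ y (y + L) hyL
    have l3 := hbox continuous_id hψt t1 t2 y (y + L)
    have l4 := hws y (Φ := fun z => max z 0) (by fun_prop) hψx t1 t2 h1 h2
    have l5 := hbox (ab_cont hlam) hψ t1 t2 y (y + L)
    have l := (l1.sub l2).sub ((l3.add l4).sub l5)
    have := tendsto_nhds_unique l (hA.congr fun N => ?_)
    · simp only [id] at this
      linarith
    · have c0 := A.c0 N
      have c3 := A.c3 N
      have cab := ab_cont hlam
      rw [iter_box (f := fun p => v N p * ψt p + ((max (v N p) 0) ^ 2 * v3 N p * ψx p -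
        ab lam (v N p) * ψ p)) (by fun_prop) h12 hyL]
      simp only [id]
      congr 1
      rw [← integral_add (integrable_box (by fun_prop) _ _ _ _)
        (integrable_box (by fun_prop) _ _ _ _), ← integral_sub
        (integrable_box (f := fun p => v N p * ψt p +
          max (v N p) 0 * v3 N p * (max (v N p) 0 * ψx p)) (by fun_prop) _ _ _ _)
        (integrable_box (by fun_prop) _ _ _ _)]
      refine integral_congr_ae (Eventually.of_forall fun p => ?_)
      simp only
      ring
  · intro y K φ0 φ1 φ2 φ3 hK hKs hpos k0 k1 k2 k3 hz x0 x1 x2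
    -- a positive lower bound of `u` on `K`
    obtain ⟨c, hc, hcu⟩ : ∃ c > 0, ∀ p ∈ K, c ≤ u p := by
      rcases K.eq_empty_or_nonempty with rfl | hne
      · exact ⟨1, one_pos, by simp⟩
      · obtain ⟨q, hq, hmin⟩ := hK.exists_isMinOn hne huc.continuousOn
        exact ⟨u q, hpos q hq, fun p hp => hmin hp⟩
    have hΦ : Continuous fun z : ℝ => (max z (c / 2))⁻¹ :=
      (continuous_id.max continuous_const).inv₀ fun z => by
        have : c / 2 ≤ max (id z) (c / 2) := le_max_right _ _
        linarith
    have l1 := hws y hΦ k0 0 T le_rfl le_rfl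
    have l0 : Tendsto (fun N => ∫ p, v N p * φ3 p) F (nhds (∫ p, u p * φ3 p)) := by
      have hsupp : ∀ w : ℝ × ℝ → ℝ, ∫ p in Ioc 0 T ×ˢ Ioc y (y + L), w p * φ3 p =
          ∫ p, w p * φ3 p := fun w => setIntegral_eq_integral_of_forall_compl_eq_zero
        fun p hp => by rw [(hz p fun h => hp (hKs h)).2.2.2, mul_zero]
      simpa only [hsupp, id] using hbox continuous_id k3 0 T y (y + L)
    have e : ∫ p in Ioc 0 T ×ˢ Ioc y (y + L), hh y p * ((max (u p) (c / 2))⁻¹ * φ0 p) =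
        ∫ p in Ioc 0 T ×ˢ Ioc y (y + L), hh y p * (φ0 p / u p) := by
      refine integral_congr_ae (Eventually.of_forall fun p => ?_)
      simp only
      by_cases hp : p ∈ K
      · rw [max_eq_left (by linarith [hcu p hp]), div_eq_inv_mul]
      · rw [(hz p hp).1]; simp
    rw [← e]
    refine tendsto_nhds_unique l0 (l1.neg.congr' ?_)
    filter_upwards [hunif K hK (c / 2) (by linarith)] with N hN
    have i0 := ibp_on isOpen_univ hK (subset_univ K)
      (Cx_univ_one (A.d0 N) (A.c0 N) (A.c1 N)) k2 k3 (fun p hp => (hz p hp).2.2.1)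
      (fun p hp => (hz p hp).2.2.2) x2
    have i1 := ibp_on isOpen_univ hK (subset_univ K)
      (Cx_univ_one (A.d1 N) (A.c1 N) (A.c2 N)) k1 k2 (fun p hp => (hz p hp).2.1)
      (fun p hp => (hz p hp).2.2.1) x1
    have i2 := ibp_on isOpen_univ hK (subset_univ K)
      (Cx_univ_one (A.d2 N) (A.c2 N) (A.c3 N)) k0 k1 (fun p hp => (hz p hp).1)
      (fun p hp => (hz p hp).2.1) x0
    rw [(A.d0 N).pX_eq] at i0
    rw [(A.d1 N).pX_eq] at i1
    rw [(A.d2 N).pX_eq] at i2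
    rw [i0, i1, i2, neg_neg]
    congr 1
    rw [← setIntegral_eq_integral_of_forall_compl_eq_zero (s := Ioc 0 T ×ˢ Ioc y (y + L))
      (f := fun p => v3 N p * φ0 p) fun p hp => by rw [(hz p fun h => hp (hKs h)).1, mul_zero]]
    refine integral_congr_ae (Eventually.of_forall fun p => ?_)
    simp only
    by_cases hp : p ∈ K
    · have h1 := hcu p hp
      have h2 := (abs_le.1 (hN p hp)).1
      have h3 : c / 2 ≤ v N p := by linarith
      have h4 : v N p ≠ 0 := by linarith
      rw [max_eq_left h3, max_eq_left (by linarith)]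
      field_simp
    · rw [(hz p hp).1]; simp
  · intro t y
    have hyL : y ≤ y + L := by linarith
    have hc1 : ∀ N, Continuous fun x => v1 N (t, x) := fun N => by
      have := A.c1 N
      fun_prop
    obtain ⟨g, hg, hgG, hgl⟩ := weak_L2 F (w := fun N x => v1 N (t, x))
      (fun N => memLp_Ioc (hc1 N) y (y + L)) (C := G) fun N => by
        rw [← intervalIntegral.integral_of_le hyL]
        exact A.en N t y
    refine ⟨g, hg, by rwa [intervalIntegral.integral_of_le hyL], fun b hb => ?_⟩
    have hconv : ∀ w : ℝ → ℝ, ∫ x in y..b, w x =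
        ∫ x in Ioc y (y + L), w x * (Ioc y b).indicator (fun _ => 1) x := by
      intro w
      have : (fun x => w x * (Ioc y b).indicator (fun _ => 1) x) = (Ioc y b).indicator w := by
        ext x
        by_cases hx : x ∈ Ioc y b <;> simp [hx]
      rw [this, setIntegral_indicator measurableSet_Ioc,
        inter_eq_right.2 (Ioc_subset_Ioc_right hb.2), intervalIntegral.integral_of_le hb.1]
    rw [hconv]
    refine tendsto_nhds_unique ((hlim (t, b)).sub (hlim (t, y))) ((hgl ((Ioc y b).indicator
      fun _ => 1) ((memLp_const 1).indicator measurableSet_Ioc)).congr fun N => ?_)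
    rw [← hconv]
    exact intervalIntegral.integral_eq_sub_of_hasDerivAt
      (f := fun x => v N (t, x)) (fun x _ => A.d0 N (t, x))
      ((hc1 N).intervalIntegrable _ _)
  · intro t
    have := hslice t continuous_id (ψ := fun _ => 1) continuous_const 0 L hL.le
    simp only [id, mul_one] at this
    exact le_of_tendsto this (Eventually.of_forall fun N => A.mass N t)

end

/-! ### Nonnegativity and interior regularity of the limit -/

/-- The fundamental lemma of the calculus of variations for continuous functions. -/
lemma loc_zero {f : ℝ → ℝ} (hf : Continuous f) {a b : ℝ}
    (h : ∀ φ φ' : ℝ → ℝ, Continuous φ → Continuous φ' → (∀ x, HasDerivAt φ (φ' x) x) →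
      (∀ x ∉ Ioo a b, φ x = 0) → (∀ x ∉ Ioo a b, φ' x = 0) → ∫ x, f x * φ x = 0) :
    ∀ x ∈ Ioo a b, f x = 0 := by
  have h1 : ∀ᵐ x, x ∈ Ioo a b → f x = 0 := by
    refine isOpen_Ioo.ae_eq_zero_of_integral_contDiff_smul_eq_zero
      (hf.locallyIntegrable.locallyIntegrableOn _) fun g hg _ hs => ?_
    have hd : Differentiable ℝ g := hg.differentiable (by simp)
    have := h g (deriv g) hg.continuous (hg.continuous_deriv (by simp))
      (fun x => (hd x).hasDerivAt)
      (fun x hx => image_eq_zero_of_notMem_tsupport fun h => hx (hs h))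
      (fun x hx => image_eq_zero_of_notMem_tsupport fun h => hx (hs (tsupport_deriv_subset h)))
    simpa [mul_comm] using this
  have h2 := Measure.eqOn_open_of_ae_eq (μ := volume) (f := f) (g := fun _ => (0 : ℝ))
    ((ae_restrict_iff' measurableSet_Ioo).2 h1) isOpen_Ioo hf.continuousOn continuousOn_const
  exact h2

section
variable {L T lam G : ℝ} {u₀ : ℝ → ℝ} {u : ℝ × ℝ → ℝ} {hh : ℝ → ℝ × ℝ → ℝ}

/-- The weak formulation tested with functions of `x` alone. -/
lemma LimSol.weak_x (S : LimSol L T lam G u₀ u hh) (hL : 0 < L) {y a b : ℝ} (hya : y ≤ a)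
    (hby : b ≤ y + L) {φ φ' : ℝ → ℝ} (hφ : Continuous φ) (hφ' : Continuous φ')
    (hd : ∀ x, HasDerivAt φ (φ' x) x) (hz : ∀ x ∉ Ioo a b, φ x = 0) {t1 t2 : ℝ} (h1 : 0 ≤ t1)
    (h12 : t1 ≤ t2) (h2 : t2 ≤ T) :
    ∫ x, (u (t2, x) - u (t1, x)) * φ x =
      (∫ p in Ioc t1 t2 ×ˢ Ioc y (y + L), hh y p * (max (u p) 0 * φ' p.2)) -
      ∫ p in Ioc t1 t2 ×ˢ Ioc y (y + L), ab lam (u p) * φ p.2 := by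
  have huc := S.cont
  have hw := S.weak (fun p => φ p.2) (fun _ => 0) (fun p => φ' p.2) y (by fun_prop)
    continuous_const (by fun_prop) (fun p => hasDerivAt_const p.1 (φ p.2)) (fun p => hd p.2)
    (fun t => by
      simp only
      rw [hz y fun h => by linarith [h.1], hz (y + L) fun h => by linarith [h.2]]) t1 t2 h1 h12 h2
  simp only [mul_zero, integral_zero, zero_add] at hw
  rw [← hw, ← intervalIntegral.integral_sub
    ((by fun_prop : Continuous fun x => u (t2, x) * φ x).intervalIntegrable _ _)
    ((by fun_prop : Continuous fun x => u (t1, x) * φ x).intervalIntegrable _ _),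
    intervalIntegral.integral_of_le (by linarith), ← setIntegral_eq_integral_of_forall_compl_eq_zero
      (s := Ioc y (y + L)) fun x hx => ?_]
  · simp only [sub_mul]
  · rw [hz x fun h => hx ⟨by linarith [h.1], by linarith [h.2]⟩, mul_zero]

/-- Where `u` is negative the equation reduces to `u_t = 0`, so `u` cannot become negative. -/
lemma LimSol.nonneg (S : LimSol L T lam G u₀ u hh) (hL : 0 < L) (hlam : 1 ≤ lam)
    (h0 : ∀ x, 0 ≤ u₀ x) {t : ℝ} (ht : t ∈ Icc 0 T) (x0 : ℝ) : 0 ≤ u (t, x0) := by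
  by_contra! hneg
  have huc := S.cont
  have hux : Continuous fun s => u (s, x0) := by fun_prop
  set Z : Set ℝ := Icc 0 t ∩ {s | 0 ≤ u (s, x0)} with hZ
  have hZc : IsCompact Z := isCompact_Icc.inter_right (isClosed_le continuous_const hux)
  have hZne : Z.Nonempty := ⟨0, ⟨le_rfl, ht.1⟩, by rw [mem_ofPred_eq, S.init]; exact h0 x0⟩
  obtain ⟨s, hs, hmax⟩ := hZc.exists_isGreatest hZne
  have hst : s < t := lt_of_le_of_ne hs.1.2 fun h => by
    have : 0 ≤ u (s, x0) := hs.2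
    rw [h] at this; linarith
  have hafter : ∀ r, s < r → r ≤ t → u (r, x0) < 0 := by
    intro r hr hrt
    by_contra! h
    have := hmax ⟨⟨by linarith [hs.1.1], hrt⟩, h⟩
    linarith
  have hconst : ∀ r ∈ Ioo s t, u (r, x0) = u (t, x0) := by
    intro r hr
    obtain ⟨A, B, hA, hB, hAs, hBs, hAB⟩ := generalized_tube_lemma (isCompact_Icc (a := r) (b := t))
      (isCompact_singleton (x := x0)) (isOpen_lt huc continuous_const)
      (n := {p | u p < 0}) (by
        rintro ⟨s', x⟩ ⟨h1, h2⟩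
        simp only [mem_singleton_iff] at h2
        subst h2
        exact hafter s' (lt_of_lt_of_le hr.1 h1.1) h1.2)
    obtain ⟨δ', hδ', hball⟩ := Metric.isOpen_iff.1 hB x0 (hBs rfl)
    set δ := min δ' (L / 2) with hδ
    have hδ0 : 0 < δ := by positivity
    have hδ1 : δ ≤ δ' := min_le_left _ _
    have hδ2 : δ ≤ L / 2 := min_le_right _ _
    have hneg' : ∀ s' ∈ Ioc r t, ∀ x ∈ Ioo (x0 - δ) (x0 + δ), u (s', x) < 0 := by
      intro s' hs' x hx
      refine hAB (show (s', x) ∈ A ×ˢ B from ⟨hAs (Ioc_subset_Icc_self hs'), hball ?_⟩)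
      rw [Metric.mem_ball, Real.dist_eq, abs_lt]
      constructor <;> linarith [hx.1, hx.2]
    have := loc_zero (f := fun x => u (t, x) - u (r, x)) (by fun_prop) (a := x0 - δ) (b := x0 + δ)
      (fun φ φ' c c' hd hz hz' => by
        rw [S.weak_x hL (y := x0 - L / 2) (a := x0 - δ) (b := x0 + δ) (by linarith) (by linarith)
          c c' hd hz (by linarith [hs.1.1, hr.1]) hr.2.le ht.2]
        rw [setIntegral_eq_zero_of_forall_eq_zero, setIntegral_eq_zero_of_forall_eq_zero, sub_zero]
        · rintro ⟨s', x⟩ ⟨h1, -⟩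
          by_cases hx : x ∈ Ioo (x0 - δ) (x0 + δ)
          · rw [ab, max_eq_right (hneg' s' h1 x hx).le, Real.zero_rpow (by linarith), zero_mul]
          · simp only [hz x hx, mul_zero]
        · rintro ⟨s', x⟩ ⟨h1, -⟩
          by_cases hx : x ∈ Ioo (x0 - δ) (x0 + δ)
          · rw [max_eq_right (hneg' s' h1 x hx).le, zero_mul, mul_zero]
          · simp only [hz' x hx, mul_zero]) x0 ⟨by linarith, by linarith⟩
    linarith
  have h1 : Tendsto (fun r => u (r, x0)) (nhdsWithin s (Ioi s)) (nhds (u (s, x0))) :=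
    (hux.tendsto s).mono_left nhdsWithin_le_nhds
  have h2 : Tendsto (fun r => u (r, x0)) (nhdsWithin s (Ioi s)) (nhds (u (t, x0))) :=
    tendsto_const_nhds.congr' (by
      filter_upwards [Ioo_mem_nhdsGT hst] with r hr
      exact (hconst r hr).symm)
  have h3 := tendsto_nhds_unique h1 h2
  have h4 : 0 ≤ u (s, x0) := hs.2
  linarith

/-- The positivity set of `u` in `(0,T) × ℝ`. -/
def posSet (T : ℝ) (u : ℝ × ℝ → ℝ) : Set (ℝ × ℝ) := {p | p.1 ∈ Ioo 0 T ∧ 0 < u p}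

lemma isOpen_posSet (huc : Continuous u) : IsOpen (posSet T u) :=
  (isOpen_Ioo.preimage continuous_fst).inter (isOpen_lt continuous_const huc)

lemma LimSol.locSol (S : LimSol L T lam G u₀ u hh) {y δ : ℝ} {p0 : ℝ × ℝ}
    (hδ : 0 < δ)
    (hball : Metric.closedBall p0 δ ⊆ posSet T u ∩ Ioo 0 T ×ˢ Ioo y (y + L)) :
    LocSol lam δ p0 u ((Ioc 0 T ×ˢ Ioc y (y + L)).indicator fun p => hh y p / u p) := by
  have huc := S.cont
  set B := Ioc 0 T ×ˢ Ioc y (y + L) with hB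
  have hBm : MeasurableSet B := measurableSet_Ioc.prod measurableSet_Ioc
  have hin : ∀ p, ‖p - p0‖ ≤ δ → p ∈ Metric.closedBall p0 δ := fun p hp => by
    rwa [mem_closedBall_iff_norm]
  have hpos : ∀ p ∈ Metric.closedBall p0 δ, 0 < u p := fun p hp => (hball hp).1.2
  have hKB : Metric.closedBall p0 δ ⊆ B := fun p hp =>
    Set.prod_mono Ioo_subset_Ioc_self Ioo_subset_Ioc_self (hball hp).2
  have hK : IsCompact (Metric.closedBall p0 δ) := isCompact_closedBall _ _
  have hoff : ∀ {φ : ℝ × ℝ → ℝ}, CB p0 δ φ → ∀ p ∉ Metric.closedBall p0 δ, φ p = 0 :=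
    fun hφ p hp => hφ.2 p (by rw [mem_closedBall_iff_norm] at hp; exact not_le.1 hp)
  have hset : ∀ {f : ℝ × ℝ → ℝ}, (∀ p ∉ Metric.closedBall p0 δ, f p = 0) →
      ∫ p in B, f p = ∫ p, f p := fun h =>
    setIntegral_eq_integral_of_forall_compl_eq_zero fun p hp => h p fun h' => hp (hKB h')
  have hm : AEStronglyMeasurable (B.indicator fun p => hh y p / u p) volume := by
    rw [aestronglyMeasurable_indicator_iff hBm]
    have : AEStronglyMeasurable (fun p => (u p)⁻¹) (volume.restrict B) :=
      huc.measurable.inv.aestronglyMeasurable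
    exact (S.hmem y).1.mul this
  refine ⟨huc, fun p hp => hpos p (hin p hp), hm, ?_, ?_, ?_⟩
  · obtain ⟨q, hq, hmin⟩ := hK.exists_isMinOn ⟨p0, Metric.mem_closedBall_self hδ.le⟩
      huc.continuousOn
    have hbm : MeasurableSet (Metric.ball p0 δ) := measurableSet_ball
    have h1 : MemLp (hh y) 2 (volume.restrict (Metric.ball p0 δ)) :=
      (S.hmem y).mono_measure (Measure.restrict_mono (Metric.ball_subset_closedBall.trans hKB) le_rfl)
    have h2 : MemLp (B.indicator fun p => hh y p / u p) 2 (volume.restrict (Metric.ball p0 δ)) := by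
      refine h1.of_le_mul (c := (u q)⁻¹) hm.restrict ?_
      refine (ae_restrict_iff' hbm).2 (Eventually.of_forall fun p hp => ?_)
      have hp' := Metric.ball_subset_closedBall hp
      have h3 : u q ≤ u p := hmin hp'
      have h4 := hpos q hq
      rw [indicator_of_mem (hKB hp'), norm_div, div_eq_inv_mul]
      refine mul_le_mul_of_nonneg_right ?_ (norm_nonneg _)
      rw [Real.norm_of_nonneg (by linarith)]
      exact inv_anti₀ h4 h3
    have h3 := lintegral_rpow_enorm_lt_top_of_eLpNorm_lt_top (by norm_num) (by norm_num) h2.2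
    simpa using h3
  · intro φ0 φ1 φ2 φ3 c0 c1 c2 c3 x0 x1 x2
    rw [S.third y _ φ0 φ1 φ2 φ3 hK hKB hpos c0.1 c1.1 c2.1 c3.1
      (fun p hp => ⟨hoff c0 p hp, hoff c1 p hp, hoff c2 p hp, hoff c3 p hp⟩) x0 x1 x2,
      hset fun p hp => by rw [hoff c0 p hp]; simp]
    congr 1
    refine integral_congr_ae (Eventually.of_forall fun p => ?_)
    simp only
    by_cases hp : p ∈ Metric.closedBall p0 δ
    · rw [indicator_of_mem (hKB hp)]; ring
    · rw [hoff c0 p hp]; simp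
  · intro φ φt φx c ct cx dt dx
    have hp0 := hball (Metric.mem_closedBall_self hδ.le)
    have hz : ∀ t x, (t ∉ Ioo 0 T ∨ x ∉ Ioo y (y + L)) → φ (t, x) = 0 := fun t x h =>
      hoff c _ fun h' => h.elim (fun h1 => h1 (hball h').2.1) fun h1 => h1 (hball h').2.2
    have hw := S.weak φ φt φx y c.1 ct.1 cx.1 dt dx
      (fun t => by rw [hz t y (Or.inr (by simp)), hz t (y + L) (Or.inr (by simp))])
      0 T le_rfl (hp0.1.1.1.trans hp0.1.1.2).le le_rfl
    simp only [hz 0 _ (Or.inl (by simp)), hz T _ (Or.inl (by simp)), mul_zero,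
      intervalIntegral.integral_zero, sub_zero] at hw
    rw [hset fun p hp => by rw [hoff ct p hp]; simp, hset fun p hp => by rw [hoff cx p hp]; simp,
      hset fun p hp => by rw [hoff c p hp]; simp] at hw
    rw [hw]
    congr 1
    · congr 1
      refine integral_congr_ae (Eventually.of_forall fun p => ?_)
      simp only
      by_cases hp : p ∈ Metric.closedBall p0 δ
      · have := hpos p hp
        rw [indicator_of_mem (hKB hp), max_eq_left this.le]
        field_simp
      · rw [hoff cx p hp]; simp
    · refine integral_congr_ae (Eventually.of_forall fun p => ?_)
      simp only
      by_cases hp : p ∈ Metric.closedBall p0 δ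
      · rw [ab, max_eq_left (hpos p hp).le]
      · rw [hoff c p hp]; simp

lemma LimSol.regular_at (S : LimSol L T lam G u₀ u hh) (hlam : 1 ≤ lam) {y : ℝ} {p0 : ℝ × ℝ}
    (hp : p0 ∈ posSet T u) (hy : p0.2 ∈ Ioo y (y + L)) :
    ∃ V : Set (ℝ × ℝ), IsOpen V ∧ p0 ∈ V ∧ Cx V 4 u ∧
      ∀ᵐ p, p ∈ V → hh y p = u p * pX (pX (pX u)) p := by
  have hopen : IsOpen (posSet T u ∩ Ioo 0 T ×ˢ Ioo y (y + L)) :=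
    (isOpen_posSet S.cont).inter (isOpen_Ioo.prod isOpen_Ioo)
  obtain ⟨δ, hδ, hball⟩ := Metric.nhds_basis_closedBall.mem_iff.1
    (hopen.mem_nhds ⟨hp, hp.1, hy⟩)
  obtain ⟨V, hV, hpV, hreg, hae⟩ := (S.locSol hδ hball).regular hlam hδ
  refine ⟨V ∩ Metric.ball p0 δ, hV.inter Metric.isOpen_ball, ⟨hpV, Metric.mem_ball_self hδ⟩,
    hreg.mono inter_subset_left, ?_⟩
  filter_upwards [hae] with p h hpV
  have h1 := hball (Metric.ball_subset_closedBall hpV.2)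
  have h2 := h hpV.1
  rw [indicator_of_mem (Set.prod_mono Ioo_subset_Ioc_self Ioo_subset_Ioc_self h1.2)] at h2
  have h3 : u p ≠ 0 := h1.1.2.ne'
  rw [← h2]
  field_simp

lemma Cx.of_local {U : Set (ℝ × ℝ)} {j : ℕ} {f : ℝ × ℝ → ℝ}
    (h : ∀ p ∈ U, ∃ V, IsOpen V ∧ p ∈ V ∧ Cx V j f) : Cx U j f := by
  induction j generalizing f with
  | zero =>
    intro p hp
    obtain ⟨V, hV, hpV, hc⟩ := h p hp
    exact (ContinuousOn.continuousAt hc (hV.mem_nhds hpV)).continuousWithinAt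
  | succ j ih =>
    refine ⟨fun p hp => ?_, fun p hp => ?_, ih fun p hp => ?_⟩
    · obtain ⟨V, hV, hpV, hc⟩ := h p hp
      exact (hc.1.continuousAt (hV.mem_nhds hpV)).continuousWithinAt
    · obtain ⟨V, hV, hpV, hc⟩ := h p hp
      exact hc.2.1 p hpV
    · obtain ⟨V, hV, hpV, hc⟩ := h p hp
      exact ⟨V, hV, hpV, hc.2.2⟩

lemma LimSol.regular (S : LimSol L T lam G u₀ u hh) (hL : 0 < L) (hlam : 1 ≤ lam) :
    Cx (posSet T u) 4 u :=
  Cx.of_local fun p hp => by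
    obtain ⟨V, hV, hpV, hc, -⟩ := S.regular_at hlam (y := p.2 - L / 2) hp
      ⟨by linarith, by linarith⟩
    exact ⟨V, hV, hpV, hc⟩

lemma LimSol.flux_ae (S : LimSol L T lam G u₀ u hh) (hlam : 1 ≤ lam) (y : ℝ) :
    ∀ᵐ p, p ∈ posSet T u → p.2 ∈ Ioo y (y + L) → hh y p = u p * pX (pX (pX u)) p := by
  rw [ae_iff]
  refine measure_null_of_locally_null _ fun p hp => ?_
  simp only [mem_ofPred_eq, Classical.not_imp] at hp
  obtain ⟨V, hV, hpV, -, hae⟩ := S.regular_at hlam (y := y) hp.1 hp.2.1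
  refine ⟨_, inter_mem_nhdsWithin _ (hV.mem_nhds hpV), measure_mono_null ?_ (ae_iff.1 hae)⟩
  intro q hq
  have h1 : q ∈ posSet T u ∧ q.2 ∈ Ioo y (y + L) ∧ ¬ hh y q = u q * pX (pX (pX u)) q := by
    simpa only [mem_ofPred_eq, Classical.not_imp] using hq.1
  simp only [mem_ofPred_eq, Classical.not_imp]
  exact ⟨hq.2, h1.2.2⟩

end

/-! ### The equation on the positivity set -/

section
variable {L T lam G : ℝ} {u₀ : ℝ → ℝ} {u : ℝ × ℝ → ℝ} {hh : ℝ → ℝ × ℝ → ℝ}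

lemma swap_box {f : ℝ × ℝ → ℝ} (hf : Continuous f) {a b c d : ℝ} (hab : a ≤ b) (hcd : c ≤ d) :
    ∫ t in a..b, ∫ x in c..d, f (t, x) = ∫ x in c..d, ∫ t in a..b, f (t, x) := by
  have h := integrable_box hf a b c d
  rw [IntegrableOn, Measure.volume_eq_prod, ← Measure.prod_restrict] at h
  simp only [intervalIntegral.integral_of_le hab, intervalIntegral.integral_of_le hcd]
  exact integral_integral_swap (f := fun t x => f (t, x)) h

/-- The right-hand side `-(u² u_xxx)_x - u^λ` of the equation. -/
def rhs (lam : ℝ) (u : ℝ × ℝ → ℝ) (p : ℝ × ℝ) : ℝ :=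
  -pX (fun q => u q * u q * pX (pX (pX u)) q) p - u p ^ lam

lemma LimSol.flux_cx (S : LimSol L T lam G u₀ u hh) (hL : 0 < L) (hlam : 1 ≤ lam) :
    Cx (posSet T u) 1 (fun q => u q * u q * pX (pX (pX u)) q) := by
  have h := S.regular hL hlam
  have h1 : Cx (posSet T u) 1 u := h.pred.pred.pred
  have h3 : Cx (posSet T u) 1 (pX (pX (pX u))) := h.2.2.2.2.2.2
  have hU := isOpen_posSet (T := T) S.cont
  exact Cx.mul hU (Cx.mul hU h1 h1) h3

lemma LimSol.rhs_cont (S : LimSol L T lam G u₀ u hh) (hL : 0 < L) (hlam : 1 ≤ lam) :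
    ContinuousOn (rhs lam u) (posSet T u) := by
  have h : ContinuousOn (pX (fun q => u q * u q * pX (pX (pX u)) q)) (posSet T u) :=
    (S.flux_cx hL hlam).2.2
  exact h.neg.sub (S.cont.continuousOn.rpow_const fun p hp => Or.inr (by linarith))

/-- Projection of the plane onto the closed sup-norm ball. -/
def clampB (p0 : ℝ × ℝ) (δ : ℝ) (p : ℝ × ℝ) : ℝ × ℝ :=
  (max (p0.1 - δ) (min p.1 (p0.1 + δ)), max (p0.2 - δ) (min p.2 (p0.2 + δ)))

lemma clampB_mem {p0 : ℝ × ℝ} {δ : ℝ} (hδ : 0 < δ) (p : ℝ × ℝ) :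
    clampB p0 δ p ∈ Metric.closedBall p0 δ := by
  have h : ∀ a c : ℝ, |max (a - δ) (min c (a + δ)) - a| ≤ δ := by
    intro a c
    rw [abs_le]
    refine ⟨by linarith [le_max_left (a - δ) (min c (a + δ))], ?_⟩
    have := max_le (by linarith : a - δ ≤ a + δ) (min_le_right c (a + δ))
    linarith
  rw [mem_closedBall_iff_norm, Prod.norm_def]
  exact max_le (h p0.1 p.1) (h p0.2 p.2)

lemma clampB_eq {p0 : ℝ × ℝ} {δ : ℝ} {p : ℝ × ℝ} (h1 : p.1 ∈ Icc (p0.1 - δ) (p0.1 + δ))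
    (h2 : p.2 ∈ Icc (p0.2 - δ) (p0.2 + δ)) : clampB p0 δ p = p := by
  unfold clampB
  rw [min_eq_left h1.2, min_eq_left h2.2, max_eq_right h1.1, max_eq_right h2.1]

lemma clampB_cont (p0 : ℝ × ℝ) (δ : ℝ) : Continuous (clampB p0 δ) := by
  unfold clampB
  fun_prop

/-- On the positivity set the equation holds classically. -/
theorem LimSol.time_deriv (S : LimSol L T lam G u₀ u hh) (hL : 0 < L) (hlam : 1 ≤ lam)
    {p0 : ℝ × ℝ} (hp0 : p0 ∈ posSet T u) :
    HasDerivAt (fun s => u (s, p0.2)) (rhs lam u p0) p0.1 := by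
  have huc := S.cont
  have cab := ab_cont hlam
  obtain ⟨δ', hδ', hball'⟩ := Metric.nhds_basis_closedBall.mem_iff.1
    ((isOpen_posSet (T := T) huc).mem_nhds hp0)
  set δ := min δ' (L / 2) with hδd
  have hδ : 0 < δ := by positivity
  have hδL : δ ≤ L / 2 := min_le_right _ _
  have hball : Metric.closedBall p0 δ ⊆ posSet T u :=
    (Metric.closedBall_subset_closedBall (min_le_left _ _)).trans hball'
  obtain ⟨t0, x0⟩ := p0
  set fl : ℝ × ℝ → ℝ := fun q => u q * u q * pX (pX (pX u)) q with hfl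
  have hflx : Cx (posSet T u) 1 fl := S.flux_cx hL hlam
  have hclP : ∀ p, clampB (t0, x0) δ p ∈ posSet T u := fun p => hball (clampB_mem hδ p)
  have hclamp : ∀ {t x}, t ∈ Icc (t0 - δ) (t0 + δ) → x ∈ Icc (x0 - δ) (x0 + δ) →
      clampB (t0, x0) δ (t, x) = (t, x) := fun h1 h2 => clampB_eq h1 h2
  have hrect : ∀ {t x}, t ∈ Icc (t0 - δ) (t0 + δ) → x ∈ Icc (x0 - δ) (x0 + δ) →
      (t, x) ∈ posSet T u := fun {t x} h1 h2 => by
    have := hclP (t, x)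
    rwa [hclamp h1 h2] at this
  set Gc : ℝ × ℝ → ℝ := fun p => rhs lam u (clampB (t0, x0) δ p) with hGc
  have hGcc : Continuous Gc :=
    (S.rhs_cont hL hlam).comp_continuous (clampB_cont _ _) hclP
  set Fc : ℝ × ℝ → ℝ := fun p => fl (clampB (t0, x0) δ p) with hFc
  have hFcc : Continuous Fc := hflx.continuousOn.comp_continuous (clampB_cont _ _) hclP
  -- the integrated equation
  have key : ∀ t1 t2, t1 ∈ Icc (t0 - δ) (t0 + δ) → t2 ∈ Icc (t0 - δ) (t0 + δ) → t1 ≤ t2 →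
      u (t2, x0) - u (t1, x0) = ∫ s in t1..t2, Gc (s, x0) := by
    intro t1 t2 h1 h2 h12
    have hx0 : x0 ∈ Icc (x0 - δ) (x0 + δ) := ⟨by linarith, by linarith⟩
    have ht1 : 0 ≤ t1 := (hrect h1 hx0).1.1.le
    have ht2 : t2 ≤ T := (hrect h2 hx0).1.2.le
    have hIc : Continuous fun x => ∫ s in t1..t2, Gc (s, x) :=
      intervalIntegral.continuous_parametric_intervalIntegral_of_continuous'
        (f := fun x s => Gc (s, x)) (by
          rw [Function.uncurry_def]; fun_prop) t1 t2
    have := loc_zero (f := fun x => (u (t2, x) - u (t1, x)) - ∫ s in t1..t2, Gc (s, x))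
      (by fun_prop) (a := x0 - δ) (b := x0 + δ) (fun φ φ' c c' hd hz hz' => by
        set y := x0 - L / 2 with hy
        have hyL : y ≤ y + L := by linarith
        have hsub : Ioo (x0 - δ) (x0 + δ) ⊆ Ioc y (y + L) := fun x hx =>
          ⟨by linarith [hx.1], by linarith [hx.2]⟩
        have hst : ∀ {s}, s ∈ Ioc t1 t2 → s ∈ Icc (t0 - δ) (t0 + δ) := fun hs =>
          ⟨by linarith [hs.1, h1.1], by linarith [hs.2, h2.2]⟩
        -- integrals over a period against a function supported in the small interval
        have hloc : ∀ {w : ℝ → ℝ}, (∀ x ∉ Ioo (x0 - δ) (x0 + δ), w x = 0) →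
            ∫ x in y..(y + L), w x = ∫ x in (x0 - δ)..(x0 + δ), w x := by
          intro w hw
          rw [intervalIntegral.integral_of_le hyL,
            intervalIntegral.integral_of_le (by linarith),
            setIntegral_eq_integral_of_forall_compl_eq_zero fun x hx => hw x fun h => hx (hsub h),
            setIntegral_eq_integral_of_forall_compl_eq_zero fun x hx => hw x fun h =>
              hx (Ioo_subset_Ioc_self h)]
        have hslice : ∀ s ∈ Icc (t0 - δ) (t0 + δ), ∫ x in y..(y + L),
            (Fc (s, x) * φ' x - ab lam (u (s, x)) * φ x) = ∫ x in y..(y + L), Gc (s, x) * φ x := by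
          intro s hs
          have e1 : ∫ x in y..(y + L), Fc (s, x) * φ' x =
              ∫ x in (x0 - δ)..(x0 + δ), -(pX fl (clampB (t0, x0) δ (s, x)) * φ x) := by
            have hpc : Continuous fun x => pX fl (clampB (t0, x0) δ (s, x)) := by
              have h := hflx.2.2
              exact ContinuousOn.comp_continuous (g := pX fl)
                (f := fun x => clampB (t0, x0) δ (s, x)) h
                ((clampB_cont _ _).comp (by fun_prop)) fun x => hclP _
            rw [hloc fun x hx => by rw [hz' x hx, mul_zero]]
            have hle : x0 - δ ≤ x0 + δ := by linarith
            have e2 : ∫ x in (x0 - δ)..(x0 + δ), Fc (s, x) * φ' x =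
                ∫ x in (x0 - δ)..(x0 + δ), fl (s, x) * φ' x := by
              refine intervalIntegral.integral_congr fun x hx => ?_
              rw [uIcc_of_le hle] at hx
              simp only [hFc, hclamp hs hx]
            rw [e2, intervalIntegral.integral_mul_deriv_eq_deriv_mul
              (u := fun x => fl (s, x)) (u' := fun x => pX fl (clampB (t0, x0) δ (s, x)))
              (v := φ) (v' := φ') ?_ (fun x _ => hd x)
              (hpc.intervalIntegrable _ _) (c'.intervalIntegrable _ _), hz (x0 + δ) (by simp),
              hz (x0 - δ) (by simp), intervalIntegral.integral_neg]
            · ring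
            · intro x hx
              rw [uIcc_of_le hle] at hx
              have := hflx.hasDeriv (hrect hs hx)
              rwa [hclamp hs hx]
          rw [intervalIntegral.integral_sub
            ((by fun_prop : Continuous fun x => Fc (s, x) * φ' x).intervalIntegrable _ _)
            ((by fun_prop : Continuous fun x => ab lam (u (s, x)) * φ x).intervalIntegrable _ _),
            e1, hloc fun x hx => by rw [hz x hx, mul_zero],
            hloc (w := fun x => Gc (s, x) * φ x) fun x hx => by rw [hz x hx, mul_zero]]
          have e3 : ∫ x in (x0 - δ)..(x0 + δ), -(pX fl (clampB (t0, x0) δ (s, x)) * φ x) =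
              ∫ x in (x0 - δ)..(x0 + δ), (Gc (s, x) * φ x + ab lam (u (s, x)) * φ x) := by
            refine intervalIntegral.integral_congr fun x hx => ?_
            rw [uIcc_of_le (by linarith)] at hx
            have hpos := (hrect hs hx).2
            simp only [hGc, hclamp hs hx, rhs, ab, max_eq_left hpos.le]
            ring
          rw [e3, intervalIntegral.integral_add
            ((by fun_prop : Continuous fun x => Gc (s, x) * φ x).intervalIntegrable _ _)
            ((by fun_prop : Continuous fun x => ab lam (u (s, x)) * φ x).intervalIntegrable _ _)]
          ring
        have hbox : (∫ p in Ioc t1 t2 ×ˢ Ioc y (y + L), hh y p * (max (u p) 0 * φ' p.2)) =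
            ∫ p in Ioc t1 t2 ×ˢ Ioc y (y + L), Fc p * φ' p.2 := by
          refine integral_congr_ae ((ae_restrict_iff' (measurableSet_Ioc.prod
            measurableSet_Ioc)).2 ?_)
          filter_upwards [S.flux_ae hlam y] with p hp hpB
          by_cases hx : p.2 ∈ Ioo (x0 - δ) (x0 + δ)
          · have hP : p ∈ posSet T u := hrect (hst hpB.1) (Ioo_subset_Icc_self hx)
            have hcl : clampB (t0, x0) δ p = p := hclamp (hst hpB.1) (Ioo_subset_Icc_self hx)
            rw [hp hP ⟨by linarith [hx.1], by linarith [hx.2]⟩, max_eq_left hP.2.le]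
            simp only [hFc, hcl, hfl]
            ring
          · simp only [hz' _ hx, mul_zero]
        have hI : ∫ x, (u (t2, x) - u (t1, x)) * φ x =
            ∫ x, (∫ s in t1..t2, Gc (s, x)) * φ x := by
          rw [S.weak_x hL (y := y) (a := x0 - δ) (b := x0 + δ) (by linarith) (by linarith) c c' hd
            hz ht1 h12 ht2, hbox, ← integral_sub (integrable_box (by fun_prop) _ _ _ _)
            (integrable_box (by fun_prop) _ _ _ _),
            ← iter_box (f := fun p => Fc p * φ' p.2 - ab lam (u p) * φ p.2) (by fun_prop) h12 hyL]
          calc _ = ∫ s in t1..t2, ∫ x in y..(y + L), Gc (s, x) * φ x := by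
                refine intervalIntegral.integral_congr fun s hs => ?_
                rw [uIcc_of_le h12] at hs
                exact hslice s ⟨by linarith [hs.1, h1.1], by linarith [hs.2, h2.2]⟩
            _ = ∫ x in y..(y + L), ∫ s in t1..t2, Gc (s, x) * φ x :=
                swap_box (f := fun p => Gc p * φ p.2) (by fun_prop) h12 hyL
            _ = ∫ x in y..(y + L), (∫ s in t1..t2, Gc (s, x)) * φ x := by
                simp only [intervalIntegral.integral_mul_const]
            _ = _ := by
                rw [intervalIntegral.integral_of_le hyL]
                exact setIntegral_eq_integral_of_forall_compl_eq_zero fun x hx => by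
                  rw [hz x fun h => hx (hsub h), mul_zero]
        have hcs : HasCompactSupport φ := HasCompactSupport.intro
          (isCompact_Icc (a := x0 - δ) (b := x0 + δ)) fun x hx => hz x fun h =>
            hx (Ioo_subset_Icc_self h)
        simp only [sub_mul (_ - _)]
        rw [integral_sub, hI, sub_self]
        · exact (by fun_prop : Continuous fun x =>
            (u (t2, x) - u (t1, x)) * φ x).integrable_of_hasCompactSupport hcs.mul_left
        · exact (by fun_prop : Continuous fun x =>
            (∫ s in t1..t2, Gc (s, x)) * φ x).integrable_of_hasCompactSupport hcs.mul_left)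
      x0 ⟨by linarith, by linarith⟩
    linarith
  have hx0 : x0 ∈ Icc (x0 - δ) (x0 + δ) := ⟨by linarith, by linarith⟩
  have ht0 : t0 ∈ Icc (t0 - δ) (t0 + δ) := ⟨by linarith, by linarith⟩
  have hG0 : Gc (t0, x0) = rhs lam u (t0, x0) := by simp only [hGc, hclamp ht0 hx0]
  have hd : HasDerivAt (fun s => u (t0, x0) + ∫ r in t0..s, Gc (r, x0)) (rhs lam u (t0, x0)) t0 := by
    rw [← hG0]
    have hc : Continuous fun r => Gc (r, x0) := by fun_prop
    exact (intervalIntegral.integral_hasDerivAt_right (hc.intervalIntegrable _ _)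
      (hc.stronglyMeasurableAtFilter _ _) hc.continuousAt).const_add _
  refine hd.congr_of_eventuallyEq ?_
  filter_upwards [Icc_mem_nhds (by linarith : t0 - δ < t0) (by linarith : t0 < t0 + δ)] with s hs
  rcases le_total t0 s with h | h
  · rw [← key t0 s ht0 hs h]; ring
  · rw [intervalIntegral.integral_symm, ← key s t0 hs ht0 h]; ring

end

/-! ### The space derivative and the initial condition -/

lemma ae_hasDeriv_of_primitive {w g : ℝ → ℝ} {y z : ℝ} (hyz : y ≤ z)
    (hg : IntervalIntegrable g volume y z) (h : ∀ b ∈ Icc y z, w b - w y = ∫ x in y..b, g x) :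
    ∀ᵐ x, x ∈ Ioo y z → HasDerivAt w (g x) x := by
  filter_upwards [hg.ae_hasDerivAt_integral] with x hx hxy
  rw [uIcc_of_le hyz] at hx
  have h1 := (hx (Ioo_subset_Icc_self hxy) y ⟨le_rfl, hyz⟩).const_add (w y)
  refine h1.congr_of_eventuallyEq ?_
  filter_upwards [Icc_mem_nhds hxy.1 hxy.2] with b hb
  rw [← h b hb]; ring

lemma ae_Ioc_of_Ioo {y z : ℝ} {P : ℝ → Prop} (h : ∀ᵐ x, x ∈ Ioo y z → P x) :
    ∀ᵐ x ∂(volume.restrict (Ioc y z)), P x := by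
  rw [← restrict_Ioo_eq_restrict_Ioc]
  exact (ae_restrict_iff' measurableSet_Ioo).2 h

lemma const_of_small_steps {H : ℝ → ℝ} {L : ℝ} (hL : 0 < L)
    (h : ∀ y, ∀ b ∈ Icc y (y + L), H b = H y) (a b : ℝ) : H b = H a := by
  wlog hab : a ≤ b generalizing a b
  · exact (this b a (le_of_not_ge hab)).symm
  obtain ⟨n, hn⟩ := exists_nat_gt ((b - a) / L)
  rw [div_lt_iff₀ hL] at hn
  have hn0 : (0 : ℝ) < n := by
    rcases (Nat.cast_nonneg (α := ℝ) n).eq_or_lt with h0 | h0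
    · rw [← h0] at hn; linarith
    · exact h0
  set s := (b - a) / n with hs
  have hs0 : 0 ≤ s := div_nonneg (by linarith) hn0.le
  have hsL : s ≤ L := by rw [hs, div_le_iff₀ hn0]; linarith
  have : ∀ k : ℕ, H (a + k * s) = H a := by
    intro k
    induction k with
    | zero => simp
    | succ k ih =>
      rw [← ih]
      refine h _ _ ?_
      push_cast
      constructor <;> linarith
  have e := this n
  rwa [hs, mul_div_cancel₀ _ hn0.ne', add_sub_cancel] at e

section
variable {L T lam G : ℝ} {u₀ : ℝ → ℝ} {u : ℝ × ℝ → ℝ} {hh : ℝ → ℝ × ℝ → ℝ}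

lemma intervalIntegrable_of_memLp {g : ℝ → ℝ} {y z : ℝ} (hyz : y ≤ z)
    (hg : MemLp g 2 (volume.restrict (Ioc y z))) : IntervalIntegrable g volume y z := by
  rw [intervalIntegrable_iff_integrableOn_Ioc_of_le hyz]
  exact hg.integrable one_le_two

lemma LimSol.ux_local (S : LimSol L T lam G u₀ u hh) (hL : 0 < L) (t y : ℝ) :
    MemLp (fun x => pX u (t, x)) 2 (volume.restrict (Ioc y (y + L))) ∧
    ∫ x in y..(y + L), pX u (t, x) ^ 2 ≤ G ∧
    ∀ b ∈ Icc y (y + L), u (t, b) - u (t, y) = ∫ x in y..b, pX u (t, x) := by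
  obtain ⟨g, hg, hgG, hgb⟩ := S.ac t y
  have hyL : y ≤ y + L := by linarith
  have hae := ae_Ioc_of_Ioo (ae_hasDeriv_of_primitive (w := fun x => u (t, x)) hyL
    (intervalIntegrable_of_memLp hyL hg) hgb)
  have hae' : (fun x => pX u (t, x)) =ᵐ[volume.restrict (Ioc y (y + L))] g := by
    filter_upwards [hae] with x hx
    exact hx.deriv
  refine ⟨(memLp_congr_ae hae').2 hg, ?_, fun b hb => ?_⟩
  · rw [intervalIntegral.integral_of_le hyL] at hgG ⊢
    refine le_of_eq_of_le (integral_congr_ae ?_) hgG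
    filter_upwards [hae'] with x hx
    rw [hx]
  · rw [hgb b hb, intervalIntegral.integral_of_le hb.1, intervalIntegral.integral_of_le hb.1]
    exact integral_congr_ae (ae_restrict_of_ae_restrict_of_subset
      (Ioc_subset_Ioc_right hb.2) hae'.symm)

lemma LimSol.ux_int (S : LimSol L T lam G u₀ u hh) (hL : 0 < L) (t a b : ℝ) :
    IntervalIntegrable (fun x => pX u (t, x)) volume a b := by
  have hper : Function.Periodic (fun x => pX u (t, x)) L := by
    intro x
    simp only [pX]
    rw [← deriv_comp_add_const]
    simp only [S.per]
  have h := intervalIntegrable_of_memLp (by linarith) (S.ux_local hL t 0).1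
  exact hper.intervalIntegrable hL.ne' h a b

lemma LimSol.ux_ac (S : LimSol L T lam G u₀ u hh) (hL : 0 < L) (t a b : ℝ) :
    u (t, b) - u (t, a) = ∫ x in a..b, pX u (t, x) := by
  have h := const_of_small_steps (H := fun b => u (t, b) - ∫ x in (0 : ℝ)..b, pX u (t, x)) hL
    (fun y b hb => by
      have h1 := (S.ux_local hL t y).2.2 b hb
      have h2 := intervalIntegral.integral_add_adjacent_intervals (S.ux_int hL t 0 y)
        (S.ux_int hL t y b)
      linarith) a b
  have h2 := intervalIntegral.integral_add_adjacent_intervals (S.ux_int hL t 0 a)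
    (S.ux_int hL t a b)
  linarith

/-- Strong convergence to the initial datum: `u_x(t)` converges weakly to `g₀` in `L²`, and its
norm does not exceed that of `g₀`. -/
theorem LimSol.init_tendsto {g₀ : ℝ → ℝ}
    (S : LimSol L T lam (∫ x in (0 : ℝ)..L, g₀ x ^ 2) u₀ u hh) (hL : 0 < L)
    (h0int : ∀ a b : ℝ, IntervalIntegrable g₀ volume a b)
    (h0ac : ∀ a b : ℝ, u₀ b - u₀ a = ∫ x in a..b, g₀ x)
    (h0L2 : IntervalIntegrable (fun x => (g₀ x) ^ 2) volume 0 L) :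
    Tendsto (fun t => ∫ x in (0 : ℝ)..L, ((u (t, x) - u₀ x) ^ 2 + (pX u (t, x) - g₀ x) ^ 2))
      (nhdsWithin 0 (Ioi 0)) (nhds 0) := by
  have huc := S.cont
  set G := ∫ x in (0 : ℝ)..L, g₀ x ^ 2 with hGd
  set μ := (volume : Measure ℝ).restrict (Ioc 0 L) with hμ
  have hg₀ : MemLp g₀ 2 μ := by
    rw [memLp_two_iff_integrable_sq]
    · exact (intervalIntegrable_iff_integrableOn_Ioc_of_le hL.le).1 h0L2
    · exact ((intervalIntegrable_iff_integrableOn_Ioc_of_le hL.le).1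
        (h0int 0 L)).aestronglyMeasurable
  have hm : ∀ t, MemLp (fun x => pX u (t, x)) 2 μ := fun t => by
    have := (S.ux_local hL t 0).1
    rwa [zero_add] at this
  have hG : ∀ t, ∫ x, pX u (t, x) ^ 2 ∂μ ≤ G := fun t => by
    have := (S.ux_local hL t 0).2.1
    rwa [zero_add, intervalIntegral.integral_of_le hL.le] at this
  have hGμ : ∫ x, g₀ x ^ 2 ∂μ = G := by rw [hGd, intervalIntegral.integral_of_le hL.le]
  refine tendsto_of_seq_tendsto fun τ hτ => ?_
  have hτ0 : Tendsto τ atTop (nhds 0) := hτ.mono_right nhdsWithin_le_nhds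
  have hweak : Tendsto (fun n => ∫ x, pX u (τ n, x) * g₀ x ∂μ) atTop (nhds G) := by
    rw [tendsto_iff_ultrafilter]
    intro F hF
    obtain ⟨h, hh2, -, hlim⟩ := weak_L2 F (fun n => hm (τ n)) (fun n => hG (τ n))
    have hprim : ∀ b ∈ Icc 0 L, u₀ b - u₀ 0 = ∫ x in (0 : ℝ)..b, h x := by
      intro b hb
      have hconv : ∀ w : ℝ → ℝ, ∫ x in (0 : ℝ)..b, w x =
          ∫ x, w x * (Ioc 0 b).indicator (fun _ => 1) x ∂μ := by
        intro w
        have : (fun x => w x * (Ioc 0 b).indicator (fun _ => 1) x) = (Ioc 0 b).indicator w := by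
          ext x
          by_cases hx : x ∈ Ioc 0 b <;> simp [hx]
        rw [this, hμ, setIntegral_indicator measurableSet_Ioc,
          inter_eq_right.2 (Ioc_subset_Ioc_right hb.2), intervalIntegral.integral_of_le hb.1]
      have hut : ∀ x, Tendsto (fun n => u (τ n, x)) F (nhds (u₀ x)) := fun x => by
        rw [← S.init x]
        exact ((by fun_prop : Continuous fun s => u (s, x)).tendsto 0).comp (hτ0.mono_left hF)
      rw [hconv]
      refine tendsto_nhds_unique ((hut b).sub (hut 0)) ((hlim ((Ioc 0 b).indicator
        fun _ => 1) ((memLp_const 1).indicator measurableSet_Ioc)).congr fun n => ?_)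
      rw [← hconv, S.ux_ac hL]
    have e1 := ae_Ioc_of_Ioo (ae_hasDeriv_of_primitive hL.le
      (intervalIntegrable_of_memLp hL.le hh2) hprim)
    have e2 := ae_Ioc_of_Ioo (ae_hasDeriv_of_primitive hL.le (h0int 0 L) fun b _ => h0ac 0 b)
    have e3 : ∫ x, h x * g₀ x ∂μ = G := by
      rw [← hGμ]
      refine integral_congr_ae ?_
      filter_upwards [e1, e2] with x h1 h2
      rw [h1.unique h2, sq]
    rw [← e3]
    exact hlim g₀ hg₀
  have hA : Tendsto (fun n => ∫ x in (0 : ℝ)..L, (u (τ n, x) - u₀ x) ^ 2) atTop (nhds 0) := by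
    have hu0c : Continuous u₀ := by
      have : u₀ = fun x => u (0, x) := funext fun x => (S.init x).symm
      rw [this]; fun_prop
    have hc : Continuous fun t => ∫ x in (0 : ℝ)..L, (u (t, x) - u₀ x) ^ 2 :=
      intervalIntegral.continuous_parametric_intervalIntegral_of_continuous'
        (f := fun t x => (u (t, x) - u₀ x) ^ 2) (by rw [Function.uncurry_def]; fun_prop) 0 L
    have := (hc.tendsto 0).comp hτ0
    simpa [S.init, Function.comp_def] using this
  have hB : Tendsto (fun n => ∫ x, (pX u (τ n, x) - g₀ x) ^ 2 ∂μ) atTop (nhds 0) := by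
    have hup : Tendsto (fun n => 2 * G - 2 * ∫ x, pX u (τ n, x) * g₀ x ∂μ) atTop (nhds 0) := by
      have := (hweak.const_mul 2).const_sub (2 * G)
      simpa using this
    refine squeeze_zero (fun n => integral_nonneg fun x => sq_nonneg _) (fun n => ?_) hup
    have e : ∫ x, (pX u (τ n, x) - g₀ x) ^ 2 ∂μ = ∫ x, pX u (τ n, x) ^ 2 ∂μ -
        2 * (∫ x, pX u (τ n, x) * g₀ x ∂μ) + ∫ x, g₀ x ^ 2 ∂μ := by
      have i1 := (hm (τ n)).integrable_sq
      have i2 := (memLp_mul_integrable (hm (τ n)) hg₀).const_mul 2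
      have i3 := hg₀.integrable_sq
      have i12 : Integrable (fun x => pX u (τ n, x) ^ 2 - 2 * (pX u (τ n, x) * g₀ x)) μ :=
        i1.sub i2
      rw [← integral_const_mul, ← integral_sub i1 i2, ← integral_add i12 i3]
      refine integral_congr_ae (Eventually.of_forall fun x => ?_)
      ring
    rw [e, hGμ]
    linarith [hG (τ n)]
  have hsum := hA.add hB
  rw [add_zero] at hsum
  refine hsum.congr fun n => ?_
  have hu0c : Continuous u₀ := by
    have : u₀ = fun x => u (0, x) := funext fun x => (S.init x).symm
    rw [this]; fun_prop
  simp only [Function.comp_def, intervalIntegral.integral_of_le hL.le]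
  rw [← integral_add]
  · exact (memLp_Ioc (f := fun x => u (τ n, x) - u₀ x) (by fun_prop) 0 L).integrable_sq
  · exact ((hm (τ n)).sub hg₀).integrable_sq

end

/-! ### Assembly of the weak solution -/

section
variable {L T lam G : ℝ} {u₀ : ℝ → ℝ} {u : ℝ × ℝ → ℝ} {hh : ℝ → ℝ × ℝ → ℝ}

lemma Ioo_box_ae (L T : ℝ) :
    (QTper L T : Set (ℝ × ℝ)) =ᵐ[volume] (Ioc 0 T ×ˢ Ioc 0 L : Set (ℝ × ℝ)) := by
  rw [QTper, Measure.volume_eq_prod]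
  exact Measure.set_prod_ae_eq Ioo_ae_eq_Ioc Ioo_ae_eq_Ioc

lemma measurableSet_QTper (L T : ℝ) : MeasurableSet (QTper L T) :=
  measurableSet_Ioo.prod measurableSet_Ioo

lemma LimSol.flux_sq (S : LimSol L T lam G u₀ u hh) (hlam : 1 ≤ lam) :
    IntegrableOn (fun p => (u p * pX (pX (pX u)) p) ^ 2) (posSet T u ∩ QTper L T) volume := by
  have hP : MeasurableSet (posSet T u ∩ QTper L T) :=
    (isOpen_posSet S.cont).measurableSet.inter (measurableSet_QTper L T)
  have h1 : IntegrableOn (fun p => hh 0 p ^ 2) (Ioc 0 T ×ˢ Ioc 0 (0 + L)) volume :=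
    (S.hmem 0).integrable_sq
  have h2 : IntegrableOn (fun p => hh 0 p ^ 2) (posSet T u ∩ QTper L T) volume := by
    refine h1.mono_set fun p hp => ?_
    rw [zero_add]
    exact ⟨Ioo_subset_Ioc_self hp.2.1, Ioo_subset_Ioc_self hp.2.2⟩
  refine h2.congr_fun_ae ?_
  rw [Filter.EventuallyEq, ae_restrict_iff' hP]
  filter_upwards [S.flux_ae hlam 0] with p hp hpm
  rw [hp hpm.1 (by rw [zero_add]; exact hpm.2.2)]

lemma LimSol.weak_form (S : LimSol L T lam G u₀ u hh) (hL : 0 < L) (hT : 0 < T) (hlam : 1 ≤ lam)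
    (h0 : ∀ x, 0 ≤ u₀ x) {ψ : ℝ → ℝ → ℝ} (hψ : ContDiff ℝ 1 (fun p : ℝ × ℝ => ψ p.1 p.2))
    (hper : ∀ t x, ψ t (x + L) = ψ t x) (hψ0 : ∀ x, ψ 0 x = 0) (hψT : ∀ x, ψ T x = 0) :
    (∫ p in QTper L T, u p * deriv (fun s => ψ s p.2) p.1)
      + (∫ p in posSet T u ∩ QTper L T,
          u p ^ 2 * pX (pX (pX u)) p * deriv (fun y => ψ p.1 y) p.2)
      - (∫ p in QTper L T, u p ^ lam * ψ p.1 p.2) = 0 := by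
  set Ψ : ℝ × ℝ → ℝ := fun p => ψ p.1 p.2 with hΨ
  have hd : Differentiable ℝ Ψ := hψ.differentiable (by norm_num)
  have hfc : Continuous (fderiv ℝ Ψ) := hψ.continuous_fderiv (by norm_num)
  have hDT : DT Ψ fun p => fderiv ℝ Ψ p (1, 0) := fun p =>
    HasFDerivAt.comp_hasDerivAt (l := Ψ) (f := fun s => (s, p.2)) p.1 (hd p).hasFDerivAt
      ((hasDerivAt_id p.1).prodMk (hasDerivAt_const p.1 p.2))
  have hDX : DX Ψ fun p => fderiv ℝ Ψ p (0, 1) := fun p =>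
    HasFDerivAt.comp_hasDerivAt (l := Ψ) (f := fun y => (p.1, y)) p.2 (hd p).hasFDerivAt
      ((hasDerivAt_const p.2 p.1).prodMk (hasDerivAt_id p.2))
  have et : ∀ p : ℝ × ℝ, deriv (fun s => ψ s p.2) p.1 = fderiv ℝ Ψ p (1, 0) := fun p =>
    (hDT p).deriv
  have ex : ∀ p : ℝ × ℝ, deriv (fun y => ψ p.1 y) p.2 = fderiv ℝ Ψ p (0, 1) := fun p =>
    (hDX p).deriv
  have hw := S.weak Ψ _ _ 0 hd.continuous (hfc.clm_apply continuous_const)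
    (hfc.clm_apply continuous_const) hDT hDX (fun t => hper t 0) 0 T le_rfl hT.le le_rfl
  have hz : (∫ x in (0 : ℝ)..(0 + L), u (T, x) * Ψ (T, x)) -
      (∫ x in (0 : ℝ)..(0 + L), u (0, x) * Ψ (0, x)) = 0 := by
    simp [hΨ, hψ0, hψT]
  rw [hz, zero_add] at hw
  simp only [← setIntegral_congr_set (Ioo_box_ae L T)] at hw
  simp only [et, ex]
  have hQ := measurableSet_QTper L T
  have e3 : ∫ p in QTper L T, ab lam (u p) * Ψ p = ∫ p in QTper L T, u p ^ lam * ψ p.1 p.2 := by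
    refine setIntegral_congr_fun hQ fun p hp => ?_
    have := S.nonneg hL hlam h0 (Ioo_subset_Icc_self hp.1) p.2
    simp only [ab, hΨ, max_eq_left this]
  have e2 : ∫ p in QTper L T, hh 0 p * (max (u p) 0 * fderiv ℝ Ψ p (0, 1)) =
      ∫ p in posSet T u ∩ QTper L T, u p ^ 2 * pX (pX (pX u)) p * fderiv ℝ Ψ p (0, 1) := by
    have hP : MeasurableSet (posSet T u) := (isOpen_posSet S.cont).measurableSet
    rw [inter_comm, ← setIntegral_indicator hP]
    refine setIntegral_congr_ae hQ ?_
    filter_upwards [S.flux_ae hlam 0] with p hp hpQ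
    by_cases h : p ∈ posSet T u
    · rw [indicator_of_mem h, hp h (by rw [zero_add]; exact hpQ.2), max_eq_left h.2.le]
      ring
    · -- outside the positivity set nonnegativity forces `u = 0`
      have hu : u p = 0 :=
        le_antisymm (not_lt.1 fun h' => h ⟨hpQ.1, h'⟩)
          (S.nonneg hL hlam h0 (Ioo_subset_Icc_self hpQ.1) p.2)
      rw [indicator_of_notMem h, hu]
      simp
  rw [← e3, ← e2]
  exact hw.symm

lemma LimSol.h1_bound (S : LimSol L T lam G u₀ u hh) (hL : 0 < L) :
    ∃ B : ℝ, ∀ t ∈ Icc (0 : ℝ) T,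
      (∫ x in (0 : ℝ)..L, (u (t, x) ^ 2 + pX u (t, x) ^ 2)) ≤ B := by
  have huc := S.cont
  have hc : Continuous fun t => ∫ x in (0 : ℝ)..L, u (t, x) ^ 2 :=
    intervalIntegral.continuous_parametric_intervalIntegral_of_continuous'
      (f := fun t x => u (t, x) ^ 2) (by rw [Function.uncurry_def]; fun_prop) 0 L
  obtain ⟨C, hC⟩ := (isCompact_Icc (a := (0 : ℝ)) (b := T)).exists_bound_of_continuousOn
    hc.continuousOn
  refine ⟨C + G, fun t ht => ?_⟩
  have h := S.ux_local hL t 0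
  rw [zero_add] at h
  have i1 : IntervalIntegrable (fun x => u (t, x) ^ 2) volume 0 L :=
    Continuous.intervalIntegrable (by fun_prop) _ _
  have i2 : IntervalIntegrable (fun x => pX u (t, x) ^ 2) volume 0 L :=
    (intervalIntegrable_iff_integrableOn_Ioc_of_le hL.le).2 h.1.integrable_sq
  rw [intervalIntegral.integral_add i1 i2]
  exact add_le_add ((le_abs_self _).trans (hC t ht)) h.2.1

/-- A limit of approximations with datum energy `∫ g₀²` is a weak solution; its derivatives
`u_x, …, u_xxxx` are the iterated partial derivatives and `u_t` is read off the equation. -/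
def LimSol.weakSol {g₀ : ℝ → ℝ}
    (S : LimSol L T lam (∫ x in (0 : ℝ)..L, g₀ x ^ 2) u₀ u hh) (hL : 0 < L) (hT : 0 < T)
    (hlam : 1 ≤ lam) (h0nonneg : ∀ x : ℝ, 0 ≤ u₀ x)
    (h0int : ∀ a b : ℝ, IntervalIntegrable g₀ volume a b)
    (h0ac : ∀ a b : ℝ, u₀ b - u₀ a = ∫ x in a..b, g₀ x)
    (h0L2 : IntervalIntegrable (fun x => (g₀ x) ^ 2) volume 0 L) : WeakSol L T lam u₀ g₀ where
  u t x := u (t, x)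
  ux t x := pX u (t, x)
  ut t x := rhs lam u (t, x)
  ux2 t x := pX (pX u) (t, x)
  ux3 t x := pX (pX (pX u)) (t, x)
  ux4 t x := pX (pX (pX (pX u))) (t, x)
  nonneg t ht x := S.nonneg hL hlam h0nonneg ht x
  cont := S.cont.continuousOn
  periodic := S.per
  ux_int t _ a b := S.ux_int hL t a b
  ac t _ a b := S.ux_ac hL t a b
  ux_sq_int t _ := by
    have h := (S.ux_local hL t 0).1
    rw [zero_add] at h
    exact (intervalIntegrable_iff_integrableOn_Ioc_of_le hL.le).2 h.integrable_sq
  bdd := S.h1_bound hL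
  hasDeriv_t p hp := S.time_deriv hL hlam hp
  hasDeriv_x p hp := (S.regular hL hlam).hasDeriv hp
  hasDeriv_x2 p hp := (S.regular hL hlam).2.2.hasDeriv hp
  hasDeriv_x3 p hp := (S.regular hL hlam).2.2.2.2.hasDeriv hp
  hasDeriv_x4 p hp := (S.regular hL hlam).2.2.2.2.2.2.hasDeriv hp
  cont_t := S.rhs_cont hL hlam
  cont_x := (S.regular hL hlam).2.2.continuousOn
  cont_x2 := (S.regular hL hlam).2.2.2.2.continuousOn
  cont_x3 := (S.regular hL hlam).2.2.2.2.2.2.continuousOn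
  cont_x4 := (S.regular hL hlam).2.2.2.2.2.2.2.2.continuousOn
  flux_sq_int := S.flux_sq hlam
  weak _ hψ hper hψ0 hψT := S.weak_form hL hT hlam h0nonneg hψ hper hψ0 hψT
  init := S.init_tendsto hL h0int h0ac h0L2

end

/-- Existence of a nonnegative weak solution of the thin-film equation with absorption,
whose mass is dominated by the initial mass. -/
theorem thin_film_absorption_existence_mass_decrease
    (L T lam : ℝ) (hL : 0 < L) (hT : 0 < T) (hlam : 1 ≤ lam)
    (u₀ g₀ : ℝ → ℝ)
    (h0cont : Continuous u₀)
    (h0nonneg : ∀ x : ℝ, 0 ≤ u₀ x)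
    (h0ne : ∃ x : ℝ, u₀ x ≠ 0)
    (h0per : ∀ x : ℝ, u₀ (x + L) = u₀ x)
    (h0int : ∀ a b : ℝ, IntervalIntegrable g₀ volume a b)
    (h0ac : ∀ a b : ℝ, u₀ b - u₀ a = ∫ x in a..b, g₀ x)
    (h0L2 : IntervalIntegrable (fun x => (g₀ x) ^ 2) volume 0 L) :
    ∃ W : WeakSol L T lam u₀ g₀,
      ∀ t ∈ Set.Icc (0 : ℝ) T,
        (∫ x in (0 : ℝ)..L, W.u t x) ≤ ∫ x in (0 : ℝ)..L, u₀ x := by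
  obtain ⟨M, v, v1, v2, v3, A⟩ := approx_exists hL hT hlam h0cont h0per h0int h0ac h0L2
  obtain ⟨u, hh, S⟩ := limSol_exists A hL hT hlam h0cont h0per
  exact ⟨S.weakSol hL hT hlam h0nonneg h0int h0ac h0L2, fun t _ => S.mass t⟩

end
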